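/- Let R be a Dedekind ring of arithmetic type and l ≥ 2. Then the symplectic group Sp(2l,R) is generated by symplectic transvections. -/

import Mathlib

/-!
The argument follows Bass, Milnor and Serre in spirit, but replaces the class field theoretic input
by elementary counting, since neither Chebotarev's theorem nor Dirichlet's theorem on primes in
progressions is available over a general global field.

**Reduction to a symbol.** Let `E` be the subgroup generated by transvections; it is normal. Over a
Dedekind domain a stable range argument (`exists_fix_planes`) moves any symplectic matrix, by
transvections, to one acting on a single hyperbolic plane, so everything reduces to the image of
`SL₂` in `Sp₄` (`E_eq_top_of_long1`). The quotient `Cq R = Sp₄(R)/E` is commutative, because its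
classes have representatives in two commuting copies of `SL₂`. The class of a matrix of `SL₂` only
depends on its first row; write `[a, b]` for it (`sym`). A computation with the Levi subgroup
`GL₂ ⊂ Sp₄` gives `[a, b c²] = [a, b] [a, c²]` (`sym_mul_sq`), whence `(a, c) ↦ [a, c²]` is
a Mennicke symbol: invariant under elementary operations and bimultiplicative
(`isMennicke_sym_sq`). If such symbols are trivial, then solving a conic modulo a squarefree `a`
shows that `[a, b]` is itself a Mennicke symbol (`isMennicke_sym`), hence trivial too.

**Mennicke symbols are trivial** (`mennicke_trivial`). On a ring of integers `O` a Mennicke symbol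
extends to ideals, `(I, b) ↦ E I b`, and after composition with a character it takes values in
`p`-power roots of unity: a reciprocity system (`Recip`), that is, a family of residue characters
with the reciprocity law `E (a) b = E (b) a`. Call a prime bad if its residue character is
nontrivial. Suppose that almost all bad primes split in a fixed nontrivial Galois extension.
* A Mertens type bound in the extension shows that bad primes have upper density well below `1`
  (`sparse_of_gal`), while all primes together have density `1` (`not_sparse`); so infinitely many
  primes are good.
* Good primes produce infinitely many independent elements which are `p`-th powers modulo all bad
  primes (`many_b`). The bad primes split in the resulting Kummer extensions, of arbitrarily large
  degree, so they have density `0` (`sparse_all`).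
* Hence most elements `a` have a small bad part, and by pigeonhole many of them define the same
  function `v ↦ E v a` on bad primes. Comparing with the near orthogonality of residue characters
  (a second moment, or large sieve, argument) bounds the number of bad primes so well that
  `∑ 1/N v` converges over them (`bad_count`, `bad_summable`).
* A sieve then finds, in any suitable residue class, an element divisible by no bad prime
  (`exists_avoid`); for it the reciprocity law forces every residue character to be trivial
  (`Recip.trivial_of_splits`).

The Galois extension is cyclotomic in a first step, which shows that the values have order at most
`p^k` when the field has no primitive `p^(k+1)`-th root of unity (`Recip.pow_eq_one`). In a second
step it is a Kummer extension obtained by counting: the elements whose ideals are `p`-th powers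
outnumber the characters of the class group killed by `p` (`Recip.exists_selmer`).

**Analytic input.** All estimates come from equidistribution modulo ideals of boxes in a ring which
is finite over `ℤ` or `𝔽_q[X]` (`Sized`, `BoxSys`, `Arith`, `nonempty_arith`).

**Rings of `S`-integers.** A ring between such an `O` and its fraction field is a localization of
`O`, the class group being finite (`isLocalization_of_classGroup`), and symbols on a localization
restrict to symbols on `O` (`mennicke_trivial_loc`). For number fields `O` is the ring of integers.
For function fields `O` is the integral closure of `𝔽_q[x]`, where `x ∈ R` is a separating element
(`isSeparable_num_or_den`, `E_eq_top_functionField`).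
-/


/-!
STATEMENT 6. Let `R` be a Dedekind ring of arithmetic type and `l ≥ 2`. Then the
symplectic group `Sp(2l,R)` is generated by symplectic transvections.
-/

/-- A field `F` is a global field if it is a number field or a function field, i.e. a finite
extension of `𝔽_q(t)` for a finite field `𝔽_q`. -/
def IsGlobalField (F : Type) [Field F] : Prop :=
  NumberField F ∨
    ∃ (Fq : Type) (_ : Field Fq) (_ : Fintype Fq) (_ : Algebra (RatFunc Fq) F),
      FunctionField Fq F

/-- `R` is a Dedekind ring of arithmetic type: `R` is (isomorphic to) the ring of `S`-integers
`{x ∈ F : v(x) ≥ 0 for all places v ∉ S}` of a global field `F`, where `S` is a finite nonempty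
set of places of `F` containing all the archimedean ones.  The nonarchimedean places of a global
field `F` are exactly its proper valuation subrings, and the archimedean places (present only in
the number field case, where the nonemptiness of `S` is automatic) impose no condition on `x`;
hence `S` is encoded below by its (finite) set of nonarchimedean members. -/
def IsDedekindRingOfArithmeticType (R : Type) [CommRing R] : Prop :=
  ∃ (F : Type) (_ : Field F) (_ : Algebra R F) (_ : IsFractionRing R F)
    (S : Set (ValuationSubring F)),
      S.Finite ∧
      (∀ x : F, x ∈ (algebraMap R F).range ↔
        ∀ V : ValuationSubring F, V ≠ ⊤ → V ∉ S → x ∈ V) ∧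
      (NumberField F ∨ (S.Nonempty ∧ ∃ (Fq : Type) (_ : Field Fq) (_ : Fintype Fq)
          (_ : Algebra (RatFunc Fq) F), FunctionField Fq F))

/-- The set of elementary transvections `e_{ij}(r) = 1 + r·E_{ij}`, `i ≠ j`, in `SL(n,R)`. -/
def ElemTransvections (n : ℕ) (R : Type) [CommRing R] :
    Set (Matrix.SpecialLinearGroup (Fin n) R) :=
  {g | ∃ (i j : Fin n) (r : R), i ≠ j ∧
    (g : Matrix (Fin n) (Fin n) R) = Matrix.transvection i j r}

/-- `g` is a product of at most `L` elements of the set `X`. -/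
def IsProductOfAtMost {G : Type*} [Monoid G] (X : Set G) (L : ℕ) (g : G) : Prop :=
  ∃ (m : ℕ) (y : Fin m → G), m ≤ L ∧ (∀ i, y i ∈ X) ∧ g = (List.ofFn y).prod
open Matrix in
/-- `g ∈ Sp(2l,R)` is a symplectic transvection: it acts on `R^{2l}` by
`v ↦ v + r·ω(v,u)·u` for some vector `u` and scalar `r`, where `ω` is the standard
alternating form given by the matrix `J`, i.e. `ω(v,u) = vᵀ J u`. -/
def IsSymplecticTransvection {l : Type} [DecidableEq l] [Fintype l] {R : Type} [CommRing R]
    (g : Matrix.symplecticGroup l R) : Prop :=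
  ∃ (u : l ⊕ l → R) (r : R), ∀ v : l ⊕ l → R,
    (g : Matrix (l ⊕ l) (l ⊕ l) R).mulVec v = v + (r * (v ⬝ᵥ (Matrix.J l R).mulVec u)) • u

/-! ### Transvections and the reduction to one hyperbolic plane -/

namespace SpGen
open Matrix
section basics
variable {ι : Type} [DecidableEq ι] [Fintype ι] {R : Type} [CommRing R]

/-- The standard alternating form `ω(v,u) = vᵀ J u`. -/
def om (v u : ι ⊕ ι → R) : R := v ⬝ᵥ (Matrix.J ι R).mulVec u

lemma om_eq (v u : ι ⊕ ι → R) :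
    om v u = ∑ i, (v (.inr i) * u (.inl i) - v (.inl i) * u (.inr i)) := by
  simp only [om, Matrix.J, dotProduct, Fintype.sum_sum_type, mulVec, fromBlocks_apply₁₁,
    fromBlocks_apply₁₂, fromBlocks_apply₂₁, fromBlocks_apply₂₂, Matrix.zero_apply, zero_mul,
    Finset.sum_const_zero, zero_add, add_zero, Matrix.neg_apply, Matrix.one_apply]
  simp only [neg_mul, ite_mul, one_mul, zero_mul, Finset.sum_ite_eq, Finset.mem_univ, if_true,
    Finset.sum_neg_distrib, mul_neg, Finset.sum_sub_distrib]
  ring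

lemma om_add_left (v w u : ι ⊕ ι → R) : om (v + w) u = om v u + om w u := by
  simp [om, add_dotProduct]
lemma om_smul_left (c : R) (v u : ι ⊕ ι → R) : om (c • v) u = c * om v u := by
  simp [om]
lemma om_add_right (v w u : ι ⊕ ι → R) : om u (v + w) = om u v + om u w := by
  simp [om, mulVec_add]
lemma om_smul_right (c : R) (v u : ι ⊕ ι → R) : om u (c • v) = c * om u v := by
  simp [om, mulVec_smul]
lemma om_self (v : ι ⊕ ι → R) : om v v = 0 := by
  rw [om_eq]; exact Finset.sum_eq_zero fun i _ => by ring
lemma om_swap (v u : ι ⊕ ι → R) : om v u = - om u v := by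
  rw [om_eq, om_eq, ← Finset.sum_neg_distrib]; exact Finset.sum_congr rfl fun i _ => by ring
lemma om_sub_left (v w u : ι ⊕ ι → R) : om (v - w) u = om v u - om w u := by
  simp [om, sub_dotProduct]
lemma om_sub_right (v w u : ι ⊕ ι → R) : om u (v - w) = om u v - om u w := by
  simp [om, mulVec_sub]

/-- Symplectic matrices are those preserving the form `ω`. -/
lemma mem_iff_om (A : Matrix (ι ⊕ ι) (ι ⊕ ι) R) :
    A ∈ symplecticGroup ι R ↔ ∀ v w, om (A *ᵥ v) (A *ᵥ w) = om v w := by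
  rw [SymplecticGroup.mem_iff']
  have key : ∀ v w, om (A *ᵥ v) (A *ᵥ w) = v ⬝ᵥ (Aᵀ * J ι R * A) *ᵥ w := by
    intro v w
    rw [om, ← Matrix.vecMul_transpose, ← Matrix.dotProduct_mulVec, mulVec_mulVec, mulVec_mulVec,
      Matrix.mul_assoc]
  constructor
  · intro h v w; rw [key, h]; rfl
  · intro h
    refine Matrix.ext fun i j => ?_
    have := h (Pi.single i 1) (Pi.single j 1)
    rw [key] at this
    simpa [om] using this

/-- The underlying matrix of the transvection `v ↦ v + r·ω(v,u)·u`. -/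
def Tm (u : ι ⊕ ι → R) (r : R) : Matrix (ι ⊕ ι) (ι ⊕ ι) R :=
  1 + r • vecMulVec u (J ι R *ᵥ u)

lemma Tm_mulVec (u : ι ⊕ ι → R) (r : R) (v : ι ⊕ ι → R) :
    Tm u r *ᵥ v = v + (r * om v u) • u := by
  ext i
  simp [Tm, add_mulVec, smul_mulVec, vecMulVec_mulVec, om, dotProduct_comm]
  ring

lemma Tm_mem (u : ι ⊕ ι → R) (r : R) : Tm u r ∈ symplecticGroup ι R := by
  rw [mem_iff_om]; intro v w
  simp only [Tm_mulVec, om_add_left, om_add_right, om_smul_left, om_smul_right, om_self]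
  rw [om_swap u w]; ring

/-- The symplectic transvection `v ↦ v + r·ω(v,u)·u`. -/
def T (u : ι ⊕ ι → R) (r : R) : symplecticGroup ι R := ⟨Tm u r, Tm_mem u r⟩

variable (ι R) in
/-- The subgroup generated by the symplectic transvections. -/
def E : Subgroup (symplecticGroup ι R) := Subgroup.closure {g | IsSymplecticTransvection g}

lemma T_isT (u : ι ⊕ ι → R) (r : R) : IsSymplecticTransvection (T u r) :=
  ⟨u, r, fun v => Tm_mulVec u r v⟩

lemma T_mem (u : ι ⊕ ι → R) (r : R) : T u r ∈ E ι R := Subgroup.subset_closure (T_isT u r)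

lemma ext_mulVec {g h : symplecticGroup ι R} (H : ∀ v, g.1 *ᵥ v = h.1 *ᵥ v) : g = h :=
  Subtype.ext (Matrix.ext_of_mulVec_single fun _ => H _)

lemma eq_T_of_isT {g : symplecticGroup ι R} (h : IsSymplecticTransvection g) :
    ∃ u r, g = T u r := by
  obtain ⟨u, r, h⟩ := h
  exact ⟨u, r, ext_mulVec fun v => by rw [h, T, Tm_mulVec]; rfl⟩

lemma om_act (g : symplecticGroup ι R) (v w : ι ⊕ ι → R) :
    om (g.1 *ᵥ v) (g.1 *ᵥ w) = om v w := (mem_iff_om g.1).1 g.2 v w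

lemma mul_act (g h : symplecticGroup ι R) (v : ι ⊕ ι → R) :
    (g * h).1 *ᵥ v = g.1 *ᵥ (h.1 *ᵥ v) := by
  rw [mulVec_mulVec]; rfl

/-- Conjugating a transvection by `g` replaces its vector `u` by `g u`, so that `E` is normal. -/
lemma conj_T (g : symplecticGroup ι R) (u : ι ⊕ ι → R) (r : R) :
    g * T u r * g⁻¹ = T (g.1 *ᵥ u) r := by
  rw [mul_inv_eq_iff_eq_mul]
  refine ext_mulVec fun v => ?_
  rw [mul_act, mul_act, T, T, Tm_mulVec, Tm_mulVec, om_act, mulVec_add, mulVec_smul]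

instance E_normal : (E ι R).Normal := by
  rw [← Subgroup.normalizer_eq_top_iff, eq_top_iff, E, Subgroup.le_normalizer_closure_iff]
  intro h _ g hg
  obtain ⟨u, r, rfl⟩ := eq_T_of_isT hg
  rw [conj_T]; exact T_mem _ _

/-- The basis vector `e_i`. -/
def eB (i : ι) : ι ⊕ ι → R := Pi.single (.inl i) 1
/-- The basis vector `f_i`, dual to `e_i`. -/
def fB (i : ι) : ι ⊕ ι → R := Pi.single (.inr i) 1

lemma om_eB (v : ι ⊕ ι → R) (i : ι) : om v (eB i) = v (.inr i) := by
  rw [om_eq]; simp [eB, Pi.single_apply]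
lemma om_fB (v : ι ⊕ ι → R) (i : ι) : om v (fB i) = - v (.inl i) := by
  rw [om_eq]; simp [fB, Pi.single_apply]

/-- `y` is the image of `x` under a product of transvections fixing the set `W` pointwise. -/
def Reach (W : Set (ι ⊕ ι → R)) (x y : ι ⊕ ι → R) : Prop :=
  ∃ e ∈ E ι R, (∀ w ∈ W, e.1 *ᵥ w = w) ∧ e.1 *ᵥ x = y

lemma Reach.trans {W : Set (ι ⊕ ι → R)} {x y z : ι ⊕ ι → R} (h : Reach W x y) (h' : Reach W y z) :
    Reach W x z := by
  obtain ⟨e, he, h1, h2⟩ := h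
  obtain ⟨e', he', h1', h2'⟩ := h'
  exact ⟨e' * e, mul_mem he' he, fun w hw => by rw [mul_act, h1 w hw, h1' w hw],
    by rw [mul_act, h2, h2']⟩

lemma reach_T {W : Set (ι ⊕ ι → R)} (x u : ι ⊕ ι → R) (r : R) (hu : ∀ w ∈ W, om w u = 0) :
    Reach W x (x + (r * om x u) • u) :=
  ⟨T u r, T_mem u r, fun w hw => by simp [T, Tm_mulVec, hu w hw], Tm_mulVec u r x⟩

lemma reach_unit {W : Set (ι ⊕ ι → R)} {x y : ι ⊕ ι → R} (hx : ∀ w ∈ W, om w (x - y) = 0)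
    (h : IsUnit (om x y)) : Reach W x y := by
  obtain ⟨r, hr⟩ := h.exists_left_inv
  have := reach_T x (x - y) r hx
  rw [om_sub_right, om_self, zero_sub, mul_neg, hr] at this
  simpa using this

end basics

/-- In a Dedekind domain, elements generating the unit ideal modulo a nonzero ideal can be
combined into a single one (stable rank one of `R/I`). -/
lemma exists_add_mul_sup_eq_top {R : Type*} [CommRing R] [IsDedekindDomain R] (I : Ideal R)
    (hI : I ≠ ⊥) (a c : R) (h : ∀ M : Ideal R, M.IsMaximal → I ≤ M → a ∈ M → c ∉ M) :
    ∃ t : R, Ideal.span {c + t * a} ⊔ I = ⊤ := by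
  classical
  have hfin := Ideal.finite_factors hI
  obtain ⟨t, ht⟩ := IsDedekindDomain.exists_forall_sub_mem_ideal
    (s := hfin.toFinset) (fun v => v.asIdeal) (fun _ => 1)
    (fun v _ => v.prime) (fun v _ w _ hvw h => hvw (IsDedekindDomain.HeightOneSpectrum.ext h))
    (fun v => if c ∈ v.1.asIdeal then 1 else 0)
  refine ⟨t, ?_⟩
  by_contra hne
  obtain ⟨M, hM, hle⟩ := Ideal.exists_le_maximal _ hne
  have hIM : I ≤ M := le_sup_right.trans hle
  have hcM : c + t * a ∈ M := hle (Ideal.mem_sup_left (Ideal.mem_span_singleton_self _))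
  let v : IsDedekindDomain.HeightOneSpectrum R := ⟨M, hM.isPrime, fun h => hI (by rw [h] at hIM; exact le_bot_iff.1 hIM)⟩
  have hv : v ∈ hfin.toFinset := by
    rw [Set.Finite.mem_toFinset]; exact Ideal.dvd_iff_le.2 hIM
  have h1 := ht v hv
  simp only [pow_one] at h1
  change t - (if c ∈ M then 1 else 0) ∈ M at h1
  by_cases hc : c ∈ M
  · rw [if_pos hc] at h1
    have h2 : a ∈ M := by
      have : a = (c + t * a) - c - (t - 1) * a := by ring
      rw [this]
      exact M.sub_mem (M.sub_mem hcM hc) (M.mul_mem_right _ h1)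
    exact h M hM hIM h2 hc
  · rw [if_neg hc, sub_zero] at h1
    exact hc (by simpa using M.sub_mem hcM (M.mul_mem_right a h1))

section reduction
variable {ι : Type} [DecidableEq ι] [Fintype ι] {R : Type} [CommRing R]

/-- The form as a linear functional of its second argument. -/
def omL (x : ι ⊕ ι → R) : (ι ⊕ ι → R) →ₗ[R] R where
  toFun := om x
  map_add' a b := om_add_right a b x
  map_smul' c a := om_smul_right c a x

/-- The vectors orthogonal to `W` whose components in the `i`-th plane vanish. -/
def perpPlane (W : Set (ι ⊕ ι → R)) (i : ι) : Submodule R (ι ⊕ ι → R) where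
  carrier := {y | (∀ w ∈ W, om w y = 0) ∧ y (.inl i) = 0 ∧ y (.inr i) = 0}
  add_mem' := by
    rintro a b ⟨h1, h2, h3⟩ ⟨h1', h2', h3'⟩
    exact ⟨fun w hw => by rw [om_add_right, h1 w hw, h1' w hw, add_zero], by simp [h2, h2'],
      by simp [h3, h3']⟩
  zero_mem' := ⟨fun w _ => by simp [om], rfl, rfl⟩
  smul_mem' := by
    rintro c a ⟨h1, h2, h3⟩
    exact ⟨fun w hw => by rw [om_smul_right, h1 w hw, mul_zero], by simp [h2],
      by simp [h3]⟩

/-- A vector `x` with a symplectic partner `y0` can be moved to the `i`-th basis vector by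
transvections fixing `W`, provided that `ω x` does not vanish on the vectors of `perpPlane W i`: the
values of `ω x` there form a nonzero ideal, modulo which the Dedekind domain `R` is semilocal. -/
lemma reach_eB_aux [IsDedekindDomain R] {W : Set (ι ⊕ ι → R)} {i : ι}
    (hei : ∀ w ∈ W, om w (eB i) = 0) (hfi : ∀ w ∈ W, om w (fB i) = 0)
    {x y0 : ι ⊕ ι → R} (hx : ∀ w ∈ W, om w x = 0) (hy0 : ∀ w ∈ W, om w y0 = 0)
    (h1 : om x y0 = 1) (hI : (perpPlane W i).map (omL x) ≠ ⊥) : Reach W x (eB i) := by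
  have hdec : ∀ y : ι ⊕ ι → R, (∀ w ∈ W, om w y = 0) →
      y - y (.inl i) • eB i - y (.inr i) • fB i ∈ perpPlane W i := by
    intro y hy
    refine ⟨fun w hw => ?_, ?_, ?_⟩
    · rw [om_sub_right, om_sub_right, om_smul_right, om_smul_right, hy w hw, hei w hw, hfi w hw]
      ring
    · simp [eB, fB]
    · simp [eB, fB]
  obtain ⟨t, ht⟩ := exists_add_mul_sup_eq_top ((perpPlane W i).map (omL x)) hI
    (x (.inl i)) (x (.inr i)) (by
      intro M hM hle ha hc
      apply hM.ne_top
      rw [Ideal.eq_top_iff_one, ← h1]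
      have h2 : om x y0 = om x (y0 - y0 (.inl i) • eB i - y0 (.inr i) • fB i)
        + y0 (.inl i) * x (.inr i) - y0 (.inr i) * x (.inl i) := by
        rw [om_sub_right, om_sub_right, om_smul_right, om_smul_right, om_eB, om_fB]; ring
      rw [h2]
      exact M.sub_mem (M.add_mem (hle (Submodule.mem_map_of_mem (hdec y0 hy0)))
        (M.mul_mem_left _ hc)) (M.mul_mem_left _ ha))
  rw [Ideal.eq_top_iff_one, Submodule.mem_sup] at ht
  obtain ⟨p, hp, q, ⟨z, hz, rfl⟩, hpq⟩ := ht
  obtain ⟨s, rfl⟩ := Ideal.mem_span_singleton'.1 hp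
  set x' := x + (-t * om x (fB i)) • fB i with hx'
  have hr1 : Reach W x x' := reach_T x (fB i) (-t) hfi
  have hx'i : x' (.inl i) = x (.inl i) := by simp [hx', fB]
  have hx'W : ∀ w ∈ W, om w x' = 0 := fun w hw => by
    rw [hx', om_add_right, om_smul_right, hx w hw, hfi w hw]; ring
  obtain ⟨hz1, hz2, hz3⟩ := hz
  have hfz : om (fB i) z = 0 := by rw [om_swap, om_fB, hz2]; simp
  have hfe : om (fB i : ι ⊕ ι → R) (eB i) = 1 := by rw [om_eB]; simp [fB]
  set y := s • eB i + z with hy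
  have hxy : om x' y = 1 := by
    rw [hx', hy]
    have hx1 : om x z = 1 - s * (x (.inr i) + t * x (.inl i)) := by
      rw [← hpq]; simp [omL]
    simp only [om_add_left, om_add_right, om_smul_left, om_smul_right, hfz, hfe, om_eB x, om_fB,
      hx1]
    ring
  set y' := (1 + x' (.inl i)) • y + fB i with hy'
  have hxy' : om x' y' = 1 := by
    rw [hy', om_add_right, om_smul_right, hxy, om_fB]; ring
  have hyi : y' (.inr i) = 1 := by simp [hy', hy, eB, fB, hz3]
  have hyW : ∀ w ∈ W, om w y' = 0 := fun w hw => by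
    rw [hy', hy]; simp only [om_add_right, om_smul_right, hei w hw, hz1 w hw, hfi w hw]; ring
  refine hr1.trans ((reach_unit (y := y') ?_ ?_).trans (reach_unit ?_ ?_))
  · intro w hw; rw [om_sub_right, hx'W w hw, hyW w hw, sub_zero]
  · rw [hxy']; exact isUnit_one
  · intro w hw; rw [om_sub_right, hyW w hw, hei w hw, sub_zero]
  · rw [om_eB, hyi]; exact isUnit_one

/-- As `reach_eB_aux`; the nonvanishing condition is arranged by using a second plane, the `k`-th.
-/
lemma reach_eB [IsDedekindDomain R] {W : Set (ι ⊕ ι → R)} {i k : ι} (hik : i ≠ k)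
    (hei : ∀ w ∈ W, om w (eB i) = 0) (hfi : ∀ w ∈ W, om w (fB i) = 0)
    (hek : ∀ w ∈ W, om w (eB k) = 0) (hfk : ∀ w ∈ W, om w (fB k) = 0)
    {x y0 : ι ⊕ ι → R} (hx : ∀ w ∈ W, om w x = 0) (hy0 : ∀ w ∈ W, om w y0 = 0)
    (h1 : om x y0 = 1) : Reach W x (eB i) := by
  by_cases hI : (perpPlane W i).map (omL x) = ⊥
  swap
  · exact reach_eB_aux hei hfi hx hy0 h1 hI
  have hekP : eB k ∈ perpPlane W i := ⟨hek, by simp [eB, hik], by simp [eB]⟩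
  have hfkP : fB k ∈ perpPlane W i := ⟨hfk, by simp [fB], by simp [fB, hik]⟩
  have hz : ∀ y ∈ perpPlane W i, om x y = 0 := fun y hy => by
    have := Submodule.mem_map_of_mem (f := omL x) hy
    rw [hI, Submodule.mem_bot] at this; exact this
  by_cases hxi : x (.inl i) = 0
  · apply reach_unit
    · intro w hw; rw [om_sub_right, hx w hw, hei w hw, sub_zero]
    · rw [om_eB]
      refine IsUnit.of_mul_eq_one (y0 (.inl i)) ?_
      have h2 := hz (y0 - y0 (.inl i) • eB i - y0 (.inr i) • fB i) ⟨fun w hw => by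
        rw [om_sub_right, om_sub_right, om_smul_right, om_smul_right, hy0 w hw, hei w hw, hfi w hw]
        ring, by simp [eB, fB], by simp [eB, fB]⟩
      rw [om_sub_right, om_sub_right, om_smul_right, om_smul_right, om_eB, om_fB, hxi, h1] at h2
      linear_combination -h2
  · set u : ι ⊕ ι → R := eB k + fB i with hu
    have huW : ∀ w ∈ W, om w u = 0 := fun w hw => by
      rw [hu, om_add_right, hek w hw, hfi w hw, add_zero]
    have hxu : om x u = - x (.inl i) := by
      rw [hu, om_add_right, hz _ hekP, om_fB, zero_add]
    refine (reach_T x u 1 huW).trans (reach_eB_aux hei hfi (y0 := y0 + (1 * om y0 u) • u) ?_ ?_ ?_ ?_)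
    · intro w hw; rw [om_add_right, om_smul_right, huW w hw, hx w hw]; ring
    · intro w hw; rw [om_add_right, om_smul_right, huW w hw, hy0 w hw]; ring
    · rw [← Tm_mulVec, ← Tm_mulVec]; exact (om_act (T u 1) x y0).trans h1
    · intro h0
      have := Submodule.mem_map_of_mem (f := omL (x + (1 * om x u) • u)) hfkP
      rw [h0, Submodule.mem_bot] at this
      change om _ _ = 0 at this
      rw [om_add_left, om_smul_left, hz _ hfkP, hxu, hu, om_add_left, om_fB, om_fB] at this
      simp [eB, fB] at this
      exact hxi this

/-- Modulo transvections, a symplectic matrix can be made to fix all hyperbolic planes but one. -/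
theorem exists_fix_planes [IsDedekindDomain R] (i₀ : ι) (g : symplecticGroup ι R) (S : Finset ι)
    (hS : i₀ ∉ S) : ∃ e ∈ E ι R, ∀ j ∈ S,
      (e * g).1 *ᵥ eB j = eB j ∧ (e * g).1 *ᵥ fB j = fB j := by
  induction S using Finset.induction_on with
  | empty => exact ⟨1, one_mem _, by simp⟩
  | insert i S hiS ih =>
    obtain ⟨hne, hS'⟩ : i₀ ≠ i ∧ i₀ ∉ S := by simpa using hS
    obtain ⟨e, he, hfix⟩ := ih hS'
    set g1 := e * g with hg1
    set W : Set (ι ⊕ ι → R) := {w | ∃ j ∈ S, w = eB j ∨ w = fB j} with hW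
    have hWfix : ∀ w ∈ W, g1.1 *ᵥ w = w := by
      rintro w ⟨j, hj, rfl | rfl⟩
      exacts [(hfix j hj).1, (hfix j hj).2]
    have hperp : ∀ i, i ∉ S → (∀ w ∈ W, om w (eB i) = 0) ∧ (∀ w ∈ W, om w (fB i) = 0) := by
      intro i hi
      constructor <;> rintro w ⟨j, hj, rfl | rfl⟩ <;>
        have : j ≠ i := fun h => hi (h ▸ hj)
      · rw [om_eB]; simp [eB]
      · rw [om_eB]; simp [fB, this.symm]
      · rw [om_fB]; simp [eB, this.symm]
      · rw [om_fB]; simp [fB]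
    have hact : ∀ v, (∀ w ∈ W, om w v = 0) → ∀ w ∈ W, om w (g1.1 *ᵥ v) = 0 := by
      intro v hv w hw
      rw [← hWfix w hw, om_act, hv w hw]
    obtain ⟨e2, he2, h2W, h2⟩ := reach_eB (W := W) (i := i) (k := i₀) (x := g1.1 *ᵥ eB i)
      (y0 := g1.1 *ᵥ (-1 : R) • fB i) (Ne.symm hne) (hperp i hiS).1 (hperp i hiS).2 (hperp i₀ hS').1
      (hperp i₀ hS').2 (hact _ (hperp i hiS).1)
      (hact _ (fun w hw => by rw [om_smul_right, (hperp i hiS).2 w hw, mul_zero]))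
      (by rw [om_act, om_smul_right, om_fB]; simp [eB])
    set f' := (e2 * g1).1 *ᵥ fB i with hf'
    have hfe : om f' (eB i) = 1 := by
      rw [← h2, ← mul_act, om_act, om_eB]; simp [fB]
    set W' : Set (ι ⊕ ι → R) := insert (eB i) W
    have hf'W : ∀ w ∈ W, om w f' = 0 := by
      intro w hw
      rw [hf', mul_act]
      nth_rewrite 1 [← h2W w hw]
      rw [om_act]
      exact hact _ (hperp i hiS).2 w hw
    have hr : Reach W' f' (fB i) := by
      have h3 := reach_T (W := W') f' (eB i) (om f' (fB i) - 1) (by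
        rintro w (rfl | hw)
        · exact om_self _
        · exact (hperp i hiS).1 w hw)
      rw [hfe, mul_one] at h3
      refine h3.trans (reach_unit ?_ ?_)
      · rintro w (rfl | hw)
        · rw [om_sub_right, om_add_right, om_smul_right, om_self, om_swap, hfe, om_fB (eB i)]
          simp [eB]
        · rw [om_sub_right, om_add_right, om_smul_right, hf'W w hw, (hperp i hiS).1 w hw,
            (hperp i hiS).2 w hw]; ring
      · rw [om_add_left, om_smul_left, om_fB (eB i)]
        simp [eB]
    obtain ⟨e3, he3, h3W, h3⟩ := hr
    refine ⟨e3 * e2 * e, mul_mem (mul_mem he3 he2) he, ?_⟩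
    have hassoc : e3 * e2 * e * g = e3 * (e2 * g1) := by simp [hg1, mul_assoc]
    rw [hassoc]
    intro j hj
    rcases Finset.mem_insert.1 hj with rfl | hj
    · refine ⟨?_, ?_⟩
      · rw [mul_act, mul_act, h2]; exact h3W _ (Set.mem_insert _ _)
      · rw [mul_act]; exact h3
    · have hw1 : eB j ∈ W := ⟨j, hj, Or.inl rfl⟩
      have hw2 : fB j ∈ W := ⟨j, hj, Or.inr rfl⟩
      refine ⟨?_, ?_⟩
      · rw [mul_act, mul_act, hWfix _ hw1, h2W _ hw1, h3W _ (Set.mem_insert_of_mem _ hw1)]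
      · rw [mul_act, mul_act, hWfix _ hw2, h2W _ hw2, h3W _ (Set.mem_insert_of_mem _ hw2)]

end reduction
end SpGen

/-! ### Subgroups of `Sp₄` -/

namespace SpGen
open Matrix
section planes
variable {ι : Type} [DecidableEq ι] [Fintype ι] {R : Type} [CommRing R]

lemma ext_basis {g h : symplecticGroup ι R} (H : ∀ j, g.1 *ᵥ eB j = h.1 *ᵥ eB j)
    (H' : ∀ j, g.1 *ᵥ fB j = h.1 *ᵥ fB j) : g = h :=
  Subtype.ext (Matrix.ext_of_mulVec_single fun i => by
    rcases i with i | i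
    exacts [H i, H' i])

/-- A symplectic matrix fixing all hyperbolic planes but the `i₀`-th acts on that plane by a
matrix of determinant one. -/
lemma exists_plane_matrix (i₀ : ι) (g : symplecticGroup ι R)
    (hg : ∀ j, j ≠ i₀ → g.1 *ᵥ eB j = eB j ∧ g.1 *ᵥ fB j = fB j) :
    ∃ a b c d : R, a * d - b * c = 1 ∧ g.1 *ᵥ eB i₀ = a • eB i₀ + c • fB i₀ ∧
      g.1 *ᵥ fB i₀ = b • eB i₀ + d • fB i₀ := by
  have key : ∀ v : ι ⊕ ι → R, (∀ j, j ≠ i₀ → om v (eB j) = 0 ∧ om v (fB j) = 0) →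
      g.1 *ᵥ v = (g.1 *ᵥ v) (.inl i₀) • eB i₀ + (g.1 *ᵥ v) (.inr i₀) • fB i₀ := by
    intro v hv
    ext (j | j)
    · by_cases hj : j = i₀
      · subst hj; simp [eB, fB]
      · have := om_act g v (fB j)
        rw [(hg j hj).2, (hv j hj).2, om_fB] at this
        rw [neg_eq_zero.1 this]
        simp [eB, fB, hj]
    · by_cases hj : j = i₀
      · subst hj; simp [eB, fB]
      · have := om_act g v (eB j)
        rw [(hg j hj).1, (hv j hj).1, om_eB] at this
        rw [this]
        simp [eB, fB, hj]
  have h1 := key (eB i₀) (fun j hj => by rw [om_eB, om_fB]; simp [eB, hj])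
  have h2 := key (fB i₀) (fun j hj => by rw [om_eB, om_fB]; simp [fB, hj])
  refine ⟨_, _, _, _, ?_, h1, h2⟩
  have h3 := om_act g (fB i₀) (eB i₀)
  rw [h1, h2] at h3
  simp only [om_add_left, om_add_right, om_smul_left, om_smul_right, om_self] at h3
  have e1 : om (fB i₀ : ι ⊕ ι → R) (eB i₀) = 1 := by rw [om_eB]; simp [fB]
  rw [om_swap (eB i₀) (fB i₀), e1] at h3
  linear_combination h3

/-- The embedding of `R⁴` onto the planes `i₀`, `i₁` of `R^{2l}`. -/
def emb (i₀ i₁ : ι) (v : Fin 2 ⊕ Fin 2 → R) : ι ⊕ ι → R :=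
  v (.inl 0) • eB i₀ + v (.inl 1) • eB i₁ + v (.inr 0) • fB i₀ + v (.inr 1) • fB i₁

lemma emb_add_smul (i₀ i₁ : ι) (v w : Fin 2 ⊕ Fin 2 → R) (c : R) :
    emb i₀ i₁ (v + c • w) = emb i₀ i₁ v + c • emb i₀ i₁ w := by
  simp only [emb, Pi.add_apply, Pi.smul_apply, smul_eq_mul]; module

lemma om_emb {i₀ i₁ : ι} (h : i₀ ≠ i₁) (v w : Fin 2 ⊕ Fin 2 → R) :
    om (emb i₀ i₁ v) (emb i₀ i₁ w) = om v w := by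
  have h' := h.symm
  rw [om_eq v w, emb, emb, Fin.sum_univ_two]
  simp only [om_add_right, om_smul_right, om_eB, om_fB, Pi.add_apply, Pi.smul_apply]
  simp [eB, fB, h, h']
  ring

/-- An element of `E` for `Sp₄` acts, as an element of `E ι R`, on the span of the planes `i₀` and
`i₁` and fixes the orthogonal complement of these planes. -/
lemma exists_transfer {i₀ i₁ : ι} (h : i₀ ≠ i₁) {g : symplecticGroup (Fin 2) R}
    (hg : g ∈ E (Fin 2) R) : ∃ g' ∈ E ι R, (∀ v, g'.1 *ᵥ emb i₀ i₁ v = emb i₀ i₁ (g.1 *ᵥ v)) ∧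
      ∀ w : ι ⊕ ι → R, (∀ v, om w (emb i₀ i₁ v) = 0) → g'.1 *ᵥ w = w := by
  induction hg using Subgroup.closure_induction with
  | mem x hx =>
    obtain ⟨u, r, rfl⟩ := eq_T_of_isT hx
    refine ⟨T (emb i₀ i₁ u) r, T_mem _ _, fun v => ?_, fun w hw => ?_⟩
    · rw [T, T, Tm_mulVec, Tm_mulVec, om_emb h, emb_add_smul]
    · rw [T, Tm_mulVec, hw]; simp
  | one => exact ⟨1, one_mem _, by simp, by simp⟩
  | mul x y _ _ hx hy =>
    obtain ⟨x', hx', h1, h2⟩ := hx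
    obtain ⟨y', hy', h3, h4⟩ := hy
    exact ⟨x' * y', mul_mem hx' hy', fun v => by rw [mul_act, h3, h1, mul_act],
      fun w hw => by rw [mul_act, h4 w hw, h2 w hw]⟩
  | inv x _ hx =>
    obtain ⟨x', hx', h1, h2⟩ := hx
    have hi : ∀ v, x'.1 *ᵥ (x'⁻¹.1 *ᵥ v) = v := fun v => by rw [← mul_act, mul_inv_cancel]; simp
    have hi' : ∀ v, x'⁻¹.1 *ᵥ (x'.1 *ᵥ v) = v := fun v => by rw [← mul_act, inv_mul_cancel]; simp
    have hj : ∀ v, x.1 *ᵥ (x⁻¹.1 *ᵥ v) = v := fun v => by rw [← mul_act, mul_inv_cancel]; simp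
    refine ⟨x'⁻¹, inv_mem hx', fun v => ?_, fun w hw => ?_⟩
    · nth_rewrite 1 [← hj v]; rw [← h1, hi']
    · nth_rewrite 1 [← h2 w hw]; rw [hi']

end planes

section sp4
variable {R : Type} [CommRing R]

/-- Column relations of a symplectic matrix. -/
lemma col_rel (P : symplecticGroup (Fin 2) R) (i j : Fin 2 ⊕ Fin 2) :
    P.1 (.inr 0) i * P.1 (.inl 0) j - P.1 (.inl 0) i * P.1 (.inr 0) j +
    (P.1 (.inr 1) i * P.1 (.inl 1) j - P.1 (.inl 1) i * P.1 (.inr 1) j) =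
    om (Pi.single i 1 : Fin 2 ⊕ Fin 2 → R) (Pi.single j 1) := by
  rw [← om_act P, mulVec_single_one, mulVec_single_one, om_eq, Fin.sum_univ_two]; rfl

/-- The matrix of determinant one with the given entries. -/
def mk2 (a b c d : R) (h : a * d - b * c = 1) : SpecialLinearGroup (Fin 2) R :=
  ⟨!![a, b; c, d], by simp [det_fin_two, h]⟩

lemma mem_sp4 (A B C D : Matrix (Fin 2) (Fin 2) R)
    (h1 : Aᵀ * C = Cᵀ * A) (h2 : Bᵀ * D = Dᵀ * B) (h3 : Aᵀ * D - Cᵀ * B = 1) :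
    fromBlocks A B C D ∈ symplecticGroup (Fin 2) R := by
  rw [SymplecticGroup.mem_iff', J, fromBlocks_transpose, fromBlocks_multiply, fromBlocks_multiply]
  have h4 : Dᵀ * A - Bᵀ * C = 1 := by
    have := congrArg transpose h3
    simpa [transpose_sub, transpose_mul] using this
  congr 1
  · simp [h1]
  · calc _ = -(Aᵀ * D - Cᵀ * B) := by simp [sub_eq_add_neg]
      _ = _ := by rw [h3]
  · calc _ = Dᵀ * A - Bᵀ * C := by simp [sub_eq_add_neg]
      _ = _ := h4
  · simp [h2]

/-- `SL₂` acting on the first hyperbolic plane. -/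
def long1 (A : SpecialLinearGroup (Fin 2) R) : symplecticGroup (Fin 2) R :=
  ⟨fromBlocks !![A.1 0 0, 0; 0, 1] !![A.1 0 1, 0; 0, 0] !![A.1 1 0, 0; 0, 0] !![A.1 1 1, 0; 0, 1], by
    have h := A.2
    rw [det_fin_two] at h
    apply mem_sp4 <;> ext i j <;> fin_cases i <;> fin_cases j <;> simp [mul_apply] <;>
      first | ring1 | linear_combination h⟩

/-- `SL₂` acting on the second hyperbolic plane. -/
def long2 (A : SpecialLinearGroup (Fin 2) R) : symplecticGroup (Fin 2) R :=
  ⟨fromBlocks !![1, 0; 0, A.1 0 0] !![0, 0; 0, A.1 0 1] !![0, 0; 0, A.1 1 0] !![1, 0; 0, A.1 1 1], by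
    have h := A.2
    rw [det_fin_two] at h
    apply mem_sp4 <;> ext i j <;> fin_cases i <;> fin_cases j <;> simp [mul_apply] <;>
      first | ring1 | linear_combination h⟩

/-- The Levi embedding `g ↦ diag(g, g⁻ᵀ)` of `SL₂`. -/
def lev (A : SpecialLinearGroup (Fin 2) R) : symplecticGroup (Fin 2) R :=
  ⟨fromBlocks !![A.1 0 0, A.1 0 1; A.1 1 0, A.1 1 1] 0 0 !![A.1 1 1, -A.1 1 0; -A.1 0 1, A.1 0 0], by
    have h := A.2
    rw [det_fin_two] at h
    apply mem_sp4 <;> ext i j <;> fin_cases i <;> fin_cases j <;> simp [mul_apply] <;>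
      first | ring1 | linear_combination h⟩

/-- Upper unipotents `(1 S; 0 1)`. -/
def Uu (x y z : R) : symplecticGroup (Fin 2) R :=
  ⟨fromBlocks 1 !![x, y; y, z] 0 1, by
    apply mem_sp4 <;> ext i j <;> fin_cases i <;> fin_cases j <;> simp [mul_apply]⟩

/-- Lower unipotents `(1 0; S 1)`. -/
def Ll (x y z : R) : symplecticGroup (Fin 2) R :=
  ⟨fromBlocks 1 0 !![x, y; y, z] 1, by
    apply mem_sp4 <;> ext i j <;> fin_cases i <;> fin_cases j <;> simp [mul_apply]⟩

lemma long1_mul (A B : SpecialLinearGroup (Fin 2) R) : long1 (A * B) = long1 A * long1 B := by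
  apply Subtype.ext
  change _ = (long1 A).1 * (long1 B).1
  simp only [long1, fromBlocks_multiply]
  congr 1 <;> ext i j <;> fin_cases i <;> fin_cases j <;> simp [mul_apply, Fin.sum_univ_two]

lemma long2_mul (A B : SpecialLinearGroup (Fin 2) R) : long2 (A * B) = long2 A * long2 B := by
  apply Subtype.ext
  change _ = (long2 A).1 * (long2 B).1
  simp only [long2, fromBlocks_multiply]
  congr 1 <;> ext i j <;> fin_cases i <;> fin_cases j <;> simp [mul_apply, Fin.sum_univ_two]

lemma lev_mul (A B : SpecialLinearGroup (Fin 2) R) : lev (A * B) = lev A * lev B := by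
  apply Subtype.ext
  change _ = (lev A).1 * (lev B).1
  simp only [lev, fromBlocks_multiply]
  congr 1 <;> ext i j <;> fin_cases i <;> fin_cases j <;>
    simp [mul_apply, Fin.sum_univ_two] <;> ring

lemma long_comm (A B : SpecialLinearGroup (Fin 2) R) : long1 A * long2 B = long2 B * long1 A := by
  apply Subtype.ext
  change (long1 A).1 * (long2 B).1 = (long2 B).1 * (long1 A).1
  simp only [long1, long2, fromBlocks_multiply]
  congr 1 <;> ext i j <;> fin_cases i <;> fin_cases j <;> simp [mul_apply, Fin.sum_univ_two]

lemma T_upper (p q r : R) : T (Sum.elim ![p, q] 0) r = Uu (r * p * p) (r * p * q) (r * q * q) := by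
  apply Subtype.ext
  change Tm _ _ = fromBlocks _ _ _ _
  ext (i | i) (j | j) <;> fin_cases i <;> fin_cases j <;>
    simp [Tm, J, vecMulVec_apply, fromBlocks_mulVec, mul_apply, Matrix.one_apply] <;> ring

lemma T_lower (p q r : R) :
    T (Sum.elim 0 ![p, q]) (-r) = Ll (r * p * p) (r * p * q) (r * q * q) := by
  apply Subtype.ext
  change Tm _ _ = fromBlocks _ _ _ _
  ext (i | i) (j | j) <;> fin_cases i <;> fin_cases j <;>
    simp [Tm, J, vecMulVec_apply, fromBlocks_mulVec, mul_apply, Matrix.one_apply] <;> ring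

lemma Uu_mul (x y z x' y' z' : R) : Uu x y z * Uu x' y' z' = Uu (x + x') (y + y') (z + z') := by
  apply Subtype.ext
  change (Uu x y z).1 * (Uu x' y' z').1 = _
  simp only [Uu, fromBlocks_multiply]
  congr 1 <;> ext i j <;> fin_cases i <;> fin_cases j <;>
    simp [mul_apply, Fin.sum_univ_two, add_comm]

lemma Ll_mul (x y z x' y' z' : R) : Ll x y z * Ll x' y' z' = Ll (x + x') (y + y') (z + z') := by
  apply Subtype.ext
  change (Ll x y z).1 * (Ll x' y' z').1 = _
  simp only [Ll, fromBlocks_multiply]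
  congr 1 <;> ext i j <;> fin_cases i <;> fin_cases j <;>
    simp [mul_apply, Fin.sum_univ_two, add_comm]

lemma Uu_mem (x y z : R) : Uu x y z ∈ E (Fin 2) R := by
  have h : Uu x y z = T (Sum.elim ![1, 1] 0) y * T (Sum.elim ![1, 0] 0) (x - y) *
      T (Sum.elim ![0, 1] 0) (z - y) := by
    rw [T_upper, T_upper, T_upper, Uu_mul, Uu_mul]; congr 1 <;> ring
  rw [h]; exact mul_mem (mul_mem (T_mem _ _) (T_mem _ _)) (T_mem _ _)

lemma Ll_mem (x y z : R) : Ll x y z ∈ E (Fin 2) R := by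
  have h : Ll x y z = T (Sum.elim 0 ![1, 1]) (-y) * T (Sum.elim 0 ![1, 0]) (-(x - y)) *
      T (Sum.elim 0 ![0, 1]) (-(z - y)) := by
    rw [T_lower, T_lower, T_lower, Ll_mul, Ll_mul]; congr 1 <;> ring
  rw [h]; exact mul_mem (mul_mem (T_mem _ _) (T_mem _ _)) (T_mem _ _)

lemma lev_upper_mem (t : R) : lev (mk2 1 t 0 1 (by ring)) ∈ E (Fin 2) R := by
  have h : lev (mk2 1 t 0 1 (by ring)) = T (Sum.elim ![1, 0] ![0, 1]) (-t) *
      T (Sum.elim ![1, 0] 0) t * T (Sum.elim 0 ![0, 1]) (-(-t)) := by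
    rw [T_upper, T_lower]
    apply Subtype.ext
    change fromBlocks _ _ _ _ = Tm _ _ * fromBlocks _ _ _ _ * fromBlocks _ _ _ _
    ext (i | i) (j | j) <;> fin_cases i <;> fin_cases j <;>
    simp [Tm, J, mk2, vecMulVec_apply, fromBlocks_mulVec, mul_apply, Matrix.one_apply]
  rw [h]; exact mul_mem (mul_mem (T_mem _ _) (T_mem _ _)) (T_mem _ _)

lemma lev_lower_mem (t : R) : lev (mk2 1 0 t 1 (by ring)) ∈ E (Fin 2) R := by
  have h : lev (mk2 1 0 t 1 (by ring)) = T (Sum.elim ![0, 1] ![1, 0]) (-t) *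
      T (Sum.elim ![0, 1] 0) t * T (Sum.elim 0 ![1, 0]) (-(-t)) := by
    rw [T_upper, T_lower]
    apply Subtype.ext
    change fromBlocks _ _ _ _ = Tm _ _ * fromBlocks _ _ _ _ * fromBlocks _ _ _ _
    ext (i | i) (j | j) <;> fin_cases i <;> fin_cases j <;>
    simp [Tm, J, mk2, vecMulVec_apply, fromBlocks_mulVec, mul_apply, Matrix.one_apply]
  rw [h]; exact mul_mem (mul_mem (T_mem _ _) (T_mem _ _)) (T_mem _ _)

lemma long1_upper_mem (t : R) : long1 (mk2 1 t 0 1 (by ring)) ∈ E (Fin 2) R := by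
  have : long1 (mk2 1 t 0 1 (by ring)) = Uu t 0 0 := by
    apply Subtype.ext
    change fromBlocks _ _ _ _ = fromBlocks _ _ _ _
    congr 1 <;> ext i j <;> fin_cases i <;> fin_cases j <;> simp [mk2]
  rw [this]; exact Uu_mem _ _ _

lemma long1_lower_mem (t : R) : long1 (mk2 1 0 t 1 (by ring)) ∈ E (Fin 2) R := by
  have : long1 (mk2 1 0 t 1 (by ring)) = Ll t 0 0 := by
    apply Subtype.ext
    change fromBlocks _ _ _ _ = fromBlocks _ _ _ _
    congr 1 <;> ext i j <;> fin_cases i <;> fin_cases j <;> simp [mk2]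
  rw [this]; exact Ll_mem _ _ _

lemma weyl_eq : (mk2 0 (-1) 1 0 (by ring) : SpecialLinearGroup (Fin 2) R) =
    mk2 1 (-1) 0 1 (by ring) * mk2 1 0 1 1 (by ring) * mk2 1 (-1) 0 1 (by ring) := by
  apply Subtype.ext
  change (!![_, _; _, _] : Matrix _ _ R) = !![_, _; _, _] * !![_, _; _, _] * !![_, _; _, _]
  simp

/-- A symplectic matrix with first row `(1,0 | 0,0)` and entry `-1` in the upper right corner of the
second plane block is a product of transvections. -/
lemma mem_of_row (P : symplecticGroup (Fin 2) R) (h1 : P.1 (.inl 0) (.inl 0) = 1)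
    (h2 : P.1 (.inl 0) (.inl 1) = 0) (h3 : P.1 (.inl 0) (.inr 0) = 0)
    (h4 : P.1 (.inl 0) (.inr 1) = 0) (h5 : P.1 (.inl 1) (.inr 1) = -1) : P ∈ E (Fin 2) R := by
  set m := P.1 (.inl 1) (.inl 0) with hm
  set al := P.1 (.inl 1) (.inl 1) with hal
  set n := P.1 (.inr 1) (.inl 0) with hn
  set k := P.1 (.inr 0) (.inl 0) with hk
  set dl := P.1 (.inr 1) (.inr 1) with hdl
  have hs := SymplecticGroup.mem_iff.1 P.2
  have hrow : ∀ i j, - (P.1 i (.inl 0) * P.1 j (.inr 0)) - P.1 i (.inl 1) * P.1 j (.inr 1) +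
      P.1 i (.inr 0) * P.1 j (.inl 0) + P.1 i (.inr 1) * P.1 j (.inl 1) = J (Fin 2) R i j := by
    intro i j
    rw [← hs]
    simp [mul_apply, J, Fin.sum_univ_two, Matrix.one_apply]
    ring
  have y1 : P.1 (.inl 1) (.inr 0) = 0 := by
    have := hrow (.inl 0) (.inl 1)
    simp [h1, h2, h3, h4, J] at this; exact this
  have y2 : P.1 (.inr 0) (.inr 0) = 1 := by
    have := hrow (.inl 0) (.inr 0)
    simp [h1, h2, h3, h4, J] at this; exact this
  have y3 : P.1 (.inr 1) (.inr 0) = 0 := by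
    have := hrow (.inl 0) (.inr 1)
    simp [h1, h2, h3, h4, J] at this; exact this
  have hga : P.1 (.inr 1) (.inl 1) = 1 - al * dl := by
    have := hrow (.inl 1) (.inr 1)
    simp [y1, y3, h5, J, ← hal, ← hdl] at this
    linear_combination -this
  have c1 := col_rel P (.inl 0) (.inl 1)
  have c2 := col_rel P (.inl 0) (.inr 1)
  rw [om_eq, Fin.sum_univ_two] at c1 c2
  simp [h1, h2, h4, h5, hga, ← hk, ← hm, ← hn, ← hal, ← hdl] at c1 c2
  have hP : P = Ll (k - n * m) n 0 * lev (mk2 1 0 m 1 (by ring)) *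
      (Ll 0 0 (1 - dl) * Uu 0 0 (-1) * Ll 0 0 (1 - al)) := by
    apply Subtype.ext
    change _ = fromBlocks _ _ _ _ * fromBlocks _ _ _ _ * (fromBlocks _ _ _ _ * fromBlocks _ _ _ _ *
      fromBlocks _ _ _ _)
    simp only [fromBlocks_multiply, Matrix.one_fin_two]
    ext (i | i) (j | j) <;> fin_cases i <;> fin_cases j <;>
      simp [mk2, mul_apply, Fin.sum_univ_two, h1, h2, h3, h4, h5, y1, y2, y3, hga, ← hk, ← hm,
        ← hn, ← hal, ← hdl] <;> first | ring1 | linear_combination -c1 | linear_combination -c2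
  rw [hP]
  exact mul_mem (mul_mem (Ll_mem _ _ _) (lev_lower_mem m))
    (mul_mem (mul_mem (Ll_mem _ _ _) (Uu_mem _ _ _)) (Ll_mem _ _ _))

end sp4
end SpGen

/-! ### The quotient of `Sp₄` by transvections and the symbol `[a, b]` -/

namespace SpGen
open Matrix
section quot
variable {R : Type} [CommRing R]

lemma long1_eB (A : SpecialLinearGroup (Fin 2) R) :
    (long1 A).1 *ᵥ eB 0 = A.1 0 0 • eB 0 + A.1 1 0 • fB 0 ∧
    (long1 A).1 *ᵥ fB 0 = A.1 0 1 • eB 0 + A.1 1 1 • fB 0 ∧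
    (long1 A).1 *ᵥ eB 1 = eB 1 ∧ (long1 A).1 *ᵥ fB 1 = fB 1 := by
  refine ⟨?_, ?_, ?_, ?_⟩ <;> ext (i | i) <;> fin_cases i <;> simp [long1, eB, fB]

lemma long2_eB (A : SpecialLinearGroup (Fin 2) R) :
    (long2 A).1 *ᵥ eB 1 = A.1 0 0 • eB 1 + A.1 1 0 • fB 1 ∧
    (long2 A).1 *ᵥ fB 1 = A.1 0 1 • eB 1 + A.1 1 1 • fB 1 ∧
    (long2 A).1 *ᵥ eB 0 = eB 0 ∧ (long2 A).1 *ᵥ fB 0 = fB 0 := by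
  refine ⟨?_, ?_, ?_, ?_⟩ <;> ext (i | i) <;> fin_cases i <;> simp [long2, eB, fB]

/-- If the `SL₂` of a plane in `Sp₄` consists of products of transvections, all symplectic groups
of rank at least two are generated by transvections. -/
theorem E_eq_top_of_long1 [IsDedekindDomain R] (h : ∀ A, long1 A ∈ E (Fin 2) R)
    {ι : Type} [DecidableEq ι] [Fintype ι] {i₀ i₁ : ι} (hi : i₀ ≠ i₁) : E ι R = ⊤ := by
  rw [eq_top_iff]
  intro g _
  obtain ⟨e, he, hfix⟩ := exists_fix_planes i₀ g (Finset.univ.erase i₀) (by simp)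
  have hfix' : ∀ j, j ≠ i₀ → (e * g).1 *ᵥ eB j = eB j ∧ (e * g).1 *ᵥ fB j = fB j :=
    fun j hj => hfix j (by simp [hj])
  obtain ⟨a, b, c, d, hdet, h1, h2⟩ := exists_plane_matrix i₀ (e * g) hfix'
  obtain ⟨g', hg', h3, h4⟩ := exists_transfer hi (h (mk2 a b c d hdet))
  obtain ⟨q1, q2, q3, q4⟩ := long1_eB (mk2 a b c d hdet)
  have hi' := hi.symm
  have k1 : (emb i₀ i₁ (eB 0) : ι ⊕ ι → R) = eB i₀ := by simp [emb, eB]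
  have k2 : (emb i₀ i₁ (fB 0) : ι ⊕ ι → R) = fB i₀ := by simp [emb, fB]
  have k3 : (emb i₀ i₁ (eB 1) : ι ⊕ ι → R) = eB i₁ := by simp [emb, eB]
  have k4 : (emb i₀ i₁ (fB 1) : ι ⊕ ι → R) = fB i₁ := by simp [emb, fB]
  have hperp : ∀ j, j ≠ i₀ → j ≠ i₁ → (∀ v : Fin 2 ⊕ Fin 2 → R, om (eB j) (emb i₀ i₁ v) = 0) ∧
      (∀ v : Fin 2 ⊕ Fin 2 → R, om (fB j) (emb i₀ i₁ v) = 0) := by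
    intro j hj hj'
    constructor <;> intro v <;> simp only [emb, om_add_right, om_smul_right, om_eB, om_fB] <;>
      simp [eB, fB, hj.symm, hj'.symm]
  have key : e * g = g' := by
    apply ext_basis
    · intro j
      by_cases hj : j = i₀
      · subst hj
        rw [h1, ← k1, h3, q1]
        simp [emb, eB, fB, mk2]
      · rw [(hfix' j hj).1]
        by_cases hj' : j = i₁
        · subst hj'; rw [← k3, h3, q3]
        · rw [h4 _ (hperp j hj hj').1]
    · intro j
      by_cases hj : j = i₀
      · subst hj
        rw [h2, ← k2, h3, q2]
        simp [emb, eB, fB, mk2]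
      · rw [(hfix' j hj).2]
        by_cases hj' : j = i₁
        · subst hj'; rw [← k4, h3, q4]
        · rw [h4 _ (hperp j hj hj').2]
  have : g = e⁻¹ * g' := by rw [← key]; group
  rw [this]
  exact mul_mem (inv_mem he) hg'

variable (R) in
/-- The quotient of `Sp₄(R)` by the subgroup generated by transvections. -/
abbrev Cq := symplecticGroup (Fin 2) R ⧸ E (Fin 2) R

/-- The class of a matrix in the quotient. -/
def cl (g : symplecticGroup (Fin 2) R) : Cq R := QuotientGroup.mk g

lemma cl_eq_one {g : symplecticGroup (Fin 2) R} (h : g ∈ E (Fin 2) R) : cl g = 1 :=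
  (QuotientGroup.eq_one_iff g).2 h
lemma cl_mul (g h : symplecticGroup (Fin 2) R) : cl (g * h) = cl g * cl h := rfl

/-- Every class of `Sp₄` modulo `E` is represented by an element of the first `SL₂`. -/
lemma exists_long1 [IsDedekindDomain R] (x : Cq R) : ∃ A, x = cl (long1 A) := by
  obtain ⟨g, rfl⟩ := QuotientGroup.mk_surjective x
  obtain ⟨e, he, hfix⟩ := exists_fix_planes (0 : Fin 2) g {1} (by simp)
  obtain ⟨a, b, c, d, hdet, h1, h2⟩ := exists_plane_matrix 0 (e * g) (fun j hj => hfix j (by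
    fin_cases j <;> simp at hj ⊢))
  obtain ⟨q1, q2, q3, q4⟩ := long1_eB (mk2 a b c d hdet)
  refine ⟨mk2 a b c d hdet, ?_⟩
  have : e * g = long1 (mk2 a b c d hdet) := by
    apply ext_basis
    · rw [Fin.forall_fin_two, h1, q1, q3]; exact ⟨by simp [mk2], (hfix 1 (by simp)).1⟩
    · rw [Fin.forall_fin_two, h2, q2, q4]; exact ⟨by simp [mk2], (hfix 1 (by simp)).2⟩
  rw [← this, cl_mul, cl_eq_one he, one_mul]; rfl

/-- Every class of `Sp₄` modulo `E` is represented by an element of the second `SL₂`. -/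
lemma exists_long2 [IsDedekindDomain R] (x : Cq R) : ∃ A, x = cl (long2 A) := by
  obtain ⟨g, rfl⟩ := QuotientGroup.mk_surjective x
  obtain ⟨e, he, hfix⟩ := exists_fix_planes (1 : Fin 2) g {0} (by simp)
  obtain ⟨a, b, c, d, hdet, h1, h2⟩ := exists_plane_matrix 1 (e * g) (fun j hj => hfix j (by
    fin_cases j <;> simp at hj ⊢))
  obtain ⟨q1, q2, q3, q4⟩ := long2_eB (mk2 a b c d hdet)
  refine ⟨mk2 a b c d hdet, ?_⟩
  have : e * g = long2 (mk2 a b c d hdet) := by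
    apply ext_basis
    · rw [Fin.forall_fin_two, h1, q1, q3]; exact ⟨(hfix 0 (by simp)).1, by simp [mk2]⟩
    · rw [Fin.forall_fin_two, h2, q2, q4]; exact ⟨(hfix 0 (by simp)).2, by simp [mk2]⟩
  rw [← this, cl_mul, cl_eq_one he, one_mul]; rfl

/-- The quotient is commutative, since its elements are represented in either plane. -/
instance [IsDedekindDomain R] : CommGroup (Cq R) where
  mul_comm x y := by
    obtain ⟨A, rfl⟩ := exists_long1 x
    obtain ⟨B, rfl⟩ := exists_long2 y
    rw [← cl_mul, long_comm, cl_mul]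

/-- The two copies of `SL₂` are conjugate by a Weyl element, and the group of classes is
commutative. -/
lemma cl_long2 [IsDedekindDomain R] (A : SpecialLinearGroup (Fin 2) R) :
    cl (long2 A) = cl (long1 A) := by
  let w : symplecticGroup (Fin 2) R := ⟨fromBlocks !![0, 1; 1, 0] 0 0 !![0, 1; 1, 0], by
    apply mem_sp4 <;> ext i j <;> fin_cases i <;> fin_cases j <;> simp [mul_apply]⟩
  have h : w * long1 A = long2 A * w := by
    apply Subtype.ext
    change fromBlocks _ _ _ _ * fromBlocks _ _ _ _ = fromBlocks _ _ _ _ * fromBlocks _ _ _ _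
    rw [fromBlocks_multiply, fromBlocks_multiply]
    congr 1 <;> ext i j <;> fin_cases i <;> fin_cases j <;> simp
  have h2 := congrArg cl h
  rw [cl_mul, cl_mul, mul_comm] at h2
  exact (mul_right_cancel h2).symm

/-- Matrices of determinant one with the same first row have the same class. -/
lemma cl_long1_congr (A B : SpecialLinearGroup (Fin 2) R) (h0 : A.1 0 0 = B.1 0 0)
    (h1 : A.1 0 1 = B.1 0 1) : cl (long1 A) = cl (long1 B) := by
  have hA := A.2
  have hB := B.2
  rw [det_fin_two] at hA hB
  have : A = mk2 1 0 (A.1 1 0 * B.1 1 1 - A.1 1 1 * B.1 1 0) 1 (by ring) * B := by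
    ext i j
    change A.1 i j = (!![_, _; _, _] * B.1 : Matrix _ _ R) i j
    fin_cases i <;> fin_cases j <;> simp [mul_apply, Fin.sum_univ_two, h0, h1] <;>
      rw [h0, h1] at hA
    · linear_combination (- A.1 1 0) * hB + B.1 1 0 * hA
    · linear_combination (- A.1 1 1) * hB + B.1 1 1 * hA
  rw [this, long1_mul, cl_mul, cl_eq_one (long1_lower_mem _), one_mul]

lemma cl_lev_congr (A B : SpecialLinearGroup (Fin 2) R) (h0 : A.1 0 0 = B.1 0 0)
    (h1 : A.1 0 1 = B.1 0 1) : cl (lev A) = cl (lev B) := by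
  have hA := A.2
  have hB := B.2
  rw [det_fin_two] at hA hB
  have : A = mk2 1 0 (A.1 1 0 * B.1 1 1 - A.1 1 1 * B.1 1 0) 1 (by ring) * B := by
    ext i j
    change A.1 i j = (!![_, _; _, _] * B.1 : Matrix _ _ R) i j
    fin_cases i <;> fin_cases j <;> simp [mul_apply, Fin.sum_univ_two, h0, h1] <;>
      rw [h0, h1] at hA
    · linear_combination (- A.1 1 0) * hB + B.1 1 0 * hA
    · linear_combination (- A.1 1 1) * hB + B.1 1 1 * hA
  rw [this, lev_mul, cl_mul, cl_eq_one (lev_lower_mem _), one_mul]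

open Classical in
/-- The symbol `[a, b]`: the class of a matrix in `SL₂` of the first plane, with first row
`(a, b)`; it is `1` by convention when `a`, `b` are not coprime. -/
noncomputable def sym (a b : R) : Cq R :=
  if h : ∃ A : SpecialLinearGroup (Fin 2) R, A.1 0 0 = a ∧ A.1 0 1 = b then
    cl (long1 h.choose) else 1

lemma sym_eq {a b : R} (A : SpecialLinearGroup (Fin 2) R) (ha : A.1 0 0 = a) (hb : A.1 0 1 = b) :
    sym a b = cl (long1 A) := by
  have h : ∃ A : SpecialLinearGroup (Fin 2) R, A.1 0 0 = a ∧ A.1 0 1 = b := ⟨A, ha, hb⟩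
  rw [sym, dif_pos h]
  exact cl_long1_congr _ _ (h.choose_spec.1.trans ha.symm) (h.choose_spec.2.trans hb.symm)

lemma exists_mk2 {a b : R} (h : IsCoprime a b) : ∃ c d, a * d - b * c = 1 := by
  obtain ⟨x, y, h⟩ := h
  exact ⟨-y, x, by linear_combination h⟩

lemma sym_mk2 (a b c d : R) (h : a * d - b * c = 1) : sym a b = cl (long1 (mk2 a b c d h)) :=
  sym_eq _ rfl rfl

lemma mk2_mul (a b c d a' b' c' d' : R) (h : a * d - b * c = 1) (h' : a' * d' - b' * c' = 1) :
    mk2 a b c d h * mk2 a' b' c' d' h' = mk2 (a * a' + b * c') (a * b' + b * d')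
      (c * a' + d * c') (c * b' + d * d') (by linear_combination (a' * d' - b' * c') * h + h') := by
  apply Subtype.ext
  change (!![_, _; _, _] * !![_, _; _, _] : Matrix _ _ R) = !![_, _; _, _]
  simp

lemma sym_add_left {a b : R} (h : IsCoprime a b) (t : R) : sym (a + t * b) b = sym a b := by
  obtain ⟨c, d, h⟩ := exists_mk2 h
  rw [sym_mk2 a b c d h, ← mul_one (cl _), ← cl_eq_one (long1_lower_mem t), ← cl_mul, ← long1_mul,
    mk2_mul]
  exact sym_eq _ (by simp [mk2]; ring) (by simp [mk2])

lemma sym_add_right {a b : R} (h : IsCoprime a b) (t : R) : sym a (b + t * a) = sym a b := by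
  obtain ⟨c, d, h⟩ := exists_mk2 h
  rw [sym_mk2 a b c d h, ← mul_one (cl _), ← cl_eq_one (long1_upper_mem t), ← cl_mul, ← long1_mul,
    mk2_mul]
  exact sym_eq _ (by simp [mk2]) (by simp [mk2]; ring)

lemma long1_weyl_mem : long1 (mk2 0 (-1) 1 0 (by ring) : SpecialLinearGroup (Fin 2) R)
    ∈ E (Fin 2) R := by
  rw [weyl_eq, long1_mul, long1_mul]
  exact mul_mem (mul_mem (long1_upper_mem _) (long1_lower_mem _)) (long1_upper_mem _)

lemma lev_weyl_mem : lev (mk2 0 (-1) 1 0 (by ring) : SpecialLinearGroup (Fin 2) R)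
    ∈ E (Fin 2) R := by
  rw [weyl_eq, lev_mul, lev_mul]
  exact mul_mem (mul_mem (lev_upper_mem _) (lev_lower_mem _)) (lev_upper_mem _)

lemma sym_rot {a b : R} (h : IsCoprime a b) : sym b (-a) = sym a b := by
  obtain ⟨c, d, h⟩ := exists_mk2 h
  rw [sym_mk2 a b c d h, ← mul_one (cl _), ← cl_eq_one long1_weyl_mem, ← cl_mul, ← long1_mul,
    mk2_mul]
  exact sym_eq _ (by simp [mk2]) (by simp [mk2])

lemma sym_inv {a b c d : R} (h : a * d - b * c = 1) : (sym a b)⁻¹ = sym d (-b) := by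
  rw [inv_eq_iff_mul_eq_one, sym_mk2 a b c d h, sym_mk2 d (-b) (-c) a (by linear_combination h),
    ← cl_mul, ← long1_mul, mk2_mul]
  have : cl (long1 (mk2 1 0 0 1 (by ring) : SpecialLinearGroup (Fin 2) R)) = 1 :=
    cl_eq_one (long1_lower_mem 0)
  rw [← this]
  apply cl_long1_congr
  · simp [mk2]; linear_combination h
  · simp [mk2]; ring

/-- The quotient of two symbols with the same `a`, read off from the product of two matrices of
`SL₂`. -/
lemma sym_div [IsDedekindDomain R] {a b b' c' d' : R} (h : IsCoprime a b)
    (h' : a * d' - b' * c' = 1) :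
    sym a b * (sym a b')⁻¹ = sym (a * d' - b * c') (a * (b - b')) := by
  obtain ⟨c, d, h⟩ := exists_mk2 h
  rw [sym_inv h', sym_mk2 a b c d h, sym_mk2 d' (-b') (-c') a (by linear_combination h'),
    ← cl_mul, ← long1_mul, mk2_mul]
  exact (sym_eq _ (by simp [mk2]; ring) (by simp [mk2]; ring)).symm

/-- The central computation: `[a, b c²]` is `[a, b]` times the class of the Levi element attached
to a matrix with first row `(a, c)`. -/
lemma sym_mul_sq_lev [IsDedekindDomain R] {a b c c' d' : R} (h : IsCoprime a b)
    (h' : a * d' - c * c' = 1) :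
    sym a (b * c ^ 2) = sym a b * cl (lev (mk2 a c c' d' h')) := by
  have hac : IsCoprime a c := ⟨d', -c', by linear_combination h'⟩
  obtain ⟨p, q, hpq⟩ : ∃ p q, b * q - (-a) * p = 1 := by
    obtain ⟨x, y, hxy⟩ := h
    exact ⟨x, y, by linear_combination hxy⟩
  obtain ⟨r, s, hrs⟩ := exists_mk2 (h.mul_right (hac.pow_right (n := 2)))
  -- `u`, `w` express `c b` through `a` and `c² b`
  set u := c * b * s
  set w := - (c * b * r)
  have huw : c * b = u * a + w * (b * c ^ 2) := by linear_combination (-c * b) * hrs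
  set γ := mk2 a (b * c ^ 2) r s hrs
  set M := lev (mk2 a c c' d' h') * long2 (mk2 b (-a) p q hpq)
  set e := Uu 0 c 0 * lev (mk2 1 (-u) 0 1 (by ring)) * Ll 0 (-w) 0
  have he : e ∈ E (Fin 2) R := mul_mem (mul_mem (Uu_mem _ _ _) (lev_upper_mem _)) (Ll_mem _ _ _)
  set γi := mk2 s (-(b * c ^ 2)) (-r) a (by linear_combination hrs)
  have hP : M * e * long1 γi ∈ E (Fin 2) R := by
    have hM : (M * e * long1 γi).1 = M.1 * e.1 * (long1 γi).1 := rfl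
    have hM1 : M.1 = fromBlocks !![a, c; c', d'] 0 0 !![d', -c'; -c, a] *
      fromBlocks !![1, 0; 0, b] !![0, 0; 0, -a] !![0, 0; 0, p] !![1, 0; 0, q] := rfl
    have he1 : e.1 = fromBlocks !![1, 0; 0, 1] !![0, c; c, 0] 0 !![1, 0; 0, 1] *
      fromBlocks !![1, -u; 0, 1] 0 0 !![1, -0; - -u, 1] *
      fromBlocks !![1, 0; 0, 1] 0 !![0, -w; -w, 0] !![1, 0; 0, 1] := by
      rw [← Matrix.one_fin_two]; rfl
    have hγ1 : (long1 γi).1 = fromBlocks !![s, 0; 0, 1] !![-(b * c ^ 2), 0; 0, 0] !![-r, 0; 0, 0]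
      !![a, 0; 0, 1] := rfl
    rw [hM1, he1, hγ1] at hM
    simp only [fromBlocks_multiply] at hM
    apply mem_of_row
    all_goals
      rw [hM]; simp
    · linear_combination hrs + (-(b * c ^ 2) * r * 0 : R)
    · linear_combination huw
    · ring
    · ring
    · linear_combination -h'
  have h1 := cl_eq_one hP
  rw [cl_mul, cl_mul, cl_eq_one he, mul_one, cl_mul, cl_long2,
    ← sym_mk2, ← sym_mk2, sym_rot h, ← sym_inv hrs, mul_inv_eq_one] at h1
  rw [← h1, mul_comm]

lemma sym_one_right (a : R) : sym a 1 = 1 := by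
  rw [sym_mk2 a 1 (-1) 0 (by ring), ← cl_eq_one (long1_upper_mem (1 : R)),
    ← mul_one (cl (long1 (mk2 a 1 (-1) 0 _))), ← cl_eq_one (long1_lower_mem (1 - a)), ← cl_mul,
    ← long1_mul, mk2_mul]
  apply cl_long1_congr
  · simp [mk2]
  · simp [mk2]

/-- The symbol `[a, c²]` is the class of a Levi element with first row `(a, c)`. -/
lemma sym_sq_eq_lev [IsDedekindDomain R] {a c c' d' : R} (h' : a * d' - c * c' = 1) :
    sym a (c ^ 2) = cl (lev (mk2 a c c' d' h')) := by
  have := sym_mul_sq_lev (b := 1) isCoprime_one_right h'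
  rwa [one_mul, sym_one_right, one_mul] at this

lemma sym_mul_sq [IsDedekindDomain R] {a b c : R} (h : IsCoprime a b) (h' : IsCoprime a c) :
    sym a (b * c ^ 2) = sym a b * sym a (c ^ 2) := by
  obtain ⟨c', d', h'⟩ := exists_mk2 h'
  rw [sym_mul_sq_lev h h', sym_sq_eq_lev h']

end quot

/-- A Mennicke symbol on `R` with values in a commutative group: a function on coprime pairs
(its values elsewhere are irrelevant), multiplicative in each variable and unchanged when a multiple
of one variable is added to the other. -/
structure IsMennicke {R : Type*} [CommRing R] {A : Type*} [CommGroup A] (s : R → R → A) : Prop where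
  add_left : ∀ {a b : R}, IsCoprime a b → ∀ t, s (a + t * b) b = s a b
  add_right : ∀ {a b : R}, IsCoprime a b → ∀ t, s a (b + t * a) = s a b
  mul_left : ∀ {a a' b : R}, IsCoprime a b → IsCoprime a' b → s (a * a') b = s a b * s a' b
  mul_right : ∀ {a b b' : R}, IsCoprime a b → IsCoprime a b' → s a (b * b') = s a b * s a b'

section quot
variable {R : Type} [CommRing R]

/-- `(a, c) ↦ [a, c²]` is a Mennicke symbol. It is multiplicative in `c` by `sym_mul_sq`, and
symmetric because, as a class of a Levi element, it is unchanged by a rotation of the row `(a, c)`.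
-/
theorem isMennicke_sym_sq [IsDedekindDomain R] : IsMennicke (fun a c : R => sym a (c ^ 2)) := by
  have hswap : ∀ {a c : R}, IsCoprime a c → sym a (c ^ 2) = sym c (a ^ 2) := by
    intro a c h
    obtain ⟨c', d', h'⟩ := exists_mk2 h
    have h2 : c * -c' - (-a) * d' = 1 := by linear_combination h'
    have h1 := sym_sq_eq_lev (c := -a) h2
    rw [neg_sq] at h1
    rw [h1, sym_sq_eq_lev h', ← mul_one (cl (lev (mk2 a c c' d' h'))),
      ← cl_eq_one lev_weyl_mem, ← cl_mul, ← lev_mul, mk2_mul]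
    apply cl_lev_congr <;> simp [mk2]
  have hright : ∀ {a b : R}, IsCoprime a b → ∀ t, sym a ((b + t * a) ^ 2) = sym a (b ^ 2) := by
    intro a b h t
    have : (b + t * a) ^ 2 = b ^ 2 + (2 * b * t + t ^ 2 * a) * a := by ring
    rw [this, sym_add_right h.pow_right]
  have hmul : ∀ {a b b' : R}, IsCoprime a b → IsCoprime a b' →
      sym a ((b * b') ^ 2) = sym a (b ^ 2) * sym a (b' ^ 2) := by
    intro a b b' h h'
    rw [mul_pow, sym_mul_sq h.pow_right h']
  refine ⟨fun {a b} h t => ?_, fun {a b} h t => hright h t, fun {a a' b} h h' => ?_,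
    fun h h' => hmul h h'⟩
  · have h' : IsCoprime (a + t * b) b := by
      have := (IsCoprime.add_mul_right_left_iff (z := t)).2 h
      rwa [mul_comm t b, mul_comm b t] at *
    rw [hswap h', hswap h, hright h.symm]
  · rw [hswap (h.mul_left h'), hmul h.symm h'.symm, hswap h, hswap h']

end quot
end SpGen

/-! ### Bimultiplicativity of the symbol `[a, b]` -/

namespace SpGen
open Matrix

lemma exists_sq_mul_ne_one {K : Type*} [Field K] (hK : 4 ≤ Nat.card K) (t : K) :
    ∃ s : K, s ≠ 0 ∧ s ^ 2 * t ≠ 1 := by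
  classical
  by_contra! h
  have : Finite K := Nat.finite_of_card_ne_zero (by omega)
  have := Fintype.ofFinite K
  rw [Nat.card_eq_fintype_card] at hK
  have ht : t = 1 := by simpa using h 1 one_ne_zero
  have hsub : (Finset.univ : Finset K) ⊆ {0, 1, -1} := by
    intro s _
    by_cases hs : s = 0
    · simp [hs]
    · have := h s hs
      rw [ht, mul_one, sq, mul_self_eq_one_iff] at this
      rcases this with h | h <;> simp [h]
  have h1 := Finset.card_le_card hsub
  have h2 : ({0, 1, -1} : Finset K).card ≤ 3 := Finset.card_le_three
  rw [Finset.card_univ] at h1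
  omega

/-- Solvability of the conic used to compare `[a, b]` and `[a, bt]`, over a finite field with at
least four elements. -/
lemma exists_conic {K : Type*} [Field K] (hK : 4 ≤ Nat.card K) {b t : K} (hb : b ≠ 0)
    (ht : t ≠ 0) : ∃ s c m : K, s ≠ 0 ∧ c ≠ 0 ∧ 1 - s ^ 2 * t ≠ 0 ∧
      c ^ 2 * b * (1 - s ^ 2 * t) = 1 - m ^ 2 * (s ^ 2 * t) := by
  have : Finite K := Nat.finite_of_card_ne_zero (by omega)
  have := Fintype.ofFinite K
  obtain ⟨s, hs, hst⟩ := exists_sq_mul_ne_one hK t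
  have h1 : 1 - s ^ 2 * t ≠ 0 := fun h => hst (sub_eq_zero.1 h).symm
  set β := b * (1 - s ^ 2 * t) with hβ
  have hβ0 : β ≠ 0 := mul_ne_zero hb h1
  by_cases h2 : ringChar K = 2
  · obtain ⟨c, hc⟩ := FiniteField.isSquare_of_char_two h2 β⁻¹
    have hc0 : c ≠ 0 := by rintro rfl; simp [hβ0] at hc
    refine ⟨s, c, 0, hs, hc0, h1, ?_⟩
    have : c ^ 2 * β = 1 := by rw [sq, ← hc]; exact inv_mul_cancel₀ hβ0
    rw [mul_assoc, ← hβ, this]; ring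
  have h20 : (2 : K) ≠ 0 := Ring.two_ne_zero h2
  by_cases hsq : IsSquare t
  · obtain ⟨τ, rfl⟩ := hsq
    have hτ : τ ≠ 0 := by rintro rfl; simp at ht
    obtain ⟨g, hg, hg1⟩ := exists_sq_mul_ne_one hK (-β)
    have hρ : 1 + β * g ^ 2 ≠ 0 := fun h => hg1 (by linear_combination -h)
    refine ⟨s, 2 * g / (1 + β * g ^ 2), (1 - β * g ^ 2) / (1 + β * g ^ 2) / (s * τ), hs,
      div_ne_zero (mul_ne_zero h20 hg) hρ, h1, ?_⟩
    rw [mul_assoc, ← hβ]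
    clear_value β
    obtain ⟨D, hD⟩ : ∃ D, D = 1 + β * g ^ 2 := ⟨_, rfl⟩
    rw [← hD] at hρ ⊢
    field_simp
    linear_combination (-(1 - β * g ^ 2) - D - 2 * β * g ^ 2 ) * hD
  · have hT0 : s ^ 2 * t ≠ 0 := mul_ne_zero (pow_ne_zero 2 hs) ht
    obtain ⟨c, m, hcm⟩ := FiniteField.exists_root_sum_quadratic
      (f := Polynomial.C β * Polynomial.X ^ 2) (g := Polynomial.C (s ^ 2 * t) * Polynomial.X ^ 2
        + Polynomial.C (-1))
      (Polynomial.degree_C_mul_X_pow 2 hβ0)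
      (by rw [Polynomial.degree_add_C (by rw [Polynomial.degree_C_mul_X_pow 2 hT0]; decide),
            Polynomial.degree_C_mul_X_pow 2 hT0]; rfl)
      ((Nat.odd_iff).1 (FiniteField.odd_card_of_char_ne_two h2 |> fun h => Nat.odd_iff.2 h))
    simp at hcm
    refine ⟨s, c, m, hs, ?_, h1, ?_⟩
    · rintro rfl
      apply hsq
      have hm : m ≠ 0 := by rintro rfl; simp at hcm
      refine ⟨(s * m)⁻¹, ?_⟩
      field_simp
      linear_combination hcm
    · rw [mul_assoc, ← hβ]; linear_combination hcm

section quot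
variable {R : Type} [CommRing R]

lemma isCoprime_of_forall_maximal {R : Type*} [CommRing R] {a x : R}
    (h : ∀ M : Ideal R, M.IsMaximal → a ∈ M → x ∉ M) : IsCoprime a x := by
  rw [← Ideal.isCoprime_span_singleton_iff, Ideal.isCoprime_iff_sup_eq]
  by_contra hne
  obtain ⟨M, hM, hle⟩ := Ideal.exists_le_maximal _ hne
  exact h M hM (hle (Ideal.mem_sup_left (Ideal.mem_span_singleton_self _)))
    (hle (Ideal.mem_sup_right (Ideal.mem_span_singleton_self _)))

lemma IsCoprime.not_mem {R : Type*} [CommRing R] {a x : R} (h : IsCoprime a x)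
    {M : Ideal R} (hM : M ≠ ⊤) (ha : a ∈ M) : x ∉ M := by
  intro hx
  obtain ⟨p, q, h⟩ := h
  apply hM
  rw [Ideal.eq_top_iff_one, ← h]
  exact M.add_mem (M.mul_mem_left _ ha) (M.mul_mem_left _ hx)

/-- Simultaneous approximation at the maximal ideals containing a nonzero element. -/
lemma exists_crt_mem {R : Type*} [CommRing R] [IsDedekindDomain R] {a : R} (ha : a ≠ 0)
    (x : Ideal R → R) : ∃ y : R, ∀ M : Ideal R, M.IsMaximal → a ∈ M → y - x M ∈ M := by
  have hI : Ideal.span {a} ≠ ⊥ := by simpa using ha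
  have hfin := Ideal.finite_factors hI
  obtain ⟨t, ht⟩ := IsDedekindDomain.exists_forall_sub_mem_ideal
    (s := hfin.toFinset) (fun v => v.asIdeal) (fun _ => 1)
    (fun v _ => v.prime) (fun v _ w _ hvw h => hvw (IsDedekindDomain.HeightOneSpectrum.ext h))
    (fun v => x v.1.asIdeal)
  refine ⟨t, fun M hM haM => ?_⟩
  let v : IsDedekindDomain.HeightOneSpectrum R := ⟨M, hM.isPrime, fun h => ha (by
    rw [h] at haM; simpa using haM)⟩
  have hv : v ∈ hfin.toFinset := by
    rw [Set.Finite.mem_toFinset]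
    exact Ideal.dvd_iff_le.2 ((Ideal.span_singleton_le_iff_mem _).2 haM)
  simpa using ht v hv

/-- `a` is nonzero and squarefree, and all its residue fields have at least four elements. -/
def IsGood (a : R) : Prop := a ≠ 0 ∧ (Ideal.span {a}).IsRadical ∧
  ∀ M : Ideal R, M.IsMaximal → a ∈ M → 4 ≤ Nat.card (R ⧸ M)

/-- The conic of `exists_conic` solved modulo a squarefree element, by the Chinese remainder
theorem. -/
lemma exists_conic_mod [IsDedekindDomain R] {a b t : R} (ha : IsGood a) (hb : IsCoprime a b)
    (ht : IsCoprime a t) : ∃ s c m : R, IsCoprime a s ∧ IsCoprime a c ∧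
      IsCoprime a (1 - s ^ 2 * t) ∧ a ∣ c ^ 2 * b * (1 - s ^ 2 * t) - (1 - m ^ 2 * (s ^ 2 * t)) := by
  obtain ⟨ha0, hrad, hcard⟩ := ha
  have key : ∀ M : Ideal R, ∃ s c m : R, M.IsMaximal → a ∈ M → s ∉ M ∧ c ∉ M ∧
      (1 - s ^ 2 * t) ∉ M ∧ c ^ 2 * b * (1 - s ^ 2 * t) - (1 - m ^ 2 * (s ^ 2 * t)) ∈ M := by
    intro M
    by_cases h : M.IsMaximal ∧ a ∈ M
    swap
    · exact ⟨0, 0, 0, fun h1 h2 => absurd ⟨h1, h2⟩ h⟩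
    obtain ⟨hM, haM⟩ := h
    let _ := Ideal.Quotient.field M
    obtain ⟨s, c, m, h1, h2, h3, h4⟩ := exists_conic (hcard M hM haM)
      (b := Ideal.Quotient.mk M b) (t := Ideal.Quotient.mk M t)
      (fun h => IsCoprime.not_mem hb hM.ne_top haM (Ideal.Quotient.eq_zero_iff_mem.1 h))
      (fun h => IsCoprime.not_mem ht hM.ne_top haM (Ideal.Quotient.eq_zero_iff_mem.1 h))
    obtain ⟨s, rfl⟩ := Ideal.Quotient.mk_surjective s
    obtain ⟨c, rfl⟩ := Ideal.Quotient.mk_surjective c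
    obtain ⟨m, rfl⟩ := Ideal.Quotient.mk_surjective m
    refine ⟨s, c, m, fun _ _ => ⟨fun h => h1 (Ideal.Quotient.eq_zero_iff_mem.2 h),
      fun h => h2 (Ideal.Quotient.eq_zero_iff_mem.2 h), fun h => h3 ?_, ?_⟩⟩
    · simpa using Ideal.Quotient.eq_zero_iff_mem.2 h
    · rw [← Ideal.Quotient.eq_zero_iff_mem]
      simp only [map_sub, map_mul, map_pow, map_one]
      rw [h4, sub_self]
  choose s c m h using key
  obtain ⟨s', hs⟩ := exists_crt_mem ha0 s
  obtain ⟨c', hc⟩ := exists_crt_mem ha0 c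
  obtain ⟨m', hm⟩ := exists_crt_mem ha0 m
  refine ⟨s', c', m', isCoprime_of_forall_maximal fun M hM haM hx => ?_,
    isCoprime_of_forall_maximal fun M hM haM hx => ?_,
    isCoprime_of_forall_maximal fun M hM haM hx => ?_, ?_⟩
  · exact (h M hM haM).1 (by simpa using M.sub_mem hx (hs M hM haM))
  · exact (h M hM haM).2.1 (by simpa using M.sub_mem hx (hc M hM haM))
  · apply (h M hM haM).2.2.1
    rw [← Ideal.Quotient.eq_zero_iff_mem] at hx ⊢
    have := Ideal.Quotient.eq.2 (hs M hM haM)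
    simp only [map_sub, map_mul, map_pow, map_one] at hx ⊢
    rwa [← this]
  · rw [← Ideal.mem_span_singleton]
    apply hrad
    rw [Ideal.radical_eq_sInf]
    refine Submodule.mem_sInf.2 fun (P : Ideal R) hP => ?_
    obtain ⟨hle, hP⟩ := hP
    have haP : a ∈ P := hle (Ideal.mem_span_singleton_self a)
    have hM : P.IsMaximal := hP.isMaximal (fun h => ha0 (by rw [h] at haP; simpa using haP))
    have h4 := (h P hM haP).2.2.2
    have e1 := Ideal.Quotient.eq.2 (hs P hM haP)
    have e2 := Ideal.Quotient.eq.2 (hc P hM haP)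
    have e3 := Ideal.Quotient.eq.2 (hm P hM haP)
    rw [← Ideal.Quotient.eq_zero_iff_mem] at h4 ⊢
    simp only [map_sub, map_mul, map_pow, map_one] at h4 ⊢
    rwa [e1, e2, e3]

variable [IsDedekindDomain R]

lemma sym_one_left (b : R) : sym 1 b = 1 := by
  rw [← sym_one_right (R := R) 1]
  have := sym_add_right (a := (1 : R)) (b := 1) isCoprime_one_left (b - 1)
  rw [← this]; congr 1; ring

lemma sym_mod_left {a a' b : R} (h : IsCoprime a b) (hd : b ∣ a' - a) : sym a' b = sym a b := by
  obtain ⟨t, ht⟩ := hd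
  rw [← sym_add_left h t]; congr 1; linear_combination ht

lemma sym_mod_right {a b b' : R} (h : IsCoprime a b) (hd : a ∣ b' - b) : sym a b' = sym a b := by
  obtain ⟨t, ht⟩ := hd
  rw [← sym_add_right h t]; congr 1; linear_combination ht

lemma sym_unit_right (a : R) {u : R} (hu : IsUnit u) : sym a u = 1 := by
  have h1 : IsCoprime (1 : R) u := isCoprime_one_left
  rw [sym_mod_left h1 hu.dvd, sym_one_left]

lemma sym_unit_left {u : R} (hu : IsUnit u) (b : R) : sym u b = 1 := by
  have h1 : IsCoprime u (1 : R) := isCoprime_one_right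
  rw [sym_mod_right h1 hu.dvd, sym_one_right]

/-- Once the symbols `[a, c²]` vanish, and every residue class contains squarefree elements without
small prime factors, the symbol is bimultiplicative. -/
theorem isMennicke_sym (hs : ∀ a c : R, IsCoprime a c → sym a (c ^ 2) = 1)
    (hgood : ∀ a b : R, IsCoprime a b → b ≠ 0 → ∃ k, IsGood (a + k * b)) :
    IsMennicke (sym : R → R → Cq R) := by
  have r1 : ∀ {a b c : R}, IsCoprime a b → IsCoprime a c → sym a (b * c ^ 2) = sym a b :=
    fun h h' => by rw [sym_mul_sq h h', hs _ _ h', mul_one]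
  have r2 : ∀ {a b c : R}, IsCoprime a b → IsCoprime c b → sym (a * c ^ 2) b = sym a b := by
    intro a b c h h'
    rw [← sym_rot h, ← sym_rot (h.mul_left h'.pow_left), ← neg_mul, r1 h.symm.neg_right h'.symm]
  have r3 : ∀ {a b : R}, IsCoprime a b → (sym a b)⁻¹ = sym a (-b) := by
    intro a b h
    obtain ⟨c, d, hd⟩ := exists_mk2 h
    have hdb : IsCoprime d b := ⟨a, -c, by linear_combination hd⟩
    rw [sym_inv hd, ← r2 h.neg_right hdb.neg_right]
    refine sym_mod_left (h.mul_left hdb.pow_left).neg_right ⟨d * c, ?_⟩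
    linear_combination (-d) * hd
  have main : ∀ {a b t : R}, IsCoprime a b → IsCoprime a t → IsGood a →
      sym a (b * t) = sym a b * sym a t := by
    intro a b t hb ht ha
    obtain ⟨s, c, m, hs1, hc1, h1, h2⟩ := exists_conic_mod ha hb ht
    rw [← r1 ht hs1, ← r1 hb hc1, ← r1 (hb.mul_right ht) hs1,
      ← r1 ((hb.mul_right ht).mul_right hs1.pow_right) hc1]
    have e1 : b * t * s ^ 2 * c ^ 2 = (b * c ^ 2) * (t * s ^ 2) := by ring
    rw [e1]
    rw [show c ^ 2 * b * (1 - s ^ 2 * t) - (1 - m ^ 2 * (s ^ 2 * t)) =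
      b * c ^ 2 * (1 - t * s ^ 2) - (1 - m ^ 2 * (t * s ^ 2)) by ring] at h2
    rw [show s ^ 2 * t = t * s ^ 2 by ring] at h1
    have hb' : IsCoprime a (b * c ^ 2) := hb.mul_right hc1.pow_right
    have ht' : IsCoprime a (t * s ^ 2) := ht.mul_right hs1.pow_right
    generalize b * c ^ 2 = B at *
    generalize t * s ^ 2 = τ at *
    obtain ⟨k, hk⟩ := h2
    set δ := 1 - m ^ 2 * τ with hδ
    have haδ : IsCoprime a δ := by
      have : δ = B * (1 - τ) + a * (-k) := by linear_combination -hk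
      rw [this]
      exact (IsCoprime.add_mul_left_right_iff).2 (hb'.mul_right h1)
    have hbt : IsCoprime a (B - δ) := by
      have : B - δ = B * τ + a * k := by linear_combination hk
      rw [this]
      exact (IsCoprime.add_mul_left_right_iff).2 (hb'.mul_right ht')
    obtain ⟨c', d', hd'⟩ := exists_mk2 hbt
    have h5 := sym_div hb' hd'
    rw [show B - (B - δ) = δ by ring] at h5
    have h6 : sym a (B - δ) = sym a (B * τ) :=
      sym_mod_right (hb'.mul_right ht') ⟨k, by linear_combination hk⟩
    set x := a * d' - B * c' with hx
    have hxδ : x = 1 - δ * c' := by linear_combination hd'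
    obtain ⟨p, q, hpq⟩ := haδ
    -- `z ≡ τ` modulo `a` and `z ≡ mτ` modulo `δ`
    set z := τ * (q * δ) + m * τ * (p * a) with hz
    have hzt : IsCoprime τ (a * δ) := by
      refine ht'.symm.mul_right ⟨m ^ 2, 1, ?_⟩
      rw [hδ]; ring
    have hza : z - τ = a * (p * (m * τ - τ)) := by rw [hz]; linear_combination τ * hpq
    have hzδ : z - m * τ = δ * (q * (τ - m * τ)) := by rw [hz]; linear_combination m * τ * hpq
    have hzc : IsCoprime z (a * δ) := by
      refine IsCoprime.mul_right ?_ ?_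
      · have : z = τ + a * (p * (m * τ - τ)) := by linear_combination hza
        rw [this]; exact (IsCoprime.add_mul_left_left_iff).2 ht'.symm
      · have : z = m * τ + δ * (q * (τ - m * τ)) := by linear_combination hzδ
        rw [this]; exact (IsCoprime.add_mul_left_left_iff).2 ⟨m, 1, by rw [hδ]; ring⟩
    have hxa : a ∣ x * τ - 1 := by
      refine ⟨d' * τ + k * c' - d', ?_⟩
      rw [hx]; linear_combination c' * hk + hd'
    have hxz : a * δ ∣ τ - x * z ^ 2 := by
      refine IsCoprime.mul_dvd ⟨p, q, hpq⟩ ?_ ?_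
      · obtain ⟨y, hy⟩ := hxa
        refine ⟨- (τ * y) - x * (p * (m * τ - τ)) * (z + τ), ?_⟩
        linear_combination (-τ) * hy - x * (z + τ) * hza
      · refine ⟨τ + c' * z ^ 2 - (q * (τ - m * τ)) * (z + m * τ), ?_⟩
        rw [hxδ]
        linear_combination (-(z + m * τ)) * hzδ - τ * hδ
    have hxc : IsCoprime x (a * δ) := by
      refine IsCoprime.mul_right ?_ ?_
      · obtain ⟨y, hy⟩ := hxa
        exact ⟨τ, -y, by linear_combination hy⟩
      · exact ⟨1, c', by rw [hxδ]; ring⟩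
    have h7 : sym x (a * δ) = (sym a τ)⁻¹ := by
      rw [← r2 hxc hzc, ← sym_mod_left (hxc.mul_left hzc.pow_left) hxz, r3 ht',
        sym_rot ht'.symm]
      refine sym_mod_right ht'.symm ⟨-(m ^ 2 * a), ?_⟩
      rw [hδ]; ring
    rw [h6, h7, mul_inv_eq_iff_eq_mul] at h5
    rw [h5, mul_comm (sym a τ)⁻¹, inv_mul_cancel_right]
  have mr : ∀ {a b t : R}, IsCoprime a b → IsCoprime a t → sym a (b * t) = sym a b * sym a t := by
    intro a b t hb ht
    by_cases h0 : b * t = 0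
    · have hu : IsUnit a := by
        rw [← isCoprime_zero_right, ← h0]; exact hb.mul_right ht
      simp [sym_unit_left hu]
    · obtain ⟨k, hk⟩ := hgood a (b * t) (hb.mul_right ht) h0
      have h1 : sym (a + k * (b * t)) b = sym a b := sym_mod_left hb ⟨k * t, by ring⟩
      have h2 : sym (a + k * (b * t)) t = sym a t := sym_mod_left ht ⟨k * b, by ring⟩
      have h3 : sym (a + k * (b * t)) (b * t) = sym a (b * t) :=
        sym_mod_left (hb.mul_right ht) ⟨k, by ring⟩
      rw [← h1, ← h2, ← h3]
      refine main ?_ ?_ hk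
      · have := (IsCoprime.add_mul_left_left_iff (z := k * t)).2 hb
        rwa [show b * (k * t) = k * (b * t) by ring] at this
      · have := (IsCoprime.add_mul_left_left_iff (z := k * b)).2 ht
        rwa [show t * (k * b) = k * (b * t) by ring] at this
  have mn : ∀ {a b : R}, IsCoprime a b → sym a (-b) = sym a b := by
    intro a b h
    rw [← mul_neg_one, mr h isCoprime_one_right.neg_right, sym_unit_right _ isUnit_one.neg, mul_one]
  refine ⟨fun h t => sym_add_left h t, fun h t => sym_add_right h t, ?_, fun h h' => mr h h'⟩
  intro a a' b h h'
  rw [← sym_rot h, ← sym_rot h', ← sym_rot (h.mul_left h'), mn h.symm, mn h'.symm,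
    mn (h.mul_left h').symm, mr h.symm h'.symm]

end quot
end SpGen

/-! ### Extension of Mennicke symbols to ideals -/

namespace SpGen

section mennicke
variable {R : Type*} [CommRing R] {A : Type*} [CommGroup A] {s : R → R → A}

lemma IsMennicke.mod_left (h : IsMennicke s) {a a' b : R} (hc : IsCoprime a b) (hd : b ∣ a' - a) :
    s a' b = s a b := by
  obtain ⟨t, ht⟩ := hd
  rw [← h.add_left hc t]; congr 1; linear_combination ht

lemma IsMennicke.mod_right (h : IsMennicke s) {a b b' : R} (hc : IsCoprime a b)
    (hd : a ∣ b' - b) : s a b' = s a b := by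
  obtain ⟨t, ht⟩ := hd
  rw [← h.add_right hc t]; congr 1; linear_combination ht

lemma IsMennicke.one_right (h : IsMennicke s) (a : R) : s a 1 = 1 := by
  have := h.mul_right (isCoprime_one_right (x := a)) (isCoprime_one_right (x := a))
  simpa using this

lemma IsMennicke.unit_left (h : IsMennicke s) {u : R} (hu : IsUnit u) (b : R) : s u b = 1 := by
  have h1 : IsCoprime u (1 : R) := isCoprime_one_right
  rw [h.mod_right h1 hu.dvd, h.one_right]

lemma IsMennicke.symm (h : IsMennicke s) {a b : R} (hc : IsCoprime a b) : s a b = s b a := by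
  have h1 : IsCoprime (a - b) b := by
    have := (IsCoprime.add_mul_left_left_iff (z := -1)).2 hc
    rwa [show a + b * -1 = a - b by ring] at this
  have h2 : IsCoprime (-1 * b) a := by rw [neg_one_mul]; exact hc.symm.neg_left
  calc s a b = s (a - b) b := (h.mod_left hc ⟨-1, by ring⟩).symm
    _ = s (a - b) a := (h.mod_right h1 ⟨1, by ring⟩).symm
    _ = s (-1 * b) a := h.mod_left h2 ⟨1, by ring⟩
    _ = s b a := by
      rw [h.mul_left isCoprime_one_left.neg_left hc.symm, h.unit_left isUnit_one.neg, one_mul]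

end mennicke

section ideals
variable {R : Type*} [CommRing R]

lemma cop_iff {I : Ideal R} {b : R} :
    IsCoprime I (Ideal.span {b}) ↔ ∃ r, r * b - 1 ∈ I := by
  rw [Ideal.isCoprime_iff_exists]
  constructor
  · rintro ⟨i, hi, j, hj, h⟩
    obtain ⟨r, rfl⟩ := Ideal.mem_span_singleton'.1 hj
    exact ⟨r, by rw [← h]; simpa using hi⟩
  · rintro ⟨r, hr⟩
    exact ⟨1 - r * b, by rw [← neg_sub]; exact I.neg_mem hr, r * b,
      Ideal.mem_span_singleton'.2 ⟨r, rfl⟩, by ring⟩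

lemma cop_congr {I : Ideal R} {b c : R} (h : c - b ∈ I) (hb : IsCoprime I (Ideal.span {b})) :
    IsCoprime I (Ideal.span {c}) := by
  rw [cop_iff] at hb ⊢
  obtain ⟨r, hr⟩ := hb
  exact ⟨r, by
    have := I.add_mem hr (I.mul_mem_left r h)
    rwa [show r * b - 1 + r * (c - b) = r * c - 1 by ring] at this⟩

lemma cop_one {I : Ideal R} {b : R} (h : b - 1 ∈ I) : IsCoprime I (Ideal.span {b}) :=
  cop_iff.2 ⟨1, by rwa [one_mul]⟩

lemma exists_crt {I J : Ideal R} (h : IsCoprime I J) (a b : R) : ∃ y, y - a ∈ I ∧ y - b ∈ J := by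
  obtain ⟨i, hi, j, hj, hij⟩ := Ideal.isCoprime_iff_exists.1 h
  refine ⟨a * j + b * i, ?_, ?_⟩
  · rw [show a * j + b * i - a = (b - a) * i by linear_combination a * hij]
    exact I.mul_mem_left _ hi
  · rw [show a * j + b * i - b = (a - b) * j by linear_combination b * hij]
    exact J.mul_mem_left _ hj

lemma mem_mul_of_cop {I J : Ideal R} (h : IsCoprime I J) {x : R} (hI : x ∈ I) (hJ : x ∈ J) :
    x ∈ I * J := by
  rw [← Ideal.inf_eq_mul_of_isCoprime h]; exact ⟨hI, hJ⟩

/-- Every nonzero ideal divides a principal ideal with cofactor prime to a given ideal. -/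
lemma exists_gen [IsDedekindDomain R] {I K : Ideal R} (hI : I ≠ ⊥) (hK : K ≠ ⊥) :
    ∃ (x : R) (m : Ideal R), x ≠ 0 ∧ Ideal.span {x} = I * m ∧ IsCoprime K m := by
  by_cases hIt : I = ⊤
  · exact ⟨1, ⊤, one_ne_zero, by simp [hIt], by rw [Ideal.isCoprime_iff_sup_eq]; simp⟩
  have hKI : K * I ≠ ⊥ := mul_ne_zero hK hI
  obtain ⟨x, hx⟩ := IsDedekindDomain.exists_sup_span_eq (I := I * (K * I)) (J := I)
    Ideal.mul_le_left (mul_ne_zero hI hKI)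
  have hle : Ideal.span {x} ≤ I := by rw [← hx]; exact le_sup_right
  obtain ⟨m, hm⟩ := Ideal.dvd_iff_le.2 hle
  have hc : K * I ⊔ m = ⊤ := by
    have h1 : I * (K * I ⊔ m) = I * ⊤ := by rw [Ideal.mul_sup, ← hm, hx, Ideal.mul_top]
    exact mul_left_cancel₀ hI h1
  have hc' := Ideal.isCoprime_iff_sup_eq.2 hc
  refine ⟨x, m, ?_, hm, IsCoprime.of_mul_left_left hc'⟩
  rintro rfl
  have hm0 : m = ⊥ := by
    have h3 : I * m = 0 := by rw [← hm]; simp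
    rcases mul_eq_zero.1 h3 with h | h
    · exact absurd h hI
    · exact h
  apply hIt
  rw [hm0, sup_bot_eq] at hc
  exact top_le_iff.1 (hc ▸ Ideal.mul_le_right)

end ideals

section symbol
variable {R : Type*} [CommRing R] [IsDedekindDomain R] {A : Type*} [CommGroup A] {s : R → R → A}

lemma dvd_of_cop {x b c : R} {I m : Ideal R} (hx : Ideal.span {x} = I * m) (hc : IsCoprime I m)
    (hI : c - b ∈ I) (hb : b - 1 ∈ m) (hb' : c - 1 ∈ m) : x ∣ c - b := by
  rw [← Ideal.mem_span_singleton, hx]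
  exact mem_mul_of_cop hc hI (by simpa using m.sub_mem hb' hb)

lemma isCoprime_of_gen {x b b' : R} {I m : Ideal R} (hx : Ideal.span {x} = I * m)
    (hb : IsCoprime I (Ideal.span {b})) (hI : b' - b ∈ I) (hm : b' - 1 ∈ m) : IsCoprime x b' := by
  rw [← Ideal.isCoprime_span_singleton_iff, hx]
  exact (cop_congr hI hb).mul_left (cop_one hm)

/-- The value `s π b'`, where `π` generates `I` up to a factor `m` prime to `I` and where `b'` is
congruent to `b` modulo `I` and to `1` modulo `m`, depends only on `I` and `b`. -/
lemma symbol_indep (h : IsMennicke s) {I m m₂ : Ideal R} {x x₂ b b' b₂ : R} (hI0 : I ≠ ⊥)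
    (hx : Ideal.span {x} = I * m) (hx₂ : Ideal.span {x₂} = I * m₂)
    (hm : IsCoprime I m) (hm₂ : IsCoprime I m₂) (hb : IsCoprime I (Ideal.span {b}))
    (h1 : b' - b ∈ I) (h2 : b' - 1 ∈ m) (h3 : b₂ - b ∈ I) (h4 : b₂ - 1 ∈ m₂) :
    s x b' = s x₂ b₂ := by
  obtain ⟨α, hα1, hα2⟩ := exists_crt hm₂ 1 0
  rw [sub_zero] at hα2
  have hαI : IsCoprime I (Ideal.span {α}) := cop_one hα1
  obtain ⟨α₂, hα₂, he⟩ : ∃ z ∈ m, x₂ * z = α * x := by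
    rw [← Ideal.mem_span_singleton_mul, hx₂, mul_right_comm, ← hx, mul_comm]
    exact Ideal.mul_mem_mul hα2 (Ideal.mem_span_singleton_self x)
  have hα₂I : IsCoprime I (Ideal.span {α₂}) := by
    have e1 : I * (m₂ * Ideal.span {α₂}) = I * (Ideal.span {α} * m) := by
      rw [← mul_assoc, ← hx₂, Ideal.span_singleton_mul_span_singleton, he,
        ← Ideal.span_singleton_mul_span_singleton, hx]; ring
    have e2 := mul_left_cancel₀ hI0 e1
    have e3 : IsCoprime I (m₂ * Ideal.span {α₂}) := e2 ▸ hαI.mul_right hm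
    exact e3.of_mul_right_right
  obtain ⟨c, hc1, hc2⟩ := exists_crt (I := I)
    (J := (Ideal.span {α} * Ideal.span {α₂}) * (m * m₂))
    ((hαI.mul_right hα₂I).mul_right (hm.mul_right hm₂)) b 1
  have c1 : c - 1 ∈ m := Ideal.mul_le_left (Ideal.mul_le_right hc2)
  have c2 : c - 1 ∈ m₂ := Ideal.mul_le_right (Ideal.mul_le_right hc2)
  have c3 : α ∣ c - 1 := Ideal.mem_span_singleton.1 (Ideal.mul_le_left (Ideal.mul_le_left hc2))
  have c4 : α₂ ∣ c - 1 := Ideal.mem_span_singleton.1 (Ideal.mul_le_right (Ideal.mul_le_left hc2))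
  have hxb := isCoprime_of_gen hx hb h1 h2
  have hxb₂ := isCoprime_of_gen hx₂ hb h3 h4
  have hxc := isCoprime_of_gen hx hb hc1 c1
  have hxc₂ := isCoprime_of_gen hx₂ hb hc1 c2
  have hαc : IsCoprime α c := by
    rw [← Ideal.isCoprime_span_singleton_iff]; exact cop_one (Ideal.mem_span_singleton.2 c3)
  have hα₂c : IsCoprime α₂ c := by
    rw [← Ideal.isCoprime_span_singleton_iff]; exact cop_one (Ideal.mem_span_singleton.2 c4)
  calc s x b' = s x c := (h.mod_right hxb
        (dvd_of_cop hx hm (by simpa using I.sub_mem hc1 h1) h2 c1)).symm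
    _ = s (α * x) c := by
      rw [h.mul_left hαc hxc, h.mod_right isCoprime_one_right c3, h.one_right, one_mul]
    _ = s x₂ c := by
      rw [← he, h.mul_left hxc₂ hα₂c, h.mod_right (a := α₂) isCoprime_one_right c4, h.one_right,
        mul_one]
    _ = s x₂ b₂ := h.mod_right hxb₂
        (dvd_of_cop hx₂ hm₂ (by simpa using I.sub_mem hc1 h3) h4 c2)

/-- The data used to define the symbol of an ideal `I`: a generator `x` of a multiple `I m` of `I`
with `m` prime to `I`, and an element `b'` congruent to `b` modulo `I` and to `1` modulo `m`. -/
lemma exists_symbol {I : Ideal R} (hI : I ≠ ⊥) {b : R} :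
    ∃ (x b' : R) (m : Ideal R), x ≠ 0 ∧ Ideal.span {x} = I * m ∧ IsCoprime I m ∧
      b' - b ∈ I ∧ b' - 1 ∈ m := by
  obtain ⟨x, m, hx0, hx, hm⟩ := exists_gen hI hI
  obtain ⟨b', h1, h2⟩ := exists_crt hm b 1
  exact ⟨x, b', m, hx0, hx, hm, h1, h2⟩

open Classical in
/-- The extension of a Mennicke symbol to ideals in the first variable. -/
noncomputable def idealSymbol (s : R → R → A) (I : Ideal R) (b : R) : A :=
  if h : I ≠ ⊥ then
    s (exists_symbol (b := b) h).choose (exists_symbol (b := b) h).choose_spec.choose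
  else 1

lemma idealSymbol_eq (h : IsMennicke s) {I m : Ideal R} {x b b' : R} (hI0 : I ≠ ⊥)
    (hx : Ideal.span {x} = I * m) (hm : IsCoprime I m) (hb : IsCoprime I (Ideal.span {b}))
    (h1 : b' - b ∈ I) (h2 : b' - 1 ∈ m) : idealSymbol s I b = s x b' := by
  rw [idealSymbol, dif_pos hI0]
  obtain ⟨m', -, hx', hm', h1', h2'⟩ := (exists_symbol (b := b) hI0).choose_spec.choose_spec
  exact symbol_indep h hI0 hx' hx hm' hm hb h1' h2' h1 h2

lemma idealSymbol_span (h : IsMennicke s) {a b : R} (ha : a ≠ 0) (hab : IsCoprime a b) :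
    idealSymbol s (Ideal.span {a}) b = s a b :=
  idealSymbol_eq h (m := ⊤) (by simpa using ha) (by simp)
    (by rw [Ideal.isCoprime_iff_sup_eq]; simp) ((Ideal.isCoprime_span_singleton_iff _ _).2 hab)
    (by simp) (by simp)

lemma idealSymbol_mul_ideal (h : IsMennicke s) {I J : Ideal R} {b : R} (hI : I ≠ ⊥) (hJ : J ≠ ⊥)
    (hIb : IsCoprime I (Ideal.span {b})) (hJb : IsCoprime J (Ideal.span {b})) :
    idealSymbol s (I * J) b = idealSymbol s I b * idealSymbol s J b := by
  have hIJ : I * J ≠ ⊥ := mul_ne_zero hI hJ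
  obtain ⟨x, m, -, hx, hm⟩ := exists_gen hI hIJ
  obtain ⟨y, n, -, hy, hn⟩ := exists_gen hJ hIJ
  have hxy : Ideal.span {x * y} = (I * J) * (m * n) := by
    rw [← Ideal.span_singleton_mul_span_singleton, hx, hy]; ring
  have hmn := hm.mul_right hn
  obtain ⟨c, hc1, hc2⟩ := exists_crt hmn b 1
  have c1 : c - b ∈ I := Ideal.mul_le_left hc1
  have c2 : c - b ∈ J := Ideal.mul_le_right hc1
  have d1 : c - 1 ∈ m := Ideal.mul_le_left hc2
  have d2 : c - 1 ∈ n := Ideal.mul_le_right hc2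
  rw [idealSymbol_eq h hIJ hxy hmn (hIb.mul_left hJb) hc1 hc2,
    idealSymbol_eq h hI hx hm.of_mul_left_left hIb c1 d1,
    idealSymbol_eq h hJ hy hn.of_mul_left_right hJb c2 d2,
    h.mul_left (isCoprime_of_gen hx hIb c1 d1) (isCoprime_of_gen hy hJb c2 d2)]

lemma idealSymbol_mul_right (h : IsMennicke s) {I : Ideal R} {b c : R} (hI : I ≠ ⊥)
    (hb : IsCoprime I (Ideal.span {b})) (hc : IsCoprime I (Ideal.span {c})) :
    idealSymbol s I (b * c) = idealSymbol s I b * idealSymbol s I c := by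
  obtain ⟨x, m, -, hx, hm⟩ := exists_gen hI hI
  obtain ⟨b', b1, b2⟩ := exists_crt hm b 1
  obtain ⟨c', c1, c2⟩ := exists_crt hm c 1
  have hbc : IsCoprime I (Ideal.span {b * c}) := by
    rw [← Ideal.span_singleton_mul_span_singleton]; exact hb.mul_right hc
  rw [idealSymbol_eq h hI hx hm hb b1 b2, idealSymbol_eq h hI hx hm hc c1 c2,
    idealSymbol_eq (b' := b' * c') h hI hx hm hbc ?_ ?_,
    h.mul_right (isCoprime_of_gen hx hb b1 b2) (isCoprime_of_gen hx hc c1 c2)]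
  · rw [show b' * c' - b * c = (b' - b) * c' + b * (c' - c) by ring]
    exact I.add_mem (I.mul_mem_right _ b1) (I.mul_mem_left _ c1)
  · rw [show b' * c' - 1 = (b' - 1) * c' + (c' - 1) by ring]
    exact m.add_mem (m.mul_mem_right _ b2) c2

lemma idealSymbol_mod (h : IsMennicke s) {I : Ideal R} {b c : R} (hI : I ≠ ⊥)
    (hb : IsCoprime I (Ideal.span {b})) (hc : c - b ∈ I) :
    idealSymbol s I c = idealSymbol s I b := by
  obtain ⟨x, m, -, hx, hm⟩ := exists_gen hI hI
  obtain ⟨c', c1, c2⟩ := exists_crt hm c 1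
  rw [idealSymbol_eq h hI hx hm (cop_congr hc hb) c1 c2, idealSymbol_eq h hI hx hm hb ?_ c2]
  simpa using I.add_mem c1 hc

end symbol
end SpGen

/-! ### From Mennicke symbols to reciprocity systems -/

namespace SpGen

/-- The embedding `q ↦ exp(2πiq)` of `ℚ/ℤ` into `ℂˣ`. -/
noncomputable def expHom : AddCircle (1 : ℚ) →+ Additive ℂˣ :=
  QuotientAddGroup.lift _
    { toFun := fun q => Additive.ofMul (Units.mk0 (Complex.exp (2 * Real.pi * Complex.I * q))
        (Complex.exp_ne_zero _))
      map_zero' := by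
        rw [← ofMul_one]; congr 1; ext; simp
      map_add' := fun a b => by
        rw [← ofMul_mul]; congr 1; ext; simp [mul_add, Complex.exp_add] }
    (by
      intro q hq
      obtain ⟨n, rfl⟩ := AddSubgroup.mem_zmultiples_iff.1 hq
      change Additive.ofMul _ = Additive.ofMul 1
      congr 1; ext
      simp only [Units.val_mk0, Units.val_one, Complex.exp_eq_one_iff]
      exact ⟨n, by simp; ring⟩)

lemma expHom_injective : Function.Injective expHom := by
  rw [injective_iff_map_eq_zero]
  intro a
  induction a using QuotientAddGroup.induction_on with
  | H q =>
    intro h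
    have h1 : Complex.exp (2 * Real.pi * Complex.I * q) = 1 := by
      have h2 : (Units.mk0 (Complex.exp (2 * Real.pi * Complex.I * q))
        (Complex.exp_ne_zero _)) = 1 := h
      simpa using congrArg Units.val h2
    obtain ⟨n, hn⟩ := Complex.exp_eq_one_iff.1 h1
    have h3 : (2 * Real.pi * Complex.I : ℂ) ≠ 0 := Complex.two_pi_I_ne_zero
    have h4 : ((q : ℚ) : ℂ) = n := mul_left_cancel₀ h3 (by rw [hn]; ring)
    have h5 : q = n := by exact_mod_cast h4
    rw [QuotientAddGroup.eq_zero_iff]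
    exact AddSubgroup.mem_zmultiples_iff.2 ⟨n, by simp [h5]⟩

/-- Characters separate an element from a subgroup, by injectivity of `ℚ/ℤ`. -/
lemma exists_char {A : Type*} [CommGroup A] (T : Subgroup A) {x : A} (hx : x ∉ T) :
    ∃ θ : A →* ℂˣ, θ x ≠ 1 ∧ ∀ y ∈ T, θ y = 1 := by
  have hx' : Additive.ofMul (QuotientGroup.mk x : A ⧸ T) ≠ 0 := by
    rw [← ofMul_one, Ne, Additive.ofMul.injective.eq_iff, QuotientGroup.eq_one_iff]; exact hx
  obtain ⟨c, hc⟩ := CharacterModule.exists_character_apply_ne_zero_of_ne_zero hx'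
  let c' : Additive (A ⧸ T) →+ AddCircle (1 : ℚ) := c
  refine ⟨MonoidHom.mk' (fun y => (expHom (c' (Additive.ofMul (QuotientGroup.mk y)))).toMul)
    (fun y z => by rw [QuotientGroup.mk_mul, ofMul_mul, map_add, map_add, toMul_add]), ?_, ?_⟩
  · intro h
    apply hc
    apply expHom_injective
    rw [map_zero]
    exact h
  · intro y hy
    have h1 : (QuotientGroup.mk y : A ⧸ T) = 1 := (QuotientGroup.eq_one_iff y).2 hy
    rw [MonoidHom.mk'_apply, h1, ofMul_one, map_zero, map_zero, toMul_zero]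

/-- A `p`-primary system of residue symbols `E I b` (extended by zero to non-coprime arguments)
satisfying a reciprocity law. -/
structure Recip {O : Type*} [CommRing O] (p : ℕ) (E : Ideal O → O → ℂ) : Prop where
  ne_zero_iff : ∀ {I : Ideal O} {b : O}, I ≠ ⊥ → (E I b ≠ 0 ↔ IsCoprime I (Ideal.span {b}))
  mul_ideal : ∀ {I J : Ideal O} (b : O), I ≠ ⊥ → J ≠ ⊥ → E (I * J) b = E I b * E J b
  mul_right : ∀ {I : Ideal O} (b c : O), I ≠ ⊥ → E I (b * c) = E I b * E I c
  mod : ∀ {I : Ideal O} {b c : O}, I ≠ ⊥ → c - b ∈ I → E I c = E I b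
  pow : ∀ {I : Ideal O} {b : O}, I ≠ ⊥ → IsCoprime I (Ideal.span {b}) → ∃ k, E I b ^ p ^ k = 1
  recip : ∀ {a b : O}, a ≠ 0 → b ≠ 0 → IsCoprime a b →
    E (Ideal.span {a}) b = E (Ideal.span {b}) a

section
variable {O : Type*} [CommRing O] [IsDedekindDomain O] {A : Type*} [CommGroup A] {s : O → O → A}

lemma idealSymbol_one_right (h : IsMennicke s) {I : Ideal O} (hI : I ≠ ⊥) :
    idealSymbol s I 1 = 1 := by
  have hc : IsCoprime I (Ideal.span {(1 : O)}) := cop_one (by simp)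
  have := idealSymbol_mul_right h hI hc hc
  simpa using this

/-- Symbols have finite order, since `(O/I)ˣ` is finite. -/
lemma exists_pow_idealSymbol (h : IsMennicke s) {I : Ideal O} (hI : I ≠ ⊥) [Finite (O ⧸ I)]
    {b : O} (hb : IsCoprime I (Ideal.span {b})) : ∃ n, 0 < n ∧ idealSymbol s I b ^ n = 1 := by
  have hpow : ∀ n : ℕ, IsCoprime I (Ideal.span {b ^ n}) ∧
      idealSymbol s I (b ^ n) = idealSymbol s I b ^ n := by
    intro n
    induction n with
    | zero => exact ⟨cop_one (by simp), by simp [idealSymbol_one_right h hI]⟩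
    | succ n ih =>
      have e : IsCoprime I (Ideal.span {b ^ (n + 1)}) := by
        rw [pow_succ, ← Ideal.span_singleton_mul_span_singleton]; exact ih.1.mul_right hb
      exact ⟨e, by rw [pow_succ, idealSymbol_mul_right h hI ih.1 hb, ih.2, pow_succ]⟩
  obtain ⟨r, hr⟩ := cop_iff.1 hb
  have hu : IsUnit (Ideal.Quotient.mk I b) := by
    refine IsUnit.of_mul_eq_one (Ideal.Quotient.mk I r) ?_
    rw [← map_mul, ← map_one (Ideal.Quotient.mk I), Ideal.Quotient.eq, mul_comm]; exact hr
  obtain ⟨u, hu⟩ := hu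
  obtain ⟨n, hn, hn1⟩ := (isOfFinOrder_iff_pow_eq_one).1 (isOfFinOrder_of_finite u)
  refine ⟨n, hn, ?_⟩
  rw [← (hpow n).2, ← idealSymbol_one_right h hI]
  refine idealSymbol_mod h hI (cop_one (by simp)) ?_
  rw [← Ideal.Quotient.eq, map_pow, ← hu, ← Units.val_pow_eq_pow_val, hn1]; simp

open Classical in
/-- Mennicke symbols are trivial as soon as all systems of `p`-primary residue symbols are. -/
theorem mennicke_trivial_of_recip (hfin : ∀ I : Ideal O, I ≠ ⊥ → Finite (O ⧸ I))
    (H : ∀ (p : ℕ) (E : Ideal O → O → ℂ), p.Prime → Recip p E →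
      ∀ I b, I ≠ ⊥ → IsCoprime I (Ideal.span {b}) → E I b = 1)
    (h : IsMennicke s) {a b : O} (hab : IsCoprime a b) : s a b = 1 := by
  by_cases ha : a = 0
  · subst ha
    rw [h.symm hab, h.unit_left (isCoprime_zero_left.1 hab)]
  by_contra hne
  set x := idealSymbol s (Ideal.span {a}) b with hx
  have hx1 : x = s a b := idealSymbol_span h ha hab
  have ha' : Ideal.span {a} ≠ ⊥ := by simpa using ha
  have hcop := (Ideal.isCoprime_span_singleton_iff a b).2 hab
  have := hfin _ ha'
  obtain ⟨n, hn, hxn⟩ := exists_pow_idealSymbol h ha' hcop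
  have hord : orderOf x ≠ 1 := by rw [Ne, orderOf_eq_one_iff, hx1]; exact hne
  set p := (orderOf x).minFac with hp
  have hpp : p.Prime := Nat.minFac_prime hord
  let T : Subgroup A :=
    { carrier := {y | ∃ n : ℕ, n.Coprime p ∧ y ^ n = 1}
      one_mem' := ⟨1, by simp, by simp⟩
      mul_mem' := by
        rintro y z ⟨n, hn, hy⟩ ⟨m, hm, hz⟩
        exact ⟨n * m, hn.mul_left hm, by
          rw [mul_pow, pow_mul, hy, mul_comm n, pow_mul, hz]; simp⟩
      inv_mem' := by
        rintro y ⟨n, hn, hy⟩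
        exact ⟨n, hn, by rw [inv_pow, hy, inv_one]⟩ }
  have hxT : x ∉ T := by
    rintro ⟨n, hn, hxn⟩
    have h1 : p ∣ n := (Nat.minFac_dvd _).trans (orderOf_dvd_of_pow_eq_one hxn)
    have h2 := Nat.dvd_gcd h1 dvd_rfl
    rw [hn.gcd_eq_one] at h2
    exact hpp.one_lt.ne' (Nat.dvd_one.1 h2)
  obtain ⟨θ, hθ, hθT⟩ := exists_char T hxT
  have hcmul : ∀ {I : Ideal O} {b c : O}, IsCoprime I (Ideal.span {b * c}) ↔
      IsCoprime I (Ideal.span {b}) ∧ IsCoprime I (Ideal.span {c}) := by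
    intro I b c
    rw [← Ideal.span_singleton_mul_span_singleton, IsCoprime.mul_right_iff]
  have hR : Recip p (fun (I : Ideal O) (b : O) => if IsCoprime I (Ideal.span {b}) then
      ((θ (idealSymbol s I b) : ℂˣ) : ℂ) else 0) := by
    refine ⟨?_, ?_, ?_, ?_, ?_, ?_⟩
    · intro I b hI
      by_cases hc : IsCoprime I (Ideal.span {b}) <;> simp [hc]
    · intro I J b hI hJ
      by_cases hc : IsCoprime I (Ideal.span {b})
      · by_cases hc' : IsCoprime J (Ideal.span {b})
        · simp [hc, hc', hc.mul_left hc', idealSymbol_mul_ideal h hI hJ hc hc']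
        · have : ¬ IsCoprime (I * J) (Ideal.span {b}) := fun h => hc' h.of_mul_left_right
          simp [hc', this]
      · have : ¬ IsCoprime (I * J) (Ideal.span {b}) := fun h => hc h.of_mul_left_left
        simp [hc, this]
    · intro I b c hI
      by_cases hc : IsCoprime I (Ideal.span {b})
      · by_cases hc' : IsCoprime I (Ideal.span {c})
        · simp [hc, hc', hcmul.2 ⟨hc, hc'⟩, idealSymbol_mul_right h hI hc hc']
        · have : ¬ IsCoprime I (Ideal.span {b * c}) := fun h => hc' (hcmul.1 h).2
          simp [hc', this]
      · have : ¬ IsCoprime I (Ideal.span {b * c}) := fun h => hc (hcmul.1 h).1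
        simp [hc, this]
    · intro I b c hI hbc
      by_cases hc : IsCoprime I (Ideal.span {b})
      · simp only [hc, cop_congr hbc hc, if_true]
        rw [idealSymbol_mod h hI hc hbc]
      · have : ¬ IsCoprime I (Ideal.span {c}) :=
          fun h => hc (cop_congr (by rw [← neg_sub]; exact I.neg_mem hbc) h)
        simp [hc, this]
    · intro I b hI hc
      have := hfin I hI
      obtain ⟨n, hn, hn1⟩ := exists_pow_idealSymbol h hI hc
      obtain ⟨k, m, hm, hkm⟩ := Nat.exists_eq_pow_mul_and_not_dvd hn.ne' p hpp.ne_one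
      refine ⟨k, ?_⟩
      simp only [hc, if_true]
      rw [← Units.val_pow_eq_pow_val, ← map_pow, hθT, Units.val_one]
      refine ⟨m, ((Nat.Prime.coprime_iff_not_dvd hpp).2 hm).symm, ?_⟩
      rw [← pow_mul, ← hkm, hn1]
    · intro a b ha hb hab
      have h1 := (Ideal.isCoprime_span_singleton_iff a b).2 hab
      simp only [h1, h1.symm, if_true]
      rw [idealSymbol_span h ha hab, idealSymbol_span h hb hab.symm, h.symm hab]
  have := H p _ hpp hR _ b ha' hcop
  simp only [hcop, if_true] at this
  exact hθ (Units.val_eq_one.1 this)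

end
end SpGen

/-! ### Boxes in finite algebras over `ℤ` or `𝔽_q[X]` -/

namespace SpGen

/-- A base ring (`ℤ` or `𝔽_q[X]`) with a size function and finite boxes `D T` of about `T` elements
which are almost invariant under translation by small elements: `core` and `outer` bound the number of
elements of a box near its boundary. -/
structure Sized (A : Type*) [CommRing A] where
  sz : A → ℕ
  sz_eq_zero : ∀ {x}, sz x = 0 ↔ x = 0
  sz_mul : ∀ x y, sz (x * y) = sz x * sz y
  sz_add : ∀ x y, sz (x + y) ≤ sz x + sz y
  div : ∀ x d, d ≠ 0 → ∃ q, sz (x - d * q) ≤ sz d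
  card_quot : ∀ d, d ≠ 0 → Nat.card (A ⧸ Ideal.span {d}) = sz d
  c : ℕ
  D : ℕ → Finset A
  le_card : ∀ T, T ≤ (D T).card
  card_le : ∀ T, (D T).card ≤ c * T
  sz_le : ∀ T, ∀ x ∈ D T, sz x ≤ c * T
  core : ∀ T ρ, ∃ K : Finset A, (∀ x ∈ K, ∀ y, sz y ≤ ρ → x + y ∈ D T) ∧
    (D T).card ≤ K.card + c * ρ
  outer : ∀ T ρ, ∃ K : Finset A, (∀ x ∈ D T, ∀ y, sz y ≤ ρ → x + y ∈ K) ∧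
    K.card ≤ (D T).card + c * ρ

namespace Sized
variable {A : Type*} [CommRing A] [IsDomain A] (S : Sized A)

lemma sz_zero : S.sz 0 = 0 := S.sz_eq_zero.2 rfl

lemma sz_one : S.sz 1 = 1 := by
  have h := S.sz_mul 1 1
  have h1 : S.sz 1 ≠ 0 := fun h => one_ne_zero (S.sz_eq_zero.1 h)
  rw [mul_one] at h
  exact (Nat.eq_of_mul_eq_mul_left (Nat.pos_of_ne_zero h1) (by rw [mul_one]; exact h)).symm

lemma sz_neg (x : A) : S.sz (-x) = S.sz x := by
  have h : S.sz (-1) * S.sz (-1) = 1 := by rw [← S.sz_mul]; simp [S.sz_one]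
  rw [← neg_one_mul, S.sz_mul, Nat.eq_one_of_mul_eq_one_left h, one_mul]

lemma sz_sub (x y : A) : S.sz (x - y) ≤ S.sz x + S.sz y := by
  rw [sub_eq_add_neg, ← S.sz_neg y]; exact S.sz_add _ _

lemma sz_sum {ι : Type*} (s : Finset ι) (f : ι → A) : S.sz (∑ i ∈ s, f i) ≤ ∑ i ∈ s, S.sz (f i) := by
  classical
  induction s using Finset.induction_on with
  | empty => simp [S.sz_zero]
  | insert i s hi ih => rw [Finset.sum_insert hi, Finset.sum_insert hi]; have := S.sz_add (f i) (∑ i ∈ s, f i); omega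

/-- There are `O(ρ + 1)` elements of size at most `ρ`. -/
lemma exists_ball (ρ : ℕ) : ∃ K : Finset A, (∀ y, S.sz y ≤ ρ → y ∈ K) ∧ K.card ≤ S.c * (ρ + 1) := by
  classical
  obtain ⟨K, h1, h2⟩ := S.outer 1 ρ
  obtain ⟨x, hx⟩ := Finset.card_pos.1 (Nat.lt_of_lt_of_le Nat.zero_lt_one (S.le_card 1))
  refine ⟨K.image (fun y => y - x), fun y hy => Finset.mem_image.2 ⟨x + y, h1 x hx y hy, by ring⟩,
    Finset.card_image_le.trans (h2.trans ?_)⟩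
  have := S.card_le 1
  linarith

end Sized

section box
variable {A : Type*} [CommRing A] [IsDomain A] (S : Sized A) {Λ : Type*} [CommRing Λ] [IsDomain Λ]
  [Algebra A Λ] {ι : Type*} [Fintype ι] (b : Module.Basis ι A Λ)

/-- The elements of `Λ` all of whose coordinates lie in `K`. -/
noncomputable def boxOf (K : Finset A) : Finset Λ := by
  classical
  exact (Fintype.piFinset fun _ : ι => K).map b.equivFun.symm.toEquiv.toEmbedding

lemma mem_boxOf {K : Finset A} {a : Λ} : a ∈ boxOf b K ↔ ∀ i, b.repr a i ∈ K := by
  classical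
  simp only [boxOf, Finset.mem_map, Fintype.mem_piFinset]
  constructor
  · rintro ⟨f, hf, rfl⟩ i
    have := congrFun (b.equivFun.apply_symm_apply f) i
    rw [Module.Basis.equivFun_apply] at this
    change b.repr (b.equivFun.symm f) i ∈ K
    rw [this]; exact hf i
  · intro h
    exact ⟨b.equivFun a, h, by simp⟩

lemma card_boxOf (K : Finset A) : (boxOf b K).card = K.card ^ Fintype.card ι := by
  classical
  simp [boxOf]

/-- The maximum of the sizes of the coordinates. -/
noncomputable def nm (a : Λ) : ℕ := Finset.univ.sup fun i => S.sz (b.repr a i)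

lemma nm_le {a : Λ} {r : ℕ} : nm S b a ≤ r ↔ ∀ i, S.sz (b.repr a i) ≤ r := by
  simp [nm, Finset.sup_le_iff]

lemma sz_repr_le (a : Λ) (i : ι) : S.sz (b.repr a i) ≤ nm S b a := nm_le S b |>.1 le_rfl i

lemma nm_add (x y : Λ) : nm S b (x + y) ≤ nm S b x + nm S b y := by
  rw [nm_le]
  intro i
  rw [map_add, Finsupp.add_apply]
  exact (S.sz_add _ _).trans (add_le_add (sz_repr_le S b x i) (sz_repr_le S b y i))

lemma nm_sub (x y : Λ) : nm S b (x - y) ≤ nm S b x + nm S b y := by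
  rw [nm_le]
  intro i
  rw [map_sub, Finsupp.sub_apply]
  exact (S.sz_sub _ _).trans (add_le_add (sz_repr_le S b x i) (sz_repr_le S b y i))

lemma nm_mul : ∃ C : ℕ, ∀ x y : Λ, nm S b (x * y) ≤ C * (nm S b x * nm S b y) := by
  classical
  refine ⟨∑ k, ∑ i, ∑ j, S.sz (b.repr (b i * b j) k), fun x y => ?_⟩
  rw [nm_le]
  intro k
  have e : x * y = ∑ i, ∑ j, (b.repr x i * b.repr y j) • (b i * b j) := by
    conv_lhs => rw [← b.sum_repr x, ← b.sum_repr y, Finset.sum_mul_sum]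
    refine Finset.sum_congr rfl fun i _ => Finset.sum_congr rfl fun j _ => ?_
    rw [smul_mul_smul_comm]
  have e2 : b.repr (x * y) k = ∑ i, ∑ j, (b.repr x i * b.repr y j) * b.repr (b i * b j) k := by
    rw [e]; simp [Finsupp.finset_sum_apply]
  rw [e2]
  calc _ ≤ ∑ i, ∑ j, S.sz ((b.repr x i * b.repr y j) * b.repr (b i * b j) k) :=
        (S.sz_sum _ _).trans (Finset.sum_le_sum fun i _ => S.sz_sum _ _)
    _ ≤ ∑ i, ∑ j, S.sz (b.repr (b i * b j) k) * (nm S b x * nm S b y) := by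
        refine Finset.sum_le_sum fun i _ => Finset.sum_le_sum fun j _ => ?_
        rw [S.sz_mul, S.sz_mul, mul_comm]
        exact Nat.mul_le_mul_left _ (Nat.mul_le_mul (sz_repr_le S b x i) (sz_repr_le S b y j))
    _ = (∑ i, ∑ j, S.sz (b.repr (b i * b j) k)) * (nm S b x * nm S b y) := by
        simp_rw [Finset.sum_mul]
    _ ≤ _ := Nat.mul_le_mul_right _ (Finset.single_le_sum
        (f := fun k => ∑ i, ∑ j, S.sz (b.repr (b i * b j) k)) (fun _ _ => Nat.zero_le _)
        (Finset.mem_univ k))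

lemma nm_smul (d : A) (x : Λ) : nm S b (d • x) = S.sz d * nm S b x := by
  apply le_antisymm
  · rw [nm_le]
    intro i
    rw [map_smul, Finsupp.smul_apply, smul_eq_mul, S.sz_mul]
    exact Nat.mul_le_mul_left _ (sz_repr_le S b x i)
  · by_cases h : (Finset.univ : Finset ι).Nonempty
    · obtain ⟨i, -, hi⟩ := Finset.exists_mem_eq_sup Finset.univ h fun i => S.sz (b.repr x i)
      rw [nm, hi]
      have := sz_repr_le S b (d • x) i
      rwa [map_smul, Finsupp.smul_apply, smul_eq_mul, S.sz_mul] at this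
    · rw [Finset.not_nonempty_iff_eq_empty] at h
      simp [nm, h]

lemma nm_pos {x : Λ} (h : x ≠ 0) : 0 < nm S b x := by
  rw [Nat.pos_iff_ne_zero]
  intro h0
  apply h
  apply b.repr.injective
  ext i
  have := sz_repr_le S b x i
  rw [h0, Nat.le_zero, S.sz_eq_zero] at this
  simpa using this

/-- Every residue class modulo `α` contains an element of size `O(‖α‖)`. -/
lemma exists_rep : ∃ C : ℕ, ∀ α : Λ, α ≠ 0 → ∀ x : Λ, ∃ y, nm S b (x - α * y) ≤ C * nm S b α := by
  obtain ⟨C, hC⟩ := nm_mul S b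
  refine ⟨C, fun α hα x => ?_⟩
  have : Module.Finite A Λ := Module.Finite.of_basis b
  have halg : IsAlgebraic A α := (Algebra.IsIntegral.isIntegral (R := A) α).isAlgebraic
  obtain ⟨d, hd, δ, hδ⟩ := halg.exists_nonzero_dvd (mem_nonZeroDivisors_of_ne_zero hα)
  choose q hq using fun i => S.div (b.repr (δ * x) i) d hd
  set Q : Λ := b.equivFun.symm q with hQ
  have hQi : ∀ i, b.repr Q i = q i := fun i => by
    rw [hQ, ← Module.Basis.equivFun_apply, b.equivFun.apply_symm_apply]
  have hr : nm S b (δ * x - d • Q) ≤ S.sz d := by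
    rw [nm_le]; intro i
    rw [map_sub, Finsupp.sub_apply, map_smul, Finsupp.smul_apply, smul_eq_mul, hQi]; exact hq i
  refine ⟨Q, ?_⟩
  have e : d • (x - α * Q) = α * (δ * x - d • Q) := by
    rw [Algebra.smul_def, Algebra.smul_def, hδ]; ring
  have h1 : S.sz d * nm S b (x - α * Q) ≤ S.sz d * (C * nm S b α) := by
    rw [← nm_smul, e]
    refine (hC _ _).trans ?_
    calc C * (nm S b α * nm S b (δ * x - d • Q)) ≤ C * (nm S b α * S.sz d) :=
          Nat.mul_le_mul_left _ (Nat.mul_le_mul_left _ hr)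
      _ = _ := by ring
  exact Nat.le_of_mul_le_mul_left h1 (Nat.pos_of_ne_zero fun h => hd (S.sz_eq_zero.1 h))

lemma nm_le_of_mem_box {T : ℕ} {x : Λ} (h : x ∈ boxOf b (S.D T)) : nm S b x ≤ S.c * T :=
  (nm_le S b).2 fun i => S.sz_le T _ ((mem_boxOf b).1 h i)

/-- An ideal of index less than `T ^ n` contains a nonzero element with coordinates of size `O(T)`,
by the pigeonhole principle. -/
lemma exists_short {J : Ideal Λ} [Finite (Λ ⧸ J)] {T : ℕ}
    (h : Nat.card (Λ ⧸ J) < T ^ Fintype.card ι) :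
    ∃ α ∈ J, α ≠ 0 ∧ nm S b α ≤ 2 * S.c * T := by
  classical
  have := Fintype.ofFinite (Λ ⧸ J)
  have hc : (Finset.univ : Finset (Λ ⧸ J)).card < (boxOf b (S.D T)).card := by
    rw [Finset.card_univ, ← Nat.card_eq_fintype_card, card_boxOf]
    exact h.trans_le (Nat.pow_le_pow_left (S.le_card T) _)
  obtain ⟨x, hx, y, hy, hxy, he⟩ := Finset.exists_ne_map_eq_of_card_lt_of_maps_to hc
    (f := Ideal.Quotient.mk J) (fun _ _ => Finset.mem_univ _)
  refine ⟨x - y, Ideal.Quotient.eq.1 he, sub_ne_zero.2 hxy, (nm_sub S b x y).trans ?_⟩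
  have h1 := nm_le_of_mem_box S b hx
  have h2 := nm_le_of_mem_box S b hy
  linarith

/-- The finitely many elements of size at most `ρ`. -/
lemma exists_ball_nm (ρ : ℕ) : ∃ K : Finset Λ, (∀ y, nm S b y ≤ ρ → y ∈ K) ∧
    K.card ≤ (S.c * (ρ + 1)) ^ Fintype.card ι := by
  obtain ⟨K, h1, h2⟩ := S.exists_ball ρ
  refine ⟨boxOf b K, fun y hy => (mem_boxOf b).2 fun i => h1 _ ((nm_le S b).1 hy i), ?_⟩
  rw [card_boxOf]; exact Nat.pow_le_pow_left h2 _

lemma card_quot_le_of_rep {J : Ideal Λ} {ρ : ℕ} (h : ∀ x, ∃ y ∈ J, nm S b (x - y) ≤ ρ) :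
    Finite (Λ ⧸ J) ∧ Nat.card (Λ ⧸ J) ≤ (S.c * (ρ + 1)) ^ Fintype.card ι := by
  obtain ⟨K, h1, h2⟩ := exists_ball_nm S b ρ
  have hs : Function.Surjective (fun x : K => Ideal.Quotient.mk J x.1) := by
    intro z
    obtain ⟨x, rfl⟩ := Ideal.Quotient.mk_surjective z
    obtain ⟨y, hy, hxy⟩ := h x
    exact ⟨⟨x - y, h1 _ hxy⟩, by simp [Ideal.Quotient.eq_zero_iff_mem.2 hy]⟩
  refine ⟨Finite.of_surjective _ hs, (Nat.card_le_card_of_surjective _ hs).trans ?_⟩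
  simpa using h2

lemma finite_quot_of_ne_bot (S : Sized A) (b : Module.Basis ι A Λ) {J : Ideal Λ} (hJ : J ≠ ⊥) : Finite (Λ ⧸ J) := by
  obtain ⟨α, hα, hα0⟩ := Submodule.exists_mem_ne_zero_of_ne_bot hJ
  obtain ⟨C, hC⟩ := exists_rep S b
  exact (card_quot_le_of_rep S b (ρ := C * nm S b α) fun x => by
    obtain ⟨y, hy⟩ := hC α hα0 x
    exact ⟨α * y, J.mul_mem_right _ hα, hy⟩).1

lemma card_quot_span_le : ∃ C : ℕ, ∀ α : Λ, α ≠ 0 →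
    Nat.card (Λ ⧸ Ideal.span {α}) ≤ (C * nm S b α) ^ Fintype.card ι := by
  obtain ⟨C, hC⟩ := exists_rep S b
  refine ⟨S.c * (C + 1), fun α hα => ?_⟩
  have := (card_quot_le_of_rep S b (J := Ideal.span {α}) (ρ := C * nm S b α) fun x => by
    obtain ⟨y, hy⟩ := hC α hα x
    exact ⟨α * y, Ideal.mul_mem_right _ _ (Ideal.mem_span_singleton_self α), hy⟩).2
  refine this.trans (Nat.pow_le_pow_left ?_ _)
  rw [mul_assoc]
  refine Nat.mul_le_mul_left _ ?_
  have := nm_pos S b hα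
  linarith

/-- Every residue class modulo an ideal of index less than `T ^ N` has an element of size `O(T)`. -/
lemma exists_rep_ideal : ∃ C : ℕ, ∀ (J : Ideal Λ) (T : ℕ), Finite (Λ ⧸ J) →
    Nat.card (Λ ⧸ J) < T ^ Fintype.card ι → ∀ x, ∃ y ∈ J, nm S b (x - y) ≤ C * T := by
  obtain ⟨C, hC⟩ := exists_rep S b
  refine ⟨C * (2 * S.c), fun J T _ hT x => ?_⟩
  obtain ⟨α, hα, hα0, hn⟩ := exists_short S b hT
  obtain ⟨y, hy⟩ := hC α hα0 x
  refine ⟨α * y, J.mul_mem_right _ hα, hy.trans ?_⟩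
  rw [mul_assoc]; exact Nat.mul_le_mul_left _ hn

open Classical in
/-- Counting a residue class in a box between the core and the outer hull of the box. -/
lemma count_class {J : Ideal Λ} [Finite (Λ ⧸ J)] {ρ T : ℕ}
    (h : ∀ x, ∃ y ∈ J, nm S b (x - y) ≤ ρ) (x : Λ) :
    ((S.D T).card - S.c * ρ) ^ Fintype.card ι ≤
      Nat.card (Λ ⧸ J) * ((boxOf b (S.D T)).filter fun a => a - x ∈ J).card ∧
    Nat.card (Λ ⧸ J) * ((boxOf b (S.D T)).filter fun a => a - x ∈ J).card ≤
      ((S.D T).card + S.c * ρ) ^ Fintype.card ι := by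
  have := Fintype.ofFinite (Λ ⧸ J)
  -- small representatives of the residue classes
  have hr : ∀ z : Λ ⧸ J, ∃ r : Λ, Ideal.Quotient.mk J r = z ∧ nm S b r ≤ ρ := by
    intro z
    obtain ⟨x, rfl⟩ := Ideal.Quotient.mk_surjective z
    obtain ⟨y, hy, hxy⟩ := h x
    exact ⟨x - y, by simp [Ideal.Quotient.eq_zero_iff_mem.2 hy], hxy⟩
  choose r hr1 hr2 using hr
  set F := (boxOf b (S.D T)).filter fun a => a - x ∈ J with hF
  have hFm : ∀ a, a ∈ F ↔ a ∈ boxOf b (S.D T) ∧ Ideal.Quotient.mk J a = Ideal.Quotient.mk J x := by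
    intro a; rw [hF, Finset.mem_filter, Ideal.Quotient.eq]
  have hprod : Nat.card (Λ ⧸ J) * F.card = ((Finset.univ : Finset (Λ ⧸ J)) ×ˢ F).card := by
    rw [Finset.card_product, Finset.card_univ, Nat.card_eq_fintype_card]
  rw [hprod]
  constructor
  · obtain ⟨K, hK1, hK2⟩ := S.core T ρ
    have h1 : ((S.D T).card - S.c * ρ) ^ Fintype.card ι ≤ (boxOf b K).card := by
      rw [card_boxOf]; exact Nat.pow_le_pow_left (by omega) _
    refine h1.trans (Finset.card_le_card_of_injOn
      (fun a => (Ideal.Quotient.mk J (x - a), a + r (Ideal.Quotient.mk J (x - a)))) ?_ ?_)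
    · intro a ha
      simp only [Finset.coe_product, Finset.coe_univ, Set.mem_prod, Set.mem_univ, true_and,
        Finset.mem_coe, hFm]
      refine ⟨(mem_boxOf b).2 fun i => ?_, ?_⟩
      · rw [map_add, Finsupp.add_apply]
        exact hK1 _ ((mem_boxOf b).1 ha i) _ ((nm_le S b).1 (hr2 _) i)
      · rw [map_add, hr1, ← map_add]; congr 1; ring
    · intro a _ a' _ he
      simp only [Prod.mk.injEq] at he
      have := he.2
      rw [he.1] at this
      exact add_right_cancel this
  · obtain ⟨K, hK1, hK2⟩ := S.outer T ρ
    have h1 : (boxOf b K).card ≤ ((S.D T).card + S.c * ρ) ^ Fintype.card ι := by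
      rw [card_boxOf]; exact Nat.pow_le_pow_left hK2 _
    refine le_trans (Finset.card_le_card_of_injOn (fun u => u.2 + r u.1) ?_ ?_) h1
    · rintro ⟨z, a⟩ ha
      simp only [Finset.coe_product, Finset.coe_univ, Set.mem_prod, Set.mem_univ, true_and,
        Finset.mem_coe, hFm] at ha
      refine (mem_boxOf b).2 fun i => ?_
      rw [map_add, Finsupp.add_apply]
      exact hK1 _ ((mem_boxOf b).1 ha.1 i) _ ((nm_le S b).1 (hr2 _) i)
    · rintro ⟨z, a⟩ ha ⟨z', a'⟩ ha' he
      simp only [Finset.coe_product, Finset.coe_univ, Set.mem_prod, Set.mem_univ, true_and,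
        Finset.mem_coe, hFm] at ha ha' he
      have h2 := congrArg (Ideal.Quotient.mk J) he
      rw [map_add, map_add, hr1, hr1, ha.2, ha'.2, add_left_cancel_iff] at h2
      subst h2
      rw [add_right_cancel he]

end box
end SpGen

/-! ### Equidistribution of boxes modulo ideals -/

namespace SpGen

open Classical in
/-- A family of finite subsets (`boxes`) of a domain, of all sizes up to a bounded factor, which are
equidistributed modulo ideals of small index, with a power saving `κ` in the error term. The field
`norm_le` bounds the norms of the elements of an arithmetic progression indexed by a box. -/
structure BoxSys (Λ : Type*) [CommRing Λ] where
  B : ℕ → Finset Λ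
  C : ℝ
  κ : ℝ
  one_le_C : 1 ≤ C
  κ_pos : 0 < κ
  κ_le : κ ≤ 1
  one_le : ∀ T, 1 ≤ (B T).card
  exists_le : ∀ X : ℝ, 1 ≤ X → ∃ T, X ≤ (B T).card ∧ (B T).card ≤ C * X
  finite_quot : ∀ J : Ideal Λ, J ≠ ⊥ → Finite (Λ ⧸ J)
  equi : ∀ (J : Ideal Λ), J ≠ ⊥ → ∀ T x, Nat.card (Λ ⧸ J) ≤ (B T).card →
    |(Nat.card (Λ ⧸ J) : ℝ) * ((B T).filter fun a => a - x ∈ J).card - (B T).card| ≤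
      C * (B T).card * ((Nat.card (Λ ⧸ J) : ℝ) / (B T).card) ^ κ
  equi' : ∀ (J : Ideal Λ), J ≠ ⊥ → ∀ T x,
    (Nat.card (Λ ⧸ J) : ℝ) * ((B T).filter fun a => a - x ∈ J).card ≤
      C * ((B T).card + Nat.card (Λ ⧸ J))
  norm_le : ∀ a b : Λ, ∃ C' : ℝ, ∀ T, ∀ k ∈ B T, a + k * b ≠ 0 →
    (Nat.card (Λ ⧸ Ideal.span {a + k * b}) : ℝ) ≤ C' * (B T).card

lemma one_add_pow_le {c t : ℝ} (hc : 0 ≤ c) (h0 : 0 ≤ t) (h1 : t ≤ 1) (N : ℕ) :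
    (1 + c * t) ^ N ≤ 1 + ((1 + c) ^ N - 1) * t := by
  induction N with
  | zero => simp
  | succ n ih =>
    have h3 : 0 ≤ (1 + c) ^ n - 1 := sub_nonneg.2 (one_le_pow₀ (by linarith))
    have h4 : t * t ≤ t := mul_le_of_le_one_left h0 h1
    calc (1 + c * t) ^ (n + 1) = (1 + c * t) ^ n * (1 + c * t) := pow_succ _ _
      _ ≤ (1 + ((1 + c) ^ n - 1) * t) * (1 + c * t) := by gcongr
      _ = 1 + t * ((1 + c) ^ n - 1 + c) + ((1 + c) ^ n - 1) * c * (t * t) := by ring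
      _ ≤ 1 + t * ((1 + c) ^ n - 1 + c) + ((1 + c) ^ n - 1) * c * t := by gcongr
      _ = _ := by rw [pow_succ]; ring

section pack
variable {A : Type*} [CommRing A] [IsDomain A] (S : Sized A) {Λ : Type*} [CommRing Λ] [IsDomain Λ]
  [Algebra A Λ] {ι : Type*} [Fintype ι] [Nonempty ι] (b : Module.Basis ι A Λ)

open Classical in
set_option maxHeartbeats 1000000 in
/-- Equidistribution of the boxes `boxOf b (D (T + 1))` modulo ideals, with a relative error which
is the `1/n`-th power of the ratio of the index to the size of the box; the second part is an upper
bound without a condition on the index. -/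
lemma boxSys_equi : ∃ C : ℝ, 1 ≤ C ∧ ∀ (J : Ideal Λ), J ≠ ⊥ → ∀ T x,
    (Nat.card (Λ ⧸ J) ≤ (boxOf b (S.D (T + 1))).card →
    |(Nat.card (Λ ⧸ J) : ℝ) * ((boxOf b (S.D (T + 1))).filter fun a => a - x ∈ J).card
        - (boxOf b (S.D (T + 1))).card| ≤ C * (boxOf b (S.D (T + 1))).card *
        ((Nat.card (Λ ⧸ J) : ℝ) / (boxOf b (S.D (T + 1))).card) ^ ((Fintype.card ι : ℝ)⁻¹)) ∧
    (Nat.card (Λ ⧸ J) : ℝ) * ((boxOf b (S.D (T + 1))).filter fun a => a - x ∈ J).card ≤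
      C * ((boxOf b (S.D (T + 1))).card + Nat.card (Λ ⧸ J)) := by
  obtain ⟨C0, hC0⟩ := exists_rep_ideal S b
  set N := Fintype.card ι with hN
  have hN0 : N ≠ 0 := Fintype.card_ne_zero
  set c1 : ℝ := S.c * C0 * 2 with hc1
  have hc10 : 0 ≤ c1 := by positivity
  refine ⟨1 + N * c1 + (1 + c1) ^ N + 2 ^ (N - 1) * (1 + c1 ^ N), ?_, fun J hJ T x => ?_⟩
  · have : 0 ≤ N * c1 + (1 + c1) ^ N + 2 ^ (N - 1) * (1 + c1 ^ N) := by positivity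
    linarith
  have hfin := finite_quot_of_ne_bot S b hJ
  set m := Nat.card (Λ ⧸ J) with hm
  have hm0 : 0 < m := Nat.card_pos
  set μ : ℝ := (m : ℝ) ^ ((N : ℝ)⁻¹) with hμ
  have hμ1 : 1 ≤ μ := Real.one_le_rpow (by exact_mod_cast hm0) (by positivity)
  have hμN : μ ^ N = m := Real.rpow_inv_natCast_pow (by positivity) hN0
  set T0 := ⌊μ⌋₊ + 1 with hT0
  have hT0m : m < T0 ^ N := by
    have : μ < T0 := by rw [hT0]; exact_mod_cast Nat.lt_floor_add_one μ
    have h2 : μ ^ N < (T0 : ℝ) ^ N := pow_lt_pow_left₀ this (by positivity) hN0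
    rw [hμN] at h2
    exact_mod_cast h2
  have hT0le : (T0 : ℝ) ≤ 2 * μ := by
    have := Nat.floor_le (show 0 ≤ μ by positivity)
    rw [hT0]; push_cast; linarith
  obtain ⟨hlo, hhi⟩ := count_class S b (J := J) (ρ := C0 * T0) (T := T + 1) (hC0 J T0 hfin hT0m) x
  rw [← hN, ← hm] at hlo hhi
  set f := ((boxOf b (S.D (T + 1))).filter fun a => a - x ∈ J).card with hf
  have hBcard : (boxOf b (S.D (T + 1))).card = (S.D (T + 1)).card ^ N := card_boxOf b _
  rw [hBcard]
  set X := (S.D (T + 1)).card with hX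
  have hX1 : 1 ≤ X := (Nat.le_add_left 1 T).trans (S.le_card (T + 1))
  have hXr : (1:ℝ) ≤ X := by exact_mod_cast hX1
  have hcρ : (S.c : ℝ) * (C0 * T0 : ℕ) ≤ c1 * μ := by
    push_cast
    calc (S.c : ℝ) * (C0 * T0) = S.c * C0 * T0 := by ring
      _ ≤ S.c * C0 * (2 * μ) := by gcongr
      _ = _ := by rw [hc1]; ring
  have hhi' : (m : ℝ) * f ≤ (X + c1 * μ) ^ N := by
    have h1 : ((m * f : ℕ) : ℝ) ≤ ((X + S.c * (C0 * T0)) ^ N : ℕ) := by exact_mod_cast hhi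
    push_cast at h1
    refine h1.trans (pow_le_pow_left₀ (by positivity) ?_ _)
    push_cast at hcρ
    linarith
  constructor
  · intro hmB
    set t : ℝ := ((m : ℝ) / (X ^ N : ℕ)) ^ ((N : ℝ)⁻¹) with ht
    have hμt : μ = X * t := by
      rw [ht, Real.div_rpow (by positivity) (by positivity)]
      push_cast
      rw [Real.pow_rpow_inv_natCast (by positivity) hN0]
      rw [mul_div_cancel₀ _ (by positivity)]
    have ht0 : 0 ≤ t := by positivity
    have ht1 : t ≤ 1 := Real.rpow_le_one (by positivity)
      (div_le_one_of_le₀ (by exact_mod_cast hmB) (by positivity)) (by positivity)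
    have up : (m : ℝ) * f ≤ X ^ N * (1 + (1 + c1) ^ N * t) := by
      refine hhi'.trans ?_
      rw [hμt, show (X : ℝ) + c1 * (X * t) = X * (1 + c1 * t) by ring, mul_pow]
      gcongr
      refine (one_add_pow_le hc10 ht0 ht1 N).trans ?_
      nlinarith
    have lo : (X : ℝ) ^ N * (1 - N * c1 * t) ≤ m * f := by
      by_cases hneg : 1 - c1 * t ≤ 0
      · have : 1 - N * c1 * t ≤ 0 := by
          have hN1 : (1:ℝ) ≤ N := by exact_mod_cast Nat.one_le_iff_ne_zero.2 hN0
          have : c1 * t ≤ N * (c1 * t) := le_mul_of_one_le_left (by positivity) hN1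
          linarith
        exact (mul_nonpos_of_nonneg_of_nonpos (by positivity) this).trans (by positivity)
      · push Not at hneg
        have h1 : ((X - S.c * (C0 * T0) : ℕ) : ℝ) ^ N ≤ m * f := by exact_mod_cast hlo
        have h2 : (X : ℝ) * (1 - c1 * t) ≤ ((X - S.c * (C0 * T0) : ℕ) : ℝ) := by
          have : (X : ℝ) - ((S.c * (C0 * T0) : ℕ) : ℝ) ≤ ((X - S.c * (C0 * T0) : ℕ) : ℝ) := by
            rw [sub_le_iff_le_add]; norm_cast; omega
          push_cast at this hcρ ⊢
          rw [hμt] at hcρ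
          linarith
        refine le_trans ?_ h1
        refine le_trans ?_ (pow_le_pow_left₀ (by positivity) h2 N)
        rw [mul_pow]
        gcongr
        have := one_add_mul_le_pow (a := -(c1 * t)) (by linarith) N
        rw [← sub_eq_add_neg] at this
        linarith
    push_cast
    rw [abs_le]
    have hXN : (0:ℝ) ≤ X ^ N * t := by positivity
    have e1 : 0 ≤ (X ^ N * t) * (1 + (1 + c1) ^ N + 2 ^ (N - 1) * (1 + c1 ^ N)) := by positivity
    have e2 : 0 ≤ (X ^ N * t) * (1 + N * c1 + 2 ^ (N - 1) * (1 + c1 ^ N)) := by positivity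
    constructor <;> nlinarith
  · push_cast
    refine hhi'.trans ((add_pow_le (by positivity) (by positivity) N).trans ?_)
    rw [mul_pow, hμN]
    have e1 : 0 ≤ ((X:ℝ) ^ N + m) * (1 + N * c1 + (1 + c1) ^ N) := by positivity
    have e2 : (0:ℝ) ≤ 2 ^ (N - 1) * (X ^ N * c1 ^ N + m) := by positivity
    nlinarith

lemma nm_box_le (T : ℕ) {x : Λ} (h : x ∈ boxOf b (S.D (T + 1))) :
    nm S b x ≤ S.c * (S.D (T + 1)).card :=
  (nm_le_of_mem_box S b h).trans (Nat.mul_le_mul_left _ (S.le_card _))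

/-- The box system attached to an integral basis. -/
noncomputable def boxSys : BoxSys Λ where
  B T := boxOf b (S.D (T + 1))
  C := max (boxSys_equi S b).choose ((S.c * 2) ^ Fintype.card ι)
  κ := (Fintype.card ι : ℝ)⁻¹
  one_le_C := (boxSys_equi S b).choose_spec.1.trans (le_max_left _ _)
  κ_pos := by positivity
  κ_le := inv_le_one_of_one_le₀ (by exact_mod_cast Fintype.card_pos)
  one_le T := by
    rw [card_boxOf]
    exact Nat.one_le_pow _ _ (Nat.lt_of_lt_of_le (Nat.succ_pos T) (S.le_card _))
  exists_le X hX := by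
    set N := Fintype.card ι with hN
    have hN0 : N ≠ 0 := Fintype.card_ne_zero
    set μ : ℝ := X ^ ((N : ℝ)⁻¹) with hμ
    have hμ1 : 1 ≤ μ := Real.one_le_rpow hX (by positivity)
    have hμN : μ ^ N = X := Real.rpow_inv_natCast_pow (by positivity) hN0
    refine ⟨⌊μ⌋₊, ?_, ?_⟩
    · rw [card_boxOf, ← hN, ← hμN]
      push_cast
      refine pow_le_pow_left₀ (by positivity) ?_ _
      have h1 : ((⌊μ⌋₊ + 1 : ℕ) : ℝ) ≤ (S.D (⌊μ⌋₊ + 1)).card := by exact_mod_cast S.le_card _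
      have := (Nat.lt_floor_add_one μ).le
      push_cast at h1; linarith
    · refine le_trans ?_ (mul_le_mul_of_nonneg_right (le_max_right _ _) (by positivity))
      rw [card_boxOf, ← hN, ← hμN, ← mul_pow]
      push_cast
      refine pow_le_pow_left₀ (by positivity) ?_ _
      have h1 : ((S.D (⌊μ⌋₊ + 1)).card : ℝ) ≤ S.c * (⌊μ⌋₊ + 1 : ℕ) := by exact_mod_cast S.card_le _
      refine h1.trans ?_
      rw [mul_assoc]
      gcongr
      have := Nat.floor_le (show 0 ≤ μ by positivity)
      push_cast; linarith
  finite_quot J hJ := finite_quot_of_ne_bot S b hJ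
  equi J hJ T x h := by
    refine (((boxSys_equi S b).choose_spec.2 J hJ T x).1 h).trans ?_
    gcongr
    exact le_max_left _ _
  equi' J hJ T x := by
    refine (((boxSys_equi S b).choose_spec.2 J hJ T x).2).trans ?_
    gcongr
    exact le_max_left _ _
  norm_le x y := by
    obtain ⟨C, hC⟩ := card_quot_span_le S b
    obtain ⟨C2, hC2⟩ := nm_mul S b
    refine ⟨((C * (nm S b x + C2 * (S.c * nm S b y)) : ℕ) : ℝ) ^ Fintype.card ι, fun T k hk h => ?_⟩
    rw [card_boxOf]
    push_cast
    rw [← mul_pow]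
    have h1 := hC _ h
    have h2 : C * nm S b (x + k * y) ≤ C * (nm S b x + C2 * (S.c * nm S b y)) * (S.D (T + 1)).card := by
      rw [mul_assoc]
      refine Nat.mul_le_mul_left _ ((nm_add S b _ _).trans ?_)
      rw [add_mul]
      refine add_le_add (Nat.le_mul_of_pos_right _ ((Nat.succ_pos T).trans_le (S.le_card _))) ?_
      refine (hC2 _ _).trans ?_
      calc C2 * (nm S b k * nm S b y) ≤ C2 * ((S.c * (S.D (T + 1)).card) * nm S b y) := by
            gcongr; exact nm_box_le S b T hk
        _ = _ := by ring
    have h3 := h1.trans (Nat.pow_le_pow_left h2 _)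
    exact_mod_cast h3

end pack
end SpGen

/-! ### Elements and ideals of small norm -/

namespace SpGen

/-- The index of ideals is multiplicative. -/
theorem card_quot_mul {O : Type*} [CommRing O] [IsDedekindDomain O] [Infinite O] (I J : Ideal O) :
    Nat.card (O ⧸ (I * J)) = Nat.card (O ⧸ I) * Nat.card (O ⧸ J) := by
  have := UniqueFactorizationMonoid.multiplicative_of_coprime
      (fun I : Ideal O => Submodule.cardQuot I) I J (Submodule.cardQuot_bot _ _)
      (fun {I J} hI => by simp [Ideal.isUnit_iff.mp hI])
      (fun {I} i hI =>
        have : Ideal.IsPrime I := Ideal.isPrime_of_prime hI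
        cardQuot_pow_of_prime hI.ne_zero)
      fun {I J} hIJ => cardQuot_mul_of_coprime <| Ideal.isCoprime_iff_sup_eq.mpr
        (Ideal.isUnit_iff.mp
          (hIJ (Ideal.dvd_iff_le.mpr le_sup_left) (Ideal.dvd_iff_le.mpr le_sup_right)))
  exact this

section sep
variable {A : Type*} [CommRing A] [IsDomain A] (S : Sized A)

open Polynomial

/-- A nonzero polynomial of degree `n` cannot take small values at `n + 1` points which are pairwise
far apart. The factor `k` accumulates the distances divided out in the induction on `n`, which
passes to the quotient of `P - P(c 0)` by `X - c 0`. -/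
lemma separation (ρ : ℕ) : ∀ (n : ℕ) (P : A[X]) (k U : ℕ) (c : Fin (n + 1) → A),
    P.natDegree = n → P ≠ 0 → (∀ i j, i ≠ j → ρ ≤ S.sz (c i - c j)) →
    (∀ i, k * S.sz (P.eval (c i)) ≤ U) → k * ρ ^ n ≤ 2 ^ n * U := by
  intro n
  induction n with
  | zero =>
    intro P k U c hP hP0 _ hU
    have h := hU 0
    rw [Polynomial.eq_C_of_natDegree_eq_zero hP, eval_C] at h
    have h1 : S.sz (P.coeff 0) ≠ 0 := by
      rw [Ne, S.sz_eq_zero]; intro h0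
      apply hP0
      rw [Polynomial.eq_C_of_natDegree_eq_zero hP, h0, C_0]
    simp only [pow_zero, mul_one, one_mul]
    exact (Nat.le_mul_of_pos_right k (Nat.pos_of_ne_zero h1)).trans h
  | succ n ih =>
    intro P k U c hP hP0 hsep hU
    obtain ⟨Q, hQ⟩ : X - C (c 0) ∣ P - C (P.eval (c 0)) := by
      rw [dvd_iff_isRoot]; simp
    have hd : (P - C (P.eval (c 0))).natDegree = n + 1 := by rw [natDegree_sub_C, hP]
    have hQ0 : Q ≠ 0 := by
      rintro rfl
      rw [hQ] at hd; simp at hd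
    have hQd : Q.natDegree = n := by
      rw [hQ, natDegree_mul (X_sub_C_ne_zero _) hQ0, natDegree_X_sub_C] at hd
      omega
    have := ih Q (k * ρ) (2 * U) (fun i => c i.succ) hQd hQ0
      (fun i j hij => hsep _ _ (by simpa using hij)) (fun i => by
        have e : P.eval (c i.succ) - P.eval (c 0) = (c i.succ - c 0) * Q.eval (c i.succ) := by
          have := congrArg (eval (c i.succ)) hQ
          simpa using this
        have h1 : ρ * S.sz (Q.eval (c i.succ)) ≤ S.sz (P.eval (c i.succ)) + S.sz (P.eval (c 0)) := by
          refine le_trans (Nat.mul_le_mul_right _ (hsep i.succ 0 (Fin.succ_ne_zero i))) ?_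
          rw [← S.sz_mul, ← e]; exact S.sz_sub _ _
        calc k * ρ * S.sz (Q.eval (c i.succ)) = k * (ρ * S.sz (Q.eval (c i.succ))) := by ring
          _ ≤ k * (S.sz (P.eval (c i.succ)) + S.sz (P.eval (c 0))) := Nat.mul_le_mul_left _ h1
          _ ≤ 2 * U := by rw [mul_add]; have := hU i.succ; have := hU 0; omega)
    calc k * ρ ^ (n + 1) = k * ρ * ρ ^ n := by ring
      _ ≤ 2 ^ n * (2 * U) := this
      _ = _ := by ring

/-- Either `G` contains `n` points pairwise at distance at least `ρ`, or it is covered by `n` balls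
of radius `ρ`. -/
lemma exists_cover (G : Finset A) (ρ : ℕ) (n : ℕ) :
    (∃ c : Fin n → A, (∀ i, c i ∈ G) ∧ ∀ i j, i ≠ j → ρ ≤ S.sz (c i - c j)) ∨
    ∃ H : Finset A, H.card ≤ n ∧ ∀ g ∈ G, ∃ h ∈ H, S.sz (g - h) < ρ := by
  classical
  induction n with
  | zero => left; exact ⟨fun i => i.elim0, fun i => i.elim0, fun i => i.elim0⟩
  | succ n ih =>
    rcases ih with ⟨c, hc, hs⟩ | ⟨H, h1, h2⟩
    · by_cases h : ∃ g ∈ G, ∀ i, ρ ≤ S.sz (g - c i)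
      · obtain ⟨g, hg, hgs⟩ := h
        left
        refine ⟨Fin.cons g c, fun i => ?_, fun i j => ?_⟩
        · refine Fin.cases ?_ (fun i => ?_) i
          · simpa using hg
          · simpa using hc i
        · refine Fin.cases ?_ (fun i => ?_) i <;> refine Fin.cases ?_ (fun j => ?_) j
          · simp
          · intro _; simpa using hgs j
          · intro _; rw [← S.sz_neg, neg_sub]; simpa using hgs i
          · intro hij; simpa using hs i j (by simpa using hij)
      · push Not at h
        right
        refine ⟨Finset.univ.image c, Finset.card_image_le.trans (by simp), fun g hg => ?_⟩
        obtain ⟨i, hi⟩ := h g hg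
        exact ⟨c i, Finset.mem_image_of_mem _ (Finset.mem_univ i), hi⟩
    · right; exact ⟨H, by omega, h2⟩

/-- A nonzero polynomial of degree `n` takes values of size at most `U` at `O(ρ)` points only, where
`ρ` is about `U ^ (1/n)`. -/
lemma card_small_values {n : ℕ} {P : A[X]} (hP : P.natDegree = n) (hP0 : P ≠ 0) {U ρ : ℕ}
    (hρ : 2 ^ n * U < ρ ^ n) (G : Finset A) (hG : ∀ g ∈ G, S.sz (P.eval g) ≤ U) :
    G.card ≤ (n + 1) * (S.c * (ρ + 1)) := by
  classical
  rcases exists_cover S G ρ (n + 1) with ⟨c, hc, hs⟩ | ⟨H, h1, h2⟩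
  · have := separation S ρ n P 1 U c hP hP0 hs fun i => by rw [one_mul]; exact hG _ (hc i)
    omega
  · obtain ⟨K, hK1, hK2⟩ := S.exists_ball ρ
    have hsub : G ⊆ (H ×ˢ K).image fun u => u.1 + u.2 := by
      intro g hg
      obtain ⟨h, hh, hgh⟩ := h2 g hg
      exact Finset.mem_image.2 ⟨(h, g - h), Finset.mem_product.2 ⟨hh, hK1 _ hgh.le⟩, by simp⟩
    refine (Finset.card_le_card hsub).trans (Finset.card_image_le.trans ?_)
    rw [Finset.card_product]
    exact Nat.mul_le_mul h1 hK2

end sep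

section norm
variable {A : Type*} [CommRing A] [IsDomain A] (S : Sized A) {Λ : Type*} [CommRing Λ] [IsDomain Λ]
  [Algebra A Λ] {ι : Type*} [Fintype ι] (b : Module.Basis ι A Λ)

/-- The index of a principal ideal is the size of the norm of its generator. -/
lemma card_quot_span (S : Sized A) (b : Module.Basis ι A Λ) [IsPrincipalIdealRing A] {f : Λ} (hf : f ≠ 0) :
    Nat.card (Λ ⧸ Ideal.span {f}) = S.sz (Algebra.norm A f) := by
  classical
  have hI : Ideal.span {f} ≠ ⊥ := Ideal.span_singleton_eq_bot.not.2 hf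
  have hassoc := associated_norm_prod_smith b hf
  rw [Nat.card_congr (Ideal.quotientEquivPiSpan (Ideal.span {f}) b hI).toEquiv, Nat.card_pi]
  obtain ⟨u, hu⟩ := hassoc
  have hu1 : S.sz (u : A) = 1 := by
    have : S.sz (u : A) * S.sz ((u⁻¹ : Aˣ) : A) = 1 := by
      rw [← S.sz_mul, Units.mul_inv, S.sz_one]
    exact Nat.eq_one_of_mul_eq_one_right this
  have hprod : ∀ (s : Finset ι) (g : ι → A), S.sz (∏ i ∈ s, g i) = ∏ i ∈ s, S.sz (g i) := by
    intro s g
    induction s using Finset.induction_on with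
    | empty => simp [S.sz_one]
    | insert i s hi ih => rw [Finset.prod_insert hi, Finset.prod_insert hi, S.sz_mul, ih]
  have hne : ∏ i, Ideal.smithCoeffs b _ hI i ≠ 0 := by
    rw [← hu]
    exact mul_ne_zero ((Algebra.norm_ne_zero_iff_of_basis b).2 hf) u.ne_zero
  have := congrArg S.sz hu
  rw [S.sz_mul, hu1, mul_one, hprod] at this
  rw [this]
  exact Finset.prod_congr rfl fun i _ => S.card_quot _ (Finset.prod_ne_zero_iff.1 hne i (Finset.mem_univ i))

open Classical Polynomial in
/-- Few elements of a box have small norm: for fixed values of the other coordinates, the norm is a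
polynomial of degree `n` in the `i₀`-th coordinate, and `card_small_values` applies. -/
lemma card_small_norm (i₀ : ι) {U ρ : ℕ} (hρ : 2 ^ Fintype.card ι * U < ρ ^ Fintype.card ι)
    (K : Finset A) :
    ((boxOf b K).filter fun a => S.sz (Algebra.norm A a) ≤ U).card ≤
      (Fintype.card ι + 1) * (S.c * (ρ + 1)) * K.card ^ (Fintype.card ι - 1) := by
  set F := (boxOf b K).filter fun a => S.sz (Algebra.norm A a) ≤ U with hF
  set f : Λ → ({i : ι // i ≠ i₀} → A) := fun a i => b.repr a i with hf
  have himg : (F.image f).card ≤ K.card ^ (Fintype.card ι - 1) := by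
    have hsub : F.image f ⊆ Fintype.piFinset fun _ => K := by
      intro g hg
      obtain ⟨a, ha, rfl⟩ := Finset.mem_image.1 hg
      exact Fintype.mem_piFinset.2 fun i => (mem_boxOf b).1 (Finset.mem_filter.1 ha).1 i
    refine (Finset.card_le_card hsub).trans (le_of_eq ?_)
    simp [Fintype.card_subtype_compl]
  refine (Finset.card_le_mul_card_image F ((Fintype.card ι + 1) * (S.c * (ρ + 1))) ?_).trans
    (Nat.mul_le_mul_left _ himg)
  intro g hg
  obtain ⟨a₁, ha₁, rfl⟩ := Finset.mem_image.1 hg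
  set a₀ := a₁ - b.repr a₁ i₀ • b i₀ with ha₀
  set P : A[X] := ((X : A[X]) • (Algebra.leftMulMatrix b (b i₀)).map C +
    (Algebra.leftMulMatrix b a₀).map C).det with hP
  have hev : ∀ c : A, P.eval c = Algebra.norm A (c • b i₀ + a₀) := by
    intro c
    have hL : Algebra.leftMulMatrix b (c • b i₀ + a₀) =
        c • Algebra.leftMulMatrix b (b i₀) + Algebra.leftMulMatrix b a₀ := by
      rw [map_add, map_smul]
    rw [hP, ← coe_evalRingHom, RingHom.map_det, Algebra.norm_eq_matrix_det b]
    congr 1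
    ext i j
    rw [RingHom.mapMatrix_apply, Matrix.map_apply, Matrix.add_apply, Matrix.smul_apply,
      Matrix.map_apply, Matrix.map_apply, hL, Matrix.add_apply, Matrix.smul_apply]
    simp only [smul_eq_mul, map_add, map_mul, coe_evalRingHom, eval_X, eval_C]
  have hcoeff : P.coeff (Fintype.card ι) ≠ 0 := by
    rw [hP, coeff_det_X_add_C_card, ← Algebra.norm_eq_matrix_det b,
      Algebra.norm_ne_zero_iff_of_basis b]
    exact b.ne_zero i₀
  have hdeg : P.natDegree = Fintype.card ι :=
    natDegree_eq_of_le_of_coeff_ne_zero (natDegree_det_X_add_C_le _ _) hcoeff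
  have hP0 : P ≠ 0 := by rintro h; simp [h] at hcoeff
  have key : ∀ a, f a = f a₁ → a = b.repr a i₀ • b i₀ + a₀ := by
    intro a ha
    apply b.repr.injective
    ext i
    rw [ha₀]
    by_cases hi : i = i₀
    · subst hi; simp
    · have : b.repr a i = b.repr a₁ i := congrFun ha ⟨i, hi⟩
      simp [this, Finsupp.single_apply, Ne.symm hi]
  have hinj : Set.InjOn (fun a => b.repr a i₀) (F.filter fun a => f a = f a₁ : Finset Λ) := by
    intro a ha a' ha' he
    simp only [Finset.coe_filter, Set.mem_setOf_eq] at ha ha' he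
    rw [key a ha.2, key a' ha'.2, he]
  rw [← Finset.card_image_of_injOn hinj]
  refine card_small_values S hdeg hP0 hρ _ fun c hc => ?_
  obtain ⟨a, ha, rfl⟩ := Finset.mem_image.1 hc
  rw [Finset.mem_filter] at ha
  rw [hev, ← key a ha.2]
  exact (Finset.mem_filter.1 ha.1).2

lemma rpow_inv_facts {U : ℝ} (hU : 1 ≤ U) {N : ℕ} (hN0 : N ≠ 0) :
    U < ((⌊U ^ ((N : ℝ)⁻¹)⌋₊ + 1 : ℕ) : ℝ) ^ N ∧
    ((⌊U ^ ((N : ℝ)⁻¹)⌋₊ + 1 : ℕ) : ℝ) ≤ 2 * U ^ ((N : ℝ)⁻¹) := by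
  set μ : ℝ := U ^ ((N : ℝ)⁻¹) with hμ
  have hμ1 : 1 ≤ μ := Real.one_le_rpow hU (by positivity)
  have hμN : μ ^ N = U := Real.rpow_inv_natCast_pow (by positivity) hN0
  have := Nat.floor_le (show 0 ≤ μ by positivity)
  constructor
  · conv_lhs => rw [← hμN]
    exact pow_lt_pow_left₀ (by push_cast; exact Nat.lt_floor_add_one μ) (by positivity) hN0
  · push_cast; linarith

open Classical in
/-- Few elements of a box have small norm. -/
lemma exists_card_small_norm [IsPrincipalIdealRing A] [Nonempty ι] :
    ∃ C : ℝ, 0 ≤ C ∧ ∀ T (U : ℝ), 1 ≤ U →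
      ((((boxSys S b).B T).filter fun a => (Nat.card (Λ ⧸ Ideal.span {a}) : ℝ) ≤ U).card : ℝ) ≤
        C * ((boxSys S b).B T).card * (U / ((boxSys S b).B T).card) ^ (boxSys S b).κ := by
  set N := Fintype.card ι with hN
  have hN0 : N ≠ 0 := Fintype.card_ne_zero
  refine ⟨(N + 1) * S.c * 5, by positivity, fun T U hU => ?_⟩
  obtain ⟨h1, h2⟩ := rpow_inv_facts hU hN0
  set μ : ℝ := U ^ ((N : ℝ)⁻¹) with hμ
  have hμ1 : 1 ≤ μ := Real.one_le_rpow hU (by positivity)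
  set r := ⌊μ⌋₊ + 1 with hr
  have hB : (boxSys S b).B T = boxOf b (S.D (T + 1)) := rfl
  have hκ : (boxSys S b).κ = (N : ℝ)⁻¹ := rfl
  rw [hB, hκ]
  have hX1 : 1 ≤ (S.D (T + 1)).card := (Nat.le_add_left 1 T).trans (S.le_card (T + 1))
  set X := (S.D (T + 1)).card with hX
  have hlt : 2 ^ N * ⌊U⌋₊ < (2 * r) ^ N := by
    rw [mul_pow]
    refine Nat.mul_lt_mul_of_pos_left ?_ (by positivity)
    have : ((⌊U⌋₊ : ℕ) : ℝ) < ((r ^ N : ℕ) : ℝ) :=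
      (Nat.floor_le (by linarith)).trans_lt (by push_cast; exact_mod_cast h1)
    exact_mod_cast this
  have h3 := card_small_norm S b (Classical.arbitrary ι) (U := ⌊U⌋₊) (ρ := 2 * r) hlt (S.D (T + 1))
  have hsub : ((boxOf b (S.D (T + 1))).filter fun a => (Nat.card (Λ ⧸ Ideal.span {a}) : ℝ) ≤ U) ⊆
      (boxOf b (S.D (T + 1))).filter fun a => S.sz (Algebra.norm A a) ≤ ⌊U⌋₊ := by
    intro a ha
    rw [Finset.mem_filter] at ha ⊢
    refine ⟨ha.1, ?_⟩
    by_cases h0 : a = 0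
    · have : Module.Finite A Λ := Module.Finite.of_basis b
      have : Algebra.norm A a = 0 := (Algebra.norm_eq_zero_iff_of_basis b).2 h0
      rw [this, S.sz_zero]; exact Nat.zero_le _
    · rw [← card_quot_span S b h0]
      exact Nat.le_floor ha.2
  have h4 : ((((boxOf b (S.D (T + 1))).filter fun a =>
      (Nat.card (Λ ⧸ Ideal.span {a}) : ℝ) ≤ U).card : ℕ) : ℝ) ≤
      (N + 1) * (S.c * (2 * r + 1)) * X ^ (N - 1) := by
    exact_mod_cast (Finset.card_le_card hsub).trans h3
  refine h4.trans ?_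
  rw [card_boxOf, ← hN, ← hX]
  push_cast
  rw [Real.div_rpow (by linarith) (by positivity), Real.pow_rpow_inv_natCast (by positivity) hN0,
    ← hμ]
  have hXr : (0:ℝ) < X := by exact_mod_cast hX1
  have e : (X : ℝ) ^ N = X ^ (N - 1) * X := by
    rw [← pow_succ, Nat.sub_add_cancel (Nat.one_le_iff_ne_zero.2 hN0)]
  rw [e]
  calc (N + 1 : ℝ) * (S.c * (2 * r + 1)) * X ^ (N - 1) ≤ (N + 1) * (S.c * (5 * μ)) * X ^ (N - 1) := by
        gcongr; linarith
    _ = _ := by field_simp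

/-- The number of ideals of bounded index grows at most polynomially. -/
lemma exists_ideal_count (S : Sized A) (b : Module.Basis ι A Λ) [IsDedekindDomain Λ]
    [Nonempty ι] : ∃ C : ℝ, 0 ≤ C ∧ ∀ U : ℝ, 1 ≤ U →
    ∃ W : Finset (Ideal Λ), (∀ J : Ideal Λ, J ≠ ⊥ → (Nat.card (Λ ⧸ J) : ℝ) ≤ U → J ∈ W) ∧
      (W.card : ℝ) ≤ C * U ^ 2 := by
  classical
  obtain ⟨C0, hC0⟩ := exists_rep S b
  set N := Fintype.card ι with hN
  have hN0 : N ≠ 0 := Fintype.card_ne_zero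
  set c2 : ℕ := S.c * ((C0 + 1) * (2 * S.c) + 1) with hc2
  refine ⟨((c2 * 2 : ℝ) ^ N) ^ 2, by positivity, fun U hU => ?_⟩
  obtain ⟨h1, h2⟩ := rpow_inv_facts hU hN0
  set μ : ℝ := U ^ ((N : ℝ)⁻¹) with hμ
  have hμN : μ ^ N = U := Real.rpow_inv_natCast_pow (by positivity) hN0
  set r := ⌊μ⌋₊ + 1 with hr
  obtain ⟨K, hK1, hK2⟩ := exists_ball_nm S b ((C0 + 1) * (2 * S.c * r))
  refine ⟨(K ×ˢ K).image fun u => Ideal.span {u.1} ⊔ Ideal.span {u.2}, fun J hJ hJU => ?_, ?_⟩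
  · have := finite_quot_of_ne_bot S b hJ
    have hlt : Nat.card (Λ ⧸ J) < r ^ Fintype.card ι := by
      have := hJU.trans_lt h1
      exact_mod_cast this
    obtain ⟨α, hα, hα0, hαn⟩ := exists_short S b hlt
    obtain ⟨x, hx⟩ := IsDedekindDomain.exists_sup_span_eq
      ((Ideal.span_singleton_le_iff_mem J).2 hα) (by simpa using hα0)
    obtain ⟨y, hy⟩ := hC0 α hα0 x
    refine Finset.mem_image.2 ⟨(α, x - α * y), Finset.mem_product.2 ⟨hK1 _ ?_, hK1 _ ?_⟩, ?_⟩
    · exact hαn.trans (Nat.le_mul_of_pos_left _ (Nat.succ_pos _))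
    · refine hy.trans ?_
      exact Nat.mul_le_mul (Nat.le_succ _) hαn
    · rw [← hx]
      apply le_antisymm
      · refine sup_le le_sup_left ?_
        rw [Ideal.span_singleton_le_iff_mem, sub_eq_add_neg]
        refine Ideal.add_mem _ (Ideal.mem_sup_right (Ideal.mem_span_singleton_self x)) ?_
        rw [← mul_neg]
        exact Ideal.mem_sup_left (Ideal.mul_mem_right _ _ (Ideal.mem_span_singleton_self α))
      · refine sup_le le_sup_left ?_
        rw [Ideal.span_singleton_le_iff_mem]
        have : x = (x - α * y) + α * y := by ring
        rw [this]
        exact Ideal.add_mem _ (Ideal.mem_sup_right (by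
          convert Ideal.mem_span_singleton_self (x - α * y) using 2; simp))
          (Ideal.mem_sup_left (Ideal.mul_mem_right _ _ (Ideal.mem_span_singleton_self α)))
  · have hle : ((K ×ˢ K).image fun u => Ideal.span {u.1} ⊔ Ideal.span {u.2}).card ≤ K.card ^ 2 := by
      refine Finset.card_image_le.trans ?_
      rw [Finset.card_product, sq]
    have hK3 : (K.card : ℝ) ≤ (c2 * 2) ^ N * U := by
      have hK4 : K.card ≤ (c2 * r) ^ N := by
        refine hK2.trans (Nat.pow_le_pow_left ?_ _)
        have : 1 ≤ r := Nat.le_add_left 1 _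
        calc S.c * ((C0 + 1) * (2 * S.c * r) + 1) ≤ S.c * ((C0 + 1) * (2 * S.c * r) + r) := by gcongr
          _ = _ := by rw [hc2]; ring
      have hK5 : (K.card : ℝ) ≤ (c2 * r) ^ N := by exact_mod_cast hK4
      refine hK5.trans ?_
      rw [← hμN, ← mul_pow, mul_assoc]
      gcongr
    calc _ ≤ (K.card : ℝ) ^ 2 := by exact_mod_cast hle
      _ ≤ ((c2 * 2) ^ N * U) ^ 2 := by gcongr
      _ = _ := by ring

end norm
end SpGen

/-! ### A Mertens type upper bound and split primes -/

namespace SpGen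

/-- The index of an ideal, as a real number. -/
noncomputable def cN {Λ : Type*} [CommRing Λ] (I : Ideal Λ) : ℝ := (Nat.card (Λ ⧸ I) : ℝ)

section cN
variable {Λ : Type*} [CommRing Λ] {I J : Ideal Λ}

lemma cN_nonneg : 0 ≤ cN I := Nat.cast_nonneg _

lemma BoxSys.one_le_cN (bx : BoxSys Λ) (hI : I ≠ ⊥) : 1 ≤ cN I := by
  have := bx.finite_quot I hI
  have : 0 < Nat.card (Λ ⧸ I) := Nat.card_pos
  unfold cN
  exact_mod_cast this

lemma BoxSys.two_le_cN (bx : BoxSys Λ) (hI : I ≠ ⊥) (h : I ≠ ⊤) : 2 ≤ cN I := by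
  have := bx.finite_quot I hI
  have : Nontrivial (Λ ⧸ I) := Ideal.Quotient.nontrivial_iff.2 h
  have : 1 < Nat.card (Λ ⧸ I) := Finite.one_lt_card
  unfold cN
  exact_mod_cast this

lemma BoxSys.cN_le (bx : BoxSys Λ) (hI : I ≠ ⊥) (h : I ≤ J) : cN J ≤ cN I := by
  have := bx.finite_quot I hI
  unfold cN
  exact_mod_cast Nat.card_le_card_of_surjective _ (Ideal.Quotient.factor_surjective h)

lemma cN_mul [IsDedekindDomain Λ] [Infinite Λ] (I J : Ideal Λ) : cN (I * J) = cN I * cN J := by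
  unfold cN; rw [card_quot_mul]; push_cast; rfl

lemma cN_top : cN (⊤ : Ideal Λ) = 1 := by
  unfold cN
  have : Subsingleton (Λ ⧸ (⊤ : Ideal Λ)) := Ideal.Quotient.subsingleton_iff.2 rfl
  simp

lemma cN_pow [IsDedekindDomain Λ] [Infinite Λ] (I : Ideal Λ) (k : ℕ) : cN (I ^ k) = cN I ^ k := by
  induction k with
  | zero => rw [pow_zero, pow_zero, Ideal.one_eq_top, cN_top]
  | succ k ih => rw [pow_succ, cN_mul, ih, pow_succ]

/-- The indices of distinct maximal ideals containing `I` multiply up to at most the index of `I`. -/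
lemma BoxSys.prod_cN_le (bx : BoxSys Λ) (hI : I ≠ ⊥) (W : Finset (Ideal Λ))
    (hW : ∀ w ∈ W, w.IsMaximal ∧ I ≤ w) : ∏ w ∈ W, cN w ≤ cN I := by
  classical
  have hfin := bx.finite_quot I hI
  have hcop : Pairwise fun i j : W => IsCoprime (i : Ideal Λ) (j : Ideal Λ) := by
    intro i j hij
    haveI := (hW _ i.2).1
    haveI := (hW _ j.2).1
    exact Ideal.isCoprime_of_isMaximal fun h => hij (Subtype.ext h)
  have hs : Function.Surjective (fun (x : Λ ⧸ I) (w : W) => Ideal.Quotient.factor (hW w w.2).2 x) := by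
    intro f
    choose g hg using fun w : W => Ideal.Quotient.mk_surjective (f w)
    obtain ⟨x, hx⟩ := Ideal.exists_forall_sub_mem_ideal
      (I := fun w : W => (w : Ideal Λ)) hcop g
    refine ⟨Ideal.Quotient.mk I x, funext fun w => ?_⟩
    rw [← hg w]
    exact Ideal.Quotient.eq.2 (hx w)
  have := Nat.card_le_card_of_surjective _ hs
  rw [Nat.card_pi] at this
  unfold cN
  rw [← Finset.prod_coe_sort W fun w => (Nat.card (Λ ⧸ w) : ℝ)]
  exact_mod_cast this

end cN

/-- Sparsity of a set of ideals: `∑ log N(v) / N(v) ≤ η log Y + O(1)`, the sum being over the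
elements of index at most `Y`. -/
def SparseBy {Λ : Type*} [CommRing Λ] (Z : Set (Ideal Λ)) (η : ℝ) : Prop :=
  ∃ C : ℝ, 0 ≤ C ∧ ∀ Y : ℝ, 1 ≤ Y → ∀ W : Finset (Ideal Λ), (∀ v ∈ W, v ∈ Z ∧ cN v ≤ Y) →
    ∑ v ∈ W, Real.log (cN v) / cN v ≤ η * Real.log Y + C

lemma exists_rpow_le {κ ε : ℝ} (hκ : 0 < κ) (hε : 0 < ε) : ∃ δ : ℝ, 0 < δ ∧ δ ≤ 1 ∧
    ∀ t, 0 ≤ t → t ≤ δ → t ^ κ ≤ ε := by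
  refine ⟨min 1 (ε ^ κ⁻¹), lt_min one_pos (by positivity), min_le_left _ _, fun t h0 ht => ?_⟩
  calc t ^ κ ≤ (ε ^ κ⁻¹) ^ κ := Real.rpow_le_rpow h0 (ht.trans (min_le_right _ _)) hκ.le
    _ = ε := by rw [← Real.rpow_mul hε.le, inv_mul_cancel₀ hκ.ne', Real.rpow_one]

/-- A Mertens type upper bound: `∑ log N(w) / N(w) ≤ (1 + ε) log Y + O(1)` over the maximal ideals of
index at most `Y`. Each `w` contains about `1/N(w)` of the elements of a box of about `Y` elements, and
the indices of the maximal ideals containing an element `a` multiply to at most `N(a) = O(Y)`. -/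
theorem mertens {Λ : Type*} [CommRing Λ] (bx : BoxSys Λ) {ε : ℝ} (hε : 0 < ε) :
    SparseBy {w : Ideal Λ | w.IsMaximal ∧ w ≠ ⊥} (1 + ε) := by
  classical
  set e : ℝ := min (ε / 4) (1 / 4) with he
  have he0 : 0 < e := lt_min (by positivity) (by norm_num)
  have he1 : e ≤ 1 / 4 := min_le_right _ _
  have he2 : e ≤ ε / 4 := min_le_left _ _
  have hC1 := bx.one_le_C
  obtain ⟨δ, hδ0, hδ1, hδ⟩ := exists_rpow_le bx.κ_pos (show 0 < e / bx.C by positivity)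
  set K : ℝ := max (1 / δ) (1 / e) with hK
  have hK1 : 1 ≤ K := (one_le_one_div hδ0 hδ1).trans (le_max_left _ _)
  have hK0 : 0 < K := by linarith
  have hKδ : 1 / K ≤ δ := by
    rw [div_le_iff₀ hK0, ← div_le_iff₀' hδ0]; exact le_max_left _ _
  have hKe : 1 / K ≤ e := by
    rw [div_le_iff₀ hK0, ← div_le_iff₀' he0]; exact le_max_right _ _
  obtain ⟨C', hC'⟩ := bx.norm_le 0 1
  set C2 := max C' 1 * (bx.C * K) with hC2
  have hC21 : 1 ≤ C2 := by
    have : 1 ≤ bx.C * K := by nlinarith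
    have : 1 ≤ max C' 1 := le_max_right _ _
    nlinarith
  refine ⟨(1 + ε) * Real.log C2, mul_nonneg (by positivity) (Real.log_nonneg hC21),
    fun Y hY W hW => ?_⟩
  obtain ⟨T, hT1, hT2⟩ := bx.exists_le (K * Y) (by nlinarith)
  set β : ℝ := ((bx.B T).card : ℝ) with hβ
  have hβ1 : 1 ≤ β := by rw [hβ]; exact_mod_cast bx.one_le T
  have hβ0 : 0 < β := by linarith
  -- the elements of the box in `w`
  have hcount : ∀ w ∈ W, (1 - 2 * e) * β / cN w ≤
      (((bx.B T).filter fun a => a ∈ w ∧ a ≠ 0).card : ℝ) := by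
    intro w hw
    obtain ⟨⟨hmax, hbot⟩, hwY⟩ := hW w hw
    have hw1 := bx.one_le_cN hbot
    have hle : cN w ≤ β / K := by rw [le_div_iff₀ hK0]; nlinarith
    have hle' : cN w ≤ β := hle.trans (div_le_self hβ0.le hK1)
    have h1 := bx.equi w hbot T 0 (by
      have : cN w ≤ ((bx.B T).card : ℝ) := hle'
      unfold cN at this
      exact_mod_cast this)
    simp only [sub_zero] at h1
    have h2 : (cN w / β) ^ bx.κ ≤ e / bx.C := hδ _ (by positivity) (by
      refine le_trans ?_ hKδ
      rw [div_le_iff₀ hβ0]; rw [one_div, inv_mul_eq_div]; exact hle)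
    have h3 : bx.C * β * (cN w / β) ^ bx.κ ≤ e * β := by
      calc bx.C * β * (cN w / β) ^ bx.κ ≤ bx.C * β * (e / bx.C) := by gcongr
        _ = e * β := by field_simp
    have h4 := (abs_le.1 (h1.trans h3)).1
    change -(e * β) ≤ cN w * _ - β at h4
    have h5 : ((bx.B T).filter fun a => a ∈ w).card ≤
        ((bx.B T).filter fun a => a ∈ w ∧ a ≠ 0).card + 1 := by
      have : ((bx.B T).filter fun a => a ∈ w) ⊆
          insert 0 ((bx.B T).filter fun a => a ∈ w ∧ a ≠ 0) := by
        intro a ha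
        rw [Finset.mem_insert, Finset.mem_filter]
        rw [Finset.mem_filter] at ha
        by_cases h : a = 0
        · exact Or.inl h
        · exact Or.inr ⟨ha.1, ha.2, h⟩
      exact (Finset.card_le_card this).trans (Finset.card_insert_le _ _)
    have h6 : (((bx.B T).filter fun a => a ∈ w).card : ℝ) ≤
        ((bx.B T).filter fun a => a ∈ w ∧ a ≠ 0).card + 1 := by exact_mod_cast h5
    have h7 : cN w ≤ e * β := hle.trans (by
      rw [div_eq_mul_one_div, mul_comm]; gcongr)
    rw [div_le_iff₀ (by linarith)]
    nlinarith
  have hlow : (1 - 2 * e) * β * ∑ w ∈ W, Real.log (cN w) / cN w ≤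
      ∑ w ∈ W, ∑ a ∈ (bx.B T).filter (fun a => a ∈ w ∧ a ≠ 0), Real.log (cN w) := by
    rw [Finset.mul_sum]
    refine Finset.sum_le_sum fun w hw => ?_
    rw [Finset.sum_const, nsmul_eq_mul]
    have := hcount w hw
    have hl : 0 ≤ Real.log (cN w) := Real.log_nonneg (bx.one_le_cN (hW w hw).1.2)
    calc (1 - 2 * e) * β * (Real.log (cN w) / cN w) = (1 - 2 * e) * β / cN w * Real.log (cN w) := by
          ring
      _ ≤ _ := by gcongr
  have hup : ∑ w ∈ W, ∑ a ∈ (bx.B T).filter (fun a => a ∈ w ∧ a ≠ 0), Real.log (cN w) ≤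
      β * (Real.log Y + Real.log C2) := by
    have hswap : ∑ w ∈ W, ∑ a ∈ (bx.B T).filter (fun a => a ∈ w ∧ a ≠ 0), Real.log (cN w) =
        ∑ a ∈ bx.B T, ∑ w ∈ W.filter (fun w => a ∈ w ∧ a ≠ 0), Real.log (cN w) := by
      simp_rw [Finset.sum_filter]
      exact Finset.sum_comm
    rw [hswap, hβ, ← nsmul_eq_mul]
    refine Finset.sum_le_card_nsmul _ _ _ fun a ha => ?_
    by_cases h0 : a = 0
    · simp only [h0, ne_eq, not_true_eq_false, and_false, Finset.filter_false, Finset.sum_empty]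
      exact add_nonneg (Real.log_nonneg hY) (Real.log_nonneg hC21)
    have hI : Ideal.span {a} ≠ ⊥ := by simpa using h0
    have hp := bx.prod_cN_le hI (W.filter (fun w => a ∈ w ∧ a ≠ 0)) (fun w hw => by
      rw [Finset.mem_filter] at hw
      exact ⟨(hW w hw.1).1.1, (Ideal.span_singleton_le_iff_mem w).2 hw.2.1⟩)
    have hpos : ∀ w ∈ W.filter (fun w => a ∈ w ∧ a ≠ 0), 0 < cN w := fun w hw =>
      lt_of_lt_of_le one_pos (bx.one_le_cN (hW w (Finset.mem_filter.1 hw).1).1.2)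
    rw [← Real.log_prod (fun w hw => (hpos w hw).ne'),
      ← Real.log_mul (by linarith) (by linarith)]
    refine Real.log_le_log (Finset.prod_pos hpos) (hp.trans ?_)
    have hn := hC' T a ha (by simpa using h0)
    rw [zero_add, mul_one] at hn
    change cN (Ideal.span {a}) ≤ C' * β at hn
    calc cN (Ideal.span {a}) ≤ C' * β := hn
      _ ≤ max C' 1 * (bx.C * (K * Y)) := by gcongr; exact le_max_left _ _
      _ = Y * C2 := by rw [hC2]; ring
  have h := hlow.trans hup
  have h8 : (1 - 2 * e) * ∑ w ∈ W, Real.log (cN w) / cN w ≤ Real.log Y + Real.log C2 := by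
    refine le_of_mul_le_mul_left ?_ hβ0
    linarith
  have hL : 0 ≤ Real.log Y + Real.log C2 := add_nonneg (Real.log_nonneg hY) (Real.log_nonneg hC21)
  have h9 : 1 ≤ (1 + ε) * (1 - 2 * e) := by nlinarith
  have hS : 0 ≤ ∑ w ∈ W, Real.log (cN w) / cN w := Finset.sum_nonneg fun w hw =>
    div_nonneg (Real.log_nonneg (bx.one_le_cN (hW w hw).1.2)) cN_nonneg
  calc ∑ w ∈ W, Real.log (cN w) / cN w ≤ ((1 + ε) * (1 - 2 * e)) * ∑ w ∈ W, Real.log (cN w) / cN w :=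
        le_mul_of_one_le_left hS h9
    _ = (1 + ε) * ((1 - 2 * e) * ∑ w ∈ W, Real.log (cN w) / cN w) := by ring
    _ ≤ (1 + ε) * (Real.log Y + Real.log C2) := by gcongr
    _ = _ := by ring

lemma SparseBy.of_finite_diff {Λ : Type*} [CommRing Λ] {Z Z' : Set (Ideal Λ)} {η : ℝ}
    (h : SparseBy Z η) (hf : (Z' \ Z).Finite) : SparseBy Z' η := by
  classical
  obtain ⟨C, hC0, hC⟩ := h
  set D := ∑ v ∈ hf.toFinset, |Real.log (cN v) / cN v| with hD
  have hD0 : 0 ≤ D := Finset.sum_nonneg fun _ _ => abs_nonneg _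
  refine ⟨C + D, by positivity, fun Y hY W hW => ?_⟩
  rw [← Finset.sum_filter_add_sum_filter_not W (fun v => v ∈ Z)]
  have h1 := hC Y hY (W.filter fun v => v ∈ Z) fun v hv =>
    ⟨(Finset.mem_filter.1 hv).2, (hW v (Finset.mem_filter.1 hv).1).2⟩
  have h2 : ∑ v ∈ W.filter (fun v => v ∉ Z), Real.log (cN v) / cN v ≤ D := by
    refine (Finset.sum_le_sum fun v _ => le_abs_self _).trans ?_
    refine Finset.sum_le_sum_of_subset_of_nonneg (fun v hv => ?_) fun _ _ _ => abs_nonneg _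
    rw [Finset.mem_filter] at hv
    rw [Set.Finite.mem_toFinset]
    exact ⟨(hW v hv.1).1, hv.2⟩
  linarith

/-- A set of primes almost all of which split into at least `d` parts in an extension is sparse. -/
theorem sparse_of_split {O Λ : Type*} [CommRing O] [CommRing Λ] [Algebra O Λ] [FaithfulSMul O Λ]
    (bx : BoxSys Λ) (Z : Set (Ideal O)) (hZ : ∀ v ∈ Z, v.IsMaximal ∧ v ≠ ⊥) (Z₀ : Set (Ideal O))
    (hZ₀ : Z₀.Finite) (d : ℕ) (hd : 0 < d)
    (H : ∀ v ∈ Z, v ∉ Z₀ → ∃ φ : Fin d → (Λ →ₐ[O] O ⧸ v), Function.Injective φ) {ε : ℝ}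
    (hε : 0 < ε) : SparseBy Z ((1 + ε) / d) := by
  classical
  refine SparseBy.of_finite_diff (Z := Z \ Z₀) ?_ (hZ₀.subset fun v hv => by
    by_contra h; exact hv.2 ⟨hv.1, h⟩)
  obtain ⟨C, hC0, hC⟩ := mertens bx hε
  refine ⟨C / d, by positivity, fun Y hY W hW => ?_⟩
  have hsurj : ∀ v (ψ : Λ →ₐ[O] O ⧸ v), Function.Surjective ψ := fun v ψ x => by
    obtain ⟨y, rfl⟩ := Ideal.Quotient.mk_surjective x
    exact ⟨algebraMap O Λ y, ψ.commutes y⟩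
  have hcomap : ∀ v (ψ : Λ →ₐ[O] O ⧸ v), (RingHom.ker ψ).comap (algebraMap O Λ) = v := fun v ψ => by
    ext x
    rw [Ideal.mem_comap, RingHom.mem_ker, ψ.commutes]
    exact Ideal.Quotient.eq_zero_iff_mem
  have hcN : ∀ v (ψ : Λ →ₐ[O] O ⧸ v), cN (RingHom.ker ψ) = cN v := fun v ψ => by
    unfold cN
    exact congrArg _ (Nat.card_congr (RingHom.quotientKerEquivOfSurjective
      (f := (ψ : Λ →+* O ⧸ v)) (hsurj v ψ)).toEquiv)
  have hinj1 : ∀ (v : Ideal O) (ψ ψ' : Λ →ₐ[O] O ⧸ v), RingHom.ker ψ = RingHom.ker ψ' → ψ = ψ' := by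
    intro v ψ ψ' h
    ext x
    obtain ⟨y, hy⟩ := Ideal.Quotient.mk_surjective (ψ x)
    have h1 : x - algebraMap O Λ y ∈ RingHom.ker ψ := by
      rw [RingHom.mem_ker, map_sub, ψ.commutes, ← hy]; exact sub_self _
    rw [h, RingHom.mem_ker, map_sub, ψ'.commutes, sub_eq_zero] at h1
    rw [h1, ← hy]; rfl
  have hK : ∀ v ∈ Z \ Z₀, ∃ κ : Fin d → Ideal Λ, Function.Injective κ ∧ ∀ i,
      (κ i).comap (algebraMap O Λ) = v ∧ cN (κ i) = cN v ∧ (κ i).IsMaximal := fun v hv => by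
    obtain ⟨φ, hφ⟩ := H v hv.1 hv.2
    refine ⟨fun i => RingHom.ker (φ i), fun i j h => hφ (hinj1 _ _ _ h), fun i =>
      ⟨hcomap v _, hcN v _, ?_⟩⟩
    have := (hZ v hv.1).1
    let _ := Ideal.Quotient.field v
    exact RingHom.ker_isMaximal_of_surjective (φ i) (hsurj v (φ i))
  choose! κ hκi hκ using hK
  set V := (W ×ˢ (Finset.univ : Finset (Fin d))).image fun u => κ u.1 u.2 with hV
  have hinj : Set.InjOn (fun u : Ideal O × Fin d => κ u.1 u.2)
      (W ×ˢ (Finset.univ : Finset (Fin d)) : Finset _) := by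
    rintro ⟨v, i⟩ hv ⟨v', i'⟩ hv' h
    simp only at h
    simp only [Finset.coe_product, Set.mem_prod, Finset.mem_coe] at hv hv'
    have h1 : v = v' := by
      rw [← (hκ v (hW v hv.1).1 i).1, h, (hκ v' (hW v' hv'.1).1 i').1]
    subst h1
    rw [hκi v (hW v hv.1).1 h]
  have h1 := hC Y hY V fun w hw => by
    obtain ⟨⟨v, i⟩, hv, rfl⟩ := Finset.mem_image.1 hw
    have hvW := (Finset.mem_product.1 hv).1
    obtain ⟨hvmax, hvbot⟩ := hZ v (hW v hvW).1.1
    obtain ⟨k1, k2, k3⟩ := hκ v (hW v hvW).1 i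
    refine ⟨⟨k3, ?_⟩, by rw [k2]; exact (hW v hvW).2⟩
    intro hbot
    apply hvbot
    simp only at hbot
    rw [← k1, eq_bot_iff]
    intro x hx
    rw [Ideal.mem_comap, hbot, Ideal.mem_bot] at hx
    exact (FaithfulSMul.algebraMap_injective O Λ) (by rw [hx, map_zero])
  rw [hV, Finset.sum_image hinj, Finset.sum_product] at h1
  have h2 : ∑ v ∈ W, ∑ i : Fin d, Real.log (cN (κ v i)) / cN (κ v i) =
      ∑ v ∈ W, d * (Real.log (cN v) / cN v) := Finset.sum_congr rfl fun v hv => by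
    rw [Finset.sum_congr rfl fun i _ => by rw [(hκ v (hW v hv).1 i).2.1]]
    simp
  rw [h2, ← Finset.mul_sum] at h1
  have hd' : (0:ℝ) < d := by exact_mod_cast hd
  rw [div_mul_eq_mul_div, ← add_div, le_div_iff₀ hd']
  linarith

end SpGen

/-! ### Arithmetic rings and logarithmic averages -/

namespace SpGen

open Classical in
/-- The finiteness and equidistribution properties of a ring of integers used below: boxes, few elements
of small norm in a box, polynomially many ideals of bounded index, a finite class group, and boxes in all
finite extension domains. -/
structure Arith (O : Type) [CommRing O] [IsDedekindDomain O] where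
  bx : BoxSys O
  small : ∃ C : ℝ, 0 ≤ C ∧ ∀ T (U : ℝ), 1 ≤ U →
      (((bx.B T).filter fun a => (Nat.card (O ⧸ Ideal.span {a}) : ℝ) ≤ U).card : ℝ) ≤
        C * (bx.B T).card * (U / (bx.B T).card) ^ bx.κ
  ideals : ∃ C : ℝ, 0 ≤ C ∧ ∀ U : ℝ, 1 ≤ U →
    ∃ W : Finset (Ideal O), (∀ J : Ideal O, J ≠ ⊥ → (Nat.card (O ⧸ J) : ℝ) ≤ U → J ∈ W) ∧
      (W.card : ℝ) ≤ C * U ^ 2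
  inf : Infinite O
  cg : Finite (ClassGroup O)
  ext : ∀ (Λ : Type) [CommRing Λ] [IsDomain Λ] [Algebra O Λ] [Module.Finite O Λ]
    [FaithfulSMul O Λ], Nonempty (BoxSys Λ)

/-- Summation over dyadic ranges of `N`. -/
lemma dyadic {α : Type*} (N : α → ℕ) (f : α → ℝ) (w : ℕ → ℝ) (hw : Summable w)
    (hw0 : ∀ j, 0 ≤ w j) (Z : Set α) (hN : ∀ v ∈ Z, N v ≠ 0)
    (h : ∀ j, ∀ W : Finset α, (∀ v ∈ W, v ∈ Z ∧ 2 ^ j ≤ N v ∧ N v < 2 ^ (j + 1)) →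
      ∑ v ∈ W, f v ≤ w j) (W : Finset α) (hW : ∀ v ∈ W, v ∈ Z) : ∑ v ∈ W, f v ≤ ∑' j, w j := by
  classical
  rw [← Finset.sum_fiberwise_of_maps_to (t := W.image fun v => Nat.log 2 (N v))
    (g := fun v => Nat.log 2 (N v)) fun v hv => Finset.mem_image_of_mem _ hv]
  refine (Finset.sum_le_sum fun j _ => h j _ fun v hv => ?_).trans
    (hw.sum_le_tsum _ fun j _ => hw0 j)
  rw [Finset.mem_filter] at hv
  refine ⟨hW v hv.1, ?_, ?_⟩
  · rw [← hv.2]; exact Nat.pow_log_le_self 2 (hN v (hW v hv.1))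
  · rw [← hv.2]; exact Nat.lt_pow_succ_log_self one_lt_two _

/-- The maximal ideals different from zero. -/
def primes (O : Type*) [CommRing O] : Set (Ideal O) := {w : Ideal O | w.IsMaximal ∧ w ≠ ⊥}

/-- `∑ log N(v) / N(v)²` converges over all primes, by a dyadic decomposition and `mertens`. -/
theorem sum_log_div_sq_le {Λ : Type*} [CommRing Λ] (bx : BoxSys Λ) : ∃ D : ℝ, 0 ≤ D ∧
    ∀ W : Finset (Ideal Λ), (∀ v ∈ W, v ∈ primes Λ) →
      ∑ v ∈ W, Real.log (cN v) / cN v ^ 2 ≤ D := by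
  obtain ⟨C, hC0, hC⟩ := mertens bx one_pos
  let w : ℕ → ℝ := fun j => (1 / 2) ^ j * ((1 + 1) * Real.log (2 ^ (j + 1)) + C)
  have hw : ∀ j, w j = 2 * Real.log 2 * ((j : ℝ) ^ 1 * (1 / 2) ^ j) +
      (2 * Real.log 2 + C) * (1 / 2) ^ j := fun j => by
    simp only [w]; rw [Real.log_pow]; push_cast; ring
  have hs : Summable w := by
    simp_rw [funext hw]
    refine Summable.add (Summable.mul_left _ ?_) (Summable.mul_left _ ?_)
    · exact summable_pow_mul_geometric_of_norm_lt_one 1 (by norm_num)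
    · exact summable_geometric_of_lt_one (by norm_num) (by norm_num)
  have hw0 : ∀ j, 0 ≤ w j := fun j => by
    have : 0 ≤ Real.log (2 ^ (j + 1)) := Real.log_nonneg (one_le_pow₀ (by norm_num))
    simp only [w]; positivity
  refine ⟨∑' j, w j, tsum_nonneg hw0, fun W hW => ?_⟩
  refine dyadic (fun v : Ideal Λ => Nat.card (Λ ⧸ v)) _ w hs hw0 (primes Λ)
    (fun v hv => ?_) (fun j V hV => ?_) W hW
  · have := bx.finite_quot v hv.2; exact Nat.card_pos.ne'
  · have h1 := hC (2 ^ (j + 1)) (one_le_pow₀ (by norm_num)) V fun v hv => ⟨(hV v hv).1, by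
      have := (hV v hv).2.2.le
      unfold cN; exact_mod_cast this⟩
    have h2 : ∑ v ∈ V, Real.log (cN v) / cN v ^ 2 ≤
        ∑ v ∈ V, (1 / 2) ^ j * (Real.log (cN v) / cN v) := by
      refine Finset.sum_le_sum fun v hv => ?_
      have h3 : (2 : ℝ) ^ j ≤ cN v := by
        have := (hV v hv).2.1
        unfold cN; exact_mod_cast this
      have h4 : 0 ≤ Real.log (cN v) := Real.log_nonneg (bx.one_le_cN (hV v hv).1.2)
      have h5 : (0 : ℝ) < 2 ^ j := by positivity
      have h6 : 0 < cN v := h5.trans_le h3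
      rw [one_div, inv_pow, inv_mul_eq_div, div_div, sq]
      gcongr
    rw [← Finset.mul_sum] at h2
    exact h2.trans (by simp only [w]; gcongr)

/-- A sequence of at most linear growth has arbitrarily large places where it grows little over two
steps. -/
lemma exists_scale (g : ℕ → ℝ) (A C ε : ℝ) (hε : 0 < ε) (h0 : ∀ j, 0 ≤ g j)
    (h : ∀ j, g j ≤ A * j + C) (J : ℕ) : ∃ j, J ≤ j ∧ g (j + 2) - g j ≤ ε * j := by
  by_contra! hcon
  have h1 : ∀ n : ℕ, ε * (n * (n - 1)) ≤ g (J + 2 * n) := by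
    intro n
    induction n with
    | zero => simpa using h0 J
    | succ n ih =>
      have := hcon (J + 2 * n) (by omega)
      rw [show J + 2 * (n + 1) = J + 2 * n + 2 by ring]
      push_cast at *
      have hJ : (0 : ℝ) ≤ ε * J := by positivity
      nlinarith
  obtain ⟨n, hn⟩ := exists_nat_gt (max ((2 * |A| + 1) / ε + 1) (|A| * J + |C|))
  have h2 := (h1 n).trans (h _)
  push_cast at h2
  have h3 : (2 * |A| + 1) / ε + 1 < n := (le_max_left _ _).trans_lt hn
  have h4 : |A| * J + |C| < n := (le_max_right _ _).trans_lt hn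
  have h5 : (2 * |A| + 1) < ε * (n - 1) := by
    have := (div_lt_iff₀ hε).1 (lt_sub_iff_add_lt.2 h3); linarith
  have h6 : A * (J + 2 * n) ≤ |A| * (J + 2 * n) := by gcongr; exact le_abs_self A
  have h7 := le_abs_self C
  have h8 : (0:ℝ) ≤ |A| * J + |C| := by positivity
  nlinarith

section zpart
variable {O : Type*} [CommRing O] [IsDedekindDomain O]
open UniqueFactorizationMonoid
open Classical in
/-- The part of (the prime factorisation of) an ideal composed of primes from `Z`. -/
noncomputable def zpart (Z : Set (Ideal O)) (I : Ideal O) : Ideal O :=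
  ((normalizedFactors I).filter fun v => v ∈ Z).prod

lemma cN_multiset_prod [Infinite O] (m : Multiset (Ideal O)) : cN m.prod = (m.map cN).prod := by
  induction m using Multiset.induction_on with
  | empty => simp [Ideal.one_eq_top, cN_top]
  | cons a s ih => simp [cN_mul, ih]

lemma mem_primes_of_mem_normalizedFactors {I v : Ideal O} (hv : v ∈ normalizedFactors I) :
    v ∈ primes O := by
  have hp := prime_of_normalized_factor v hv
  exact ⟨(Ideal.isPrime_of_prime hp).isMaximal hp.ne_zero, hp.ne_zero⟩

lemma zpart_mul (Z : Set (Ideal O)) {I : Ideal O} (hI : I ≠ ⊥) :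
    zpart Z I * zpart Zᶜ I = I := by
  classical
  unfold zpart
  rw [← Multiset.prod_add]
  simp only [Set.mem_compl_iff]
  rw [Multiset.filter_add_not]
  exact associated_iff_eq.1 (prod_normalizedFactors hI)

lemma zpart_univ {I : Ideal O} (hI : I ≠ ⊥) : zpart (primes O) I = I := by
  classical
  unfold zpart
  rw [Multiset.filter_eq_self.2 fun v hv => mem_primes_of_mem_normalizedFactors hv]
  exact associated_iff_eq.1 (prod_normalizedFactors hI)

lemma zpart_ne_bot (Z : Set (Ideal O)) {I : Ideal O} (hI : I ≠ ⊥) : zpart Z I ≠ ⊥ := by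
  intro h
  apply hI
  rw [← zpart_mul Z hI, h, Ideal.bot_mul]

open Classical in
/-- The logarithm of the index of the `Z`-part of `I`, bounded by a sum over prime powers dividing
`I`. -/
lemma log_zpart_le (bx : BoxSys O) [Infinite O] (Z : Set (Ideal O)) {I : Ideal O} (hI : I ≠ ⊥)
    (P : Finset (Ideal O)) (hP0 : ∀ v ∈ P, v ∈ primes O)
    (hP : ∀ v ∈ Z, v ∈ primes O → I ≤ v → v ∈ P) (K : ℕ)
    (hK : cN I < 2 ^ K) : Real.log (cN (zpart Z I)) ≤
      ∑ v ∈ P, ∑ k ∈ Finset.Icc 1 K, if I ≤ v ^ k then Real.log (cN v) else 0 := by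
  set m := (normalizedFactors I).filter fun v => v ∈ Z with hm
  have hmem : ∀ v ∈ m, v ∈ primes O ∧ v ∈ Z ∧ I ≤ v := fun v hv => by
    rw [hm, Multiset.mem_filter] at hv
    exact ⟨mem_primes_of_mem_normalizedFactors hv.1, hv.2,
      Ideal.dvd_iff_le.1 (dvd_of_mem_normalizedFactors hv.1)⟩
  have h1 : Real.log (cN (zpart Z I)) = ∑ v ∈ m.toFinset, m.count v * Real.log (cN v) := by
    unfold zpart
    rw [cN_multiset_prod, ← hm, Finset.prod_multiset_map_count, Real.log_prod]
    · exact Finset.sum_congr rfl fun v _ => Real.log_pow _ _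
    · intro v hv
      have := bx.one_le_cN (hmem v (Multiset.mem_toFinset.1 hv)).1.2
      positivity
  rw [h1]
  have hnn : ∀ v ∈ P, 0 ≤ Real.log (cN v) := fun v hv => Real.log_nonneg (bx.one_le_cN (hP0 v hv).2)
  refine (Finset.sum_le_sum fun v hv => ?_).trans (Finset.sum_le_sum_of_subset_of_nonneg
    (s := m.toFinset) (fun v hv => ?_) fun v hv _ => ?_)
  · obtain ⟨hv1, hv2, hv3⟩ := hmem v (Multiset.mem_toFinset.1 hv)
    have hl := hnn v (hP v hv2 hv1 hv3)
    rw [← Finset.sum_filter, Finset.sum_const, nsmul_eq_mul]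
    gcongr
    set e := m.count v with he
    have hdvd : v ^ e ∣ I := by
      have h2 : Multiset.replicate e v ≤ normalizedFactors I :=
        (Multiset.le_count_iff_replicate_le.1 le_rfl).trans (Multiset.filter_le _ _)
      have h3 := Multiset.prod_dvd_prod_of_le h2
      rw [Multiset.prod_replicate] at h3
      exact h3.trans (associated_iff_eq.1 (prod_normalizedFactors hI)).dvd
    have hle := Ideal.dvd_iff_le.1 hdvd
    have heK : e ≤ K := by
      have h2 : (2 : ℝ) ^ e ≤ cN (v ^ e) := by
        rw [cN_pow]
        exact pow_le_pow_left₀ (by norm_num) (bx.two_le_cN hv1.2 hv1.1.ne_top) e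
      have h3 := (h2.trans (bx.cN_le hI hle)).trans_lt hK
      exact (pow_lt_pow_iff_right₀ (by norm_num)).1 h3 |>.le
    calc e = (Finset.Icc 1 e).card := by simp
      _ ≤ _ := Finset.card_le_card fun k hk => by
        rw [Finset.mem_Icc] at hk
        rw [Finset.mem_filter, Finset.mem_Icc]
        exact ⟨⟨hk.1, hk.2.trans heK⟩, hle.trans (Ideal.pow_le_pow_right hk.2)⟩
  · obtain ⟨hv1, hv2, hv3⟩ := hmem v (Multiset.mem_toFinset.1 hv)
    exact hP v hv2 hv1 hv3
  · refine Finset.sum_nonneg fun k _ => ?_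
    split_ifs
    · exact hnn v hv
    · exact le_rfl

end zpart

end SpGen

/-! ### The set of all primes is not sparse -/

namespace SpGen

lemma sum_Icc_two_pow_le {x : ℝ} (h0 : 0 ≤ x) (h1 : x ≤ 1 / 2) (K : ℕ) :
    ∑ k ∈ Finset.Icc 2 K, x ^ k ≤ 2 * x ^ 2 := by
  rcases Nat.lt_or_ge K 1 with hK | hK
  · interval_cases K; simp; positivity
  suffices h : ∑ k ∈ Finset.Icc 2 K, x ^ k + 2 * x ^ (K + 1) ≤ 2 * x ^ 2 by
    have : 0 ≤ x ^ (K + 1) := by positivity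
    linarith
  induction K, hK using Nat.le_induction with
  | base => simp
  | succ K hK ih =>
    rw [Finset.sum_Icc_succ_top (by omega)]
    have : x ^ (K + 1 + 1) ≤ x ^ (K + 1) * (1 / 2) := by rw [pow_succ]; gcongr
    linarith

variable {O : Type} [CommRing O] [IsDedekindDomain O]

open Classical in
/-- The average of `log N` of the `Z`-part over a box is, up to `O(1)`, a sum over primes of `Z`
(the prime powers of exponent at least two contribute `O(1)`). -/
theorem avg_basic (ar : Arith O) : ∃ C' C3 D : ℝ, 1 ≤ C' ∧ 1 ≤ C3 ∧ 0 ≤ D ∧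
    ∀ Z : Set (Ideal O), Z ⊆ primes O → ∀ T, ∃ P : Finset (Ideal O),
      (∀ v ∈ P, v ∈ Z ∧ cN v ≤ C' * (ar.bx.B T).card) ∧
      ∑ a ∈ (ar.bx.B T).filter (fun a => a ≠ 0), Real.log (cN (zpart Z (Ideal.span {a}))) ≤
        ∑ v ∈ P, Real.log (cN v) * ((ar.bx.B T).filter fun a => a ∈ v ∧ a ≠ 0).card
          + D * (ar.bx.B T).card ∧
      ∀ v ∈ P, (((ar.bx.B T).filter fun a => a ∈ v ∧ a ≠ 0).card : ℝ) ≤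
        C3 * (ar.bx.B T).card / cN v := by
  have := ar.inf
  obtain ⟨D, hD0, hD⟩ := sum_log_div_sq_le ar.bx
  obtain ⟨C0, hC0⟩ := ar.bx.norm_le 0 1
  obtain ⟨_, _, hid⟩ := ar.ideals
  set C' := max C0 1 with hC'
  have hC'1 : 1 ≤ C' := le_max_right _ _
  have hC1 := ar.bx.one_le_C
  set C3 := ar.bx.C * (1 + C') with hC3
  have hC31 : 1 ≤ C3 := by nlinarith
  refine ⟨C', C3, 2 * C3 * D, hC'1, hC31, by positivity, fun Z hZ T => ?_⟩
  set β : ℝ := ((ar.bx.B T).card : ℝ) with hβ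
  have hβ1 : 1 ≤ β := by rw [hβ]; exact_mod_cast ar.bx.one_le T
  have hβ0 : 0 < β := by linarith
  obtain ⟨W, hW, -⟩ := hid (C' * β) (by nlinarith)
  have hna : ∀ a ∈ ar.bx.B T, a ≠ 0 → cN (Ideal.span {a}) ≤ C' * β := fun a ha h0 => by
    have := hC0 T a ha (by simpa using h0)
    rw [zero_add, mul_one] at this
    exact this.trans (mul_le_mul_of_nonneg_right (le_max_left _ _) hβ0.le)
  set P := W.filter fun v => v ∈ Z ∧ cN v ≤ C' * β with hP
  have hPmem : ∀ v ∈ P, v ∈ Z ∧ cN v ≤ C' * β := fun v hv => (Finset.mem_filter.1 hv).2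
  have hcnt : ∀ v ∈ P, ∀ k, (((ar.bx.B T).filter fun a => a ∈ v ^ k ∧ a ≠ 0).card : ℝ) ≤
      C3 * β * (1 / cN v) ^ k := by
    intro v hv k
    have hvp := hZ (hPmem v hv).1
    have hv1 := ar.bx.one_le_cN hvp.2
    have hvk : v ^ k ≠ ⊥ := pow_ne_zero k hvp.2
    rw [one_div, inv_pow, ← div_eq_mul_inv, ← cN_pow]
    have hvk1 := ar.bx.one_le_cN hvk
    rw [le_div_iff₀ (by linarith)]
    rcases Finset.eq_empty_or_nonempty ((ar.bx.B T).filter fun a => a ∈ v ^ k ∧ a ≠ 0) with he | ⟨a, ha⟩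
    · rw [he]; simp; positivity
    · rw [Finset.mem_filter] at ha
      have h1 : cN (v ^ k) ≤ C' * β := (ar.bx.cN_le (by simpa using ha.2.2)
        ((Ideal.span_singleton_le_iff_mem _).2 ha.2.1)).trans (hna a ha.1 ha.2.2)
      have h2 := ar.bx.equi' (v ^ k) hvk T 0
      simp only [sub_zero] at h2
      change cN (v ^ k) * _ ≤ ar.bx.C * (β + cN (v ^ k)) at h2
      have h3 : (((ar.bx.B T).filter fun a => a ∈ v ^ k ∧ a ≠ 0).card : ℝ) ≤
          ((ar.bx.B T).filter fun a => a ∈ v ^ k).card := by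
        exact_mod_cast Finset.card_le_card (Finset.monotone_filter_right _ fun a ha => And.left)
      calc _ ≤ (((ar.bx.B T).filter fun a => a ∈ v ^ k).card : ℝ) * cN (v ^ k) := by gcongr
        _ ≤ ar.bx.C * (β + cN (v ^ k)) := by rw [mul_comm]; exact h2
        _ ≤ ar.bx.C * (β + C' * β) := by gcongr
        _ = C3 * β := by rw [hC3]; ring
  refine ⟨P, hPmem, ?_, fun v hv => ?_⟩
  · obtain ⟨K, hK⟩ := pow_unbounded_of_one_lt (C' * β) (one_lt_two)
    have hK1 : 1 ≤ K := by
      rcases Nat.eq_zero_or_pos K with rfl | h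
      · simp at hK; nlinarith
      · exact h
    calc _ ≤ ∑ a ∈ (ar.bx.B T).filter (fun a => a ≠ 0), ∑ v ∈ P, ∑ k ∈ Finset.Icc 1 K,
          (if Ideal.span {a} ≤ v ^ k then Real.log (cN v) else 0) := by
          refine Finset.sum_le_sum fun a ha => ?_
          rw [Finset.mem_filter] at ha
          have hI : Ideal.span {a} ≠ ⊥ := by simpa using ha.2
          refine log_zpart_le ar.bx Z hI P (fun v hv => hZ (hPmem v hv).1) (fun v hv hv' hle => ?_) K
            ((hna a ha.1 ha.2).trans_lt hK)
          have h1 := (ar.bx.cN_le hI hle).trans (hna a ha.1 ha.2)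
          exact Finset.mem_filter.2 ⟨hW v hv'.2 h1, hv, h1⟩
      _ = ∑ v ∈ P, ∑ k ∈ Finset.Icc 1 K, Real.log (cN v) *
          ((ar.bx.B T).filter fun a => a ∈ v ^ k ∧ a ≠ 0).card := by
          rw [Finset.sum_comm]
          refine Finset.sum_congr rfl fun v _ => ?_
          rw [Finset.sum_comm]
          refine Finset.sum_congr rfl fun k _ => ?_
          rw [← Finset.sum_filter, Finset.sum_const, nsmul_eq_mul, mul_comm, Finset.filter_filter]
          congr 3
          ext a
          simp only [Ideal.span_singleton_le_iff_mem, Finset.mem_filter]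
          tauto
      _ ≤ ∑ v ∈ P, (Real.log (cN v) * ((ar.bx.B T).filter fun a => a ∈ v ∧ a ≠ 0).card +
          2 * C3 * β * (Real.log (cN v) / cN v ^ 2)) := by
          refine Finset.sum_le_sum fun v hv => ?_
          have hvp := hZ (hPmem v hv).1
          have hv2 := ar.bx.two_le_cN hvp.2 hvp.1.ne_top
          have hl : 0 ≤ Real.log (cN v) := Real.log_nonneg (by linarith)
          rw [← Finset.add_sum_Ioc_eq_sum_Icc hK1, pow_one]
          gcongr
          have : Finset.Ioc 1 K = Finset.Icc 2 K := rfl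
          rw [this]
          calc _ ≤ ∑ k ∈ Finset.Icc 2 K, Real.log (cN v) * (C3 * β * (1 / cN v) ^ k) := by
                gcongr with k hk; exact hcnt v hv k
            _ = Real.log (cN v) * (C3 * β) * ∑ k ∈ Finset.Icc 2 K, (1 / cN v) ^ k := by
                rw [Finset.mul_sum]; exact Finset.sum_congr rfl fun k _ => by ring
            _ ≤ Real.log (cN v) * (C3 * β) * (2 * (1 / cN v) ^ 2) := by
                gcongr
                exact sum_Icc_two_pow_le (by positivity) (one_div_le_one_div_of_le (by norm_num) hv2) K
            _ = _ := by rw [one_div, inv_pow]; ring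
      _ ≤ _ := by
          rw [Finset.sum_add_distrib, ← Finset.mul_sum]
          have := hD P fun v hv => hZ (hPmem v hv).1
          have h2 : 2 * C3 * β * ∑ v ∈ P, Real.log (cN v) / cN v ^ 2 ≤ 2 * C3 * β * D := by gcongr
          linarith
  · have := hcnt v hv 1
    rw [pow_one, pow_one, mul_one_div] at this
    exact this

open Classical in
/-- The average of `log` of the index of the `Z`-part, up to a constant factor. -/
theorem avg_crude (ar : Arith O) : ∃ C3 : ℝ, 1 ≤ C3 ∧ ∀ (Z : Set (Ideal O)) (η : ℝ),
    Z ⊆ primes O → 0 ≤ η → SparseBy Z η → ∃ C4 : ℝ, ∀ T,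
      ∑ a ∈ (ar.bx.B T).filter (fun a => a ≠ 0), Real.log (cN (zpart Z (Ideal.span {a}))) ≤
        (ar.bx.B T).card * (C3 * η * Real.log (ar.bx.B T).card + C4) := by
  obtain ⟨C', C3, D, hC', hC3, hD, h⟩ := avg_basic ar
  refine ⟨C3, hC3, fun Z η hZ hη ⟨C, hC0, hC⟩ => ⟨C3 * (η * Real.log C' + C) + D, fun T => ?_⟩⟩
  obtain ⟨P, hP1, hP2, hP3⟩ := h Z hZ T
  set β : ℝ := ((ar.bx.B T).card : ℝ) with hβ
  have hβ1 : 1 ≤ β := by rw [hβ]; exact_mod_cast ar.bx.one_le T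
  have h1 := hC (C' * β) (by nlinarith) P hP1
  rw [Real.log_mul (by positivity) (by positivity)] at h1
  refine hP2.trans ?_
  have h2 : ∑ v ∈ P, Real.log (cN v) * ((ar.bx.B T).filter fun a => a ∈ v ∧ a ≠ 0).card ≤
      C3 * β * ∑ v ∈ P, Real.log (cN v) / cN v := by
    rw [Finset.mul_sum]
    refine Finset.sum_le_sum fun v hv => ?_
    have hl : 0 ≤ Real.log (cN v) := Real.log_nonneg (ar.bx.one_le_cN (hZ (hP1 v hv).1).2)
    calc _ ≤ Real.log (cN v) * (C3 * β / cN v) := by gcongr; exact hP3 v hv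
      _ = _ := by ring
  have h3 : C3 * β * ∑ v ∈ P, Real.log (cN v) / cN v ≤
      C3 * β * (η * (Real.log C' + Real.log β) + C) := by gcongr
  linarith

open Classical in
/-- The average of `log N(a)` over a box of `N` elements is at least `(1 - ε)² log N`, because few
elements have small norm. -/
lemma avg_lower (ar : Arith O) {ε : ℝ} (hε : 0 < ε) (hε1 : ε < 1) : ∃ X : ℝ, ∀ T,
    X ≤ (ar.bx.B T).card → (1 - ε) * (1 - ε) * ((ar.bx.B T).card * Real.log (ar.bx.B T).card) ≤
    ∑ a ∈ (ar.bx.B T).filter (fun a => a ≠ 0), Real.log (cN (Ideal.span {a})) := by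
  have := ar.inf
  obtain ⟨C, hC0, hC⟩ := ar.small
  have hκ := ar.bx.κ_pos
  obtain ⟨δ, hδ0, hδ1, hδ⟩ := exists_rpow_le (show 0 < ε * ar.bx.κ by positivity)
    (show 0 < ε / (C + 1) by positivity)
  refine ⟨1 / δ, fun T hT => ?_⟩
  set β : ℝ := ((ar.bx.B T).card : ℝ) with hβ
  have hβ1 : 1 ≤ β := by rw [hβ]; exact_mod_cast ar.bx.one_le T
  have hβ0 : 0 < β := by linarith
  have h1 := hC T (β ^ (1 - ε)) (Real.one_le_rpow hβ1 (by linarith))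
  have h2 : (β ^ (1 - ε) / β) ^ ar.bx.κ ≤ ε / (C + 1) := by
    rw [Real.rpow_sub hβ0, Real.rpow_one, div_right_comm, div_self hβ0.ne', one_div,
      ← Real.rpow_neg hβ0.le, ← Real.rpow_mul hβ0.le, neg_mul, Real.rpow_neg hβ0.le,
      ← Real.inv_rpow hβ0.le]
    refine hδ _ (by positivity) ?_
    rw [inv_le_comm₀ hβ0 hδ0, ← one_div]; exact hT
  have h3 : C * β * (β ^ (1 - ε) / β) ^ ar.bx.κ ≤ ε * β := by
    calc _ ≤ C * β * (ε / (C + 1)) := by gcongr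
      _ = ε * β * (C / (C + 1)) := by ring
      _ ≤ ε * β * 1 := by gcongr; exact (div_le_one (by positivity)).2 (by linarith)
      _ = _ := mul_one _
  set s := (ar.bx.B T).filter fun a => (Nat.card (O ⧸ Ideal.span {a}) : ℝ) ≤ β ^ (1 - ε) with hs
  have hcomp : β - s.card = ((ar.bx.B T).filter fun a => ¬ cN (Ideal.span {a}) ≤ β ^ (1 - ε)).card := by
    have := Finset.card_filter_add_card_filter_not (s := ar.bx.B T)
      (fun a => (Nat.card (O ⧸ Ideal.span {a}) : ℝ) ≤ β ^ (1 - ε))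
    have h' : (s.card : ℝ) + ((ar.bx.B T).filter fun a => ¬ cN (Ideal.span {a}) ≤ β ^ (1 - ε)).card
        = β := by rw [hβ]; exact_mod_cast this
    linarith
  have hlog : 0 ≤ Real.log β := Real.log_nonneg hβ1
  calc (1 - ε) * (1 - ε) * (β * Real.log β) = (β - ε * β) * ((1 - ε) * Real.log β) := by ring
    _ ≤ (β - s.card) * ((1 - ε) * Real.log β) := by
        have : (0:ℝ) ≤ 1 - ε := by linarith
        gcongr; exact h1.trans h3
    _ = ∑ a ∈ (ar.bx.B T).filter fun a => ¬ cN (Ideal.span {a}) ≤ β ^ (1 - ε),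
          (1 - ε) * Real.log β := by rw [hcomp, Finset.sum_const, nsmul_eq_mul]
    _ ≤ ∑ a ∈ (ar.bx.B T).filter fun a => ¬ cN (Ideal.span {a}) ≤ β ^ (1 - ε),
          Real.log (cN (Ideal.span {a})) := by
        refine Finset.sum_le_sum fun a ha => ?_
        rw [← Real.log_rpow hβ0]
        exact Real.log_le_log (by positivity) (not_le.1 (Finset.mem_filter.1 ha).2).le
    _ ≤ _ := by
        refine Finset.sum_le_sum_of_subset_of_nonneg (fun a ha => ?_) fun a ha _ => ?_
        · rw [Finset.mem_filter] at ha ⊢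
          refine ⟨ha.1, fun h => ha.2 ?_⟩
          rw [h, Ideal.span_singleton_eq_bot.2 rfl]
          have : Infinite (O ⧸ (⊥ : Ideal O)) :=
            (Equiv.infinite_iff (RingEquiv.quotientBot O).toEquiv).2 ar.inf
          unfold cN
          rw [Nat.card_eq_zero_of_infinite]
          simp; positivity
        · exact Real.log_nonneg (ar.bx.one_le_cN (by simpa using (Finset.mem_filter.1 ha).2))

open Classical in
set_option maxHeartbeats 1000000 in
/-- The primes of a ring of integers are not sparse (a weak form of the prime ideal theorem). -/
theorem not_sparse (ar : Arith O) {η : ℝ} (h0 : 0 ≤ η) (h1 : η < 1) : ¬ SparseBy (primes O) η := by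
  intro hsp
  have := ar.inf
  obtain ⟨C, hC0, hC⟩ := id hsp
  obtain ⟨C', C3, D, hC', hC3, hD, h⟩ := avg_basic ar
  obtain ⟨_, _, hid⟩ := ar.ideals
  -- a small quantity
  set ε := (1 - η) / 10 with hε
  have hε0 : 0 < ε := by rw [hε]; linarith
  have hε1 : ε ≤ 1 / 10 := by rw [hε]; linarith
  obtain ⟨X, hX⟩ := avg_lower ar hε0 (by linarith)
  have hCC := ar.bx.one_le_C
  obtain ⟨δ, hδ0, hδ1, hδ⟩ := exists_rpow_le ar.bx.κ_pos (show 0 < ε / ar.bx.C by positivity)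
  obtain ⟨Q, hQ1, hQ2, hQ3⟩ : ∃ Q : ℝ, 2 ≤ Q ∧ 1 / δ ≤ Q ∧ C' * ar.bx.C ≤ Q :=
    ⟨max 2 (max (1 / δ) (C' * ar.bx.C)), le_max_left _ _, (le_max_left _ _).trans (le_max_right _ _),
      (le_max_right _ _).trans (le_max_right _ _)⟩
  have hQ0 : 0 < Q := by linarith
  have hQp : ∀ j : ℕ, 1 ≤ Q ^ j := fun j => one_le_pow₀ (by linarith)
  choose W hW _ using fun j : ℕ => hid (Q ^ j) (hQp j)
  let V : ℕ → Finset (Ideal O) := fun j => (W j).filter fun v => v ∈ primes O ∧ cN v ≤ Q ^ j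
  have hVmem : ∀ j v, v ∈ V j ↔ v ∈ primes O ∧ cN v ≤ Q ^ j := fun j v =>
    ⟨fun h => (Finset.mem_filter.1 h).2, fun h => Finset.mem_filter.2 ⟨hW j v h.1.2 h.2, h⟩⟩
  let g : ℕ → ℝ := fun j => ∑ v ∈ V j, Real.log (cN v) / cN v
  have hterm : ∀ v ∈ primes O, 0 ≤ Real.log (cN v) / cN v := fun v hv =>
    div_nonneg (Real.log_nonneg (ar.bx.one_le_cN hv.2)) cN_nonneg
  have hg0 : ∀ j, 0 ≤ g j := fun j => Finset.sum_nonneg fun v hv => hterm v ((hVmem j v).1 hv).1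
  have hg1 : ∀ j, g j ≤ η * Real.log Q * j + C := fun j => by
    have := hC (Q ^ j) (hQp j) (V j) fun v hv => (hVmem j v).1 hv
    rw [Real.log_pow] at this
    linarith
  have hlQ : 0 < Real.log Q := Real.log_pos (by linarith)
  obtain ⟨J, hJ⟩ := exists_nat_gt (max X ((D + (1 + ε) * C) / (ε * Real.log Q)))
  obtain ⟨j, hj1, hj2⟩ := exists_scale g _ C (ε * Real.log Q / C3) (by positivity) hg0 hg1 J
  obtain ⟨T, hT1, hT2⟩ := ar.bx.exists_le (Q ^ (j + 1)) (hQp _)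
  obtain ⟨P, hP1, hP2, hP3⟩ := h (primes O) subset_rfl T
  set β : ℝ := ((ar.bx.B T).card : ℝ) with hβ
  have hβ1 : 1 ≤ β := by rw [hβ]; exact_mod_cast ar.bx.one_le T
  have hβ0 : 0 < β := by linarith
  have hjQ : (j : ℝ) ≤ Q ^ (j + 1) := by
    have h3 : (j : ℝ) < 2 ^ j := by exact_mod_cast Nat.lt_two_pow_self
    have h4 : (2 : ℝ) ^ j ≤ Q ^ j := by gcongr
    have h5 : Q ^ j ≤ Q ^ (j + 1) := pow_le_pow_right₀ (by linarith) (by omega)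
    linarith
  have hjJ : (J : ℝ) ≤ j := by exact_mod_cast hj1
  have hlow := hX T (by
    have := (le_max_left _ _).trans_lt hJ
    linarith)
  have hup : ∑ a ∈ (ar.bx.B T).filter (fun a => a ≠ 0), Real.log (cN (Ideal.span {a})) ≤ _ :=
    le_trans (le_of_eq (Finset.sum_congr rfl fun a ha => by
      rw [zpart_univ (by simpa using (Finset.mem_filter.1 ha).2)])) hP2
  have hlogβ : ((j : ℝ) + 1) * Real.log Q ≤ Real.log β := by
    have := Real.log_le_log (by positivity) hT1
    rw [Real.log_pow] at this
    push_cast at this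
    linarith
  -- the contribution of the large and of the small primes
  have hbig : ∑ v ∈ P.filter (fun v => ¬ cN v ≤ Q ^ j),
      Real.log (cN v) * ((ar.bx.B T).filter fun a => a ∈ v ∧ a ≠ 0).card ≤
      C3 * β * (g (j + 2) - g j) := by
    have hsub : V j ⊆ V (j + 2) := fun v hv => by
      rw [hVmem] at hv ⊢
      exact ⟨hv.1, hv.2.trans (pow_le_pow_right₀ (by linarith) (by omega))⟩
    have hgd : g (j + 2) - g j = ∑ v ∈ V (j + 2) \ V j, Real.log (cN v) / cN v := by
      simp only [g]; rw [← Finset.sum_sdiff hsub]; ring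
    rw [hgd, Finset.mul_sum]
    calc _ ≤ ∑ v ∈ P.filter (fun v => ¬ cN v ≤ Q ^ j), C3 * β * (Real.log (cN v) / cN v) := by
          refine Finset.sum_le_sum fun v hv => ?_
          have hv' := (Finset.mem_filter.1 hv).1
          have hl : 0 ≤ Real.log (cN v) := Real.log_nonneg (ar.bx.one_le_cN (hP1 v hv').1.2)
          calc _ ≤ Real.log (cN v) * (C3 * β / cN v) := by gcongr; exact hP3 v hv'
            _ = _ := by ring
      _ ≤ _ := by
          refine Finset.sum_le_sum_of_subset_of_nonneg (fun v hv => ?_) fun v hv _ => ?_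
          · rw [Finset.mem_filter] at hv
            rw [Finset.mem_sdiff, hVmem, hVmem]
            obtain ⟨hv1, hv2⟩ := hP1 v hv.1
            refine ⟨⟨hv1, hv2.trans ?_⟩, fun h => hv.2 h.2⟩
            calc C' * β ≤ C' * (ar.bx.C * Q ^ (j + 1)) := by gcongr
              _ = C' * ar.bx.C * Q ^ (j + 1) := by ring
              _ ≤ Q * Q ^ (j + 1) := by gcongr
              _ = _ := by ring
          · have := hterm v ((hVmem _ v).1 (Finset.mem_sdiff.1 hv).1).1
            positivity
  have hsmall : ∑ v ∈ P.filter (fun v => cN v ≤ Q ^ j),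
      Real.log (cN v) * ((ar.bx.B T).filter fun a => a ∈ v ∧ a ≠ 0).card ≤
      (1 + ε) * β * (η * Real.log β + C) := by
    calc _ ≤ ∑ v ∈ P.filter (fun v => cN v ≤ Q ^ j), (1 + ε) * β * (Real.log (cN v) / cN v) := by
          refine Finset.sum_le_sum fun v hv => ?_
          rw [Finset.mem_filter] at hv
          have hvp := (hP1 v hv.1).1
          have hv1 := ar.bx.one_le_cN hvp.2
          have hl : 0 ≤ Real.log (cN v) := Real.log_nonneg hv1
          have hle : cN v ≤ β * δ := by
            calc cN v ≤ Q ^ j := hv.2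
              _ = Q ^ (j + 1) / Q := by field_simp; ring
              _ ≤ β / (1 / δ) := by gcongr
              _ = β * δ := by field_simp
          have hle' : cN v ≤ β := hle.trans (mul_le_of_le_one_right hβ0.le hδ1)
          have h6 := ar.bx.equi v hvp.2 T 0 (by
            have : cN v ≤ ((ar.bx.B T).card : ℝ) := hle'
            unfold cN at this
            exact_mod_cast this)
          simp only [sub_zero] at h6
          have h7 : (cN v / β) ^ ar.bx.κ ≤ ε / ar.bx.C :=
            hδ _ (by positivity) (by rw [div_le_iff₀ hβ0]; linarith)
          have h8 : ar.bx.C * β * (cN v / β) ^ ar.bx.κ ≤ ε * β := by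
            calc _ ≤ ar.bx.C * β * (ε / ar.bx.C) := by gcongr
              _ = ε * β := by field_simp
          have h9 := (abs_le.1 (h6.trans h8)).2
          change cN v * _ - β ≤ ε * β at h9
          have h3 : (((ar.bx.B T).filter fun a => a ∈ v ∧ a ≠ 0).card : ℝ) ≤
              ((ar.bx.B T).filter fun a => a ∈ v).card := by
            exact_mod_cast Finset.card_le_card (Finset.monotone_filter_right _ fun a ha => And.left)
          have h10 : (((ar.bx.B T).filter fun a => a ∈ v ∧ a ≠ 0).card : ℝ) ≤
              (1 + ε) * β / cN v := by
            rw [le_div_iff₀ (by linarith)]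
            nlinarith
          calc _ ≤ Real.log (cN v) * ((1 + ε) * β / cN v) := by gcongr
            _ = _ := by ring
      _ ≤ _ := by
          rw [← Finset.mul_sum]
          gcongr
          refine (hC (Q ^ j) (hQp j) _ fun v hv => ?_).trans ?_
          · rw [Finset.mem_filter] at hv
            exact ⟨(hP1 v hv.1).1, hv.2⟩
          · rw [Real.log_pow]
            gcongr
            nlinarith
  rw [← Finset.sum_filter_add_sum_filter_not P (fun v => cN v ≤ Q ^ j)] at hup
  have hbig' : C3 * β * (g (j + 2) - g j) ≤ β * (ε * Real.log β) := by
    calc _ ≤ C3 * β * (ε * Real.log Q / C3 * j) := by gcongr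
      _ = β * (ε * (j * Real.log Q)) := by field_simp
      _ ≤ _ := by gcongr; nlinarith
  have hrest : D + (1 + ε) * C ≤ ε * Real.log β := by
    have h3 := ((le_max_right _ _).trans_lt hJ).le
    rw [div_le_iff₀ (by positivity)] at h3
    calc _ ≤ (J : ℝ) * (ε * Real.log Q) := h3
      _ ≤ (j : ℝ) * (ε * Real.log Q) := by gcongr
      _ ≤ ε * ((j + 1) * Real.log Q) := by nlinarith [mul_pos hε0 hlQ]
      _ ≤ _ := by gcongr
  have hlogpos : 0 < Real.log β := lt_of_lt_of_le (by positivity) hlogβ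
  have hfinal : (1 - ε) * (1 - ε) * (β * Real.log β) ≤
      β * Real.log β * ((1 + ε) * η + 2 * ε) := by
    have := mul_le_mul_of_nonneg_left hrest hβ0.le
    linarith
  have hη : η = 1 - 10 * ε := by linarith [hε]
  have : 0 < β * Real.log β := mul_pos hβ0 hlogpos
  have h11 : (1 - ε) * (1 - ε) ≤ (1 + ε) * η + 2 * ε := by
    refine le_of_mul_le_mul_left ?_ this
    linarith
  rw [hη] at h11
  nlinarith

end SpGen

/-! ### Reciprocity systems and the class group -/

namespace SpGen

section classes
variable {O : Type*} [CommRing O] [IsDedekindDomain O]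

open Classical in
/-- The class of an ideal (with the zero ideal sent to `1`). -/
noncomputable def clI (I : Ideal O) : ClassGroup O :=
  if h : I ≠ ⊥ then ClassGroup.mk0 ⟨I, mem_nonZeroDivisors_iff_ne_zero.2 h⟩ else 1

lemma clI_mul {I J : Ideal O} (hI : I ≠ ⊥) (hJ : J ≠ ⊥) : clI (I * J) = clI I * clI J := by
  have hIJ : I * J ≠ ⊥ := mul_ne_zero hI hJ
  unfold clI
  rw [dif_pos hI, dif_pos hJ, dif_pos hIJ, ← map_mul]
  rfl

lemma clI_span {x : O} (hx : x ≠ 0) : clI (Ideal.span {x}) = 1 := by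
  have h : Ideal.span {x} ≠ ⊥ := by simpa using hx
  unfold clI
  rw [dif_pos h, ClassGroup.mk0_eq_one_iff]
  exact ⟨x, rfl⟩

lemma exists_of_clI_eq_one {I : Ideal O} (hI : I ≠ ⊥) (h : clI I = 1) :
    ∃ x, x ≠ 0 ∧ Ideal.span {x} = I := by
  unfold clI at h
  rw [dif_pos hI, ClassGroup.mk0_eq_one_iff] at h
  obtain ⟨x, hx⟩ := h
  refine ⟨x, ?_, hx.symm⟩
  rintro rfl
  exact hI (by rw [hx]; simp)

lemma clI_surjective (c : ClassGroup O) : ∃ I : Ideal O, I ≠ ⊥ ∧ clI I = c := by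
  obtain ⟨⟨I, hI⟩, rfl⟩ := ClassGroup.mk0_surjective c
  have hI' : I ≠ ⊥ := mem_nonZeroDivisors_iff_ne_zero.1 hI
  exact ⟨I, hI', by unfold clI; rw [dif_pos hI']⟩

lemma clI_top : clI (⊤ : Ideal O) = 1 := by
  rw [← Ideal.span_singleton_one]; exact clI_span one_ne_zero

lemma clI_pow {I : Ideal O} (hI : I ≠ ⊥) (n : ℕ) : clI (I ^ n) = clI I ^ n := by
  induction n with
  | zero => rw [pow_zero, pow_zero, Ideal.one_eq_top, clI_top]
  | succ n ih => rw [pow_succ, pow_succ, clI_mul (pow_ne_zero n hI) hI, ih]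

/-- Every ideal class contains an ideal prime to a given one. -/
lemma exists_clI_coprime (c : ClassGroup O) {K : Ideal O} (hK : K ≠ ⊥) :
    ∃ I : Ideal O, I ≠ ⊥ ∧ IsCoprime I K ∧ clI I = c := by
  obtain ⟨J, hJ, hJc⟩ := clI_surjective c⁻¹
  obtain ⟨x, m, hx, hxm, hKm⟩ := exists_gen hJ hK
  have hm : m ≠ ⊥ := by
    rintro rfl
    rw [Ideal.mul_bot] at hxm
    exact hx (by simpa using hxm)
  refine ⟨m, hm, hKm.symm, ?_⟩
  have := clI_span hx
  rw [hxm, clI_mul hJ hm, hJc] at this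
  rwa [inv_mul_eq_one, eq_comm] at this

end classes

section recip
variable {O : Type*} [CommRing O] [IsDedekindDomain O] {p : ℕ} {E : Ideal O → O → ℂ}

/-- The primes at which the residue symbol is nontrivial. -/
def badSet (E : Ideal O → O → ℂ) : Set (Ideal O) :=
  {P | P ∈ primes O ∧ ∃ b, b ∉ P ∧ E P b ≠ 1}

/-- An element `b` such that `E (b) a = 1` for all `a` prime to it, i.e. the residue symbols at the
primes dividing `b` multiply to the trivial character. -/
def Adm (E : Ideal O → O → ℂ) (b : O) : Prop :=
  b ≠ 0 ∧ ∀ a, IsCoprime a b → E (Ideal.span {b}) a = 1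

lemma Recip.top (h : Recip p E) (b : O) : E ⊤ b = 1 := by
  have h1 := h.mul_ideal (I := ⊤) (J := ⊤) b top_ne_bot top_ne_bot
  have h2 : E ⊤ b ≠ 0 := (h.ne_zero_iff top_ne_bot).2 (by
    rw [Ideal.isCoprime_iff_sup_eq]; simp)
  rw [Ideal.top_mul] at h1
  exact mul_left_cancel₀ h2 (by rw [mul_one, ← h1])

lemma Recip.one (h : Recip p E) {I : Ideal O} (hI : I ≠ ⊥) : E I 1 = 1 := by
  have h1 := h.mul_right (I := I) 1 1 hI
  have h2 : E I 1 ≠ 0 := (h.ne_zero_iff hI).2 (cop_one (by simp))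
  rw [one_mul] at h1
  exact mul_left_cancel₀ h2 (by rw [mul_one, ← h1])

lemma Recip.pow_ideal (h : Recip p E) {I : Ideal O} (hI : I ≠ ⊥) (b : O) (n : ℕ) :
    E (I ^ n) b = E I b ^ n := by
  induction n with
  | zero => rw [pow_zero, pow_zero, Ideal.one_eq_top, h.top]
  | succ n ih => rw [pow_succ, pow_succ, h.mul_ideal b (pow_ne_zero n hI) hI, ih]

lemma Recip.pow_right (h : Recip p E) {I : Ideal O} (hI : I ≠ ⊥) (b : O) (n : ℕ) :
    E I (b ^ n) = E I b ^ n := by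
  induction n with
  | zero => rw [pow_zero, pow_zero, h.one hI]
  | succ n ih => rw [pow_succ, pow_succ, h.mul_right _ _ hI, ih]

lemma isCoprime_span_iff {I : Ideal O} (hI : I.IsMaximal) {b : O} :
    IsCoprime I (Ideal.span {b}) ↔ b ∉ I := by
  rw [Ideal.isCoprime_iff_sup_eq]
  constructor
  · intro h hb
    apply hI.ne_top
    rw [← h, eq_comm, sup_eq_left, Ideal.span_singleton_le_iff_mem]
    exact hb
  · intro hb
    by_contra h
    have := hI.eq_of_le h le_sup_left
    exact hb (this ▸ Ideal.mem_sup_right (Ideal.mem_span_singleton_self b))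

/-- The symbol is trivial on ideals prime to the bad set. -/
lemma Recip.eq_one_of_forall (h : Recip p E) (I : Ideal O) (hI : I ≠ ⊥)
    (hZ : ∀ P ∈ badSet E, ¬ I ≤ P) (a : O) (ha : IsCoprime I (Ideal.span {a})) : E I a = 1 := by
  induction I using UniqueFactorizationMonoid.induction_on_prime with
  | h₁ => exact absurd rfl hI
  | h₂ x hx => rw [Ideal.isUnit_iff.1 hx, h.top]
  | h₃ J P hJ hP ih =>
    have hPp : P ∈ primes O := ⟨(Ideal.isPrime_of_prime hP).isMaximal hP.ne_zero, hP.ne_zero⟩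
    rw [h.mul_ideal a hP.ne_zero hJ, ih hJ (fun Q hQ hle => hZ Q hQ (Ideal.mul_le_right.trans hle))
      (ha.of_mul_left_right), mul_one]
    by_contra hne
    exact hZ P ⟨hPp, a, (isCoprime_span_iff hPp.1).1 ha.of_mul_left_left, hne⟩ Ideal.mul_le_left

/-- An element divisible by no bad prime is admissible. -/
lemma Recip.adm_of_forall (h : Recip p E) {b : O} (hb : b ≠ 0) (hZ : ∀ P ∈ badSet E, b ∉ P) :
    Adm E b := by
  refine ⟨hb, fun a ha => h.eq_one_of_forall _ (by simpa using hb) (fun P hP hle => hZ P hP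
    ((Ideal.span_singleton_le_iff_mem P).1 hle)) a ?_⟩
  rw [Ideal.isCoprime_span_singleton_iff]
  exact ha.symm

/-- For admissible `b`, the symbol `E I b` depends only on the class of `I`. -/
lemma Adm.congr (h : Recip p E) {b : O} (hb : Adm E b) {I J : Ideal O} (hI : I ≠ ⊥) (hJ : J ≠ ⊥)
    (hIb : IsCoprime I (Ideal.span {b})) (hJb : IsCoprime J (Ideal.span {b}))
    (hc : clI I = clI J) : E I b = E J b := by
  have hb0 : Ideal.span {b} ≠ ⊥ := by simpa using hb.1
  obtain ⟨m, hm, hmb, hmc⟩ := exists_clI_coprime (clI I)⁻¹ hb0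
  have key : ∀ K : Ideal O, K ≠ ⊥ → IsCoprime K (Ideal.span {b}) → clI K = clI I →
      E K b * E m b = 1 := by
    intro K hK hKb hKc
    obtain ⟨x, hx, hxK⟩ := exists_of_clI_eq_one (I := K * m) (mul_ne_zero hK hm) (by
      rw [clI_mul hK hm, hKc, hmc, mul_inv_cancel])
    rw [← h.mul_ideal b hK hm, ← hxK]
    have hxb : IsCoprime x b := by
      rw [← Ideal.isCoprime_span_singleton_iff, hxK]
      exact hKb.mul_left hmb
    rw [h.recip hx hb.1 hxb]
    exact hb.2 x hxb
  have h1 := key I hI hIb rfl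
  have h2 := key J hJ hJb hc.symm
  have h3 : E m b ≠ 0 := (h.ne_zero_iff hm).2 hmb
  exact mul_right_cancel₀ h3 (h1.trans h2.symm)

/-- The character of the class group attached to an admissible element. -/
lemma Adm.exists_char (h : Recip p E) {b : O} (hb : Adm E b) : ∃ ψ : ClassGroup O →* ℂˣ,
    ∀ I : Ideal O, I ≠ ⊥ → IsCoprime I (Ideal.span {b}) → E I b = ψ (clI I) := by
  have hb0 : Ideal.span {b} ≠ ⊥ := by simpa using hb.1
  choose r hr0 hrb hrc using fun c : ClassGroup O => exists_clI_coprime c hb0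
  refine ⟨MonoidHom.mk' (fun c => Units.mk0 (E (r c) b) ((h.ne_zero_iff (hr0 c)).2 (hrb c)))
    fun c d => ?_, fun I hI hIb => ?_⟩
  · ext
    simp only [Units.val_mk0, Units.val_mul]
    rw [← h.mul_ideal b (hr0 c) (hr0 d)]
    exact hb.congr h (hr0 _) (mul_ne_zero (hr0 c) (hr0 d)) (hrb _) ((hrb c).mul_left (hrb d))
      (by rw [clI_mul (hr0 c) (hr0 d), hrc, hrc, hrc])
  · simp only [MonoidHom.mk'_apply, Units.val_mk0]
    exact hb.congr h hI (hr0 _) hIb (hrb _) (hrc _).symm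

/-- The unit group of a residue field acts through a character whose order is a power of `p`. -/
lemma Recip.exists_pow_eq (h : Recip p E) (hp : p.Prime) {v : Ideal O} [Finite (O ⧸ v)]
    (hv : v ∈ badSet E) {b : O} (hb : b ∉ v) (hEb : E v b = 1) : ∃ y : O, b - y ^ p ∈ v := by
  obtain ⟨⟨hmax, hbot⟩, c, hcv, hc⟩ := hv
  let _ := Ideal.Quotient.field v
  obtain ⟨g, hg⟩ := IsCyclic.exists_generator (α := (O ⧸ v)ˣ)
  obtain ⟨x, hx⟩ := Ideal.Quotient.mk_surjective (g : O ⧸ v)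
  have key : ∀ a : O, a ∉ v → ∃ n : ℕ, a - x ^ n ∈ v := by
    intro a ha
    have ha' : (Ideal.Quotient.mk v a) ≠ 0 := fun h => ha (Ideal.Quotient.eq_zero_iff_mem.1 h)
    obtain ⟨n, hn⟩ := (mem_powers_iff_mem_zpowers).2 (hg (Units.mk0 _ ha'))
    refine ⟨n, Ideal.Quotient.eq.1 ?_⟩
    have := congrArg Units.val hn
    simp only [Units.val_pow_eq_pow_val, Units.val_mk0] at this
    rw [← this, map_pow, hx]
  obtain ⟨n, hn⟩ := key b hb
  obtain ⟨m, hm⟩ := key c hcv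
  have hEn : ∀ {a : O} {n : ℕ}, a - x ^ n ∈ v → E v a = E v x ^ n := fun {a n} hn => by
    rw [h.mod hbot hn, h.pow_right hbot]
  have hxv : x ∉ v := fun hxv => g.ne_zero (by rw [← hx]; exact Ideal.Quotient.eq_zero_iff_mem.2 hxv)
  obtain ⟨k, hk⟩ := h.pow hbot ((isCoprime_span_iff hmax).2 hxv)
  rw [hEn hn] at hEb
  rw [hEn hm] at hc
  have hpn : p ∣ n := by
    obtain ⟨j, hj, hj'⟩ := (Nat.dvd_prime_pow hp).1 (orderOf_dvd_of_pow_eq_one hk)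
    have h1 := orderOf_dvd_of_pow_eq_one hEb
    rw [hj'] at h1
    rcases Nat.eq_zero_or_pos j with rfl | hj0
    · rw [pow_zero, orderOf_eq_one_iff] at hj'
      rw [hj', one_pow] at hc
      exact absurd rfl hc
    · exact (dvd_pow_self p hj0.ne').trans h1
  obtain ⟨l, rfl⟩ := hpn
  exact ⟨x ^ l, by rwa [← pow_mul, mul_comm l p]⟩

/-- The order of the symbol `E v b` divides `N v - 1`. -/
lemma Recip.pow_card (h : Recip p E) {v : Ideal O} [Finite (O ⧸ v)] (hv : v ∈ primes O) {b : O}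
    (hb : b ∉ v) : E v b ^ (Nat.card (O ⧸ v) - 1) = 1 := by
  obtain ⟨hmax, hbot⟩ := hv
  let _ := Ideal.Quotient.field v
  let _ := Fintype.ofFinite (O ⧸ v)
  rw [← h.pow_right hbot, ← h.one hbot, Nat.card_eq_fintype_card]
  apply h.mod hbot
  rw [← Ideal.Quotient.eq, map_pow, map_one]
  exact FiniteField.pow_card_sub_one_eq_one _
    fun h => hb (Ideal.Quotient.eq_zero_iff_mem.1 h)

/-- The index of a bad prime is congruent to `1` modulo `p`. -/
lemma Recip.dvd_card (h : Recip p E) (hp : p.Prime) {v : Ideal O} [Finite (O ⧸ v)]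
    (hv : v ∈ badSet E) : p ∣ Nat.card (O ⧸ v) - 1 := by
  obtain ⟨hvp, c, hcv, hc⟩ := hv
  obtain ⟨k, hk⟩ := h.pow hvp.2 ((isCoprime_span_iff hvp.1).2 hcv)
  have h1 := orderOf_dvd_of_pow_eq_one (h.pow_card hvp hcv)
  obtain ⟨j, hj, hj'⟩ := (Nat.dvd_prime_pow hp).1 (orderOf_dvd_of_pow_eq_one hk)
  rw [hj'] at h1
  rcases Nat.eq_zero_or_pos j with rfl | hj0
  · rw [pow_zero, orderOf_eq_one_iff] at hj'
    exact absurd hj' hc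
  · exact (dvd_pow_self p hj0.ne').trans h1

/-- A positive power of a system of residue symbols. -/
lemma Recip.npow (h : Recip p E) {n : ℕ} (hn : n ≠ 0) : Recip p fun I b => E I b ^ n where
  ne_zero_iff hI := by rw [pow_ne_zero_iff hn]; exact h.ne_zero_iff hI
  mul_ideal b hI hJ := by rw [h.mul_ideal b hI hJ, mul_pow]
  mul_right b c hI := by rw [h.mul_right b c hI, mul_pow]
  mod hI hbc := by rw [h.mod hI hbc]
  pow hI hc := by
    obtain ⟨k, hk⟩ := h.pow hI hc
    exact ⟨k, by rw [← pow_mul, mul_comm, pow_mul, hk, one_pow]⟩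
  recip ha hb hab := by rw [h.recip ha hb hab]

end recip

end SpGen

/-! ### Primes splitting in a Galois extension -/

namespace SpGen
open Polynomial

section gal
variable {O : Type} [CommRing O] [IsDedekindDomain O]

lemma finite_primes_ge {I : Ideal O} (hI : I ≠ ⊥) : {v | v ∈ primes O ∧ I ≤ v}.Finite := by
  have := Ideal.finite_factors (R := O) (I := I) hI
  refine (this.image fun v => v.asIdeal).subset ?_
  rintro v ⟨hv, hIv⟩
  exact ⟨⟨v, hv.1.isPrime, hv.2⟩, Ideal.dvd_iff_le.2 hIv, rfl⟩

/-- If `Λ` is generated by roots of `f` and `f` splits modulo `v`, then `Λ` has an `O`-algebra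
homomorphism to `O ⧸ v`. -/
lemma exists_algHom_of_splits {Λ : Type*} [CommRing Λ] [IsDomain Λ] [Algebra O Λ]
    [FaithfulSMul O Λ] [Algebra.IsIntegral O Λ] (f : O[X]) (S : Set Λ)
    (hS : ∀ β ∈ S, aeval β f = 0) (hgen : Algebra.adjoin O S = ⊤) {v : Ideal O} (hv : v.IsMaximal)
    (hf : f.Monic) (hs : (f.map (Ideal.Quotient.mk v)).Splits) : Nonempty (Λ →ₐ[O] O ⧸ v) := by
  obtain ⟨w, hw, hwv⟩ := Ideal.exists_ideal_over_maximal_of_isIntegral (S := Λ) v (by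
    rw [(RingHom.injective_iff_ker_eq_bot _).1 (FaithfulSMul.algebraMap_injective O Λ)]; exact bot_le)
  letI := Ideal.Quotient.field v
  letI := Ideal.Quotient.field w
  let g : O ⧸ v →ₐ[O] Λ ⧸ w := Ideal.Quotient.liftₐ v (Algebra.ofId O (Λ ⧸ w)) (by
    intro a ha
    rw [← hwv] at ha
    have : Ideal.Quotient.mk w (algebraMap O Λ a) = 0 := Ideal.Quotient.eq_zero_iff_mem.2 ha
    simpa [Algebra.ofId_apply] using this)
  have hinj : Function.Injective g := (g : O ⧸ v →+* Λ ⧸ w).injective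
  have hroot : ∀ β ∈ S, Ideal.Quotient.mkₐ O w β ∈ g.range := by
    intro β hβ
    have h1 : aeval (Ideal.Quotient.mkₐ O w β) f = 0 := by
      rw [Polynomial.aeval_algHom_apply, hS β hβ, map_zero]
    obtain ⟨m, hm⟩ := splits_iff_exists_multiset.1 hs
    rw [(hf.map _).leadingCoeff, C_1, one_mul] at hm
    have h2 : eval₂ (g : O ⧸ v →+* Λ ⧸ w) (Ideal.Quotient.mkₐ O w β) (f.map (Ideal.Quotient.mk v)) = 0 := by
      rw [eval₂_map, ← h1, aeval_def]
      congr 1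
    rw [hm, eval₂_multiset_prod, Multiset.prod_eq_zero_iff] at h2
    simp only [Multiset.map_map, Multiset.mem_map, Function.comp] at h2
    obtain ⟨c, -, hc⟩ := h2
    rw [eval₂_sub, eval₂_X, eval₂_C, sub_eq_zero] at hc
    exact ⟨c, hc.symm⟩
  have hle : (⊤ : Subalgebra O Λ) ≤ g.range.comap (Ideal.Quotient.mkₐ O w) := by
    rw [← hgen]
    exact Algebra.adjoin_le hroot
  have hsurj : Function.Surjective g := by
    intro y
    obtain ⟨x, rfl⟩ := Ideal.Quotient.mkₐ_surjective O w y
    exact hle (Algebra.mem_top (x := x))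
  exact ⟨((AlgEquiv.ofBijective g ⟨hinj, hsurj⟩).symm : Λ ⧸ w →ₐ[O] O ⧸ v).comp
    (Ideal.Quotient.mkₐ O w)⟩

set_option maxHeartbeats 1000000 in
/-- The primes modulo which `f` splits completely have density at most `1/|Gal|`: each of them has
`|Gal|` primes of the same index above it in the ring generated by the roots of `f`, and `mertens`
applies to this ring. -/
theorem sparse_of_gal (ar : Arith O) {K L : Type} [Field K] [Algebra O K] [IsFractionRing O K]
    [Field L] [Algebra K L] [Algebra O L] [IsScalarTower O K L] (f : O[X]) (hf : f.Monic)
    [IsSplittingField K L (f.map (algebraMap O K))]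
    (Z : Set (Ideal O)) (hZ : Z ⊆ primes O) (Z₀ : Set (Ideal O)) (hZ₀ : Z₀.Finite)
    (H : ∀ v ∈ Z, v ∉ Z₀ → (f.map (Ideal.Quotient.mk v)).Splits) {ε : ℝ} (hε : 0 < ε) :
    SparseBy Z ((1 + ε) / Nat.card (L ≃ₐ[K] L)) := by
  classical
  have hfK : f.map (algebraMap O K) ≠ 0 := (hf.map _).ne_zero
  have hinjK : Function.Injective (algebraMap O L) := by
    rw [IsScalarTower.algebraMap_eq O K L]
    exact (algebraMap K L).injective.comp (IsFractionRing.injective O K)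
  set S : Set L := (f.map (algebraMap O K)).rootSet L with hS
  have hSfin : S.Finite := Polynomial.rootSet_finite _ _
  have hSmem : ∀ β, β ∈ S ↔ aeval β f = 0 := fun β => by
    rw [hS, mem_rootSet, and_iff_right hfK, aeval_map_algebraMap]
  have hintg : ∀ β ∈ S, IsIntegral O β := fun β hβ => ⟨f, hf, by
    rw [← aeval_def]; exact (hSmem β).1 hβ⟩
  haveI : FiniteDimensional K L := IsSplittingField.finiteDimensional L (f.map (algebraMap O K))
  let Λ := Algebra.adjoin O S
  haveI : Module.Finite O Λ :=
    Module.Finite.iff_fg.2 (fg_adjoin_of_finite hSfin hintg)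
  haveI : FaithfulSMul O Λ := by
    rw [faithfulSMul_iff_algebraMap_injective]
    intro x y hxy
    exact hinjK (congrArg Subtype.val hxy)
  obtain ⟨bx⟩ := ar.ext Λ
  have hmem : ∀ (σ : L ≃ₐ[K] L) {β}, β ∈ S → σ β ∈ S := fun σ β hβ => (hSmem _).2 (by
    have := aeval_algHom_apply ((σ : L →ₐ[K] L).restrictScalars O) β f
    rw [(hSmem β).1 hβ, map_zero] at this
    exact this)
  have hτ : ∀ (σ : L ≃ₐ[K] L), Λ ≤ Λ.comap ((σ : L →ₐ[K] L).restrictScalars O) := fun σ =>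
    Algebra.adjoin_le fun β hβ => Algebra.subset_adjoin (hmem σ hβ)
  let res : (L ≃ₐ[K] L) → (Λ →ₐ[O] Λ) := fun σ =>
    (((σ : L →ₐ[K] L).restrictScalars O).comp Λ.val).codRestrict Λ fun x => hτ σ x.2
  -- the difference product
  let SF : Finset L := hSfin.toFinset
  have hSF : ∀ {β}, β ∈ SF ↔ β ∈ S := hSfin.mem_toFinset
  let δ : Λ := ∏ q ∈ (SF ×ˢ SF).attach.filter (fun q => q.1.1 ≠ q.1.2),
    ((⟨q.1.1, Algebra.subset_adjoin (hSF.1 (Finset.mem_product.1 q.2).1)⟩ : Λ) -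
      ⟨q.1.2, Algebra.subset_adjoin (hSF.1 (Finset.mem_product.1 q.2).2)⟩)
  have hδ : δ ≠ 0 := by
    rw [Finset.prod_ne_zero_iff]
    intro q hq h
    rw [sub_eq_zero, Subtype.mk.injEq] at h
    exact (Finset.mem_filter.1 hq).2 h
  have hI : (Ideal.span {δ}).comap (algebraMap O Λ) ≠ ⊥ :=
    Ideal.comap_ne_bot_of_integral_mem hδ (Ideal.mem_span_singleton_self δ)
      (Algebra.IsIntegral.isIntegral δ)
  haveI : Finite (L ≃ₐ[K] L) := inferInstance
  refine sparse_of_split bx Z hZ (Z₀ ∪ {v | v ∈ primes O ∧ (Ideal.span {δ}).comap (algebraMap O Λ) ≤ v})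
    (hZ₀.union (finite_primes_ge hI)) _ Nat.card_pos (fun v hv hv0 => ?_) hε
  rw [Set.mem_union, not_or] at hv0
  obtain ⟨φ⟩ := exists_algHom_of_splits (Λ := Λ) f (((↑) : Λ → L) ⁻¹' S)
    (fun β hβ => Subtype.ext (by
      have := (hSmem _).1 hβ
      rw [← Subalgebra.coe_val, aeval_algHom_apply] at this
      simpa using this)) (Algebra.adjoin_adjoin_coe_preimage) (hZ hv).1 hf (H v hv hv0.1)
  have hφδ : φ δ ≠ 0 := by
    intro h
    refine hv0.2 ⟨hZ hv, fun x hx => ?_⟩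
    rw [Ideal.mem_comap, Ideal.mem_span_singleton'] at hx
    obtain ⟨c, hc⟩ := hx
    have : φ (algebraMap O Λ x) = 0 := by rw [← hc, map_mul, h, mul_zero]
    rw [φ.commutes] at this
    exact Ideal.Quotient.eq_zero_iff_mem.1 this
  refine ⟨fun i => φ.comp (res ((Finite.equivFin (L ≃ₐ[K] L)).symm i)), fun i j hij => ?_⟩
  apply (Finite.equivFin (L ≃ₐ[K] L)).symm.injective
  beta_reduce at hij
  generalize (Finite.equivFin (L ≃ₐ[K] L)).symm i = σ at hij ⊢
  generalize (Finite.equivFin (L ≃ₐ[K] L)).symm j = τ at hij ⊢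
  have hagree : ∀ β ∈ S, σ β = τ β := by
    intro β hβ
    by_contra hne
    have hβΛ : β ∈ Λ := Algebra.subset_adjoin hβ
    have h1 : φ (res σ ⟨β, hβΛ⟩) = φ (res τ ⟨β, hβΛ⟩) := DFunLike.congr_fun hij ⟨β, hβΛ⟩
    apply hφδ
    rw [map_prod]
    refine Finset.prod_eq_zero (i := ⟨(σ β, τ β), Finset.mem_product.2
      ⟨hSF.2 (hmem σ hβ), hSF.2 (hmem τ hβ)⟩⟩) (Finset.mem_filter.2 ⟨Finset.mem_attach _ _, hne⟩) ?_
    rw [map_sub, sub_eq_zero]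
    exact h1
  have := AlgHom.ext_of_adjoin_eq_top (φ₁ := (σ : L →ₐ[K] L)) (φ₂ := (τ : L →ₐ[K] L))
    (IsSplittingField.adjoin_rootSet L (f.map (algebraMap O K))) (fun β hβ => hagree β hβ)
  exact AlgEquiv.ext fun x => DFunLike.congr_fun this x

end gal
end SpGen

/-! ### Elements with trivial symbols at the bad primes -/

namespace SpGen
open Polynomial UniqueFactorizationMonoid

lemma inf_fiber {α β : Type*} [Finite β] {s : Set α} (hs : s.Infinite) (f : α → β) :
    ∃ y, (s ∩ f ⁻¹' {y}).Infinite := by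
  by_contra! h
  refine hs ((Set.finite_iUnion h).subset fun x hx => ?_)
  exact Set.mem_iUnion.2 ⟨f x, hx, rfl⟩

section many
variable {O : Type} [CommRing O] [IsDedekindDomain O] {p : ℕ} {E : Ideal O → O → ℂ}

lemma eq_of_le_primes {u v : Ideal O} (hu : u ∈ primes O) (hv : v ∈ primes O) (h : u ≤ v) :
    u = v := hu.1.eq_of_le hv.1.ne_top h

open Classical in
/-- Comparison of the exponents of `u` modulo `p`. -/
lemma ord_contra {u M N X Y : Ideal O} (hu : u ∈ primes O) (hM : M ≠ ⊥) (hN : N ≠ ⊥) (hX : X ≠ ⊥)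
    (hY : Y ≠ ⊥) (huM : ¬ M ≤ u) (huN : ¬ N ≤ u) {p : ℕ} (hp : p.Prime)
    (h : u * M * X ^ p = N * Y ^ p) : False := by
  have hup : Irreducible u := (Ideal.prime_of_isPrime hu.2 hu.1.isPrime).irreducible
  have hz : ∀ M : Ideal O, ¬ M ≤ u → (normalizedFactors M).count u = 0 := fun M hM =>
    Multiset.count_eq_zero.2 fun hmem => hM (Ideal.le_of_dvd (dvd_of_mem_normalizedFactors hmem))
  have h2 := congrArg (fun I => (normalizedFactors I).count u) h
  rw [normalizedFactors_mul (mul_ne_zero hu.2 hM) (pow_ne_zero _ hX), normalizedFactors_mul hu.2 hM,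
    normalizedFactors_mul hN (pow_ne_zero _ hY), normalizedFactors_pow, normalizedFactors_pow,
    normalizedFactors_irreducible hup] at h2
  simp only [Multiset.count_add, Multiset.count_nsmul, hz M huM, hz N huN, normalize_eq,
    Multiset.count_singleton_self] at h2
  have h3 : p ∣ 1 := by
    have : p ∣ 1 + 0 + p * (normalizedFactors X).count u := h2 ▸ ⟨(normalizedFactors Y).count u, by simp⟩
    rw [Nat.dvd_add_left (dvd_mul_right _ _)] at this
    exact this
  exact hp.one_lt.ne' (Nat.dvd_one.1 h3)

set_option maxHeartbeats 1000000 in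
/-- If there are infinitely many good primes, there are infinitely many elements with trivial symbol
at all bad primes, pairwise inequivalent modulo `p`-th powers. With good primes `u`, `u0` in the
same ideal class and `n` the class number, `u u0 ^ (n-1)` has a generator `b u`. Its symbols define
a character `ψ u` of the class group; `u` is restricted to an infinite set on which `ψ` is constant,
and the character is removed by multiplication with `b u1 ^ (n-1)` for a fixed `u1`. -/
lemma many_b [Finite (ClassGroup O)] (h : Recip p E) (hp : p.Prime)
    (hinf : (primes O \ badSet E).Infinite) :
    ∃ (U : Set (Ideal O)) (b : Ideal O → O), U.Infinite ∧ ∀ u ∈ U, b u ≠ 0 ∧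
      (∀ v ∈ badSet E, b u ∉ v ∧ E v (b u) = 1) ∧
      ∀ u' ∈ U, u ≠ u' → ∀ x y : O, x ≠ 0 → y ≠ 0 → b u * x ^ p ≠ b u' * y ^ p := by
  classical
  obtain ⟨c, hc⟩ := inf_fiber hinf clI
  obtain ⟨u0, hu0⟩ := hc.nonempty
  set n := Nat.card (ClassGroup O) with hn
  have hn1 : 1 ≤ n := Nat.card_pos
  set U1 := (primes O \ badSet E) ∩ clI ⁻¹' {c} with hU1
  have hmem : ∀ {u}, u ∈ U1 → u ∈ primes O ∧ u ∉ badSet E ∧ clI u = c := fun hu => ⟨hu.1.1, hu.1.2, hu.2⟩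
  have hnot : ∀ {u b}, u ∈ U1 → Ideal.span {b} = u * u0 ^ (n - 1) → ∀ v ∈ primes O, v ≠ u → v ≠ u0 →
      b ∉ v := by
    intro u b hu hb v hv hvu hvu0 hbv
    rw [← Ideal.span_singleton_le_iff_mem, hb] at hbv
    haveI := hv.1.isPrime
    rcases (Ideal.IsPrime.mul_le this).1 hbv with h1 | h1
    · exact hvu (eq_of_le_primes hu.1.1 hv h1).symm
    · exact hvu0 (eq_of_le_primes hu0.1.1 hv ((Ideal.IsPrime.le_of_pow_le h1))).symm
  have key : ∀ u : Ideal O, ∃ (b : O) (ψ : ClassGroup O →* ℂˣ), u ∈ U1 → b ≠ 0 ∧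
      Ideal.span {b} = u * u0 ^ (n - 1) ∧
      ∀ I : Ideal O, I ≠ ⊥ → IsCoprime I (Ideal.span {b}) → E I b = ψ (clI I) := by
    intro u
    by_cases hu : u ∈ U1
    · obtain ⟨b, hb0, hb⟩ := exists_of_clI_eq_one (I := u * u0 ^ (n - 1))
        (mul_ne_zero hu.1.1.2 (pow_ne_zero _ hu0.1.1.2)) (by
          rw [clI_mul hu.1.1.2 (pow_ne_zero _ hu0.1.1.2), clI_pow hu0.1.1.2, (hmem hu).2.2,
            (hmem hu0).2.2, ← pow_succ', Nat.sub_add_cancel hn1, hn, pow_card_eq_one'])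
      obtain ⟨ψ, hψ⟩ := (h.adm_of_forall hb0 fun v hv => hnot hu hb v hv.1
        (fun e => (hmem hu).2.1 (e ▸ hv)) (fun e => (hmem hu0).2.1 (e ▸ hv))).exists_char h
      exact ⟨b, ψ, fun _ => ⟨hb0, hb, hψ⟩⟩
    · exact ⟨0, 1, fun h => absurd h hu⟩
  choose b ψ hbψ using key
  obtain ⟨ψ0, hψ0⟩ := inf_fiber hc ψ
  obtain ⟨u1, hu1⟩ := hψ0.nonempty
  have hfree : ∀ u ∈ U1, ∀ v ∈ badSet E, b u ∉ v := fun u hu v hv => hnot hu (hbψ u hu).2.1 v hv.1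
        (fun e => (hmem hu).2.1 (e ▸ hv)) (fun e => (hmem hu0).2.1 (e ▸ hv))
  refine ⟨(U1 ∩ ψ ⁻¹' {ψ0}) \ {u0, u1}, fun u => b u * b u1 ^ (n - 1),
    hψ0.diff (Set.toFinite _), ?_⟩
  rintro u ⟨⟨hu, huψ⟩, hu01⟩
  simp only [Set.mem_insert_iff, Set.mem_singleton_iff, not_or] at hu01
  refine ⟨mul_ne_zero (hbψ u hu).1 (pow_ne_zero _ (hbψ u1 hu1.1).1), fun v hv => ⟨?_, ?_⟩, ?_⟩
  · intro hmemv
    rcases hv.1.1.isPrime.mem_or_mem hmemv with h1 | h1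
    · exact hfree u hu v hv h1
    · exact hfree u1 hu1.1 v hv (hv.1.1.isPrime.mem_of_pow_mem _ h1)
  · rw [h.mul_right _ _ hv.1.2, h.pow_right hv.1.2,
      (hbψ u hu).2.2 v hv.1.2 ((isCoprime_span_iff hv.1.1).2 (hfree u hu v hv)),
      (hbψ u1 hu1.1).2.2 v hv.1.2 ((isCoprime_span_iff hv.1.1).2 (hfree u1 hu1.1 v hv)),
      show ψ u = ψ0 from huψ, show ψ u1 = ψ0 from hu1.2, ← pow_succ', Nat.sub_add_cancel hn1,
      ← Units.val_pow_eq_pow_val, ← map_pow, hn, pow_card_eq_one', map_one, Units.val_one]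
  · rintro u' ⟨⟨hu', hu'ψ⟩, hu'01⟩ hne x y hx hy heq
    have h1 := congrArg (fun z => Ideal.span {z}) heq
    simp only [← Ideal.span_singleton_mul_span_singleton, ← Ideal.span_singleton_pow] at h1
    have hb1 : (Ideal.span {b u1} : Ideal O) ≠ ⊥ := by simpa using (hbψ u1 hu1.1).1
    have hu0u : ¬ u0 ≤ u := fun hle => hu01.1 (eq_of_le_primes hu0.1.1 hu.1.1 hle).symm
    have hu1u : ¬ Ideal.span {b u1} ≤ u := fun hle => hnot hu1.1 (hbψ u1 hu1.1).2.1 u hu.1.1 hu01.2 hu01.1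
      ((Ideal.span_singleton_le_iff_mem _).1 hle)
    have hu'u : ¬ u' ≤ u := fun hle => hne (eq_of_le_primes hu'.1.1 hu.1.1 hle).symm
    have hup := hu.1.1.1.isPrime
    have hnotmul : ∀ {I J : Ideal O}, ¬ I ≤ u → ¬ J ≤ u → ¬ I * J ≤ u := fun hI hJ hIJ =>
      (hup.mul_le.1 hIJ).elim hI hJ
    have hnotpow : ∀ {I : Ideal O} (k : ℕ), ¬ I ≤ u → ¬ I ^ k ≤ u := fun k hI hIk =>
      hI (hup.le_of_pow_le hIk)
    refine ord_contra (u := u) (M := u0 ^ (n - 1) * Ideal.span {b u1} ^ (n - 1))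
      (N := u' * u0 ^ (n - 1) * Ideal.span {b u1} ^ (n - 1)) (X := Ideal.span {x}) (Y := Ideal.span {y})
      hu.1.1 (mul_ne_zero (pow_ne_zero _ hu0.1.1.2) (pow_ne_zero _ hb1))
      (mul_ne_zero (mul_ne_zero hu'.1.1.2 (pow_ne_zero _ hu0.1.1.2)) (pow_ne_zero _ hb1))
      (by simpa using hx) (by simpa using hy) (hnotmul (hnotpow _ hu0u) (hnotpow _ hu1u))
      (hnotmul (hnotmul hu'u (hnotpow _ hu0u)) (hnotpow _ hu1u)) hp ?_
    rw [← mul_assoc, ← (hbψ u hu).2.1, ← (hbψ u' hu').2.1]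
    exact h1

end many
end SpGen

/-! ### Kummer extensions and sparsity of bad primes -/

namespace SpGen
open Polynomial UniqueFactorizationMonoid

section grow
variable {O : Type} [CommRing O] [IsDedekindDomain O] {p : ℕ} {E : Ideal O → O → ℂ}

lemma exists_primitive {v : Ideal O} (hv : v.IsMaximal) [Finite (O ⧸ v)] {m : ℕ}
    (hm : m ∣ Nat.card (O ⧸ v) - 1) : ∃ ζ : O ⧸ v, IsPrimitiveRoot ζ m := by
  letI := Ideal.Quotient.field v
  obtain ⟨g, hg⟩ := IsCyclic.exists_ofOrder_eq_natCard (α := (O ⧸ v)ˣ)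
  rw [Nat.card_units] at hg
  obtain ⟨c, hc⟩ := hm
  have h1 := IsPrimitiveRoot.orderOf g
  have hpos : 0 < orderOf g := orderOf_pos g
  have h2 := h1.pow hpos (a := c) (b := m) (by rw [hg, hc, mul_comm])
  exact ⟨_, IsPrimitiveRoot.coe_units_iff.2 h2⟩

lemma natCast_notMem {v : Ideal O} (hv : v.IsMaximal) [Finite (O ⧸ v)] (hp : p.Prime)
    (hm : p ∣ Nat.card (O ⧸ v) - 1) : (p : O) ∉ v := by
  intro h
  letI := Ideal.Quotient.field v
  have h1 : ((p : ℕ) : O ⧸ v) = 0 := by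
    rw [← map_natCast (Ideal.Quotient.mk v)]
    exact Ideal.Quotient.eq_zero_iff_mem.2 h
  have h2 : ((Nat.card (O ⧸ v) : ℕ) : O ⧸ v) = 0 := by
    haveI := Fintype.ofFinite (O ⧸ v)
    rw [Nat.card_eq_fintype_card]; exact Nat.cast_card_eq_zero _
  obtain ⟨c, hc⟩ := hm
  have h3 : Nat.card (O ⧸ v) = p * c + 1 := by
    have := Nat.card_pos (α := O ⧸ v)
    omega
  rw [h3] at h2
  push_cast at h2
  rw [h1, zero_mul, zero_add] at h2
  exact one_ne_zero h2

/-- If the residue field contains the `m`-th roots of unity and `b` is an `m`-th power in it, then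
`X ^ m - b` splits modulo `v`. -/
lemma splits_mod {v : Ideal O} (hv : v.IsMaximal) [Finite (O ⧸ v)]
    {m : ℕ} (hm : m ∣ Nat.card (O ⧸ v) - 1) {b y : O} (hb : b - y ^ m ∈ v) :
    ((X ^ m - C b : O[X]).map (Ideal.Quotient.mk v)).Splits := by
  letI := Ideal.Quotient.field v
  obtain ⟨ζ, hζ⟩ := exists_primitive hv hm
  have := X_pow_sub_C_splits_of_isPrimitiveRoot hζ (α := Ideal.Quotient.mk v y)
    (a := Ideal.Quotient.mk v b) (by
      rw [← map_pow, eq_comm]; exact Ideal.Quotient.eq.2 hb)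
  simpa using this

/-- The splitting field of a product of separable polynomials is Galois. -/
lemma isGalois_of_prod {K L : Type*} [Field K] [Field L] [Algebra K L] {ι : Type*} (W : Finset ι)
    (f : ι → K[X]) (hf : ∀ i ∈ W, (f i).Separable) [IsSplittingField K L (∏ i ∈ W, f i)] :
    IsGalois K L := by
  have hsep : Algebra.IsSeparable K L := by
    have h1 : Algebra.IsSeparable K (IntermediateField.adjoin K ((∏ i ∈ W, f i).rootSet L)) := by
      rw [IntermediateField.isSeparable_adjoin_iff_isSeparable]
      intro x hx
      rw [mem_rootSet, map_prod, Finset.prod_eq_zero_iff] at hx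
      obtain ⟨-, i, hi, hx⟩ := hx
      exact (hf i hi).of_dvd (minpoly.dvd K x hx)
    rw [(IntermediateField.adjoin_eq_top_iff_of_isAlgebraic (by
      intro x hx
      have h2 := mem_rootSet.1 hx
      exact ⟨_, h2.1, h2.2⟩)).2 (IsSplittingField.adjoin_rootSet L _)] at h1
    exact Algebra.IsSeparable.of_equiv_equiv (RingEquiv.refl K)
      (IntermediateField.topEquiv (F := K) (E := L)).toRingEquiv (by ext; rfl)
  have := Normal.of_isSplittingField (F := K) (E := L) (∏ i ∈ W, f i)
  exact ⟨⟩

set_option maxHeartbeats 1000000 in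
/-- If there are infinitely many good primes, the bad primes have density zero: they split in the
Kummer extensions given by `many_b`, whose degrees are unbounded. -/
lemma sparse_all (ar : Arith O) (h : Recip p E) (hp : p.Prime) (hne : (badSet E).Nonempty)
    (hinf : (primes O \ badSet E).Infinite) {η : ℝ} (hη : 0 < η) : SparseBy (badSet E) η := by
  classical
  haveI := ar.cg
  haveI hfin : ∀ v ∈ badSet E, Finite (O ⧸ v) := fun v hv => ar.bx.finite_quot v hv.1.2
  obtain ⟨U, b, hU, hb⟩ := many_b h hp hinf
  obtain ⟨D, hD⟩ := exists_nat_gt (2 / η)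
  obtain ⟨W, hWU, hWc⟩ := hU.exists_subset_card_eq (p ^ D + 1)
  let K := FractionRing O
  let f : O[X] := ∏ u ∈ W, (X ^ p - C (b u))
  have hf : f.Monic := monic_prod_of_monic _ _ fun u _ => monic_X_pow_sub_C _ hp.ne_zero
  have hfK : f.map (algebraMap O K) = ∏ u ∈ W, (X ^ p - C (algebraMap O K (b u))) := by
    simp only [f, Polynomial.map_prod, Polynomial.map_sub, Polynomial.map_pow, map_X, map_C]
  let L := (f.map (algebraMap O K)).SplittingField
  have hpK : (p : K) ≠ 0 := by
    obtain ⟨v, hv⟩ := hne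
    haveI := hfin v hv
    have := natCast_notMem hv.1.1 hp (h.dvd_card hp hv)
    intro h0
    rw [← map_natCast (algebraMap O K)] at h0
    have h1 : (p : O) = 0 := IsFractionRing.injective O K (h0.trans (map_zero _).symm)
    exact this (h1 ▸ v.zero_mem)
  have hbK : ∀ u ∈ W, algebraMap O K (b u) ≠ 0 := fun u hu h0 =>
    (hb u (hWU hu)).1 (IsFractionRing.injective O K (h0.trans (map_zero _).symm))
  haveI : IsSplittingField K L (∏ u ∈ W, (X ^ p - C (algebraMap O K (b u)))) := by
    rw [← hfK]; infer_instance
  haveI : IsGalois K L := isGalois_of_prod W (fun u => X ^ p - C (algebraMap O K (b u)))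
    fun u hu => separable_X_pow_sub_C _ hpK (hbK u hu)
  haveI : FiniteDimensional K L := IsSplittingField.finiteDimensional L (f.map (algebraMap O K))
  -- if the Galois group were small, two of the `p`-th roots `β u` would have the same Kummer cocycle `F u`,
  -- and their quotient would lie in `K`
  have hcard : D ≤ Nat.card (L ≃ₐ[K] L) := by
    by_contra! hlt
    have hroot : ∀ u : W, ∃ β : L, β ^ p = algebraMap K L (algebraMap O K (b u)) := by
      intro u
      have hs := IsSplittingField.splits L (f.map (algebraMap O K))
      have hs2 : ((X ^ p - C (algebraMap O K (b u))).map (algebraMap K L)).Splits := by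
        refine hs.of_dvd ((hf.map _).map _).ne_zero (Polynomial.map_dvd _ ?_)
        rw [hfK]
        exact Finset.dvd_prod_of_mem (fun u => X ^ p - C (algebraMap O K (b u))) u.2
      obtain ⟨β, hβ⟩ := hs2.exists_eval_eq_zero (by
        rw [Polynomial.degree_map, degree_X_pow_sub_C hp.pos]
        exact_mod_cast hp.ne_zero)
      refine ⟨β, ?_⟩
      simpa [sub_eq_zero] using hβ
    choose β hβ using hroot
    have hβ0 : ∀ u, β u ≠ 0 := fun u h0 => by
      have := hβ u
      rw [h0, zero_pow hp.ne_zero, eq_comm, map_eq_zero] at this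
      exact hbK u u.2 this
    haveI : NeZero p := ⟨hp.ne_zero⟩
    let F : W → (L ≃ₐ[K] L) → rootsOfUnity p L := fun u σ =>
      ⟨Units.mk0 (σ (β u) / β u) (div_ne_zero (by simpa using hβ0 u) (hβ0 u)), by
        rw [mem_rootsOfUnity]
        ext
        simp only [Units.val_pow_eq_pow_val, Units.val_mk0, Units.val_one]
        rw [div_pow, ← map_pow, hβ u, AlgEquiv.commutes, div_self]
        rw [← hβ u]; exact pow_ne_zero _ (hβ0 u)⟩
    have hlt2 : Nat.card ((L ≃ₐ[K] L) → rootsOfUnity p L) < Nat.card W := by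
      rw [Nat.card_fun, Nat.card_eq_fintype_card (α := W), Fintype.card_coe, hWc]
      exact Nat.lt_succ_of_le ((Nat.pow_le_pow_left (card_rootsOfUnity L p) _).trans
        (Nat.pow_le_pow_right hp.pos hlt.le))
    obtain ⟨u, u', huu', hF⟩ : ∃ u u', u ≠ u' ∧ F u = F u' := by
      by_contra! hcon
      have hinj : Function.Injective F := fun u u' he => by_contra fun hn => hcon u u' hn he
      exact absurd (Nat.card_le_card_of_injective F hinj) (not_le.2 hlt2)
    have hfix : ∀ σ : L ≃ₐ[K] L, σ (β u / β u') = β u / β u' := by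
      intro σ
      have h1 : σ (β u) / β u = σ (β u') / β u' := by
        have := congrArg (fun g => (((g σ : rootsOfUnity p L) : Lˣ) : L)) hF
        simpa [F] using this
      have h2 : σ (β u') ≠ 0 := by simpa using hβ0 u'
      rw [div_eq_div_iff (hβ0 u) (hβ0 u')] at h1
      rw [map_div₀, div_eq_div_iff h2 (hβ0 u')]
      linear_combination h1
    obtain ⟨z, hz⟩ := (IsGalois.mem_range_algebraMap_iff_fixed (β u / β u')).2 hfix
    obtain ⟨x, y, hy, hxy⟩ := IsFractionRing.div_surjective O z
    have hy0 : y ≠ 0 := nonZeroDivisors.ne_zero hy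
    have hyK : algebraMap O K y ≠ 0 := fun h0 =>
      hy0 (IsFractionRing.injective O K (h0.trans (map_zero _).symm))
    have hzp : z ^ p * algebraMap O K (b u') = algebraMap O K (b u) := by
      apply (algebraMap K L).injective
      rw [map_mul, map_pow, hz, ← hβ, ← hβ, div_pow, div_mul_cancel₀ _ (pow_ne_zero _ (hβ0 u'))]
    have hx0 : x ≠ 0 := by
      rintro rfl
      rw [map_zero, zero_div] at hxy
      rw [← hxy, zero_pow hp.ne_zero, zero_mul] at hzp
      exact hbK u u.2 hzp.symm
    refine (hb u (hWU u.2)).2.2 u' (hWU u'.2) (fun he => huu' (Subtype.ext he)) y x hy0 hx0 ?_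
    apply IsFractionRing.injective O K
    rw [map_mul, map_mul, map_pow, map_pow, ← hzp, ← hxy, div_pow, mul_right_comm,
      div_mul_cancel₀ _ (pow_ne_zero _ hyK), mul_comm]
  have hsp := sparse_of_gal ar (K := K) (L := L) f hf (badSet E) (fun v hv => hv.1) ∅ Set.finite_empty
    (fun v hv _ => by
      haveI := hfin v hv
      haveI := hv.1.1
      letI := Ideal.Quotient.field v
      rw [Polynomial.map_prod]
      refine Splits.prod fun u hu => ?_
      have h1 := (hb u (hWU hu)).2.1 v hv
      obtain ⟨y, hy⟩ := h.exists_pow_eq hp hv h1.1 h1.2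
      exact splits_mod hv.1.1 (h.dvd_card hp hv) hy) one_pos
  obtain ⟨C, hC0, hC⟩ := hsp
  refine ⟨C, hC0, fun Y hY V hV => (hC Y hY V hV).trans ?_⟩
  have : (1 + 1 : ℝ) / Nat.card (L ≃ₐ[K] L) ≤ η := by
    have hD0 : (0 : ℝ) < D := lt_of_le_of_lt (by positivity) hD
    have : (D : ℝ) ≤ Nat.card (L ≃ₐ[K] L) := by exact_mod_cast hcard
    rw [div_le_iff₀ (by linarith)]
    rw [div_lt_iff₀ hη] at hD
    nlinarith
  have := mul_le_mul_of_nonneg_right this (Real.log_nonneg hY)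
  linarith

/-- If the bad primes have density below one, there are infinitely many good primes. -/
lemma infinite_good (ar : Arith O) {η : ℝ} (h0 : 0 ≤ η) (h1 : η < 1)
    (hsp : SparseBy (badSet E) η) : (primes O \ badSet E).Infinite := by
  intro hfin
  exact not_sparse ar h0 h1 (hsp.of_finite_diff hfin)

end grow
end SpGen

/-! ### Correlations of residue characters -/

namespace SpGen
open UniqueFactorizationMonoid

section moment
variable {O : Type} [CommRing O] [IsDedekindDomain O] {p : ℕ} {E : Ideal O → O → ℂ}

/-- A periodic function with mean zero has a small sum over a box. -/
lemma sum_periodic (bx : BoxSys O) {J : Ideal O} (hJ : J ≠ ⊥) (F : O ⧸ J → ℂ) (hF : ∀ r, ‖F r‖ ≤ 1)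
    (hF0 : ∑ᶠ r, F r = 0) {T : ℕ} (hT : Nat.card (O ⧸ J) ≤ (bx.B T).card) :
    ‖∑ a ∈ bx.B T, F (Ideal.Quotient.mk J a)‖ ≤
      bx.C * (bx.B T).card * (cN J / (bx.B T).card) ^ bx.κ := by
  classical
  haveI := bx.finite_quot J hJ
  haveI := Fintype.ofFinite (O ⧸ J)
  rw [finsum_eq_sum_of_fintype] at hF0
  have hq : 1 ≤ cN J := bx.one_le_cN hJ
  set q := cN J with hqdef
  set n : O ⧸ J → ℕ := fun r => ((bx.B T).filter fun a => Ideal.Quotient.mk J a = r).card with hn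
  have h1 : ∑ a ∈ bx.B T, F (Ideal.Quotient.mk J a) = ∑ r, (n r : ℂ) * F r := by
    rw [← Finset.sum_fiberwise (bx.B T) (fun a => Ideal.Quotient.mk J a)]
    refine Finset.sum_congr rfl fun r _ => ?_
    rw [Finset.sum_congr rfl (g := fun _ => F r) (fun a ha => by rw [(Finset.mem_filter.1 ha).2]),
      Finset.sum_const, nsmul_eq_mul]
  have h2 : (q : ℂ) * ∑ r, (n r : ℂ) * F r = ∑ r, ((q * n r - (bx.B T).card : ℝ) : ℂ) * F r := by
    push_cast
    simp only [sub_mul, Finset.sum_sub_distrib, ← Finset.mul_sum, hF0, mul_zero, sub_zero]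
    rw [Finset.mul_sum]
    exact Finset.sum_congr rfl fun r _ => by ring
  have h3 : ∀ r, |q * n r - (bx.B T).card| ≤ bx.C * (bx.B T).card * (q / (bx.B T).card) ^ bx.κ := by
    intro r
    obtain ⟨x, rfl⟩ := Ideal.Quotient.mk_surjective r
    have := bx.equi J hJ T x hT
    simp only [hn, Ideal.Quotient.eq]
    rw [hqdef]
    unfold cN
    convert this using 7
  have h4 : q * ‖∑ r, (n r : ℂ) * F r‖ ≤ q * (bx.C * (bx.B T).card * (q / (bx.B T).card) ^ bx.κ) := by
    calc q * ‖∑ r, (n r : ℂ) * F r‖ = ‖(q : ℂ) * ∑ r, (n r : ℂ) * F r‖ := by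
          rw [norm_mul, Complex.norm_real, Real.norm_of_nonneg (by linarith)]
      _ ≤ ∑ r, ‖((q * n r - (bx.B T).card : ℝ) : ℂ) * F r‖ := by rw [h2]; exact norm_sum_le _ _
      _ ≤ ∑ _r : O ⧸ J, bx.C * (bx.B T).card * (q / (bx.B T).card) ^ bx.κ := by
          refine Finset.sum_le_sum fun r _ => ?_
          rw [norm_mul, Complex.norm_real, Real.norm_eq_abs]
          exact (mul_le_of_le_one_right (abs_nonneg _) (hF r)).trans (h3 r)
      _ = _ := by
          rw [Finset.sum_const, nsmul_eq_mul, Finset.card_univ, ← Nat.card_eq_fintype_card]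
          rfl
  rw [h1]
  exact le_of_mul_le_mul_left h4 (by linarith)

lemma Recip.norm_eq_one (h : Recip p E) (hp : p.Prime) {v : Ideal O} (hv : v ∈ primes O) {b : O}
    (hb : b ∉ v) : ‖E v b‖ = 1 := by
  obtain ⟨k, hk⟩ := h.pow hv.2 ((isCoprime_span_iff hv.1).2 hb)
  exact Complex.norm_eq_one_of_pow_eq_one hk (pow_ne_zero _ hp.ne_zero)

lemma Recip.eq_zero (h : Recip p E) {v : Ideal O} (hv : v ∈ primes O) {b : O}
    (hb : b ∈ v) : E v b = 0 := by
  by_contra hne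
  exact (isCoprime_span_iff hv.1).1 ((h.ne_zero_iff hv.2).1 hne) hb

lemma Recip.norm_le_one (h : Recip p E) (hp : p.Prime) {v : Ideal O} (hv : v ∈ primes O) (b : O) :
    ‖E v b‖ ≤ 1 := by
  by_cases hb : b ∈ v
  · rw [h.eq_zero hv hb]; simp
  · exact (h.norm_eq_one hp hv hb).le

/-- The residue characters of two distinct bad primes are nearly orthogonal on a box. -/
lemma corr (bx : BoxSys O) [Infinite O] (h : Recip p E) (hp : p.Prime) {v w : Ideal O}
    (hv : v ∈ badSet E) (hw : w ∈ badSet E) (hvw : v ≠ w) {T : ℕ}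
    (hT : cN v * cN w ≤ (bx.B T).card) :
    ‖∑ a ∈ bx.B T, E v a * (starRingEnd ℂ) (E w a)‖ ≤
      bx.C * (bx.B T).card * (cN v * cN w / (bx.B T).card) ^ bx.κ := by
  classical
  have hJ : v * w ≠ ⊥ := mul_ne_zero hv.1.2 hw.1.2
  haveI := bx.finite_quot _ hJ
  haveI := Fintype.ofFinite (O ⧸ (v * w))
  have hcop : IsCoprime v w := Ideal.isCoprime_iff_sup_eq.2 (hv.1.1.coprime_of_ne hw.1.1 hvw)
  let F : O ⧸ (v * w) → ℂ := fun r => E v r.out * (starRingEnd ℂ) (E w r.out)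
  have hFm : ∀ a, F (Ideal.Quotient.mk _ a) = E v a * (starRingEnd ℂ) (E w a) := by
    intro a
    have h1 : (Ideal.Quotient.mk (v * w) a).out - a ∈ v * w := by
      rw [← Ideal.Quotient.eq]
      exact Quotient.out_eq' _
    simp only [F]
    rw [h.mod hv.1.2 (Ideal.mul_le_left h1), h.mod hw.1.2 (Ideal.mul_le_right h1)]
  have hF1 : ∀ r, ‖F r‖ ≤ 1 := fun r => by
    simp only [F]
    rw [norm_mul, RCLike.norm_conj]
    exact mul_le_one₀ (h.norm_le_one hp hv.1 _) (norm_nonneg _) (h.norm_le_one hp hw.1 _)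
  have hF0 : ∑ᶠ r, F r = 0 := by
    rw [finsum_eq_sum_of_fintype]
    obtain ⟨hvp, b, hbv, hb1⟩ := id hv
    obtain ⟨x, hx1, hx2⟩ := exists_crt hcop b 1
    obtain ⟨y, hy1, hy2⟩ := exists_crt hcop 0 0
    have hxv : E v x = E v b := h.mod hv.1.2 hx1
    have hxw : E w x = 1 := (h.mod hw.1.2 hx2).trans (h.one hw.1.2)
    have hbij : Function.Bijective (fun r : O ⧸ (v * w) => Ideal.Quotient.mk _ x * r) := by
      rw [← Finite.injective_iff_bijective]
      intro r s hrs
      obtain ⟨r, rfl⟩ := Ideal.Quotient.mk_surjective r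
      obtain ⟨s, rfl⟩ := Ideal.Quotient.mk_surjective s
      simp only [← map_mul, Ideal.Quotient.eq] at hrs ⊢
      rw [← mul_sub] at hrs
      have hxv' : x ∉ v := fun hx => hbv (by
        have := v.sub_mem hx hx1; simpa using this)
      have hxw' : x ∉ w := fun hx => hw.1.1.ne_top ((Ideal.eq_top_iff_one _).2 (by
        have := w.sub_mem hx hx2; simpa using this))
      rw [← Ideal.inf_eq_mul_of_isCoprime hcop]
      exact ⟨(hv.1.1.isPrime.mem_or_mem (Ideal.mul_le_left hrs)).resolve_left hxv',
        (hw.1.1.isPrime.mem_or_mem (Ideal.mul_le_right hrs)).resolve_left hxw'⟩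
    have h1 : ∑ r, F r = E v b * ∑ r, F r := by
      rw [Finset.mul_sum]
      refine (Function.Bijective.sum_comp hbij F).symm.trans ?_
      refine Finset.sum_congr rfl fun r _ => ?_
      obtain ⟨r, rfl⟩ := Ideal.Quotient.mk_surjective r
      rw [← map_mul, hFm, hFm, h.mul_right _ _ hv.1.2, h.mul_right _ _ hw.1.2, hxv, hxw]
      ring
    have h2 : (1 - E v b) * ∑ r, F r = 0 := by linear_combination h1
    exact (mul_eq_zero.1 h2).resolve_left (sub_ne_zero.2 (Ne.symm hb1))
  have hc : cN (v * w) = cN v * cN w := cN_mul v w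
  have := sum_periodic bx hJ F hF1 hF0 (T := T) (by
    rw [← hc] at hT; unfold cN at hT; exact_mod_cast hT)
  simp only [hFm] at this
  rwa [hc] at this

/-- If the residue characters of the primes in `W` are constant on `A ⊆ B` and nearly orthogonal on
`B`, then `A` or `W` is small. This comes from the sum of `|∑_{v ∈ W} conj (E v a₀) E v a|²` over `a
∈ B`, where `a₀ ∈ A`: each `a ∈ A` contributes `|W|²`. -/
lemma second_moment (h : Recip p E) (hp : p.Prime) (B A : Finset O) (hAB : A ⊆ B)
    (W : Finset (Ideal O)) (hW : ∀ v ∈ W, v ∈ badSet E) (hA : ∀ v ∈ W, ∀ a ∈ A, a ∉ v)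
    (hEA : ∀ v ∈ W, ∀ a ∈ A, ∀ a' ∈ A, E v a = E v a') {M : ℝ} (hM0 : 0 ≤ M)
    (hM : ∀ v ∈ W, ∀ w ∈ W, v ≠ w → ‖∑ a ∈ B, E v a * (starRingEnd ℂ) (E w a)‖ ≤ M) :
    (A.card : ℝ) * (W.card : ℝ) ^ 2 ≤ W.card * B.card + (W.card : ℝ) ^ 2 * M := by
  classical
  rcases A.eq_empty_or_nonempty with rfl | ⟨a0, ha0⟩
  · simp only [Finset.card_empty, Nat.cast_zero, zero_mul]; positivity
  let S : O → ℂ := fun a => ∑ v ∈ W, (starRingEnd ℂ) (E v a0) * E v a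
  have hS : ∀ a ∈ A, S a = W.card := by
    intro a ha
    simp only [S]
    rw [Finset.sum_congr rfl (g := fun _ => (1 : ℂ)), Finset.sum_const, nsmul_eq_mul, mul_one]
    intro v hv
    rw [hEA v hv a ha a0 ha0, ← Complex.normSq_eq_conj_mul_self, Complex.normSq_eq_norm_sq,
      h.norm_eq_one hp (hW v hv).1 (hA v hv a0 ha0)]
    norm_num
  have h1 : (A.card : ℝ) * (W.card : ℝ) ^ 2 ≤ ∑ a ∈ B, ‖S a‖ ^ 2 := by
    calc (A.card : ℝ) * (W.card : ℝ) ^ 2 = ∑ a ∈ A, ‖S a‖ ^ 2 := by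
          rw [Finset.sum_congr rfl (g := fun _ => (W.card : ℝ) ^ 2), Finset.sum_const, nsmul_eq_mul]
          intro a ha; rw [hS a ha]; simp
      _ ≤ _ := Finset.sum_le_sum_of_subset_of_nonneg hAB fun _ _ _ => by positivity
  have h2 : ((∑ a ∈ B, ‖S a‖ ^ 2 : ℝ) : ℂ) = ∑ v ∈ W, ∑ w ∈ W,
      ((starRingEnd ℂ) (E v a0) * E w a0) * ∑ a ∈ B, E v a * (starRingEnd ℂ) (E w a) := by
    have : ∀ a, ((‖S a‖ ^ 2 : ℝ) : ℂ) = ∑ v ∈ W, ∑ w ∈ W,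
        ((starRingEnd ℂ) (E v a0) * E w a0) * (E v a * (starRingEnd ℂ) (E w a)) := by
      intro a
      rw [← Complex.normSq_eq_norm_sq, ← Complex.mul_conj, map_sum, Finset.sum_mul_sum]
      refine Finset.sum_congr rfl fun v _ => Finset.sum_congr rfl fun w _ => ?_
      simp only [map_mul, Complex.conj_conj]; ring
    rw [Complex.ofReal_sum, Finset.sum_congr rfl fun a _ => this a, Finset.sum_comm]
    refine Finset.sum_congr rfl fun v _ => ?_
    rw [Finset.sum_comm]
    exact Finset.sum_congr rfl fun w _ => by rw [Finset.mul_sum]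
  have h3 : ∑ a ∈ B, ‖S a‖ ^ 2 ≤ ∑ v ∈ W, ∑ w ∈ W, ((if v = w then (B.card : ℝ) else 0) + M) := by
    have hnn : (0 : ℝ) ≤ ∑ a ∈ B, ‖S a‖ ^ 2 := Finset.sum_nonneg fun _ _ => by positivity
    rw [← Real.norm_of_nonneg hnn, ← Complex.norm_real, h2]
    refine (norm_sum_le _ _).trans (Finset.sum_le_sum fun v hv => (norm_sum_le _ _).trans
      (Finset.sum_le_sum fun w hw => ?_))
    rw [norm_mul, norm_mul, RCLike.norm_conj, h.norm_eq_one hp (hW v hv).1 (hA v hv a0 ha0),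
      h.norm_eq_one hp (hW w hw).1 (hA w hw a0 ha0), one_mul, one_mul]
    split_ifs with hvw
    · refine (norm_sum_le _ _).trans ?_
      have : ∑ a ∈ B, ‖E v a * (starRingEnd ℂ) (E w a)‖ ≤ ∑ _a ∈ B, (1 : ℝ) :=
        Finset.sum_le_sum fun a _ => by
          rw [norm_mul, RCLike.norm_conj]
          exact mul_le_one₀ (h.norm_le_one hp (hW v hv).1 _) (norm_nonneg _)
            (h.norm_le_one hp (hW w hw).1 _)
      rw [Finset.sum_const, nsmul_eq_mul, mul_one] at this
      linarith
    · rw [zero_add]; exact hM v hv w hw hvw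
  refine h1.trans (h3.trans (le_of_eq ?_))
  simp only [Finset.sum_add_distrib, Finset.sum_ite_eq, Finset.sum_const, nsmul_eq_mul]
  rw [Finset.sum_congr rfl (g := fun _ => (B.card : ℝ)) (fun v hv => by rw [if_pos hv]),
    Finset.sum_const, nsmul_eq_mul]
  ring

lemma zpart_compl_not_le {Z : Set (Ideal O)} {I v : Ideal O} (hv : v ∈ Z)
    (hvp : v ∈ primes O) : ¬ zpart Zᶜ I ≤ v := by
  intro hle
  unfold zpart at hle
  have hp := Ideal.prime_of_isPrime hvp.2 hvp.1.isPrime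
  obtain ⟨w, hw, hvw⟩ := Prime.exists_mem_multiset_dvd hp (Ideal.dvd_iff_le.2 hle)
  simp only [Multiset.mem_filter] at hw
  have := eq_of_le_primes (mem_primes_of_mem_normalizedFactors hw.1) hvp (Ideal.dvd_iff_le.1 hvw)
  exact hw.2 (this ▸ hv)

set_option maxHeartbeats 1000000 in
/-- Among elements with few possible bad parts, many have the same symbols at all bad primes: two
elements with the same bad part differ, up to factors prime to the bad primes, by a character of the
class group. -/
lemma pigeon [Finite (ClassGroup O)] (h : Recip p E)
    (G : Finset O) (hG : ∀ a ∈ G, a ≠ 0) (ZZ : Finset (Ideal O))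
    (hZZ : ∀ a ∈ G, zpart (badSet E) (Ideal.span {a}) ∈ ZZ) :
    ∃ A ⊆ G, G.card ≤ ZZ.card * Nat.card (ClassGroup O →* ℂˣ) * A.card ∧
      ∀ v ∈ badSet E, ∀ a ∈ A, ∀ a' ∈ A, E v a = E v a' := by
  classical
  set Z := badSet E with hZ
  haveI := Fintype.ofFinite (ClassGroup O →* ℂˣ)
  have hrep : ∀ z : Ideal O, ∃ a0 g : O, ∀ a ∈ G, zpart Z (Ideal.span {a}) = z →
      a0 ≠ 0 ∧ g ≠ 0 ∧ zpart Z (Ideal.span {a0}) = z ∧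
      Ideal.span {g} = zpart Zᶜ (Ideal.span {a0}) ^ Nat.card (ClassGroup O) := by
    intro z
    by_cases hz : ∃ a0 ∈ G, zpart Z (Ideal.span {a0}) = z
    · obtain ⟨a0, ha0, hz0⟩ := hz
      have hs : Ideal.span {a0} ≠ ⊥ := by simpa using hG a0 ha0
      have hb := zpart_ne_bot Zᶜ hs
      obtain ⟨g, hg0, hg⟩ := exists_of_clI_eq_one (I := zpart Zᶜ (Ideal.span {a0}) ^ Nat.card (ClassGroup O))
        (pow_ne_zero _ hb) (by rw [clI_pow hb, pow_card_eq_one'])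
      exact ⟨a0, g, fun a ha haz => ⟨hG a0 ha0, hg0, hz0, hg⟩⟩
    · exact ⟨0, 0, fun a ha haz => absurd ⟨a, ha, haz⟩ hz⟩
  choose a0 g hrep using hrep
  have hnm : ∀ {v : Ideal O}, v ∈ Z → ∀ {I J : Ideal O}, ¬ I ≤ v → ¬ J ≤ v → ¬ I * J ≤ v :=
    by intro v hv I J hI hJ hIJ; exact (hv.1.1.isPrime.mul_le.1 hIJ).elim hI hJ
  have hnp : ∀ {v : Ideal O}, v ∈ Z → ∀ {I : Ideal O} (k : ℕ), ¬ I ≤ v → ¬ I ^ k ≤ v :=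
    by intro v hv I k hI hIk; haveI := hv.1.1.isPrime; exact hI (Ideal.IsPrime.le_of_pow_le hIk)
  have hψ : ∀ a : O, ∃ ψ : ClassGroup O →* ℂˣ, a ∈ G → ∀ v ∈ Z,
      E v a * E v (g (zpart Z (Ideal.span {a}))) =
        E v (a0 (zpart Z (Ideal.span {a}))) * ψ (clI v) := by
    intro a
    by_cases ha : a ∈ G
    swap
    · exact ⟨1, fun h => absurd h ha⟩
    set z := zpart Z (Ideal.span {a}) with hz
    obtain ⟨h0, hg0, hz0, hg⟩ := hrep z a ha rfl
    have hs : Ideal.span {a} ≠ ⊥ := by simpa using hG a ha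
    have hs0 : Ideal.span {a0 z} ≠ ⊥ := by simpa using h0
    have hn1 : 1 ≤ Nat.card (ClassGroup O) := Nat.card_pos
    set c := zpart Zᶜ (Ideal.span {a}) with hc
    set c0 := zpart Zᶜ (Ideal.span {a0 z}) with hc0
    have e1 : z * c = Ideal.span {a} := zpart_mul Z hs
    have e2 : z * c0 = Ideal.span {a0 z} := by rw [← zpart_mul Z hs0, hz0]
    have e3 : Ideal.span {a * g z} = Ideal.span {a0 z} * (c * c0 ^ (Nat.card (ClassGroup O) - 1)) := by
      rw [← Ideal.span_singleton_mul_span_singleton, hg, ← e1, ← e2]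
      conv_lhs => rw [← Nat.sub_add_cancel hn1, pow_succ]
      ring
    obtain ⟨b, hb⟩ : a0 z ∣ a * g z := by
      rw [← Ideal.span_singleton_le_span_singleton, e3]; exact Ideal.mul_le_left
    have hbs : Ideal.span {b} = c * c0 ^ (Nat.card (ClassGroup O) - 1) := by
      rw [hb, ← Ideal.span_singleton_mul_span_singleton] at e3
      exact mul_left_cancel₀ hs0 e3
    have hb0 : b ≠ 0 := by
      rintro rfl
      rw [mul_zero] at hb
      exact mul_ne_zero (hG a ha) hg0 hb
    have hbv : ∀ v ∈ Z, b ∉ v := by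
      intro v hv hbv
      rw [← Ideal.span_singleton_le_iff_mem, hbs] at hbv
      exact hnm hv (zpart_compl_not_le hv hv.1) (hnp hv _ (zpart_compl_not_le hv hv.1)) hbv
    obtain ⟨ψ, hψ⟩ := (h.adm_of_forall hb0 hbv).exists_char h
    refine ⟨ψ, fun _ v hv => ?_⟩
    rw [← hψ v hv.1.2 ((isCoprime_span_iff hv.1.1).2 (hbv v hv)), ← h.mul_right _ _ hv.1.2,
      ← h.mul_right _ _ hv.1.2, hb]
  choose ψ hψ using hψ
  let F : O → Ideal O × (ClassGroup O →* ℂˣ) := fun a => (zpart Z (Ideal.span {a}), ψ a)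
  have hmaps : ∀ a ∈ G, F a ∈ ZZ ×ˢ (Finset.univ : Finset (ClassGroup O →* ℂˣ)) := fun a ha =>
    Finset.mem_product.2 ⟨hZZ a ha, Finset.mem_univ _⟩
  rcases G.eq_empty_or_nonempty with rfl | hGne
  · exact ⟨∅, le_rfl, by simp, by simp⟩
  have hne : (ZZ ×ˢ (Finset.univ : Finset (ClassGroup O →* ℂˣ))).Nonempty := by
    obtain ⟨a, ha⟩ := hGne; exact ⟨_, hmaps a ha⟩
  obtain ⟨y, hy, hmax⟩ := Finset.exists_max_image _ (fun y => (G.filter fun a => F a = y).card) hne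
  refine ⟨G.filter fun a => F a = y, Finset.filter_subset _ _, ?_, ?_⟩
  · have := Finset.card_le_mul_card_image_of_maps_to (f := F) hmaps _ (fun b hb => hmax b hb)
    rw [Finset.card_product, Finset.card_univ, ← Nat.card_eq_fintype_card] at this
    rw [mul_comm]; exact this
  · intro v hv a ha a' ha'
    rw [Finset.mem_filter] at ha ha'
    have hz : zpart Z (Ideal.span {a}) = zpart Z (Ideal.span {a'}) :=
      congrArg Prod.fst (ha.2.trans ha'.2.symm)
    have hψe : ψ a = ψ a' := congrArg Prod.snd (ha.2.trans ha'.2.symm)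
    have h1 := hψ a ha.1 v hv
    have h2 := hψ a' ha'.1 v hv
    rw [hz, hψe, ← h2] at h1
    refine mul_right_cancel₀ ?_ h1
    obtain ⟨_, _, _, hg⟩ := hrep _ a' ha'.1 rfl
    rw [h.ne_zero_iff hv.1.2, isCoprime_span_iff hv.1.1]
    intro hgv
    rw [← Ideal.span_singleton_le_iff_mem, hg] at hgv
    exact hnp hv _ (zpart_compl_not_le hv hv.1) hgv

end moment
end SpGen

/-! ### The bad primes have a convergent sum of inverse norms -/

namespace SpGen
open UniqueFactorizationMonoid Filter Topology

section count
variable {O : Type} [CommRing O] [IsDedekindDomain O] {p : ℕ} {E : Ideal O → O → ℂ}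

lemma exists_threshold {κ K1 K2 : ℝ} (hκ : 0 < κ) (hκ1 : κ ≤ 1) :
    ∃ Q0 : ℝ, 4 ≤ Q0 ∧ ∀ Q : ℝ, Q0 ≤ Q → K1 * Q ^ (-(3 * κ / 4)) ≤ 1 / 2 ∧ K2 * Q ^ (κ / 8) < Q := by
  have h1 : Tendsto (fun Q : ℝ => K1 * Q ^ (-(3 * κ / 4))) atTop (𝓝 (K1 * 0)) :=
    (tendsto_rpow_neg_atTop (by positivity)).const_mul K1
  have h2 : Tendsto (fun Q : ℝ => K2 * Q ^ (-(1 - κ / 8))) atTop (𝓝 (K2 * 0)) :=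
    (tendsto_rpow_neg_atTop (by linarith)).const_mul K2
  rw [mul_zero] at h1 h2
  have e1 := h1.eventually_lt_const (show (0 : ℝ) < 1 / 2 by norm_num)
  have e2 := h2.eventually_lt_const (show (0 : ℝ) < 1 by norm_num)
  obtain ⟨Q0, hQ0⟩ := eventually_atTop.1 ((e1.and e2).and (eventually_ge_atTop 4))
  refine ⟨max Q0 4, le_max_right _ _, fun Q hQ => ?_⟩
  obtain ⟨⟨h3, h4⟩, h5⟩ := hQ0 Q ((le_max_left _ _).trans hQ)
  refine ⟨h3.le, ?_⟩
  have hQ0 : (0 : ℝ) < Q := by linarith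
  have := mul_lt_mul_of_pos_right h4 hQ0
  rw [one_mul, mul_assoc, ← Real.rpow_add_one hQ0.ne'] at this
  rwa [show -(1 - κ / 8) + 1 = κ / 8 by ring] at this

set_option maxHeartbeats 2000000 in
/-- There are `O(Q ^ (1/2))` bad primes of index in `[Q, 2Q)`. In a box of about `Q ^ 3` elements,
at least half have a bad part of index at most a small power of `Q`; `pigeon` finds a large subset
with the same symbols, and `second_moment` bounds the number of bad primes. -/
theorem bad_count (ar : Arith O) (h : Recip p E) (hp : p.Prime)
    (hsp : ∀ η : ℝ, 0 < η → SparseBy (badSet E) η) :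
    ∃ C : ℝ, 0 ≤ C ∧ ∀ Q : ℝ, 1 ≤ Q → ∀ W : Finset (Ideal O),
      (∀ v ∈ W, v ∈ badSet E ∧ Q ≤ cN v ∧ cN v < 2 * Q) → (W.card : ℝ) ≤ C * Q ^ (1 / 2 : ℝ) := by
  classical
  haveI := ar.cg
  haveI := ar.inf
  obtain ⟨C3, hC3, hav⟩ := avg_crude ar
  set κ := ar.bx.κ with hκdef
  have hκ := ar.bx.κ_pos
  have hκ1 := ar.bx.κ_le
  rw [← hκdef] at hκ hκ1
  set C := ar.bx.C with hCdef
  have hC1 : 1 ≤ C := ar.bx.one_le_C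
  -- bad parts of index about `Q ^ ε` cost a factor `Q ^ (2 * ε)` in the pigeonhole step, which has to be
  -- smaller than the saving `Q ^ κ` from near orthogonality
  set ε := κ / 8 with hε
  have hε0 : 0 < ε := by positivity
  set η := ε / (12 * C3) with hη
  have hη0 : 0 < η := by positivity
  have hηε : 4 * (C3 * η * 3) = ε := by rw [hη]; field_simp; ring
  obtain ⟨C4, hC4⟩ := hav (badSet E) η (fun v hv => hv.1) hη0.le (hsp η hη0)
  obtain ⟨Ci, hCi0, hCi⟩ := ar.ideals
  set C6 := 4 * (C3 * η * Real.log C + max C4 1) with hC6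
  have hlC : 0 ≤ Real.log C := Real.log_nonneg hC1
  have hC6pos : 0 < C6 := by
    have : 0 < max C4 1 := lt_of_lt_of_le one_pos (le_max_right _ _)
    positivity
  set M : ℝ := ((Nat.card (ClassGroup O →* ℂˣ) : ℕ) : ℝ) with hM
  have hM0 : 0 ≤ M := Nat.cast_nonneg _
  set K0 := 2 * Ci * M * Real.exp C6 ^ 2 with hK0
  have hK00 : 0 ≤ K0 := by positivity
  obtain ⟨Q0, hQ04, hQ0⟩ := exists_threshold (κ := κ) (K1 := K0 * C * 4 ^ κ) (K2 := Real.exp C6) hκ hκ1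
  refine ⟨Ci * (2 * Q0) ^ 2 + 2 * K0, by positivity, fun Q hQ W hW => ?_⟩
  have hQhalf : 1 ≤ Q ^ (1 / 2 : ℝ) := Real.one_le_rpow hQ (by norm_num)
  rcases lt_or_ge Q Q0 with hlt | hge
  · -- for bounded `Q`, all ideals of index at most `2 * Q0` are counted
    obtain ⟨I, hI1, hI2⟩ := hCi (2 * Q0) (by linarith)
    have h1 : W ⊆ I := fun v hv => hI1 v (hW v hv).1.1.2 (by
      have := (hW v hv).2.2; unfold cN at this; linarith)
    have h2 : (W.card : ℝ) ≤ I.card := by exact_mod_cast Finset.card_le_card h1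
    calc (W.card : ℝ) ≤ Ci * (2 * Q0) ^ 2 + 2 * K0 := by linarith
      _ ≤ _ := le_mul_of_one_le_right (by positivity) hQhalf
  obtain ⟨hthr1, hthr2⟩ := hQ0 Q hge
  have hQ4 : 4 ≤ Q := hQ04.trans hge
  have hQpos : 0 < Q := by linarith
  -- a box of about `Q ^ 3` elements is large compared with products of two bad primes near `Q`
  obtain ⟨T, hT1, hT2⟩ := ar.bx.exists_le (Q ^ 3) (one_le_pow₀ hQ)
  rw [← hCdef] at hT2
  set B := ar.bx.B T with hB
  set N : ℝ := (B.card : ℝ) with hN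
  have hQ3 : 4 * Q ^ 2 ≤ Q ^ 3 := by nlinarith [sq_nonneg Q]
  have hN64 : 64 ≤ N := by
    have : (4 : ℝ) ^ 3 ≤ Q ^ 3 := by gcongr
    linarith
  have hNpos : 0 < N := by linarith
  set t0 := ε * Real.log Q + C6 with ht0
  have hlQ : 0 ≤ Real.log Q := Real.log_nonneg hQ
  have ht0pos : 0 < t0 := by positivity
  set U := Real.exp C6 * Q ^ ε with hU
  have hUlog : Real.log U = t0 := by
    rw [hU, Real.log_mul (Real.exp_pos _).ne' (by positivity), Real.log_exp, Real.log_rpow hQpos, ht0]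
    ring
  have hU1 : 1 ≤ U := by
    rw [← Real.log_nonneg_iff (by positivity), hUlog]; exact ht0pos.le
  -- the elements with small bad part
  set B0 := B.filter fun a => a ≠ 0 with hB0
  set G := B0.filter fun a => Real.log (cN (zpart (badSet E) (Ideal.span {a}))) ≤ t0 with hG
  have hspan : ∀ a ∈ B0, Ideal.span {a} ≠ ⊥ := fun a ha => by
    simpa using (Finset.mem_filter.1 ha).2
  have hGcard : N / 2 ≤ G.card := by
    have h1 : (B0.card : ℝ) = G.card + (B0.filter fun a =>
        ¬ Real.log (cN (zpart (badSet E) (Ideal.span {a}))) ≤ t0).card := by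
      exact_mod_cast (Finset.card_filter_add_card_filter_not _).symm
    have h2 : N ≤ B0.card + 1 := by
      have h3 : B.card ≤ (insert 0 B0).card := Finset.card_le_card fun a ha => by
        by_cases h0 : a = 0
        · rw [h0]; exact Finset.mem_insert_self _ _
        · exact Finset.mem_insert_of_mem (Finset.mem_filter.2 ⟨ha, h0⟩)
      have h4 := h3.trans (Finset.card_insert_le _ _)
      rw [hN]; exact_mod_cast h4
    set Bd := B0.filter fun a => ¬ Real.log (cN (zpart (badSet E) (Ideal.span {a}))) ≤ t0 with hBd
    have h3 : (Bd.card : ℝ) * t0 ≤ N * (t0 / 4) := by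
      calc (Bd.card : ℝ) * t0 = ∑ _a ∈ Bd, t0 := by rw [Finset.sum_const, nsmul_eq_mul]
        _ ≤ ∑ a ∈ Bd, Real.log (cN (zpart (badSet E) (Ideal.span {a}))) :=
            Finset.sum_le_sum fun a ha => (not_le.1 (Finset.mem_filter.1 ha).2).le
        _ ≤ ∑ a ∈ B0, Real.log (cN (zpart (badSet E) (Ideal.span {a}))) :=
            Finset.sum_le_sum_of_subset_of_nonneg (Finset.filter_subset _ _) fun a ha _ =>
              Real.log_nonneg (ar.bx.one_le_cN (zpart_ne_bot _ (hspan a ha)))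
        _ ≤ N * (C3 * η * Real.log N + C4) := hC4 T
        _ ≤ N * (t0 / 4) := by
            refine mul_le_mul_of_nonneg_left ?_ hNpos.le
            have h5 : Real.log N ≤ 3 * Real.log Q + Real.log C := by
              calc Real.log N ≤ Real.log (C * Q ^ 3) := Real.log_le_log hNpos hT2
                _ = _ := by
                  rw [Real.log_mul (by positivity) (by positivity), Real.log_pow]; push_cast; ring
            have h6 := mul_le_mul_of_nonneg_left h5 (show 0 ≤ C3 * η by positivity)
            have h7 := le_max_left C4 1
            have h8 : t0 / 4 = C3 * η * (3 * Real.log Q + Real.log C) + max C4 1 := by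
              rw [ht0, ← hηε, hC6]; ring
            rw [h8]; linarith
    have h4 : (Bd.card : ℝ) ≤ N / 4 := by
      have : (Bd.card : ℝ) * t0 ≤ (N / 4) * t0 := by linarith
      exact le_of_mul_le_mul_right this ht0pos
    linarith
  obtain ⟨ZZ, hZZ1, hZZ2⟩ := hCi U hU1
  have hGsmall : ∀ a ∈ G, cN (zpart (badSet E) (Ideal.span {a})) ≤ U := by
    intro a ha
    rw [hG, Finset.mem_filter] at ha
    have h1 := ar.bx.one_le_cN (zpart_ne_bot (badSet E) (hspan a ha.1))
    rw [← Real.log_le_log_iff (by linarith) (by linarith), hUlog]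
    exact ha.2
  obtain ⟨A, hAG, hAc, hAE⟩ := pigeon h G (fun a ha => (Finset.mem_filter.1 (Finset.mem_filter.1 ha).1).2)
    ZZ (fun a ha => hZZ1 _ (zpart_ne_bot _ (hspan a (Finset.mem_filter.1 ha).1)) (hGsmall a ha))
  have hAc' : (G.card : ℝ) ≤ ZZ.card * M * A.card := by rw [hM]; exact_mod_cast hAc
  set Mo := C * N * (4 / Q) ^ κ with hMo
  have h4Q : (0 : ℝ) < 4 / Q := by positivity
  have hMo0 : 0 ≤ Mo := by positivity
  have hsm := second_moment h hp B A (hAG.trans ((Finset.filter_subset _ _).trans (Finset.filter_subset _ _)))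
    W (fun v hv => (hW v hv).1) (by
      intro v hv a ha hav
      have haG := hAG ha
      have hs := hspan a (Finset.mem_filter.1 haG).1
      obtain ⟨hvb, hvQ, -⟩ := hW v hv
      have h1 : zpart (badSet E) (Ideal.span {a}) * zpart (badSet E)ᶜ (Ideal.span {a}) ≤ v := by
        rw [zpart_mul _ hs]; exact (Ideal.span_singleton_le_iff_mem _).2 hav
      have h2 := (hvb.1.1.isPrime.mul_le.1 h1).resolve_right (zpart_compl_not_le hvb hvb.1)
      have h3 := ar.bx.cN_le (zpart_ne_bot _ hs) h2
      linarith [hGsmall a haG])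
    (fun v hv => hAE v (hW v hv).1) hMo0 (by
      intro v hv w hw hvw
      have hv2 := (hW v hv).2.2.le
      have hw2 := (hW w hw).2.2.le
      have h1 : cN v * cN w ≤ 4 * Q ^ 2 := by
        calc cN v * cN w ≤ (2 * Q) * (2 * Q) := mul_le_mul hv2 hw2 cN_nonneg (by positivity)
          _ = _ := by ring
      refine (corr ar.bx h hp (hW v hv).1 (hW w hw).1 hvw (h1.trans (hQ3.trans hT1))).trans ?_
      rw [hMo]
      refine mul_le_mul_of_nonneg_left (Real.rpow_le_rpow ?_ ?_ hκ.le) (by positivity)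
      · exact div_nonneg (mul_nonneg cN_nonneg cN_nonneg) hNpos.le
      · rw [div_le_div_iff₀ hNpos hQpos]
        calc cN v * cN w * Q ≤ 4 * Q ^ 2 * Q := by gcongr
          _ = 4 * Q ^ 3 := by ring
          _ ≤ 4 * N := by linarith)
  rw [← hN] at hsm
  set P := 2 * (Ci * U ^ 2 * M) with hP
  have hP0 : 0 ≤ P := by positivity
  have hNP : N ≤ P * A.card := by
    have : (ZZ.card : ℝ) * M * A.card ≤ Ci * U ^ 2 * M * A.card := by gcongr
    rw [hP]; linarith
  have hPK : P = K0 * Q ^ (2 * ε) := by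
    have : U ^ 2 = Real.exp C6 ^ 2 * Q ^ (2 * ε) := by
      rw [hU, mul_pow, ← Real.rpow_natCast (Q ^ ε), ← Real.rpow_mul hQpos.le]
      congr 2
      push_cast; ring
    rw [hP, this, hK0]; ring
  have hPM : P * Mo ≤ N / 2 := by
    have h1 : P * Mo = N * (K0 * C * 4 ^ κ * Q ^ (-(3 * κ / 4))) := by
      have h2 : Q ^ (2 * ε) * (4 / Q) ^ κ = 4 ^ κ * Q ^ (-(3 * κ / 4)) := by
        rw [Real.div_rpow (by norm_num) hQpos.le, div_eq_mul_inv, ← Real.rpow_neg hQpos.le,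
          mul_left_comm, ← Real.rpow_add hQpos]
        congr 2
        rw [hε]; ring
      calc P * Mo = N * (K0 * C * (Q ^ (2 * ε) * (4 / Q) ^ κ)) := by rw [hPK, hMo]; ring
        _ = _ := by rw [h2]; ring
    rw [h1]
    have := mul_le_mul_of_nonneg_left hthr1 hNpos.le
    linarith
  have hWn : (0 : ℝ) ≤ W.card := Nat.cast_nonneg _
  have hfin : N * (W.card : ℝ) ^ 2 ≤ P * (W.card * N) + (W.card : ℝ) ^ 2 * (N / 2) := by
    calc N * (W.card : ℝ) ^ 2 ≤ P * A.card * (W.card : ℝ) ^ 2 := by gcongr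
      _ = P * (A.card * (W.card : ℝ) ^ 2) := by ring
      _ ≤ P * (W.card * N + (W.card : ℝ) ^ 2 * Mo) := by gcongr
      _ = P * (W.card * N) + (W.card : ℝ) ^ 2 * (P * Mo) := by ring
      _ ≤ _ := by gcongr
  have hW2P : (W.card : ℝ) ≤ 2 * P := by
    rcases eq_or_lt_of_le hWn with h0 | h0
    · rw [← h0]; positivity
    · have : (W.card : ℝ) * (N * W.card) ≤ 2 * P * (N * W.card) := by linarith
      exact le_of_mul_le_mul_right this (by positivity)
  have hpow : Q ^ (2 * ε) ≤ Q ^ (1 / 2 : ℝ) := Real.rpow_le_rpow_of_exponent_le hQ (by rw [hε]; linarith)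
  calc (W.card : ℝ) ≤ 2 * P := hW2P
    _ = 2 * K0 * Q ^ (2 * ε) := by rw [hPK]; ring
    _ ≤ 2 * K0 * Q ^ (1 / 2 : ℝ) := by gcongr
    _ ≤ _ := by
      have : 0 ≤ Ci * (2 * Q0) ^ 2 * Q ^ (1 / 2 : ℝ) := by positivity
      linarith

/-- `∑ 1/N(v)` converges over the bad primes. -/
theorem bad_summable (ar : Arith O) (h : Recip p E) (hp : p.Prime)
    (hsp : ∀ η : ℝ, 0 < η → SparseBy (badSet E) η) :
    ∃ D : ℝ, ∀ W : Finset (Ideal O), (∀ v ∈ W, v ∈ badSet E) → ∑ v ∈ W, (cN v)⁻¹ ≤ D := by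
  obtain ⟨C, hC0, hC⟩ := bad_count ar h hp hsp
  set r : ℝ := (2 : ℝ) ^ (-(1 / 2) : ℝ) with hr
  have hr0 : 0 ≤ r := by positivity
  have hr1 : r < 1 := Real.rpow_lt_one_of_one_lt_of_neg (by norm_num) (by norm_num)
  refine ⟨_, fun W hW => dyadic (fun v => Nat.card (O ⧸ v)) (fun v => (cN v)⁻¹) (fun j => C * r ^ j)
    ((summable_geometric_of_lt_one hr0 hr1).mul_left C) (fun j => by positivity) (badSet E) ?_ ?_ W hW⟩
  · intro v hv
    haveI := ar.bx.finite_quot v hv.1.2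
    exact Nat.card_pos.ne'
  · intro j V hV
    have h1 := hC (2 ^ j) (one_le_pow₀ (by norm_num)) V (fun v hv => by
      obtain ⟨a, b, c⟩ := hV v hv
      refine ⟨a, ?_, ?_⟩
      · unfold cN; exact_mod_cast b
      · unfold cN; rw [← pow_succ']; exact_mod_cast c)
    calc ∑ v ∈ V, (cN v)⁻¹ ≤ ∑ _v ∈ V, ((2 : ℝ) ^ j)⁻¹ := Finset.sum_le_sum fun v hv => by
          have : (2 : ℝ) ^ j ≤ cN v := by unfold cN; exact_mod_cast (hV v hv).2.1
          gcongr
      _ = V.card * ((2 : ℝ) ^ j)⁻¹ := by rw [Finset.sum_const, nsmul_eq_mul]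
      _ ≤ C * ((2 : ℝ) ^ j) ^ (1 / 2 : ℝ) * ((2 : ℝ) ^ j)⁻¹ := by gcongr
      _ = C * r ^ j := by
          have h2 : (0 : ℝ) < 2 ^ j := by positivity
          rw [mul_assoc, ← Real.rpow_neg_one ((2 : ℝ) ^ j), ← Real.rpow_add h2, hr,
            ← Real.rpow_natCast, ← Real.rpow_natCast, ← Real.rpow_mul (by norm_num),
            ← Real.rpow_mul (by norm_num)]
          congr 2
          ring

end count
end SpGen

/-! ### A sieve -/

namespace SpGen
open UniqueFactorizationMonoid Filter Topology

/-- A sum of bounded partial sums has a small tail. -/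
lemma exists_tail {α : Type*} [DecidableEq α] (Z : Set α) (w : α → ℝ) {D : ℝ}
    (hD : ∀ W : Finset α, (∀ v ∈ W, v ∈ Z) → ∑ v ∈ W, w v ≤ D) {δ : ℝ} (hδ : 0 < δ) :
    ∃ W0 : Finset α, (∀ v ∈ W0, v ∈ Z) ∧ ∀ W : Finset α, (∀ v ∈ W, v ∈ Z ∧ v ∉ W0) →
      ∑ v ∈ W, w v ≤ δ := by
  set A : Set ℝ := {x | ∃ W : Finset α, (∀ v ∈ W, v ∈ Z) ∧ x = ∑ v ∈ W, w v}
  have hne : A.Nonempty := ⟨_, ∅, by simp, rfl⟩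
  have hbd : BddAbove A := ⟨D, by rintro _ ⟨W, hW, rfl⟩; exact hD W hW⟩
  obtain ⟨_, ⟨W0, hW0, rfl⟩, hlt⟩ := exists_lt_of_lt_csSup hne (show sSup A - δ < sSup A by linarith)
  refine ⟨W0, hW0, fun W hW => ?_⟩
  have hdis : Disjoint W W0 := Finset.disjoint_left.2 fun v hv => (hW v hv).2
  have := le_csSup hbd ⟨W ∪ W0, fun v hv => by
    rcases Finset.mem_union.1 hv with h | h
    · exact (hW v h).1
    · exact hW0 v h, rfl⟩
  rw [Finset.sum_union hdis] at this
  linarith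

lemma avoid_aux1 {C β N n : ℝ} (hN : 0 < N) (hn : 0 < n) :
    C * (β + N * n) / (N * n) = C * β / N * n⁻¹ + C := by
  field_simp

lemma avoid_aux2 {C β : ℝ} (hC : 0 < C) : C * β * (1 / (2 * C)) = β / 2 := by
  field_simp

lemma avoid_aux3 {C C' β N w x : ℝ} (hC1 : 1 ≤ C) (hC'0 : 0 < C') (hN0 : 0 < N) (hw : 0 ≤ w)
    (hβ0 : 0 < β) (hβ : 16 * C * N * (w + 1) ≤ β) (hx : β / (2 * N) ≤ x)
    (htot : x ≤ 1 + (C * β / N * (1 / (8 * C)) + (w + C' * β * (1 / (8 * C * C' * N))) * C)) :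
    False := by
  have hC0 : 0 < C := by linarith
  have e1 : C * β / N * (1 / (8 * C)) = β / N / 8 := by field_simp
  have e2 : C' * β * (1 / (8 * C * C' * N)) * C = β / N / 8 := by field_simp
  have e3 : 16 * C * (w + 1) ≤ β / N := by rw [le_div_iff₀ hN0]; linarith
  have e4 : β / (2 * N) = β / N / 2 := by field_simp
  have e6 : 0 ≤ C * w := by positivity
  have e7 : 0 < β / N := by positivity
  rw [e4] at hx
  rw [e1, add_mul, e2] at htot
  linarith

section avoid
variable {O : Type} [CommRing O] [IsDedekindDomain O]

lemma isCoprime_prod_pow {W0 : Finset (Ideal O)} (hW0 : ∀ v ∈ W0, v ∈ primes O) {v : Ideal O}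
    (hv : v ∈ primes O) (hvW : v ∉ W0) (n : ℕ) : IsCoprime (∏ w ∈ W0, w) (v ^ n) := by
  refine IsCoprime.pow_right (IsCoprime.prod_left fun w hw => ?_)
  haveI := (hW0 w hw).1
  haveI := hv.1
  exact Ideal.isCoprime_of_isMaximal (fun h => hvW (h ▸ hw))

set_option maxHeartbeats 2000000 in
/-- A progression `a + k b` whose terms are not all divisible by a prime of `Z` contains a nonzero
term divisible by none of the powers `v ^ e v`, provided their reciprocal indices are summable. -/
theorem exists_avoid (ar : Arith O) (Z : Set (Ideal O)) (hZ : ∀ v ∈ Z, v ∈ primes O)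
    (e : Ideal O → ℕ) (he : ∀ v ∈ Z, e v ≠ 0) {D : ℝ}
    (hD : ∀ W : Finset (Ideal O), (∀ v ∈ W, v ∈ Z) → ∑ v ∈ W, (cN (v ^ e v))⁻¹ ≤ D)
    {a b : O} (hb : b ≠ 0) (hab : ∀ v ∈ Z, a ∈ v → b ∉ v) :
    ∃ k, a + k * b ≠ 0 ∧ ∀ v ∈ Z, a + k * b ∉ v ^ e v := by
  classical
  haveI := ar.inf
  set C := ar.bx.C with hC
  have hC1 : 1 ≤ C := ar.bx.one_le_C
  clear_value C
  have hC0 : 0 < C := by linarith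
  obtain ⟨C'', hC''⟩ := ar.bx.norm_le a b
  obtain ⟨C', hC'C, hC'1⟩ : ∃ C', C'' ≤ C' ∧ 1 ≤ C' := ⟨max C'' 1, le_max_left _ _, le_max_right _ _⟩
  have hC'0 : 0 < C' := by linarith
  obtain ⟨W00, hW00, hW00s⟩ := exists_tail Z _ hD (show 0 < 1 / (8 * C) by positivity)
  have hbfin : {v | v ∈ primes O ∧ Ideal.span {b} ≤ v}.Finite := finite_primes_ge (by simpa using hb)
  set W0 := W00 ∪ (hbfin.toFinset.filter fun v => v ∈ Z) with hW0def
  have hW0 : ∀ v ∈ W0, v ∈ Z := fun v hv => by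
    rcases Finset.mem_union.1 hv with h | h
    · exact hW00 v h
    · exact (Finset.mem_filter.1 h).2
  have hW0s : ∀ W : Finset (Ideal O), (∀ v ∈ W, v ∈ Z ∧ v ∉ W0) →
      ∑ v ∈ W, (cN (v ^ e v))⁻¹ ≤ 1 / (8 * C) := fun W hW => hW00s W fun v hv =>
    ⟨(hW v hv).1, fun h => (hW v hv).2 (Finset.mem_union_left _ h)⟩
  have hbv : ∀ v ∈ Z, v ∉ W0 → b ∉ v := fun v hv hvW hbv => hvW (Finset.mem_union_right _
    (Finset.mem_filter.2 ⟨hbfin.mem_toFinset.2 ⟨hZ v hv, (Ideal.span_singleton_le_iff_mem _).2 hbv⟩, hv⟩))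
  -- residues for the finitely many primes in `W0`
  obtain ⟨k0, hk0⟩ := IsDedekindDomain.exists_forall_sub_mem_ideal (s := W0) (fun v => v) (fun _ => 1)
    (fun v hv => Ideal.prime_of_isPrime (hZ v (hW0 v hv)).2 (hZ v (hW0 v hv)).1.isPrime)
    (fun v _ w _ h => h) (fun v => if a ∈ (v : Ideal O) then 1 else 0)
  set 𝔮 := ∏ v ∈ W0, v with h𝔮
  have h𝔮0 : 𝔮 ≠ ⊥ := by
    rw [h𝔮]; exact Finset.prod_ne_zero_iff.2 fun v hv => (hZ v (hW0 v hv)).2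
  have h𝔮le : ∀ v ∈ W0, 𝔮 ≤ v := fun v hv => Ideal.le_of_dvd (Finset.dvd_prod_of_mem _ hv)
  have hgood : ∀ k, k - k0 ∈ 𝔮 → ∀ v ∈ W0, a + k * b ∉ v ^ e v := by
    intro k hk v hv hmem
    have hvZ := hW0 v hv
    have h1 : a + k * b ∈ v := Ideal.pow_le_self (he v hvZ) hmem
    have h2 : k - (if a ∈ v then 1 else 0) ∈ v := by
      have h3 := h𝔮le v hv hk
      have h4 := hk0 v hv
      rw [pow_one] at h4
      have := v.add_mem h3 h4
      simpa using this
    split_ifs at h2 with hav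
    · have h3 : b ∈ v := by
        have := v.sub_mem (v.sub_mem h1 hav) (v.mul_mem_right b h2)
        rwa [show a + k * b - a - (k - 1) * b = b by ring] at this
      exact hab v hvZ hav h3
    · rw [sub_zero] at h2
      exact hav (by simpa using v.sub_mem h1 (v.mul_mem_right b h2))
  set N𝔮 := cN 𝔮 with hN𝔮
  have hN𝔮1 : 1 ≤ N𝔮 := ar.bx.one_le_cN h𝔮0
  clear_value N𝔮
  have hN𝔮0 : 0 < N𝔮 := by linarith
  obtain ⟨W1, hW1, hW1s⟩ := exists_tail Z _ hD (show 0 < 1 / (8 * C * C' * N𝔮) by positivity)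
  obtain ⟨δ, hδ0, hδ1, hδ⟩ := exists_rpow_le ar.bx.κ_pos (show 0 < 1 / (2 * C) by positivity)
  -- a large box
  obtain ⟨T, hT, -⟩ := ar.bx.exists_le (N𝔮 / δ + 16 * C * N𝔮 * (W1.card + 1)) (by
    have : 1 ≤ 16 * C * N𝔮 * (W1.card + 1) := by
      have h1 : (1 : ℝ) ≤ W1.card + 1 := by linarith [(Nat.cast_nonneg W1.card : (0 : ℝ) ≤ _)]
      have h2 : 1 ≤ C * N𝔮 := one_le_mul_of_one_le_of_one_le hC1 hN𝔮1
      have h3 := one_le_mul_of_one_le_of_one_le h2 h1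
      nlinarith
    have : 0 < N𝔮 / δ := by positivity
    linarith)
  set B := ar.bx.B T with hB
  set β : ℝ := (B.card : ℝ) with hβ
  clear_value β
  have hβ1 : N𝔮 / δ ≤ β := by
    have : 0 ≤ 16 * C * N𝔮 * (W1.card + 1) := by positivity
    linarith
  have hβ2 : 16 * C * N𝔮 * (W1.card + 1) ≤ β := by
    have : 0 ≤ N𝔮 / δ := by positivity
    linarith
  have hβ0 : 0 < β := lt_of_lt_of_le (by positivity) hβ1
  have hβδ : N𝔮 / β ≤ δ := by
    rw [div_le_iff₀ hδ0] at hβ1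
    rw [div_le_iff₀ hβ0]; linarith
  set X := B.filter fun k => k - k0 ∈ 𝔮 with hX
  have hXc : β / (2 * N𝔮) ≤ X.card := by
    have h1 := ar.bx.equi 𝔮 h𝔮0 T k0 (by
      have h1 : N𝔮 ≤ β := by
        have := hβδ.trans hδ1
        rwa [div_le_one hβ0] at this
      rw [hN𝔮, hβ] at h1; unfold cN at h1; exact_mod_cast h1)
    change |cN 𝔮 * (X.card : ℝ) - (B.card : ℝ)| ≤ ar.bx.C * (B.card : ℝ) * (cN 𝔮 / (B.card : ℝ)) ^ ar.bx.κ at h1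
    rw [← hC, ← hN𝔮, ← hβ] at h1
    have h2 := mul_le_mul_of_nonneg_left (hδ _ (by positivity) hβδ) (show 0 ≤ C * β by positivity)
    have h3 : C * β * (1 / (2 * C)) = β / 2 := avoid_aux2 hC0
    have h4 := (abs_le.1 (h1.trans h2)).1
    rw [h3] at h4
    rw [div_le_iff₀ (by positivity)]; linarith
  by_contra hcon
  push Not at hcon
  have hβ16 : 1 ≤ β := by
    have := ar.bx.one_le T
    rw [hβ]; exact_mod_cast this
  obtain ⟨Ci, -, hI⟩ := ar.ideals
  obtain ⟨WW, hWW, -⟩ := hI (C' * β) (one_le_mul_of_one_le_of_one_le hC'1 hβ16)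
  set V := WW.filter fun v => v ∈ Z ∧ v ∉ W0 ∧ cN (v ^ e v) ≤ C' * β with hV
  have hVm : ∀ v ∈ V, v ∈ Z ∧ v ∉ W0 ∧ cN (v ^ e v) ≤ C' * β := fun v hv => (Finset.mem_filter.1 hv).2
  have hpow0 : ∀ v ∈ Z, v ^ e v ≠ ⊥ := fun v hv => pow_ne_zero _ (hZ v hv).2
  have hcover : X ⊆ (X.filter fun k => a + k * b = 0) ∪ V.biUnion fun v =>
      X.filter fun k => a + k * b ∈ v ^ e v := by
    intro k hk
    by_cases h0 : a + k * b = 0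
    · exact Finset.mem_union_left _ (Finset.mem_filter.2 ⟨hk, h0⟩)
    obtain ⟨v, hv, hkv⟩ := hcon k h0
    obtain ⟨hkB, hkq⟩ := Finset.mem_filter.1 hk
    have hvW : v ∉ W0 := fun h => hgood k hkq v h hkv
    have h1 : cN (v ^ e v) ≤ C' * β := by
      calc cN (v ^ e v) ≤ cN (Ideal.span {a + k * b}) :=
            ar.bx.cN_le (by simpa using h0) ((Ideal.span_singleton_le_iff_mem _).2 hkv)
        _ ≤ C'' * β := hβ ▸ hC'' T k hkB h0
        _ ≤ C' * β := by gcongr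
    have h2 : cN v ≤ C' * β := (ar.bx.cN_le (hpow0 v hv) (Ideal.pow_le_self (he v hv))).trans h1
    refine Finset.mem_union_right _ (Finset.mem_biUnion.2 ⟨v, Finset.mem_filter.2
      ⟨hWW v (hZ v hv).2 h2, hv, hvW, h1⟩, Finset.mem_filter.2 ⟨hk, hkv⟩⟩)
  have hzero : ((X.filter fun k => a + k * b = 0).card : ℝ) ≤ 1 := by
    have : (X.filter fun k => a + k * b = 0).card ≤ 1 := Finset.card_le_one.2 fun k hk k' hk' => by
      have h1 := (Finset.mem_filter.1 hk).2
      have h2 := (Finset.mem_filter.1 hk').2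
      exact mul_right_cancel₀ hb (by linear_combination h1 - h2)
    exact_mod_cast this
  have hone : ∀ v ∈ V, ((X.filter fun k => a + k * b ∈ v ^ e v).card : ℝ) ≤
      C * β / N𝔮 * (cN (v ^ e v))⁻¹ + C := by
    intro v hv
    obtain ⟨hvZ, hvW, -⟩ := hVm v hv
    rcases (X.filter fun k => a + k * b ∈ v ^ e v).eq_empty_or_nonempty with h | ⟨k1, hk1⟩
    · rw [h, Finset.card_empty, Nat.cast_zero]
      exact add_nonneg (mul_nonneg (by positivity) (inv_nonneg.2 cN_nonneg)) hC0.le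
    obtain ⟨hk1X, hk1v⟩ := Finset.mem_filter.1 hk1
    have hsub : (X.filter fun k => a + k * b ∈ v ^ e v) ⊆ B.filter fun k => k - k1 ∈ 𝔮 * v ^ e v := by
      intro k hk
      obtain ⟨hkX, hkv⟩ := Finset.mem_filter.1 hk
      refine Finset.mem_filter.2 ⟨(Finset.mem_filter.1 hkX).1, ?_⟩
      refine mem_mul_of_cop (isCoprime_prod_pow (fun w hw => hZ w (hW0 w hw)) (hZ v hvZ) hvW _) ?_ ?_
      · have := 𝔮.sub_mem (Finset.mem_filter.1 hkX).2 (Finset.mem_filter.1 hk1X).2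
        simpa using this
      · have h1 : b * (k - k1) ∈ v ^ e v := by
          have := (v ^ e v).sub_mem hkv hk1v
          rwa [show a + k * b - (a + k1 * b) = b * (k - k1) by ring] at this
        haveI := (hZ v hvZ).1.isPrime
        exact (Ideal.IsPrime.mul_mem_pow v h1).resolve_left (hbv v hvZ hvW)
    have hJ0 : 𝔮 * v ^ e v ≠ ⊥ := mul_ne_zero h𝔮0 (hpow0 v hvZ)
    have h1 := ar.bx.equi' _ hJ0 T k1
    change cN (𝔮 * v ^ e v) * ((B.filter fun k => k - k1 ∈ 𝔮 * v ^ e v).card : ℝ) ≤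
      ar.bx.C * ((B.card : ℝ) + cN (𝔮 * v ^ e v)) at h1
    rw [cN_mul, ← hC, ← hβ, ← hN𝔮] at h1
    have hn := ar.bx.one_le_cN (hpow0 v hvZ)
    set n := cN (v ^ e v)
    clear_value n
    have hn0 : 0 < n := by linarith
    have h2 : ((B.filter fun k => k - k1 ∈ 𝔮 * v ^ e v).card : ℝ) ≤ C * β / N𝔮 * n⁻¹ + C := by
      rw [mul_comm, ← le_div_iff₀ (by positivity)] at h1
      refine h1.trans (le_of_eq (avoid_aux1 hN𝔮0 hn0))
    exact le_trans (by exact_mod_cast Finset.card_le_card hsub) h2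
  have hVs : ∑ v ∈ V, (cN (v ^ e v))⁻¹ ≤ 1 / (8 * C) := hW0s V fun v hv => ⟨(hVm v hv).1, (hVm v hv).2.1⟩
  have hVc : (V.card : ℝ) ≤ W1.card + C' * β * (1 / (8 * C * C' * N𝔮)) := by
    have h1 : V.card ≤ W1.card + (V \ W1).card := by
      have : V ⊆ W1 ∪ (V \ W1) := fun v hv => by simp [hv]
      exact (Finset.card_le_card this).trans (Finset.card_union_le _ _)
    have h2 : ((V \ W1).card : ℝ) ≤ C' * β * ∑ v ∈ V \ W1, (cN (v ^ e v))⁻¹ := by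
      rw [Finset.mul_sum, ← nsmul_one, ← Finset.sum_const]
      refine Finset.sum_le_sum fun v hv => ?_
      obtain ⟨hvZ, -, h3⟩ := hVm v (Finset.mem_sdiff.1 hv).1
      have hn := ar.bx.one_le_cN (hpow0 v hvZ)
      rw [← div_eq_mul_inv, le_div_iff₀ (by linarith)]; linarith
    have h3 := hW1s (V \ W1) fun v hv => ⟨(hVm v (Finset.mem_sdiff.1 hv).1).1, (Finset.mem_sdiff.1 hv).2⟩
    have h4 := mul_le_mul_of_nonneg_left h3 (show 0 ≤ C' * β by positivity)
    have h5 : (V.card : ℝ) ≤ W1.card + (V \ W1).card := by exact_mod_cast h1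
    linarith
  have htot : (X.card : ℝ) ≤ 1 + (C * β / N𝔮 * (1 / (8 * C)) +
      (W1.card + C' * β * (1 / (8 * C * C' * N𝔮))) * C) := by
    calc (X.card : ℝ) ≤ ((X.filter fun k => a + k * b = 0) ∪ V.biUnion fun v =>
          X.filter fun k => a + k * b ∈ v ^ e v).card := by exact_mod_cast Finset.card_le_card hcover
      _ ≤ (X.filter fun k => a + k * b = 0).card + ∑ v ∈ V, ((X.filter fun k => a + k * b ∈ v ^ e v).card : ℝ) := by
          exact_mod_cast (Finset.card_union_le _ _).trans (Nat.add_le_add_left Finset.card_biUnion_le _)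
      _ ≤ 1 + ∑ v ∈ V, (C * β / N𝔮 * (cN (v ^ e v))⁻¹ + C) := add_le_add hzero (Finset.sum_le_sum hone)
      _ = 1 + (C * β / N𝔮 * ∑ v ∈ V, (cN (v ^ e v))⁻¹ + V.card * C) := by
          rw [Finset.sum_add_distrib, ← Finset.mul_sum, Finset.sum_const, nsmul_eq_mul]
      _ ≤ _ := by gcongr
  exact avoid_aux3 hC1 hC'0 hN𝔮0 (Nat.cast_nonneg _) hβ0 hβ2 hXc htot

end avoid
end SpGen

/-! ### Triviality of systems whose bad primes split -/

namespace SpGen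
open UniqueFactorizationMonoid Polynomial

section key
variable {O : Type} [CommRing O] [IsDedekindDomain O] {p : ℕ} {E : Ideal O → O → ℂ}

/-- A reciprocity system is trivial if all but finitely many of its bad primes split in one fixed
nontrivial Galois extension. If `v₀` is bad with `E v₀ x ≠ 1`, the sieve gives an element `a`,
congruent to `x` modulo `v₀` and to `1` modulo a cofactor `m` with `v₀ m = (y)`, which is divisible by
no bad prime; then `E v₀ x = E (y) a = E (a) y = 1`. -/
theorem Recip.trivial_of_splits (ar : Arith O) (h : Recip p E) (hp : p.Prime)
    {K L : Type} [Field K] [Algebra O K] [IsFractionRing O K]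
    [Field L] [Algebra K L] [Algebra O L] [IsScalarTower O K L] (f : O[X]) (hf : f.Monic)
    [IsSplittingField K L (f.map (algebraMap O K))] (hcard : 2 ≤ Nat.card (L ≃ₐ[K] L))
    (Z₀ : Set (Ideal O)) (hZ₀ : Z₀.Finite)
    (H : ∀ v ∈ badSet E, v ∉ Z₀ → (f.map (Ideal.Quotient.mk v)).Splits)
    (I : Ideal O) (b : O) (hI : I ≠ ⊥) (hIb : IsCoprime I (Ideal.span {b})) : E I b = 1 := by
  refine h.eq_one_of_forall I hI ?_ b hIb
  suffices hempty : ∀ v ∈ badSet E, False from fun P hP => (hempty P hP).elim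
  intro v₀ hv₀
  have hsp₀ := sparse_of_gal ar (K := K) (L := L) f hf (badSet E) (fun v hv => hv.1) Z₀ hZ₀ H
    (show (0 : ℝ) < 1 / 5 by norm_num)
  have hc : (2 : ℝ) ≤ Nat.card (L ≃ₐ[K] L) := by exact_mod_cast hcard
  have hinf := infinite_good ar (by positivity) (by rw [div_lt_one] <;> linarith) hsp₀
  -- `(1 + 1/5)/2 < 1`, so there are infinitely many good primes and `sparse_all` applies
  obtain ⟨D, hD⟩ := bad_summable ar h hp fun η hη => sparse_all ar h hp ⟨v₀, hv₀⟩ hinf hη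
  obtain ⟨hv₀p, x, hx, hEx⟩ := hv₀
  apply hEx
  obtain ⟨y, m, hy, hym, hcop⟩ := exists_gen hv₀p.2 hv₀p.2
  have hm : m ≠ ⊥ := by
    rintro rfl
    rw [Ideal.mul_bot, Ideal.span_singleton_eq_bot] at hym
    exact hy hym
  obtain ⟨b', hb'v, hb'm⟩ := exists_crt hcop x 1
  obtain ⟨k, hk0, hk⟩ := exists_avoid ar (badSet E) (fun v hv => hv.1) (fun _ => 1)
    (fun _ _ => one_ne_zero) (D := D) (by simpa only [pow_one] using hD) (a := b') (b := y) hy (by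
      intro v hv hbv hyv
      have h1 : v₀ * m ≤ v := by rw [← hym]; exact (Ideal.span_singleton_le_iff_mem _).2 hyv
      rcases hv.1.1.isPrime.mul_le.1 h1 with h2 | h2
      · have h3 := hv₀p.1.eq_of_le hv.1.1.ne_top h2
        subst h3
        exact hx (by simpa using v₀.sub_mem hbv hb'v)
      · exact hv.1.1.ne_top ((Ideal.eq_top_iff_one _).2 (by simpa using v.sub_mem hbv (h2 hb'm))))
  simp only [pow_one] at hk
  set a := b' + k * y with ha
  have hyI : y ∈ v₀ * m := by rw [← hym]; exact Ideal.mem_span_singleton_self y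
  have hav : a - x ∈ v₀ := by
    rw [ha, add_sub_right_comm]
    exact v₀.add_mem hb'v (v₀.mul_mem_left _ (Ideal.mul_le_left hyI))
  have ham : a - 1 ∈ m := by
    rw [ha, add_sub_right_comm]
    exact m.add_mem hb'm (m.mul_mem_left _ (Ideal.mul_le_right hyI))
  have hadm : Adm E a := h.adm_of_forall hk0 hk
  have hya : IsCoprime y a := by
    rw [← Ideal.isCoprime_span_singleton_iff, hym]
    exact IsCoprime.mul_left (cop_congr hav ((isCoprime_span_iff hv₀p.1).2 hx)) (cop_one ham)
  have h1 : E (Ideal.span {y}) a = 1 := by rw [h.recip hy hk0 hya]; exact hadm.2 y hya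
  rw [hym, h.mul_ideal a hv₀p.2 hm, h.mod hm ham, h.one hm, mul_one, h.mod hv₀p.2 hav] at h1
  exact h1

end key
end SpGen

/-! ### The cyclotomic step -/

namespace SpGen
open UniqueFactorizationMonoid Polynomial

section assembly

/-- A separable polynomial without all its roots in `K` has a nontrivial Galois group. -/
lemma two_le_card_gal {K L : Type*} [Field K] [Field L] [Algebra K L] {f : K[X]}
    [IsSplittingField K L f] (hsep : f.Separable) (hns : ¬ f.Splits) :
    2 ≤ Nat.card (L ≃ₐ[K] L) := by
  have := IsGalois.of_separable_splitting_field (E := L) hsep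
  have := IsSplittingField.finiteDimensional L f
  rw [IsGalois.card_aut_eq_finrank]
  by_contra hlt
  have h1 : Module.finrank K L = 1 := by
    have := Module.finrank_pos (R := K) (M := L)
    omega
  have hbij : Function.Bijective (algebraMap K L) :=
    Algebra.bijective_algebraMap_iff.2 (Subalgebra.bot_eq_top_of_finrank_eq_one h1).symm
  apply hns
  have h2 := IsSplittingField.splits L f
  have h3 := h2.map (RingEquiv.ofBijective _ hbij).symm.toRingHom
  rwa [Polynomial.map_map, show ((RingEquiv.ofBijective _ hbij).symm.toRingHom).comp (algebraMap K L) =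
    RingHom.id K by ext x; exact (RingEquiv.ofBijective _ hbij).symm_apply_apply x, Polynomial.map_id] at h3

variable {O : Type} [CommRing O] [IsDedekindDomain O] {p : ℕ} {E : Ideal O → O → ℂ}
  {K : Type} [Field K] [Algebra O K] [IsFractionRing O K]

/-- An `n`-th root in `K` of an element of `O` lies in `O`. -/
lemma exists_of_pow_eq [IsIntegrallyClosed O] {x : K} {n : ℕ} (hn : n ≠ 0) {b : O}
    (h : x ^ n = algebraMap O K b) : ∃ z : O, algebraMap O K z = x := by
  apply IsIntegrallyClosed.algebraMap_eq_of_integral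
  exact ⟨X ^ n - C b, monic_X_pow_sub_C b hn, by simp [h]⟩

/-- Roots of unity of `p`-power order remain distinct modulo primes not containing `p`. -/
lemma pow_le_card_of_isPrimitiveRoot (hp : p.Prime) {v : Ideal O} (hv : v.IsMaximal)
    [Finite (O ⧸ v)] (hpv : (p : O) ∉ v) {j : ℕ} {ζ : K} (hζ : IsPrimitiveRoot ζ (p ^ j)) :
    p ^ j ≤ Nat.card (O ⧸ v) := by
  letI := Ideal.Quotient.field v
  obtain ⟨z, rfl⟩ := exists_of_pow_eq (O := O) (b := 1) (pow_ne_zero j hp.ne_zero)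
    (hζ.pow_eq_one.trans (map_one _).symm)
  have hz : IsPrimitiveRoot z (p ^ j) := hζ.of_map_of_injective (IsFractionRing.injective O K)
  rcases j with _ | j
  · rw [pow_zero]; exact Nat.card_pos
  have hη : IsPrimitiveRoot (z ^ p ^ j) p := hz.pow (pow_pos hp.pos _) (pow_succ _ _)
  set x := Ideal.Quotient.mk v z with hx
  haveI := Fact.mk hp
  have hord : orderOf x = p ^ (j + 1) := by
    apply orderOf_eq_prime_pow
    · intro h1
      have h2 := congrArg (Ideal.Quotient.mk v) (hη.geom_sum_eq_zero hp.one_lt)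
      rw [map_sum] at h2
      simp only [map_pow, ← hx, h1, one_pow, Finset.sum_const, Finset.card_range, nsmul_eq_mul,
        mul_one, map_zero] at h2
      rw [← map_natCast (Ideal.Quotient.mk v), Ideal.Quotient.eq_zero_iff_mem] at h2
      exact hpv h2
    · rw [hx, ← map_pow, hz.pow_eq_one, map_one]
  obtain ⟨u, hu⟩ : IsUnit x := by
    rw [isUnit_iff_ne_zero]
    intro h0
    have := pow_orderOf_eq_one x
    rw [hord, h0, zero_pow (pow_ne_zero _ hp.ne_zero)] at this
    exact zero_ne_one this
  rw [← hord, ← hu, orderOf_units]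
  exact (orderOf_le_card (x := u)).trans (by rw [Nat.card_units]; omega)

lemma pow_left_inj_ideal [IsDedekindDomain O] {I J : Ideal O} {n : ℕ} (hn : n ≠ 0) (h : I ^ n = J ^ n) :
    I = J :=
  dvd_antisymm ((pow_dvd_pow_iff_dvd hn).1 h.dvd) ((pow_dvd_pow_iff_dvd hn).1 h.symm.dvd)

/-- If `K` has no primitive `p ^ (k+1)`-th root of unity, then the `p ^ k`-th power of a reciprocity
system is trivial: its bad primes have index `1` modulo `p ^ (k+1)`, so they split in the extension
generated by the `p ^ (k+1)`-th roots of unity. -/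
lemma Recip.pow_eq_one (ar : Arith O) (h : Recip p E) (hp : p.Prime) (hpK : (p : K) ≠ 0) {k : ℕ}
    (hk : ∀ ζ : K, ¬ IsPrimitiveRoot ζ (p ^ (k + 1))) (I : Ideal O) (b : O) (hI : I ≠ ⊥)
    (hIb : IsCoprime I (Ideal.span {b})) : E I b ^ p ^ k = 1 := by
  have h' := h.npow (pow_ne_zero k hp.ne_zero)
  have hn : p ^ (k + 1) ≠ 0 := pow_ne_zero _ hp.ne_zero
  let f : O[X] := X ^ p ^ (k + 1) - C 1
  have hfm : f.map (algebraMap O K) = X ^ p ^ (k + 1) - C 1 := by simp [f]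
  have hsep : (X ^ p ^ (k + 1) - C 1 : K[X]).Separable :=
    separable_X_pow_sub_C 1 (by push_cast; exact pow_ne_zero _ hpK) one_ne_zero
  refine h'.trivial_of_splits ar hp (K := K) (L := (f.map (algebraMap O K)).SplittingField) f
    (monic_X_pow_sub_C 1 hn) (two_le_card_gal (f := f.map (algebraMap O K)) (by rw [hfm]; exact hsep) ?_)
    ∅ Set.finite_empty ?_ I b hI hIb
  · -- if `X ^ p ^ (k+1) - 1` splits, counting roots gives a primitive root of unity
    rw [hfm]
    intro hs
    classical
    have hs1 := nodup_roots hsep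
    have hs2 : (X ^ p ^ (k + 1) - C 1 : K[X]).roots.card = p ^ (k + 1) := by
      rw [← hs.natDegree_eq_card_roots, natDegree_X_pow_sub_C]
    have hlt : (nthRootsFinset (p ^ k) (1 : K)).card <
        (X ^ p ^ (k + 1) - C 1 : K[X]).roots.toFinset.card := by
      rw [Multiset.toFinset_card_of_nodup hs1, hs2]
      calc (nthRootsFinset (p ^ k) (1 : K)).card ≤ p ^ k := by
            rw [nthRootsFinset_def]
            exact (Multiset.toFinset_card_le _).trans (card_nthRoots _ _)
        _ < _ := Nat.pow_lt_pow_right hp.one_lt (Nat.lt_succ_self k)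
    obtain ⟨ζ, hζ1, hζ2⟩ := Finset.exists_mem_notMem_of_card_lt_card hlt
    rw [Multiset.mem_toFinset, mem_roots (X_pow_sub_C_ne_zero (Nat.pos_of_ne_zero hn) 1)] at hζ1
    rw [mem_nthRootsFinset (pow_pos hp.pos _)] at hζ2
    haveI := Fact.mk hp
    have h1 := orderOf_eq_prime_pow hζ2 (by simpa [sub_eq_zero] using hζ1)
    exact hk ζ (h1 ▸ IsPrimitiveRoot.orderOf ζ)
  · intro v hv _
    haveI := ar.bx.finite_quot v hv.1.2
    obtain ⟨hvp, c, hcv, hc⟩ := hv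
    refine splits_mod hvp.1 (y := 1) ?_ (by simp)
    obtain ⟨n, hn⟩ := h.pow hvp.2 ((isCoprime_span_iff hvp.1).2 hcv)
    have h1 : orderOf (E v c) ∣ p ^ n := orderOf_dvd_of_pow_eq_one hn
    obtain ⟨j, -, hj⟩ := (Nat.dvd_prime_pow hp).1 h1
    have h2 : k + 1 ≤ j := by
      by_contra hlt
      refine hc (orderOf_dvd_iff_pow_eq_one.1 ?_)
      rw [hj]; exact pow_dvd_pow p (by omega)
    have h3 : orderOf (E v c) ∣ Nat.card (O ⧸ v) - 1 := orderOf_dvd_of_pow_eq_one (h.pow_card hvp hcv)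
    rw [hj] at h3
    exact (pow_dvd_pow p h2).trans h3

end assembly
end SpGen

/-! ### The Kummer step -/

namespace SpGen
open UniqueFactorizationMonoid Polynomial

section selmer
variable {O : Type} [CommRing O] [IsDedekindDomain O] {p : ℕ} {E : Ideal O → O → ℂ}
  {K : Type} [Field K] [Algebra O K] [IsFractionRing O K]

/-- A finite abelian group and its dual have equally many elements killed by `p`. -/
lemma card_torsion_dual {G : Type*} [CommGroup G] [Finite G] (p : ℕ) :
    Nat.card {ψ : G →* ℂˣ // ψ ^ p = 1} = Nat.card {c : G // c ^ p = 1} := by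
  obtain ⟨e⟩ := CommGroup.monoidHom_mulEquiv_of_hasEnoughRootsOfUnity G ℂ
  exact Nat.card_congr (e.toEquiv.subtypeEquiv fun ψ => by
    change ψ ^ p = 1 ↔ e ψ ^ p = 1
    rw [← map_pow, map_eq_one_iff _ e.injective])

/-- For a reciprocity system of exponent `p`, some element `b` which is not a `p`-th power has trivial
residue symbols. Elements `ζ ^ j β` such that `(β)` is the `p`-th power of an ideal are admissible, so
their symbols are characters of the class group killed by `p`. Up to `p`-th powers there are `p` times
as many such elements (`B` below) as there are ideal classes killed by `p`, hence more than there are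
such characters, and two of them have the same character. -/
lemma Recip.exists_selmer (ar : Arith O) (h : Recip p E) (hp : p.Prime)
    (hEp : ∀ I b, I ≠ ⊥ → IsCoprime I (Ideal.span {b}) → E I b ^ p = 1) {k : ℕ}
    (hk : ∀ ζ : K, ¬ IsPrimitiveRoot ζ (p ^ (k + 1))) {z : K} (hz : IsPrimitiveRoot z (p ^ k))
    (hk0 : k ≠ 0) :
    ∃ b : O, b ≠ 0 ∧ (∀ w : K, w ^ p ≠ algebraMap O K b) ∧
      ∀ I, I ≠ ⊥ → IsCoprime I (Ideal.span {b}) → E I b = 1 := by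
  classical
  haveI := ar.cg
  have hinj := IsFractionRing.injective O K
  obtain ⟨ζ, rfl⟩ := exists_of_pow_eq (O := O) (b := 1) (pow_ne_zero k hp.ne_zero)
    (hz.pow_eq_one.trans (map_one _).symm)
  have hζ : IsPrimitiveRoot ζ (p ^ k) := hz.of_map_of_injective hinj
  have hζu : IsUnit ζ := hζ.isUnit (pow_ne_zero _ hp.ne_zero)
  let T := {c : ClassGroup O // c ^ p = 1}
  choose 𝔟 h𝔟0 h𝔟c using fun c : T => clI_surjective c.1
  choose β hβ0 hβ using fun c : T => exists_of_clI_eq_one (I := 𝔟 c ^ p) (pow_ne_zero _ (h𝔟0 c))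
    (by rw [clI_pow (h𝔟0 c), h𝔟c]; exact c.2)
  let B : Fin p × T → O := fun x => ζ ^ (x.1 : ℕ) * β x.2
  have hB0 : ∀ x, B x ≠ 0 := fun x => mul_ne_zero (hζu.pow _).ne_zero (hβ0 _)
  have hBs : ∀ x, Ideal.span {B x} = 𝔟 x.2 ^ p := fun x => by
    rw [← hβ x.2]
    exact Ideal.span_singleton_eq_span_singleton.2 (associated_unit_mul_left _ _ (hζu.pow _))
  have hadm : ∀ x, Adm E (B x) := fun x => ⟨hB0 x, fun a ha => by
    have h1 : IsCoprime (𝔟 x.2) (Ideal.span {a}) := by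
      have h2 := (Ideal.isCoprime_span_singleton_iff _ _).2 ha.symm
      rw [hBs] at h2
      exact (IsCoprime.pow_left_iff hp.pos).1 h2
    rw [hBs, h.pow_ideal (h𝔟0 _)]
    exact hEp _ _ (h𝔟0 _) h1⟩
  choose ψ hψ using fun x => (hadm x).exists_char h
  have hψp : ∀ x, ψ x ^ p = 1 := fun x => by
    ext c
    obtain ⟨I, hI, hIc, rfl⟩ := exists_clI_coprime c (show Ideal.span {B x} ≠ ⊥ by simpa using hB0 x)
    have := hEp I (B x) hI hIc
    rw [hψ x I hI hIc] at this
    simpa using this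
  -- there are `p * |T|` elements `B x` but only `|T|` characters killed by `p`
  obtain ⟨x, y, hxy, hψxy⟩ : ∃ x y, x ≠ y ∧ ψ x = ψ y := by
    by_contra hcon
    push Not at hcon
    have hinj' : Function.Injective (fun x : Fin p × T => (⟨ψ x, hψp x⟩ : {ψ : ClassGroup O →* ℂˣ // ψ ^ p = 1})) := by
      intro x y hxy
      by_contra hne
      exact hcon x y hne (Subtype.ext_iff.1 hxy)
    haveI : Finite {ψ : ClassGroup O →* ℂˣ // ψ ^ p = 1} := by
      apply Nat.finite_of_card_ne_zero
      rw [card_torsion_dual]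
      haveI : Nonempty T := ⟨⟨1, one_pow p⟩⟩
      exact Nat.card_pos.ne'
    have h1 := Nat.card_le_card_of_injective _ hinj'
    rw [card_torsion_dual, Nat.card_prod, Nat.card_fin] at h1
    haveI : Nonempty T := ⟨⟨1, one_pow p⟩⟩
    have h2 : 0 < Nat.card T := Nat.card_pos
    have h3 := hp.two_le
    change p * Nat.card T ≤ Nat.card T at h1
    nlinarith
  -- the exponent `p - 1` stands for `-1` modulo `p`-th powers
  refine ⟨B x * B y ^ (p - 1), mul_ne_zero (hB0 x) (pow_ne_zero _ (hB0 y)), ?_, ?_⟩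
  · intro w hw
    obtain ⟨w, rfl⟩ := exists_of_pow_eq (O := O) hp.ne_zero hw
    rw [← map_pow] at hw
    have hw' : w ^ p = B x * B y ^ (p - 1) := hinj hw
    have hw0 : w ≠ 0 := by
      rintro rfl
      rw [zero_pow hp.ne_zero] at hw'
      exact mul_ne_zero (hB0 x) (pow_ne_zero _ (hB0 y)) hw'.symm
    have hI : Ideal.span {w} = 𝔟 x.2 * 𝔟 y.2 ^ (p - 1) := by
      apply pow_left_inj_ideal hp.ne_zero
      rw [Ideal.span_singleton_pow, hw', ← Ideal.span_singleton_mul_span_singleton,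
        ← Ideal.span_singleton_pow, hBs, hBs, mul_pow, ← pow_mul, ← pow_mul, mul_comm p]
    have hcl : x.2 = y.2 := by
      have h1 := clI_span hw0
      rw [hI, clI_mul (h𝔟0 _) (pow_ne_zero _ (h𝔟0 _)), clI_pow (h𝔟0 _), h𝔟c, h𝔟c] at h1
      have h2 : (y.2 : ClassGroup O) * (y.2 : ClassGroup O) ^ (p - 1) = 1 := by
        rw [← pow_succ', Nat.sub_add_cancel hp.one_le]; exact y.2.2
      exact Subtype.ext (mul_right_cancel (h1.trans h2.symm))
    have hj : x.1 ≠ y.1 := fun he => hxy (Prod.ext he hcl)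
    set n : ℕ := x.1 + y.1 * (p - 1) with hn
    have hpn : ¬ p ∣ n := by
      intro hd
      have h1 : (p : ℤ) ∣ (x.1 : ℕ) - (y.1 : ℕ) := by
        have h2 : (p : ℤ) ∣ (n : ℤ) := by exact_mod_cast hd
        have h3 : ((x.1 : ℕ) : ℤ) - (y.1 : ℕ) = n - p * (y.1 : ℕ) := by
          rw [hn]; push_cast [Nat.cast_sub hp.one_le]; ring
        rw [h3]; exact dvd_sub h2 (dvd_mul_right _ _)
      have h4 := Int.eq_zero_of_abs_lt_dvd h1 (by
        have := x.1.2; have := y.1.2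
        rw [abs_lt]; omega)
      exact hj (Fin.ext (by omega))
    have hw2 : w ^ p = ζ ^ n * β y.2 ^ p := by
      rw [hw']
      simp only [B]
      have h1 : β y.2 ^ p = β y.2 ^ (p - 1) * β y.2 := by rw [← pow_succ, Nat.sub_add_cancel hp.one_le]
      rw [hcl, hn, mul_pow, pow_add, pow_mul, h1]
      ring
    have hβK : algebraMap O K (β y.2) ≠ 0 := by
      rw [Ne, map_eq_zero_iff _ hinj]; exact hβ0 _
    set η : K := algebraMap O K w / algebraMap O K (β y.2) with hη
    have hηp : η ^ p = algebraMap O K ζ ^ n := by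
      rw [hη, div_pow, div_eq_iff (pow_ne_zero _ hβK), ← map_pow, ← map_pow, ← map_pow, ← map_mul, hw2]
    haveI := Fact.mk hp
    have hord : orderOf η = p ^ (k + 1) := by
      obtain ⟨k, rfl⟩ := Nat.exists_eq_succ_of_ne_zero hk0
      apply orderOf_eq_prime_pow
      · rw [pow_succ', pow_mul, hηp, ← pow_mul, hz.pow_eq_one_iff_dvd,
          pow_succ', Nat.mul_dvd_mul_iff_right (pow_pos hp.pos _)]
        exact hpn
      · rw [pow_succ', pow_mul, hηp, ← pow_mul, mul_comm, pow_mul, hz.pow_eq_one, one_pow]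
    exact hk η (hord ▸ IsPrimitiveRoot.orderOf η)
  · intro I hI hIb
    rw [← Ideal.span_singleton_mul_span_singleton] at hIb
    have h1 : IsCoprime I (Ideal.span {B x}) := hIb.of_mul_right_left
    have h2 : IsCoprime I (Ideal.span {B y}) := by
      have := hIb.of_mul_right_right
      rw [← Ideal.span_singleton_pow] at this
      exact (IsCoprime.pow_right_iff (by have := hp.two_le; omega)).1 this
    rw [h.mul_right _ _ hI, h.pow_right hI, hψ x I hI h1, hψ y I hI h2, hψxy, ← pow_succ',
      Nat.sub_add_cancel hp.one_le]
    have := congrArg (fun f : ClassGroup O →* ℂˣ => ((f (clI I) : ℂˣ) : ℂ)) (hψp y)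
    simpa using this

/-- A reciprocity system of exponent `p` is trivial: almost all of its bad primes split in the
Kummer extension obtained by adjoining a `p`-th root of the element given by `Recip.exists_selmer`.
-/
lemma Recip.trivial_of_pow (ar : Arith O) (h : Recip p E) (hp : p.Prime) (hpK : (p : K) ≠ 0)
    (hEp : ∀ I b, I ≠ ⊥ → IsCoprime I (Ideal.span {b}) → E I b ^ p = 1) {k : ℕ}
    (hk : ∀ ζ : K, ¬ IsPrimitiveRoot ζ (p ^ (k + 1))) {z : K} (hz : IsPrimitiveRoot z (p ^ k))
    (hk0 : k ≠ 0) (I : Ideal O) (b : O) (hI : I ≠ ⊥) (hIb : IsCoprime I (Ideal.span {b})) :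
    E I b = 1 := by
  obtain ⟨c, hc0, hcp, hc⟩ := h.exists_selmer ar hp hEp hk hz hk0
  let f : O[X] := X ^ p - C c
  have hfm : f.map (algebraMap O K) = X ^ p - C (algebraMap O K c) := by simp [f]
  refine h.trivial_of_splits ar hp (K := K) (L := (f.map (algebraMap O K)).SplittingField) f
    (monic_X_pow_sub_C c hp.ne_zero) (two_le_card_gal (f := f.map (algebraMap O K)) ?_ ?_)
    {v | v ∈ primes O ∧ Ideal.span {c} ≤ v} (finite_primes_ge (by simpa using hc0)) ?_ I b hI hIb
  · rw [hfm]
    exact separable_X_pow_sub_C _ hpK (by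
      rw [Ne, map_eq_zero_iff _ (IsFractionRing.injective O K)]; exact hc0)
  · rw [hfm]
    intro hs
    obtain ⟨w, hw⟩ := hs.exists_eval_eq_zero (by
      rw [degree_X_pow_sub_C hp.pos]; exact_mod_cast hp.ne_zero)
    exact hcp w (by simpa [sub_eq_zero] using hw)
  · intro v hv hvc
    haveI := ar.bx.finite_quot v hv.1.2
    have hcv : c ∉ v := fun hcv => hvc ⟨hv.1, (Ideal.span_singleton_le_iff_mem _).2 hcv⟩
    obtain ⟨y, hy⟩ := h.exists_pow_eq hp hv hcv (hc v hv.1.2 ((isCoprime_span_iff hv.1.1).2 hcv))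
    exact splits_mod hv.1.1 (h.dvd_card hp hv) hy

/-- Every reciprocity system over an arithmetic ring is trivial. The largest `k` such that the field
has a primitive `p ^ k`-th root of unity is bounded by the index of a bad prime; starting from
`Recip.pow_eq_one`, if the power of `E` with exponent `p ^ (i + 1)` is trivial, then the power with
exponent `p ^ i` is a system of exponent `p`, hence trivial by `Recip.trivial_of_pow`. -/
theorem Recip.trivial (ar : Arith O) (h : Recip p E) (hp : p.Prime) (I : Ideal O) (b : O)
    (hI : I ≠ ⊥) (hIb : IsCoprime I (Ideal.span {b})) : E I b = 1 := by
  by_contra hne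
  let K := FractionRing O
  obtain ⟨v, hv⟩ : ∃ v, v ∈ badSet E := by
    by_contra hcon
    push Not at hcon
    exact hne (h.eq_one_of_forall I hI (fun P hP => (hcon P hP).elim) b hIb)
  haveI := ar.bx.finite_quot v hv.1.2
  have hpv := natCast_notMem hv.1.1 hp (h.dvd_card hp hv)
  have hpK : (p : K) ≠ 0 := by
    intro h0
    rw [← map_natCast (algebraMap O K), map_eq_zero_iff _ (IsFractionRing.injective O K)] at h0
    exact hpv (h0 ▸ v.zero_mem)
  have hex : ∃ k, ∀ ζ : K, ¬ IsPrimitiveRoot ζ (p ^ (k + 1)) := by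
    refine ⟨Nat.card (O ⧸ v), fun ζ hζ => ?_⟩
    have h1 := pow_le_card_of_isPrimitiveRoot hp hv.1.1 hpv hζ
    have h2 := Nat.lt_pow_self hp.one_lt (n := Nat.card (O ⧸ v) + 1)
    omega
  classical
  set k := Nat.find hex with hkdef
  have hk := Nat.find_spec hex
  rw [← hkdef] at hk
  have htriv : ∃ i, ∀ I b, I ≠ ⊥ → IsCoprime I (Ideal.span {b}) → E I b ^ p ^ i = 1 :=
    ⟨k, h.pow_eq_one ar hp hpK hk⟩
  have hk0 : k ≠ 0 := by
    intro h0
    rw [h0] at hk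
    have := h.pow_eq_one ar hp hpK hk I b hI hIb
    rw [pow_zero, pow_one] at this
    exact hne this
  obtain ⟨z, hz⟩ : ∃ z : K, IsPrimitiveRoot z (p ^ k) := by
    have := Nat.find_min hex (m := k - 1) (by omega)
    push Not at this
    rwa [Nat.sub_add_cancel (Nat.one_le_iff_ne_zero.2 hk0)] at this
  have hi := Nat.find_spec htriv
  rcases hi0 : Nat.find htriv with _ | i
  · rw [hi0] at hi
    exact hne (by simpa using hi I b hI hIb)
  · rw [hi0] at hi
    have h' := h.npow (pow_ne_zero i hp.ne_zero)
    refine Nat.find_min htriv (m := i) (by omega) fun I b hI hIb =>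
      h'.trivial_of_pow ar hp hpK (fun I b hI hIb => ?_) hk hz hk0 I b hI hIb
    rw [← pow_mul, ← pow_succ]
    exact hi I b hI hIb

/-- Mennicke symbols over an arithmetic ring are trivial. -/
theorem mennicke_trivial (ar : Arith O) {A : Type*} [CommGroup A] {s : O → O → A}
    (h : IsMennicke s) {a b : O} (hab : IsCoprime a b) : s a b = 1 :=
  mennicke_trivial_of_recip ar.bx.finite_quot
    (fun _ _ hp hE I b hI hIb => hE.trivial ar hp I b hI hIb) h hab

end selmer
end SpGen

/-! ### Localization -/

namespace SpGen

section loc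
variable {O : Type} [CommRing O] [IsDedekindDomain O] {R : Type} [CommRing R] [Algebra O R]
  (M : Submonoid O) [IsLocalization M R]

/-- Coprimality in a localization, in terms of the original ring. -/
lemma exists_comb (hM : M ≤ nonZeroDivisors O) {a b : O}
    (h : IsCoprime (algebraMap O R a) (algebraMap O R b)) : ∃ m ∈ M, ∃ x y, x * a + y * b = m := by
  classical
  obtain ⟨x, y, hxy⟩ := h
  obtain ⟨m, hm⟩ := IsLocalization.exist_integer_multiples_of_finset M ({x, y} : Finset R)
  obtain ⟨x', hx'⟩ := hm x (by simp)
  obtain ⟨y', hy'⟩ := hm y (by simp)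
  refine ⟨m, m.2, x', y', IsLocalization.injective R hM ?_⟩
  rw [map_add, map_mul, map_mul, hx', hy', Algebra.smul_def, Algebra.smul_def]
  linear_combination (algebraMap O R m) * hxy

/-- Triviality of Mennicke symbols passes from a ring of integers to its localizations. -/
lemma mennicke_trivial_loc (ar : Arith O) (hM : M ≤ nonZeroDivisors O) {A : Type*} [CommGroup A]
    {s : R → R → A} (h : IsMennicke s) {a b : R} (hab : IsCoprime a b) : s a b = 1 := by
  have hinj : Function.Injective (algebraMap O R) := IsLocalization.injective R hM
  have hO : ∀ {x y : O}, IsCoprime x y → s (algebraMap O R x) (algebraMap O R y) = 1 := by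
    have hs : IsMennicke fun x y : O => s (algebraMap O R x) (algebraMap O R y) := by
      constructor
      · intro a b hc t
        rw [map_add, map_mul]
        exact h.add_left (hc.map (algebraMap O R)) _
      · intro a b hc t
        rw [map_add, map_mul]
        exact h.add_right (hc.map (algebraMap O R)) _
      · intro a a' b hc hc'
        rw [map_mul]
        exact h.mul_left (hc.map (algebraMap O R)) (hc'.map (algebraMap O R))
      · intro a b b' hc hc'
        rw [map_mul]
        exact h.mul_right (hc.map (algebraMap O R)) (hc'.map (algebraMap O R))
    intro x y hxy
    exact mennicke_trivial ar hs hxy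
  have key : ∀ a' b' : O, IsCoprime (algebraMap O R a') (algebraMap O R b') →
      s (algebraMap O R a') (algebraMap O R b') = 1 := by
    intro a' b' hc
    by_cases ha0 : a' = 0
    · rw [ha0, map_zero] at hc ⊢
      rw [h.symm hc, h.unit_left (isCoprime_zero_left.1 hc)]
    obtain ⟨m, hm, x, y, hxy⟩ := exists_comb M hM hc
    set I : Ideal O := (Ideal.span {algebraMap O R a'}).comap (algebraMap O R) with hI
    have haI : a' ∈ I := Ideal.mem_span_singleton_self _
    have hI0 : I ≠ ⊥ := fun h0 => ha0 (by rw [h0] at haI; exact haI)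
    obtain ⟨z, hz⟩ := IsDedekindDomain.exists_sup_span_eq
      ((Ideal.span_singleton_le_iff_mem I).2 haI) (by rwa [Ne, Ideal.zero_eq_bot, Ideal.span_singleton_eq_bot])
    have hzI : z ∈ I := hz ▸ (le_sup_right (a := Ideal.span {a'})) (Ideal.mem_span_singleton_self z)
    obtain ⟨t, ht⟩ := exists_add_mul_sup_eq_top (Ideal.span {a'})
      (by rwa [Ne, Ideal.span_singleton_eq_bot]) z b' (by
        intro w hw haw hzw hbw
        have hIw : I ≤ w := hz ▸ sup_le haw ((Ideal.span_singleton_le_iff_mem w).2 hzw)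
        have hmw : m ∈ w := hxy ▸ w.add_mem
          (w.mul_mem_left _ ((Ideal.span_singleton_le_iff_mem w).1 haw)) (w.mul_mem_left _ hbw)
        obtain ⟨J, hJ⟩ := Ideal.dvd_iff_le.2 hIw
        have hJI : J ≤ I := by
          intro j hj
          have h1 : m * j ∈ I := hJ ▸ Ideal.mul_mem_mul hmw hj
          rw [hI, Ideal.mem_comap] at h1 ⊢
          rw [map_mul] at h1
          exact (Ideal.unit_mul_mem_iff_mem _ (IsLocalization.map_units R (⟨m, hm⟩ : M))).1 h1
        have hJ' : I = J := le_antisymm (hJ ▸ Ideal.mul_le_left.trans' (by rw [mul_comm])) hJI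
        rw [← hJ'] at hJ
        have : 1 * I = w * I := by rw [one_mul]; exact hJ
        have := mul_right_cancel₀ (by rwa [Ne, Ideal.zero_eq_bot]) this
        exact hw.ne_top (this ▸ Ideal.one_eq_top))
    have hcop : IsCoprime a' (b' + t * z) := by
      rw [← Ideal.isCoprime_span_singleton_iff, Ideal.isCoprime_iff_sup_eq, sup_comm]
      exact ht
    rw [← hO hcop]
    refine (h.mod_right hc ?_).symm
    rw [hI, Ideal.mem_comap, Ideal.mem_span_singleton] at hzI
    rw [map_add, map_mul, add_sub_cancel_left]
    exact hzI.mul_left _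
  obtain ⟨⟨a', m⟩, ha'⟩ := IsLocalization.surj M a
  obtain ⟨⟨b', n⟩, hb'⟩ := IsLocalization.surj M b
  have hm := IsLocalization.map_units R m
  have hn := IsLocalization.map_units R n
  simp only at ha' hb'
  have hc1 : ∀ {u : R} (_ : IsUnit u) (x : R), IsCoprime u x := fun hu x =>
    isCoprime_one_left.of_isCoprime_of_dvd_left hu.dvd
  have e1 : s (a * algebraMap O R m) b = s a b := by
    rw [h.mul_left hab (hc1 hm b), h.unit_left hm, mul_one]
  have hc2 : IsCoprime (a * algebraMap O R m) b := hab.mul_left (hc1 hm b)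
  have e2 : s (a * algebraMap O R m) (b * algebraMap O R n) = s (a * algebraMap O R m) b := by
    rw [h.mul_right hc2 (hc1 hn _).symm, h.symm (hc1 hn _).symm, h.unit_left hn, mul_one]
  rw [← e1, ← e2, ha', hb']
  refine key a' b' ?_
  rw [← ha', ← hb']
  exact hc2.mul_right (hc1 hn _).symm

/-- Every residue class prime to the modulus contains a squarefree element without prime factors of
norm less than four. -/
lemma exists_good [IsDedekindDomain R] (ar : Arith O) (hM : M ≤ nonZeroDivisors O) {a b : R}
    (hab : IsCoprime a b) (hb : b ≠ 0) : ∃ k, IsGood (a + k * b) := by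
  classical
  haveI := ar.inf
  have hinj : Function.Injective (algebraMap O R) := IsLocalization.injective R hM
  obtain ⟨m, hm⟩ := IsLocalization.exist_integer_multiples_of_finset M ({a, b} : Finset R)
  obtain ⟨a', ha'⟩ := hm a (by simp)
  obtain ⟨b', hb'⟩ := hm b (by simp)
  rw [Algebra.smul_def] at ha' hb'
  have hmu := IsLocalization.map_units R m
  have hcop : IsCoprime (algebraMap O R a') (algebraMap O R b') := by
    rw [ha', hb']; exact (isCoprime_mul_unit_left hmu _ _).2 hab
  obtain ⟨m₁, hm₁, c, d, hcd⟩ := exists_comb M hM hcop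
  have hb0 : b' ≠ 0 := by
    rintro rfl
    rw [map_zero] at hb'
    exact hb ((hmu.mul_right_eq_zero).1 hb'.symm)
  set Z : Set (Ideal O) := {v | v ∈ primes O ∧ ∀ x ∈ M, x ∉ v} with hZ
  obtain ⟨D, hD0, hD⟩ := sum_log_div_sq_le ar.bx
  have hlog : 0 < Real.log 2 := Real.log_pos one_lt_two
  -- avoid divisibility by squares of primes, and by primes of index at most three
  obtain ⟨k, hk0, hk⟩ := exists_avoid ar Z (fun v hv => hv.1)
    (fun v => if Nat.card (O ⧸ v) ≤ 3 then 1 else 2) (fun v _ => by split_ifs <;> simp)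
    (D := 3 / Real.log 2 * D) (fun W hW => by
      refine le_trans ?_ (mul_le_mul_of_nonneg_left (hD W fun v hv => (hW v hv).1) (by positivity))
      rw [Finset.mul_sum]
      refine Finset.sum_le_sum fun v hv => ?_
      have h2 : 2 ≤ cN v := ar.bx.two_le_cN (hW v hv).1.2 (hW v hv).1.1.ne_top
      have h0 : 0 < cN v := by linarith
      have h3 : (cN (v ^ if Nat.card (O ⧸ v) ≤ 3 then 1 else 2))⁻¹ ≤ 3 / cN v ^ 2 := by
        split_ifs with hle
        · have : cN v ≤ 3 := by unfold cN; exact_mod_cast hle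
          rw [pow_one, le_div_iff₀ (by positivity), pow_two, inv_mul_cancel_left₀ h0.ne']
          exact this
        · rw [cN_pow, ← one_div]
          gcongr
          norm_num
      refine h3.trans ?_
      have h4 : Real.log 2 ≤ Real.log (cN v) := Real.log_le_log two_pos h2
      calc 3 / cN v ^ 2 = 3 / Real.log 2 * (Real.log 2 / cN v ^ 2) := by
            rw [div_mul_div_comm, mul_comm 3, mul_div_mul_left _ _ hlog.ne']
        _ ≤ _ := by gcongr) hb0 (by
      intro v hv hav hbv
      exact hv.2 m₁ hm₁ (hcd ▸ v.add_mem (v.mul_mem_left _ hav) (v.mul_mem_left _ hbv)))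
  set x := a' + k * b' with hx
  have hxy : algebraMap O R x = algebraMap O R m * (a + algebraMap O R k * b) := by
    rw [hx, map_add, map_mul, ha', hb']; ring
  set y := a + algebraMap O R k * b with hy
  have hy0 : y ≠ 0 := by
    intro h0
    rw [h0, mul_zero, map_eq_zero_iff _ hinj] at hxy
    exact hk0 hxy
  have main : ∀ P : Ideal R, P.IsMaximal → y ∈ P → 4 ≤ Nat.card (R ⧸ P) ∧ y ∉ P ^ 2 := by
    intro P hP hyP
    have hPp := hP.isPrime
    set v : Ideal O := P.comap (algebraMap O R) with hv
    have hxv : x ∈ v := by rw [hv, Ideal.mem_comap, hxy]; exact P.mul_mem_left _ hyP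
    have hv0 : v ≠ ⊥ := fun h0 => hk0 (by rw [h0] at hxv; exact hxv)
    have hvp : v.IsPrime := Ideal.IsPrime.comap _
    have hvm : v.IsMaximal := hvp.isMaximal hv0
    have hvM : ∀ z ∈ M, z ∉ v := fun z hz hzv =>
      hP.ne_top (P.eq_top_of_isUnit_mem hzv (IsLocalization.map_units R (⟨z, hz⟩ : M)))
    have hvZ : v ∈ Z := ⟨⟨hvm, hv0⟩, hvM⟩
    have hxe := hk v hvZ
    have hcard : ¬ Nat.card (O ⧸ v) ≤ 3 := by
      intro hle
      rw [if_pos hle, pow_one] at hxe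
      exact hxe hxv
    rw [if_neg hcard] at hxe
    constructor
    · have : Nat.card (O ⧸ v) = Nat.card (R ⧸ P) :=
        Nat.card_eq_of_bijective (Ideal.quotientMap P (algebraMap O R) le_rfl)
          ⟨Ideal.quotientMap_injective,
            IsLocalization.surjective_quotientMap_of_maximal_of_localization M R hvm⟩
      omega
    · intro hyP2
      have h1 : algebraMap O R x ∈ P ^ 2 := by rw [hxy]; exact Ideal.mul_mem_left _ _ hyP2
      rw [← IsLocalization.map_comap M R P, ← Ideal.map_pow,
        IsLocalization.mem_map_algebraMap_iff M] at h1
      obtain ⟨⟨⟨i, hi⟩, m'⟩, h2⟩ := h1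
      simp only [← map_mul] at h2
      have h3 : x * m' = i := hinj h2
      have h4 : (m' : O) * x ∈ v ^ 2 := by rw [mul_comm, h3]; exact hi
      rcases hvp.mul_mem_pow _ h4 with h5 | h5
      · exact hvM _ m'.2 h5
      · exact hxe h5
  refine ⟨algebraMap O R k, hy0, ?_, fun P hP hyP => (main P hP hyP).1⟩
  have hsq : Squarefree (Ideal.span {y}) := by
    intro J hJ
    by_contra hJu
    rw [Ideal.isUnit_iff] at hJu
    obtain ⟨P, hP, hJP⟩ := Ideal.exists_le_maximal J hJu
    have h1 : y ∈ J * J := Ideal.dvd_iff_le.1 hJ (Ideal.mem_span_singleton_self y)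
    refine (main P hP (hJP (Ideal.mul_le_left h1))).2 ?_
    rw [pow_two]
    exact Ideal.mul_mono hJP hJP h1
  have hrad := hsq.isRadical
  intro z hz
  obtain ⟨n, hn⟩ := hz
  rw [← Ideal.span_singleton_le_iff_mem, ← Ideal.dvd_iff_le]
  refine hrad n _ ?_
  rw [Ideal.dvd_iff_le, Ideal.span_singleton_pow, Ideal.span_singleton_le_iff_mem]
  exact hn

/-- The symplectic group over a localization of an arithmetic ring is generated by transvections. -/
theorem E_eq_top_of_arith [IsDedekindDomain R] (ar : Arith O) (hM : M ≤ nonZeroDivisors O)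
    {ι : Type} [DecidableEq ι] [Fintype ι] {i₀ i₁ : ι} (hi : i₀ ≠ i₁) : E ι R = ⊤ := by
  have h1 : ∀ a c : R, IsCoprime a c → sym a (c ^ 2) = 1 := fun a c hc =>
    mennicke_trivial_loc M ar hM isMennicke_sym_sq hc
  have h2 : IsMennicke (sym : R → R → Cq R) :=
    isMennicke_sym h1 fun a b hab hb => exists_good M ar hM hab hb
  refine E_eq_top_of_long1 (fun A => ?_) hi
  refine (QuotientGroup.eq_one_iff _).1 ?_
  change cl (long1 A) = 1
  rw [← sym_eq A rfl rfl]
  refine mennicke_trivial_loc M ar hM h2 ⟨A.1 1 1, -A.1 1 0, ?_⟩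
  have := A.2
  rw [Matrix.det_fin_two] at this
  linear_combination this

end loc
end SpGen

/-! ### Finite extensions of `ℤ` and `𝔽_q[X]` -/

namespace SpGen

section inst
variable {A : Type} [CommRing A] [IsDomain A] [IsPrincipalIdealRing A]

/-- A domain which is finite over a principal ideal domain is free over it. -/
lemma nonempty_basis (A : Type) [CommRing A] [IsDomain A] [IsPrincipalIdealRing A]
    (Λ : Type) [CommRing Λ] [IsDomain Λ] [Algebra A Λ] [Module.Finite A Λ]
    [FaithfulSMul A Λ] : Module.Free A Λ := by
  have : Module.IsTorsionFree A Λ := inferInstance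
  infer_instance

/-- A Dedekind domain which is finite over `ℤ` or `𝔽_q[X]` has the required properties. -/
theorem nonempty_arith (S : Sized A) [Infinite A] (O : Type) [CommRing O] [IsDedekindDomain O]
    [Algebra A O] [Module.Finite A O] [FaithfulSMul A O] [Finite (ClassGroup O)] :
    Nonempty (Arith O) := by
  have hfree : Module.Free A O := nonempty_basis A O
  let b := Module.Free.chooseBasis A O
  haveI : Nonempty (Module.Free.ChooseBasisIndex A O) := b.index_nonempty
  exact ⟨{
    bx := boxSys S b
    small := exists_card_small_norm S b
    ideals := exists_ideal_count S b
    inf := Infinite.of_injective _ (FaithfulSMul.algebraMap_injective A O)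
    cg := inferInstance
    ext := by
      intro Λ _ _ _ _ _
      letI : Algebra A Λ := ((algebraMap O Λ).comp (algebraMap A O)).toAlgebra
      haveI : IsScalarTower A O Λ := IsScalarTower.of_algebraMap_eq fun _ => rfl
      haveI : Module.Finite A Λ := Module.Finite.trans O Λ
      haveI : FaithfulSMul A Λ := FaithfulSMul.trans A O Λ
      haveI : Module.Free A Λ := nonempty_basis A Λ
      let b' := Module.Free.chooseBasis A Λ
      haveI : Nonempty (Module.Free.ChooseBasisIndex A Λ) := b'.index_nonempty
      exact ⟨boxSys S b'⟩ }⟩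

end inst
end SpGen

/-! ### The base rings `ℤ` and `𝔽_q[X]` -/

namespace SpGen

/-- The ring `ℤ` with the absolute value and the intervals `[0, T)`. -/
noncomputable def sizedInt : Sized ℤ where
  sz := Int.natAbs
  sz_eq_zero := Int.natAbs_eq_zero
  sz_mul := Int.natAbs_mul
  sz_add := Int.natAbs_add_le
  div x d hd := ⟨x / d, by
    rw [← Int.emod_def]
    have h1 := Int.emod_nonneg x hd
    have h2 := Int.emod_lt_abs x hd
    rw [Int.abs_eq_natAbs] at h2
    omega⟩
  card_quot d _ := by
    rw [Nat.card_congr (Int.quotientSpanEquivZMod d).toEquiv, Nat.card_zmod]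
  c := 2
  D T := Finset.Ico 0 (T : ℤ)
  le_card T := by simp
  card_le T := by simp; omega
  sz_le T x hx := by rw [Finset.mem_Ico] at hx; omega
  core T ρ := ⟨Finset.Ico (ρ : ℤ) (T - ρ), fun x hx y hy => by
    rw [Finset.mem_Ico] at hx ⊢; omega, by simp; omega⟩
  outer T ρ := ⟨Finset.Ico (-ρ : ℤ) (T + ρ), fun x hx y hy => by
    rw [Finset.mem_Ico] at hx ⊢; omega, by simp; omega⟩

open Polynomial

section poly
variable (k : Type) [Field k] [Fintype k]

/-- The polynomials of degree less than `n`. -/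
noncomputable def polyBox (n : ℕ) : Finset k[X] := by
  classical
  exact Finset.univ.image fun f : Fin n → k => ((degreeLTEquiv k n).symm f : k[X])

lemma mem_polyBox {n : ℕ} {p : k[X]} : p ∈ polyBox k n ↔ p.degree < n := by
  classical
  unfold polyBox
  rw [Finset.mem_image, ← mem_degreeLT]
  constructor
  · rintro ⟨f, -, rfl⟩
    exact ((degreeLTEquiv k n).symm f).2
  · intro h
    exact ⟨degreeLTEquiv k n ⟨p, h⟩, Finset.mem_univ _, by rw [LinearEquiv.symm_apply_apply]⟩

lemma card_polyBox (n : ℕ) : (polyBox k n).card = Fintype.card k ^ n := by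
  classical
  unfold polyBox
  rw [Finset.card_image_of_injective]
  · simp
  · exact Subtype.val_injective.comp (degreeLTEquiv k n).symm.injective

open Classical in
/-- The size `|k| ^ deg p` of a polynomial, with the zero polynomial having size zero. -/
noncomputable def polySz (p : k[X]) : ℕ := if p = 0 then 0 else Fintype.card k ^ p.natDegree

lemma polySz_lt {p : k[X]} {n : ℕ} : polySz k p < Fintype.card k ^ n ↔ p.degree < n := by
  have hq : 1 < Fintype.card k := Fintype.one_lt_card
  unfold polySz
  split_ifs with h
  · simp [h]; positivity
  · rw [Nat.pow_lt_pow_iff_right hq, natDegree_lt_iff_degree_lt h]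

lemma card_quot_poly (d : k[X]) (hd : d ≠ 0) :
    Nat.card (k[X] ⧸ Ideal.span {d}) = Fintype.card k ^ d.natDegree := by
  change Nat.card (AdjoinRoot d) = _
  haveI : Module.Finite k (AdjoinRoot d) := (AdjoinRoot.powerBasis hd).finite
  rw [Module.natCard_eq_pow_finrank (K := k), (AdjoinRoot.powerBasis hd).finrank,
    AdjoinRoot.powerBasis_dim, Nat.card_eq_fintype_card]

lemma pow_clog_le {T : ℕ} (hT : T ≠ 0) :
    Fintype.card k ^ Nat.clog (Fintype.card k) T ≤ Fintype.card k * T := by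
  have hq : 1 < Fintype.card k := Fintype.one_lt_card
  rcases Nat.lt_or_ge 1 T with h | h
  · have h1 := Nat.pow_pred_clog_lt_self hq h
    have h2 := Nat.clog_pos hq h
    obtain ⟨n, hn⟩ := Nat.exists_eq_succ_of_ne_zero h2.ne'
    rw [hn, Nat.succ_eq_add_one, pow_succ, mul_comm]
    rw [hn, Nat.pred_succ] at h1
    exact Nat.mul_le_mul_left _ h1.le
  · obtain rfl : T = 1 := by omega
    rw [Nat.clog_one_right, pow_zero]; omega

/-- The ring `𝔽_q[X]` with `|p| = q ^ deg p` and the spaces of polynomials of bounded degree. -/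
noncomputable def sizedPoly : Sized k[X] where
  sz := polySz k
  sz_eq_zero {p} := by
    have hq : 0 < Fintype.card k := Fintype.card_pos
    unfold polySz
    split_ifs with h
    · simp [h]
    · simp [h]
  sz_mul x y := by
    unfold polySz
    by_cases hx : x = 0
    · simp [hx]
    by_cases hy : y = 0
    · simp [hy]
    rw [if_neg hx, if_neg hy, if_neg (mul_ne_zero hx hy), natDegree_mul hx hy, pow_add]
  sz_add x y := by
    have hq : 1 ≤ Fintype.card k := Fintype.card_pos
    unfold polySz
    by_cases hx : x = 0
    · rw [hx, zero_add]; exact Nat.le_add_left _ _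
    by_cases hy : y = 0
    · rw [hy, add_zero]; exact Nat.le_add_right _ _
    rw [if_neg hx, if_neg hy]
    split_ifs
    · simp
    · refine (Nat.pow_le_pow_right hq (natDegree_add_le x y)).trans ?_
      rcases le_total x.natDegree y.natDegree with h | h
      · rw [max_eq_right h]; exact Nat.le_add_left _ _
      · rw [max_eq_left h]; exact Nat.le_add_right _ _
  div x d hd := ⟨x / d, by
    have h1 : x - d * (x / d) = x % d := by
      linear_combination -(EuclideanDomain.div_add_mod x d)
    rw [h1]
    have h2 : polySz k d = Fintype.card k ^ d.natDegree := by unfold polySz; rw [if_neg hd]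
    rw [h2]
    refine (polySz_lt k).2 ?_ |>.le
    rw [← degree_eq_natDegree hd]
    exact EuclideanDomain.mod_lt x hd⟩
  card_quot d hd := by
    rw [card_quot_poly k d hd]; unfold polySz; rw [if_neg hd]
  c := 2 * Fintype.card k
  D T := if T = 0 then ∅ else polyBox k (Nat.clog (Fintype.card k) T)
  le_card T := by
    split_ifs with h
    · simp [h]
    · rw [card_polyBox]; exact Nat.le_pow_clog Fintype.one_lt_card T
  card_le T := by
    split_ifs with h
    · simp
    · rw [card_polyBox, mul_assoc]
      exact (pow_clog_le k h).trans (Nat.le_mul_of_pos_left _ two_pos)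
  sz_le T x hx := by
    split_ifs at hx with h
    · simp at hx
    · rw [mem_polyBox, ← polySz_lt] at hx
      rw [mul_assoc]
      exact hx.le.trans ((pow_clog_le k h).trans (Nat.le_mul_of_pos_left _ two_pos))
  core T ρ := by
    split_ifs with h
    · exact ⟨∅, by simp, by simp⟩
    rcases Nat.lt_or_ge ρ T with hρ | hρ
    · refine ⟨polyBox k (Nat.clog (Fintype.card k) T), fun x hx y hy => ?_, Nat.le_add_right _ _⟩
      rw [mem_polyBox] at hx ⊢
      refine (degree_add_le x y).trans_lt (max_lt hx ?_)
      rw [← polySz_lt]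
      exact hy.trans_lt (hρ.trans_le (Nat.le_pow_clog Fintype.one_lt_card T))
    · refine ⟨∅, by simp, ?_⟩
      rw [card_polyBox, Finset.card_empty, zero_add]
      have h1 := pow_clog_le k h
      nlinarith [Fintype.card_pos (α := k)]
  outer T ρ := by
    split_ifs with h
    · exact ⟨∅, by simp, by simp⟩
    rcases Nat.lt_or_ge ρ T with hρ | hρ
    · refine ⟨polyBox k (Nat.clog (Fintype.card k) T), fun x hx y hy => ?_, Nat.le_add_right _ _⟩
      rw [mem_polyBox] at hx ⊢
      refine (degree_add_le x y).trans_lt (max_lt hx ?_)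
      rw [← polySz_lt]
      exact hy.trans_lt (hρ.trans_le (Nat.le_pow_clog Fintype.one_lt_card T))
    · refine ⟨polyBox k (Nat.clog (Fintype.card k) (ρ + 1)), fun x hx y hy => ?_, ?_⟩
      · rw [mem_polyBox] at hx ⊢
        refine (degree_add_le x y).trans_lt (max_lt (hx.trans_le ?_) ?_)
        · exact_mod_cast Nat.clog_mono_right _ (by omega)
        · rw [← polySz_lt]
          exact hy.trans_lt (Nat.le_pow_clog Fintype.one_lt_card (ρ + 1))
      · rw [card_polyBox k (Nat.clog _ (ρ + 1))]
        refine (pow_clog_le k (Nat.succ_ne_zero ρ)).trans (le_trans ?_ (Nat.le_add_left _ _))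
        have : 1 ≤ ρ := by omega
        nlinarith [Fintype.card_pos (α := k)]
end poly
end SpGen

/-! ### Overrings of rings of integers and number fields -/

namespace SpGen

/-- A ring between a Dedekind domain `O` with finite class group and its fraction field is a
localization of `O`: if `z` is in the ring and `J` is the ideal of denominators of `z`, some power
of `J` is generated by an element which becomes a unit. -/
theorem isLocalization_of_classGroup {O R F : Type} [CommRing O] [IsDedekindDomain O]
    [Finite (ClassGroup O)] [CommRing R] [Field F] [Algebra O F] [IsFractionRing O F] [Algebra R F]
    (hinj : Function.Injective (algebraMap R F)) [Algebra O R] [IsScalarTower O R F] :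
    IsLocalization ((IsUnit.submonoid R).comap (algebraMap O R)) R := by
  classical
  have hOF := IsFractionRing.injective O F
  have htow : ∀ x : O, algebraMap R F (algebraMap O R x) = algebraMap O F x := fun x =>
    (IsScalarTower.algebraMap_apply O R F x).symm
  have hOR : Function.Injective (algebraMap O R) := fun x y h =>
    hOF (by rw [← htow, ← htow, h])
  refine ⟨fun y => y.2, fun z => ?_, fun {x y} h => ⟨1, by rw [hOR h]⟩⟩
  obtain ⟨p, q, hq, hpq⟩ := IsFractionRing.div_surjective (A := O) (algebraMap R F z)
  have hq0 : q ≠ 0 := nonZeroDivisors.ne_zero hq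
  have hqF : algebraMap O F q ≠ 0 := (map_ne_zero_iff _ hOF).2 hq0
  have hzq : z * algebraMap O R q = algebraMap O R p := by
    apply hinj
    rw [map_mul, htow, htow, ← hpq, div_mul_cancel₀ _ hqF]
  obtain ⟨J, hJ⟩ : Ideal.span {p, q} ∣ Ideal.span {q} :=
    Ideal.dvd_iff_le.2 (Ideal.span_mono (by simp))
  have hJ0 : J ≠ ⊥ := by
    rintro rfl
    rw [← Ideal.zero_eq_bot, mul_zero, Ideal.zero_eq_bot, Ideal.span_singleton_eq_bot] at hJ
    exact hq0 hJ
  have hcan : ∀ {u w : R}, u * algebraMap O R q = w * algebraMap O R q → u = w := by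
    intro u w h
    apply hinj
    have := congrArg (algebraMap R F) h
    rw [map_mul, map_mul, htow] at this
    exact mul_right_cancel₀ hqF this
  have hden : ∀ j ∈ J, ∃ x : O, z * algebraMap O R j = algebraMap O R x := by
    intro j hj
    have h1 : p * j ∈ Ideal.span {q} := hJ ▸ Ideal.mul_mem_mul (Ideal.subset_span (by simp)) hj
    obtain ⟨x, hx⟩ := Ideal.mem_span_singleton'.1 h1
    refine ⟨x, hcan ?_⟩
    rw [← map_mul, hx, map_mul, ← hzq]; ring
  have htop : J.map (algebraMap O R) = ⊤ := by
    have h1 : q ∈ Ideal.span {p, q} * J := hJ ▸ Ideal.mem_span_singleton_self q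
    rw [Ideal.span_insert, Ideal.sup_mul, Submodule.mem_sup] at h1
    obtain ⟨u, hu, w, hw, huw⟩ := h1
    obtain ⟨j₁, hj₁, rfl⟩ := Ideal.mem_span_singleton_mul.1 hu
    obtain ⟨j₂, hj₂, rfl⟩ := Ideal.mem_span_singleton_mul.1 hw
    rw [Ideal.eq_top_iff_one]
    have h2 : (1 : R) = z * algebraMap O R j₁ + algebraMap O R j₂ := by
      apply hcan
      have := congrArg (algebraMap O R) huw
      rw [map_add, map_mul, map_mul] at this
      linear_combination -this - algebraMap O R j₁ * hzq
    rw [h2]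
    exact Ideal.add_mem _ (Ideal.mul_mem_left _ _ (Ideal.mem_map_of_mem _ hj₁))
      (Ideal.mem_map_of_mem _ hj₂)
  set h := Nat.card (ClassGroup O) with hh
  have hh0 : h ≠ 0 := Nat.card_pos.ne'
  have hprin : (J ^ h).IsPrincipal := by
    have h1 : ClassGroup.mk0 (⟨J ^ h, mem_nonZeroDivisors_of_ne_zero (pow_ne_zero h hJ0)⟩) = 1 := by
      have : (⟨J ^ h, mem_nonZeroDivisors_of_ne_zero (pow_ne_zero h hJ0)⟩ : nonZeroDivisors (Ideal O))
          = ⟨J, mem_nonZeroDivisors_of_ne_zero hJ0⟩ ^ h := rfl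
      rw [this, map_pow, hh, pow_card_eq_one']
    exact (ClassGroup.mk0_eq_one_iff _).1 h1
  obtain ⟨g, hg⟩ := hprin.principal
  rw [Ideal.submodule_span_eq] at hg
  have hgu : IsUnit (algebraMap O R g) := by
    have h1 : (J ^ h).map (algebraMap O R) = ⊤ := by rw [Ideal.map_pow, htop, Ideal.top_pow]
    rw [hg, Ideal.map_span, Set.image_singleton] at h1
    exact Ideal.span_singleton_eq_top.1 h1
  have hgJ : g ∈ J := Ideal.pow_le_self hh0 (hg ▸ Ideal.mem_span_singleton_self g)
  obtain ⟨x, hx⟩ := hden g hgJ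
  exact ⟨(x, ⟨g, hgu⟩), hx⟩

/-- The case of a ring between an arithmetic ring and its fraction field. -/
theorem E_eq_top_of_integers {O R F : Type} [CommRing O] [IsDedekindDomain O]
    (ar : Arith O) [CommRing R] [Field F] [Algebra O F] [IsFractionRing O F] [Algebra R F]
    (hinj : Function.Injective (algebraMap R F))
    (h : ∀ x, algebraMap O F x ∈ (algebraMap R F).range)
    {ι : Type} [DecidableEq ι] [Fintype ι] {i₀ i₁ : ι} (hi : i₀ ≠ i₁) : E ι R = ⊤ := by
  haveI := ar.cg
  let e : R ≃+* (algebraMap R F).range := RingEquiv.ofBijective (algebraMap R F).rangeRestrict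
    ⟨fun x y hxy => hinj (congrArg Subtype.val hxy), (algebraMap R F).rangeRestrict_surjective⟩
  let φ : O →+* R := (e.symm : _ →+* R).comp ((algebraMap O F).codRestrict _ h)
  letI : Algebra O R := φ.toAlgebra
  haveI : IsScalarTower O R F := IsScalarTower.of_algebraMap_eq fun x => by
    change _ = (e (e.symm ⟨algebraMap O F x, h x⟩) : F)
    rw [e.apply_symm_apply]
  haveI := isLocalization_of_classGroup (O := O) hinj
  have hM : (IsUnit.submonoid R).comap (algebraMap O R) ≤ nonZeroDivisors O := by
    intro x hx
    refine mem_nonZeroDivisors_of_ne_zero ?_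
    rintro rfl
    rw [Submonoid.mem_comap, map_zero] at hx
    haveI : Nontrivial R := (algebraMap R F).domain_nontrivial
    exact not_isUnit_zero hx
  haveI : IsDomain R := hinj.isDomain (algebraMap R F)
  haveI := IsLocalization.isDedekindDomain O hM R
  exact E_eq_top_of_arith _ ar hM hi

/-- The case of an integrally closed subring of a number field: it contains the ring of integers. -/
theorem E_eq_top_numberField {R F : Type} [CommRing R] [Field F] [NumberField F] [Algebra R F]
    (hinj : Function.Injective (algebraMap R F))
    (hcl : ∀ y : F, IsIntegral (algebraMap R F).range y → y ∈ (algebraMap R F).range)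
    {ι : Type} [DecidableEq ι] [Fintype ι] {i₀ i₁ : ι} (hi : i₀ ≠ i₁) : E ι R = ⊤ := by
  obtain ⟨ar⟩ := nonempty_arith sizedInt (NumberField.RingOfIntegers F)
  refine E_eq_top_of_integers (F := F) ar hinj (fun x => hcl _ ?_) hi
  exact (NumberField.RingOfIntegers.isIntegral_coe x).tower_top

end SpGen

/-! ### Separating elements in function fields -/

namespace SpGen
open IntermediateField

/-- A `k`-derivation of `F` that kills a separating element `t` vanishes. -/
lemma derivation_eq_zero {k F : Type} [Field k] [Field F] [Algebra k F] {t : F}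
    [Algebra.IsSeparable k⟮t⟯ F] (D : Derivation k F F) (hD : D t = 0) : D = 0 := by
  have hK : ∀ x ∈ k⟮t⟯, D x = 0 := by
    intro x hx
    induction hx using IntermediateField.adjoin_induction with
    | mem x hx => rw [Set.mem_singleton_iff.1 hx, hD]
    | algebraMap x => exact D.map_algebraMap x
    | add x y _ _ hx hy => rw [map_add, hx, hy, add_zero]
    | inv x _ hx => rw [Derivation.leibniz_inv, hx, smul_zero]
    | mul x y _ _ hx hy => rw [Derivation.leibniz, hx, hy, smul_zero, smul_zero, add_zero]
  let D' : Derivation k⟮t⟯ F F :=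
    { toFun := D
      map_add' := map_add D
      map_smul' := fun c x => by
        rw [Algebra.smul_def, Derivation.leibniz, RingHom.id_apply, Algebra.smul_def c (D x),
          show D (algebraMap k⟮t⟯ F c) = 0 from hK _ c.2, smul_zero, add_zero, smul_eq_mul]
      map_one_eq_zero' := D.map_one_eq_zero
      leibniz' := D.leibniz }
  haveI := Algebra.FormallyUnramified.of_isSeparable k⟮t⟯ F
  ext x
  have h1 : D' x = D'.liftKaehlerDifferential (KaehlerDifferential.D k⟮t⟯ F x) :=
    (D'.liftKaehlerDifferential_comp_D x).symm
  rw [Subsingleton.elim (KaehlerDifferential.D k⟮t⟯ F x) 0, map_zero] at h1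
  exact h1

/-- If `F` is not separable over `k(a)`, there is a nonzero `k`-derivation of `F` killing `a`. -/
lemma exists_derivation {k F : Type} [Field k] [Field F] [Algebra k F]
    [Algebra.EssFiniteType k F] {a : F} (h : ¬ Algebra.IsSeparable k⟮a⟯ F) :
    ∃ D : Derivation k F F, D ≠ 0 ∧ D a = 0 := by
  haveI := Algebra.EssFiniteType.of_comp k k⟮a⟯ F
  rw [← Algebra.FormallyUnramified.iff_isSeparable, Algebra.formallyUnramified_iff,
    not_subsingleton_iff_nontrivial] at h
  obtain ⟨w, hw⟩ := exists_ne (0 : KaehlerDifferential k⟮a⟯ F)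
  obtain ⟨f, hf⟩ : ∃ f : Module.Dual F (KaehlerDifferential k⟮a⟯ F), f w ≠ 0 := by
    by_contra! hc
    exact hw ((Module.forall_dual_apply_eq_zero_iff F w).1 hc)
  refine ⟨(f.compDer (KaehlerDifferential.D k⟮a⟯ F)).restrictScalars k, fun h0 => hf ?_, ?_⟩
  · clear hf hw
    have h1 : w ∈ Submodule.span F (Set.range (KaehlerDifferential.D k⟮a⟯ F)) := by
      rw [KaehlerDifferential.span_range_derivation]; trivial
    induction h1 using Submodule.span_induction with
    | mem x hx =>
      obtain ⟨y, rfl⟩ := hx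
      exact DFunLike.congr_fun h0 y
    | zero => exact map_zero f
    | add x y _ _ hx hy => rw [map_add, hx, hy, add_zero]
    | smul c x _ hx => rw [map_smul, hx, smul_zero]
  · change f (KaehlerDifferential.D k⟮a⟯ F a) = 0
    have := (KaehlerDifferential.D k⟮a⟯ F).map_algebraMap (AdjoinSimple.gen k a)
    rw [AdjoinSimple.algebraMap_gen] at this
    rw [this, map_zero]

/-- If `a / b` is a separating element, then `a` or `b` is one. -/
lemma isSeparable_num_or_den {k F : Type} [Field k] [Field F] [Algebra k F]
    [Algebra.EssFiniteType k F] {t a b : F} (hb : b ≠ 0) (ht : t * b = a)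
    [Algebra.IsSeparable k⟮t⟯ F] : Algebra.IsSeparable k⟮a⟯ F ∨ Algebra.IsSeparable k⟮b⟯ F := by
  by_contra! hc
  obtain ⟨D₀, h₀, ha⟩ := exists_derivation hc.1
  obtain ⟨D₁, h₁, hb'⟩ := exists_derivation hc.2
  have hz : D₁ t • D₀ - D₀ t • D₁ = 0 := by
    apply derivation_eq_zero (t := t)
    simp only [Derivation.sub_apply, Derivation.smul_apply, smul_eq_mul]
    ring
  have h2 := DFunLike.congr_fun hz b
  simp only [Derivation.sub_apply, Derivation.smul_apply, smul_eq_mul, hb', mul_zero, sub_zero,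
    Derivation.zero_apply] at h2
  have ht1 : D₁ t ≠ 0 := fun h => h₁ (derivation_eq_zero D₁ h)
  have hb0 : D₀ b = 0 := (mul_eq_zero.1 h2).resolve_left ht1
  have h3 : D₀ (t * b) = 0 := by rw [ht, ha]
  rw [Derivation.leibniz, hb0, smul_zero, zero_add, smul_eq_mul] at h3
  exact h₀ (derivation_eq_zero D₀ ((mul_eq_zero.1 h3).resolve_left hb))

open Polynomial in
/-- The function field case, given a separating element `x` of `R`: the integral closure of `k[x]`
in `F` is an arithmetic ring contained in `R`. -/
theorem E_eq_top_of_separating {k F R : Type} [Field k] [Fintype k] [Field F] [Algebra k F]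
    [CommRing R] [Algebra R F] (hinj : Function.Injective (algebraMap R F))
    (hcl : ∀ y : F, IsIntegral (algebraMap R F).range y → y ∈ (algebraMap R F).range)
    (hk : ∀ c, algebraMap k F c ∈ (algebraMap R F).range)
    {x : F} (hx : Transcendental k x) (hxR : x ∈ (algebraMap R F).range)
    [FiniteDimensional k⟮x⟯ F] [Algebra.IsSeparable k⟮x⟯ F]
    {ι : Type} [DecidableEq ι] [Fintype ι] {i₀ i₁ : ι} (hi : i₀ ≠ i₁) : E ι R = ⊤ := by
  classical
  letI a1 : Algebra k[X] k⟮x⟯ := (aeval (AdjoinSimple.gen k x)).toRingHom.toAlgebra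
  letI a2 : Algebra k[X] F := (aeval x).toRingHom.toAlgebra
  have hmap : ∀ p : k[X], algebraMap k[X] F p = aeval x p := fun _ => rfl
  haveI : IsScalarTower k[X] k⟮x⟯ F := IsScalarTower.of_algebraMap_eq fun p => by
    change aeval x p = algebraMap k⟮x⟯ F (aeval (AdjoinSimple.gen k x) p)
    rw [← aeval_algebraMap_apply, AdjoinSimple.algebraMap_gen]
  let e : RatFunc k ≃ₐ[k[X]] k⟮x⟯ :=
    AlgEquiv.ofRingEquiv (f := (RatFunc.algEquivOfTranscendental x hx).toRingEquiv)
      (fun p => RatFunc.algEquivOfTranscendental_algebraMap x hx p)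
  haveI : IsFractionRing k[X] k⟮x⟯ := IsLocalization.isLocalization_of_algEquiv _ e
  have hAinj : Function.Injective (algebraMap k[X] F) := by
    rw [IsScalarTower.algebraMap_eq k[X] k⟮x⟯ F]
    exact (algebraMap k⟮x⟯ F).injective.comp (IsFractionRing.injective k[X] k⟮x⟯)
  let O := integralClosure k[X] F
  haveI : IsIntegralClosure O k[X] F := integralClosure.isIntegralClosure _ _
  haveI : IsDedekindDomain O := IsIntegralClosure.isDedekindDomain k[X] k⟮x⟯ F O
  haveI : Module.Finite k[X] O := IsIntegralClosure.finite k[X] k⟮x⟯ F O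
  haveI : IsFractionRing O F := IsIntegralClosure.isFractionRing_of_finite_extension k[X] k⟮x⟯ F O
  haveI : FaithfulSMul k[X] O := (faithfulSMul_iff_algebraMap_injective _ _).2 fun p q hpq =>
    hAinj (congrArg Subtype.val hpq)
  haveI : Finite (ClassGroup O) := by
    haveI := ClassGroup.fintypeOfAdmissibleOfFinite k⟮x⟯ F
      (R := k[X]) (S := O) (Polynomial.cardPowDegreeIsAdmissible :
        AbsoluteValue.IsAdmissible (Polynomial.cardPowDegree : AbsoluteValue k[X] ℤ))
    infer_instance
  obtain ⟨ar⟩ := nonempty_arith (sizedPoly k) O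
  refine E_eq_top_of_integers (F := F) ar hinj (fun y => hcl _ ?_) hi
  have hpR : ∀ p : k[X], algebraMap k[X] F p ∈ (algebraMap R F).range := by
    intro p
    rw [hmap]
    induction p using Polynomial.induction_on' with
    | add p q hp hq => rw [map_add]; exact add_mem hp hq
    | monomial n c => rw [aeval_monomial]; exact mul_mem (hk c) (pow_mem hxR n)
  obtain ⟨p, hp, hpy⟩ := y.2
  refine ⟨p.map ((algebraMap k[X] F).codRestrict _ hpR), hp.map _, ?_⟩
  rw [eval₂_map]
  exact hpy

end SpGen

/-! ### Function fields and the conclusion -/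

namespace SpGen
open IntermediateField

lemma isIntegral_of_pow_eq {A F : Type} [CommRing A] [Nontrivial A] [CommRing F] [Algebra A F]
    {y : F} {n : ℕ} (hn : 1 < n) (hy : y ^ n = y) : IsIntegral A y := by
  have hm : (Polynomial.X ^ n - Polynomial.X : Polynomial A).Monic := by
    refine (Polynomial.monic_X_pow n).sub_of_left ?_
    rw [Polynomial.degree_X_pow, Polynomial.degree_X]; exact_mod_cast hn
  refine ⟨_, hm, ?_⟩
  rw [Polynomial.eval₂_sub, Polynomial.eval₂_X_pow, Polynomial.eval₂_X, hy, sub_self]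

/-- The function field case. Writing the given separating element as a quotient of elements of `R`,
one of these is separating by `isSeparable_num_or_den`. -/
theorem E_eq_top_functionField {k F R : Type} [Field k] [Fintype k] [Field F]
    [Algebra (RatFunc k) F] [FunctionField k F]
    [CommRing R] [Algebra R F] [IsFractionRing R F]
    (hcl : ∀ y : F, IsIntegral (algebraMap R F).range y → y ∈ (algebraMap R F).range)
    {ι : Type} [DecidableEq ι] [Fintype ι] {i₀ i₁ : ι} (hi : i₀ ≠ i₁) : E ι R = ⊤ := by
  letI : Algebra k F := ((algebraMap (RatFunc k) F).comp (algebraMap k (RatFunc k))).toAlgebra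
  haveI : IsScalarTower k (RatFunc k) F := IsScalarTower.of_algebraMap_eq fun _ => rfl
  haveI : Algebra.EssFiniteType k (RatFunc k) := by
    haveI := Algebra.EssFiniteType.of_isLocalization (RatFunc k) (nonZeroDivisors (Polynomial k))
    exact Algebra.EssFiniteType.comp k (Polynomial k) (RatFunc k)
  haveI : Algebra.EssFiniteType k F := Algebra.EssFiniteType.comp k (RatFunc k) F
  have hX : Transcendental k (algebraMap (RatFunc k) F RatFunc.X) := by
    rw [transcendental_algebraMap_iff (algebraMap (RatFunc k) F).injective]
    exact RatFunc.transcendental_X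
  have hbasis : IsTranscendenceBasis k
      (algebraMap (RatFunc k) F ∘ algebraMap (Polynomial k) (RatFunc k) ∘
        fun _ : Unit => (Polynomial.X : Polynomial k)) := by
    haveI : Algebra.IsAlgebraic (Polynomial k) (RatFunc k) :=
      IsLocalization.isAlgebraic _ (nonZeroDivisors (Polynomial k))
    exact ((IsTranscendenceBasis.polynomial Unit k).algebraMap_comp
      (A := RatFunc k)).algebraMap_comp (A := F)
  obtain ⟨s, hs, hsep⟩ := exists_isTranscendenceBasis_and_isSeparable_of_perfectField k F
  obtain ⟨t, rfl⟩ : ∃ t, s = {t} := by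
    rw [← Finset.card_eq_one]
    have := hs.cardinalMk_eq hbasis
    simpa using this
  rw [Finset.coe_singleton] at hsep
  have htr : ∀ x : F, Algebra.IsAlgebraic k⟮x⟯ F → Transcendental k x := by
    intro x h hx
    apply hX
    haveI : Algebra.IsAlgebraic k k⟮x⟯ := isAlgebraic_adjoin_simple hx.isIntegral
    haveI : Algebra.IsAlgebraic k F := Algebra.IsAlgebraic.trans k k⟮x⟯ F
    exact Algebra.IsAlgebraic.isAlgebraic _
  have hk : ∀ c, algebraMap k F c ∈ (algebraMap R F).range := by
    intro c
    apply hcl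
    refine isIntegral_of_pow_eq Fintype.one_lt_card (n := Fintype.card k) ?_
    rw [← map_pow, FiniteField.pow_card]
  obtain ⟨a, b, hb, hab⟩ := IsFractionRing.div_surjective (A := R) t
  have hinj := IsFractionRing.injective R F
  haveI : Nontrivial R := (algebraMap R F).domain_nontrivial
  have hb0 : algebraMap R F b ≠ 0 :=
    IsLocalization.to_map_ne_zero_of_mem_nonZeroDivisors F le_rfl hb
  have key : ∀ x : F, x ∈ (algebraMap R F).range → Algebra.IsSeparable k⟮x⟯ F → E ι R = ⊤ := by
    intro x hxR hx
    have hxt := htr x inferInstance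
    haveI := FunctionField.finiteDimensional_of_adjoin_transcendental hxt
    exact E_eq_top_of_separating hinj hcl hk hxt hxR hi
  rcases isSeparable_num_or_den (k := k) hb0 ((div_eq_iff hb0).1 hab).symm with h | h
  · exact key _ ⟨a, rfl⟩ h
  · exact key _ ⟨b, rfl⟩ h

end SpGen

theorem statement6 (R : Type) [CommRing R]
    (hR : IsDedekindRingOfArithmeticType R) (l : ℕ) (hl : 2 ≤ l) :
    Subgroup.closure {g : Matrix.symplecticGroup (Fin l) R | IsSymplecticTransvection g} = ⊤ := by
  obtain ⟨F, _, _, _, S, -, hS, hF⟩ := hR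
  have hcl : ∀ y : F, IsIntegral (algebraMap R F).range y → y ∈ (algebraMap R F).range := by
    intro y hy
    refine (hS y).2 fun V hV hVS => ?_
    have hle : (algebraMap R F).range ≤ V.toSubring := fun x hx => (hS x).1 hx V hV hVS
    have hyV : IsIntegral V y := by
      obtain ⟨p, hp, hpy⟩ := hy
      refine ⟨p.map (Subring.inclusion hle), hp.map _, ?_⟩
      rw [Polynomial.eval₂_map]
      exact hpy
    obtain ⟨z, rfl⟩ := IsIntegrallyClosed.isIntegral_iff.1 hyV
    exact z.2
  have h01 : (⟨0, by omega⟩ : Fin l) ≠ ⟨1, by omega⟩ := by simp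
  have hE : SpGen.E (Fin l) R = ⊤ := by
    rcases hF with hF | ⟨-, k, _, _, _, hF⟩
    · exact SpGen.E_eq_top_numberField (IsFractionRing.injective R F) hcl h01
    · exact SpGen.E_eq_top_functionField (k := k) hcl h01
  exact hE
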